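/- Let G be a finite group of odd order, let p be an odd prime with p ≡ 1 (mod 3), and let k be a subfield of ℂ containing the primitive p-th roots of unity but not containing the primitive 3rd roots of unity. If acd_k(G) < 3p/(p+2), then G has a normal p-complement. -/

import Mathlib

/-!
Suppose that `G`, of odd order `p ^ a * m` with `p ∤ m`, has no normal `p`-complement; the claim is
that `∑ ((p + 2) χ(1) - 3 p) ≥ 0`, the sum being over the `k`-valued irreducible characters.
Each linear one contributes `-2 (p - 1)` and each other one is nonnegative, since degrees are odd,
so it suffices to find enough non-linear ones (`Ctx.acdK_ge`).

Let `p ^ c` be the exact number of roots of unity of order dividing `p ^ a` in `k`, and let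
`n ≡ 1 + p ^ c` modulo `p ^ a` and `n ≡ -1` modulo `m`.  The set `SChar n G` of irreducible
characters with `χ (g ^ n) = χ g` is the tool.  By a parity argument, using that a power of
`g ↦ g ^ n` is an involution of `G` whose fixed points are the `p`-elements, such characters are
determined by their values on `p`-elements (`SChar_ext`).  Hence they are `k`-valued
(`SChar_mem_k`).  The linear ones are those of order dividing `p ^ c`; they form `LinQ (p ^ c) G`.

*Counting* (`claimD`): `2 |LinQ (p ^ c) G| ≤ |SChar n G|`.  By Brauer's permutation lemma,
`|SChar n G|` is the number of classes fixed by `g ↦ g ^ n`, and one argues by induction on `|G|`.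
If `O_p(G) = 1`, one passes to the proper subgroup `N_G(D*(P))`, which controls fusion in a Sylow
subgroup `P` (`fusion_control`, a substitute for Glauberman's `ZJ`-theorem, resting on the
Baer–Suzuki theorem and `p`-stability in odd order) and so has no normal `p`-complement either, by
Frobenius' criterion.  Otherwise take a minimal normal `p`-subgroup `T`.  If `G ⧸ T` has no normal
`p`-complement, induction applies to it.  If it has one, `T` has a complement `L`, and each
invariant class of `x ∈ L` produces two of `G`, those of `x` and of `x t` with `t ∉ [T, x]`
(`two_mul_card_SCl`).

*Degree prime to `p`* (`Ctx.case_one`): let `χ ∈ SChar n G` be non-linear with `p ∤ χ(1)`.  Apply to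
`χ` the twists by `k`-valued linear characters and the power maps coming from the Teichmüller
lifts of `(ZMod p)ˣ`.  If `d` is the order of the stabilizer of `χ` under twisting and `s` that of
the group of units moving `χ` to one of its twists, the resulting set has at least
`|LinK k G| (p - 1) / (d s)` members, and `(p + 2) χ(1) ≥ 3 p + 2 d s`.  The latter follows from
`d ∣ χ(1)`, `3 ∤ d` (as `k` has no primitive cube roots of unity), `s` odd, `s ∣ p - 1`,
`s ≤ χ(1)`, and `s ∣ χ(1)` if `d = χ(1) < p`.

*All non-linear degrees divisible by `p`* (`Ctx.case_two`): by counting, there are at least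
`|LinQ (p ^ c) G|` non-linear `χ ∈ SChar n G`.  Their orbits under the `k`-valued linear characters
of order dividing `m` are disjoint, and a stabilizer of order `d` satisfies `p d ∣ χ(1)`, so
these orbits outweigh the linear characters.
-/

/-- The set of irreducible complex characters of `G`. -/
noncomputable def Irr (G : Type) [Group G] : Set (G → ℂ) :=
  {χ | ∃ V : FDRep ℂ G, CategoryTheory.Simple V ∧ χ = FDRep.character V}

/-- A group `G` has a normal `p`-complement: a normal subgroup of order coprime
to `p` whose index is a power of `p`. -/
def HasNormalPComplement (G : Type) [Group G] (p : ℕ) : Prop :=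
  ∃ N : Subgroup G, N.Normal ∧ Nat.Coprime (Nat.card N) p ∧ ∃ n : ℕ, N.index = p ^ n

/-- The irreducible complex characters of `G` all of whose values lie in `k`. -/
noncomputable def IrrK (G : Type) [Group G] (k : Subfield ℂ) : Set (G → ℂ) :=
  {χ ∈ Irr G | ∀ g, χ g ∈ k}

/-- The average of the degrees of the `k`-valued irreducible characters of `G`. -/
noncomputable def acdK (G : Type) [Group G] (k : Subfield ℂ) : ℝ :=
  (∑ᶠ χ ∈ IrrK G k, (χ 1).re) / (Nat.card (IrrK G k))

/-! ### The Baer–Suzuki theorem -/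

section
open Subgroup

/-- **Baer–Suzuki theorem**, by the argument of Alperin and Lyons. -/
theorem baer_suzuki {G : Type*} [Group G] [Finite G] (p : ℕ) [Fact p.Prime] (x : G)
    (h : ∀ g : G, IsPGroup p (closure {x, g * x * g⁻¹})) :
    ∃ N : Subgroup G, N.Normal ∧ IsPGroup p N ∧ x ∈ N := by
  classical
  set C : Set G := {y | IsConj x y} with hC
  have hCconj : ∀ y ∈ C, ∀ g : G, g * y * g⁻¹ ∈ C := by
    intro y hy g
    exact IsConj.trans hy (isConj_iff.2 ⟨g, rfl⟩)
  have hpair : ∀ y ∈ C, ∀ z ∈ C, IsPGroup p (closure {y, z}) := by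
    intro y hy z hz
    obtain ⟨a, rfl⟩ := isConj_iff.1 hy
    obtain ⟨b, rfl⟩ := isConj_iff.1 hz
    have := (h (a⁻¹ * b)).map (MulAut.conj a).toMonoidHom
    rw [MonoidHom.map_closure] at this
    rw [Set.image_pair] at this
    have e : a * (a⁻¹ * b * x * (a⁻¹ * b)⁻¹) * a⁻¹ = b * x * b⁻¹ := by group
    change IsPGroup p (closure {a * x * a⁻¹, a * (a⁻¹ * b * x * (a⁻¹ * b)⁻¹) * a⁻¹}) at this
    rwa [e] at this
  have hxC : x ∈ C := IsConj.refl x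
  have hcard : ∀ P Q : Sylow p G, (C ∩ (P : Set G)).ncard = (C ∩ (Q : Set G)).ncard := by
    intro P Q
    obtain ⟨g, rfl⟩ := MulAction.exists_smul_eq G P Q
    have : (C ∩ ((g • P : Sylow p G) : Set G)) = (fun y => g * y * g⁻¹) '' (C ∩ (P : Set G)) := by
      ext y
      constructor
      · rintro ⟨hy, hyP⟩
        refine ⟨g⁻¹ * y * g, ⟨by simpa using hCconj y hy g⁻¹, ?_⟩, by group⟩
        rw [Sylow.coe_smul] at hyP
        obtain ⟨z, hz, rfl⟩ := hyP
        simpa [mul_assoc] using hz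
      · rintro ⟨z, ⟨hz, hzP⟩, rfl⟩
        refine ⟨hCconj z hz g, ?_⟩
        rw [Sylow.coe_smul]
        exact ⟨z, hzP, by simp⟩
    rw [this, Set.ncard_image_of_injective]
    intro a b hab
    simpa using hab
  by_cases hall : ∀ P Q : Sylow p G, C ∩ (P : Set G) = C ∩ (Q : Set G)
  · have hx : IsPGroup p (closure {x}) := (h 1).to_le (closure_mono (by simp))
    obtain ⟨P, hP⟩ := hx.exists_le_sylow
    have hxP : x ∈ P := hP (subset_closure rfl)
    refine ⟨normalClosure {x}, inferInstance, P.2.to_le ?_, subset_normalClosure rfl⟩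
    rw [normalClosure, closure_le]
    intro y hy
    rw [Group.mem_conjugatesOfSet_iff] at hy
    obtain ⟨z, rfl, hzy⟩ := hy
    obtain ⟨g, rfl⟩ := isConj_iff.1 hzy
    have h1 : g * z * g⁻¹ ∈ C ∩ ((g • P : Sylow p G) : Set G) := by
      refine ⟨hzy, ?_⟩
      rw [Sylow.coe_smul]
      exact ⟨z, hxP, by simp⟩
    rw [hall _ P] at h1
    exact h1.2
  exfalso
  push Not at hall
  obtain ⟨P0, Q0, hPQ0⟩ := hall
  obtain ⟨⟨P, Q⟩, hne, hmax⟩ := Set.Finite.exists_maximalFor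
    (fun PQ : Sylow p G × Sylow p G => (C ∩ (PQ.1 : Set G) ∩ (PQ.2 : Set G)).ncard)
    {PQ | C ∩ (PQ.1 : Set G) ≠ C ∩ (PQ.2 : Set G)} (Set.toFinite _) ⟨(P0, Q0), hPQ0⟩
  simp only [Set.mem_ofPred_eq] at hne hmax
  set D : Set G := C ∩ (P : Set G) ∩ (Q : Set G) with hD
  have hmax' : ∀ P' Q' : Sylow p G, C ∩ (P' : Set G) ≠ C ∩ (Q' : Set G) →
      ¬ D.ncard < (C ∩ (P' : Set G) ∩ (Q' : Set G)).ncard := by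
    intro P' Q' h1 h2
    exact absurd (@hmax (P', Q') h1 h2.le) (not_le.2 h2)
  -- in each of the two Sylow subgroups some element of `C` outside `D` normalises `D`
  have key : ∀ P' Q' : Sylow p G, C ∩ (P' : Set G) ≠ C ∩ (Q' : Set G) →
      C ∩ (P' : Set G) ∩ (Q' : Set G) = D →
      ∃ y ∈ C, y ∈ P' ∧ y ∉ D ∧ ∀ d ∈ D, y * d * y⁻¹ ∈ D := by
    intro P' Q' h1 h2
    obtain ⟨R, ⟨hRP, hRD⟩, hRmax⟩ := Set.Finite.exists_maximalFor (fun R : Subgroup G => R)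
      {R | R ≤ P' ∧ C ∩ (R : Set G) = D} (Set.toFinite _)
      ⟨(P' : Subgroup G) ⊓ Q', inf_le_left, by
        rw [← h2]; ext y; simp [and_assoc]⟩
    have hRne : R ≠ P' := by
      rintro rfl
      apply h1
      apply Set.eq_of_subset_of_ncard_le
      · intro y hy
        have : y ∈ D := hRD ▸ hy
        rw [← h2] at this
        exact ⟨this.1.1, this.2⟩
      · exact (hcard _ _).le
      · exact Set.toFinite _
    have hlt : R < P' := lt_of_le_of_ne hRP hRne
    -- normalizers grow in the `p`-group `P'`
    have hnil : Group.IsNilpotent P' := P'.2.isNilpotent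
    have hgrow := @Group.normalizerCondition_of_isNilpotent P' _ hnil (R.subgroupOf P') (by
      rw [lt_top_iff_ne_top, Ne, subgroupOf_eq_top]
      exact fun h => hRne (le_antisymm hRP h))
    obtain ⟨y, hy1, hy2⟩ := SetLike.exists_of_lt hgrow
    let R' : Subgroup G := (normalizer (R.subgroupOf (P' : Subgroup G) : Set P')).map (P' : Subgroup G).subtype
    have hRR' : R ≤ R' := by
      intro r hr
      exact ⟨⟨r, hRP hr⟩, le_normalizer (show _ ∈ R.subgroupOf _ from hr), rfl⟩
    have hR'P : R' ≤ P' := by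
      rintro _ ⟨r, _, rfl⟩
      exact r.2
    have hR'n : ∀ r ∈ R', ∀ s ∈ R, r * s * r⁻¹ ∈ R := by
      rintro _ ⟨r, hr, rfl⟩ s hs
      have := (mem_normalizer_iff.1 hr ⟨s, hRP hs⟩).1 hs
      exact this
    have hnot : ¬ (C ∩ (R' : Set G) = D) := by
      intro hcon
      have := hRmax (j := R') ⟨hR'P, hcon⟩ hRR'
      exact hy2 (this ⟨y, hy1, rfl⟩ : (y : G) ∈ R)
    have hsub : ¬ (C ∩ (R' : Set G) ⊆ D) := by
      intro hs
      apply hnot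
      refine le_antisymm hs ?_
      rw [← hRD]
      exact Set.inter_subset_inter_right _ hRR'
    obtain ⟨w, ⟨hwC, hwR'⟩, hwD⟩ := Set.not_subset.1 hsub
    refine ⟨w, hwC, hR'P hwR', hwD, ?_⟩
    intro d hd
    rw [← hRD] at hd ⊢
    exact ⟨hCconj d hd.1 w, hR'n w hwR' d hd.2⟩
  obtain ⟨y, hyC, hyP, hyD, hyn⟩ := key P Q hne rfl
  obtain ⟨z, hzC, hzQ, hzD, hzn⟩ := key Q P hne.symm (by rw [hD]; ext; simp; tauto)
  have hDp : IsPGroup p (closure D) := P.2.to_le (by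
    rw [closure_le]; exact fun d hd => hd.1.2)
  have hnorm : closure {y, z} ≤ normalizer (closure D : Set G) := by
    rw [closure_le]
    have aux : ∀ w : G, (∀ d ∈ D, w * d * w⁻¹ ∈ D) → w ∈ normalizer (closure D : Set G) := by
      intro w hw
      have h1 : (closure D).map (MulAut.conj w).toMonoidHom ≤ closure D := by
        rw [MonoidHom.map_closure, closure_le]
        rintro _ ⟨d, hd, rfl⟩
        exact subset_closure (hw d hd)
      have h2 : (closure D).map (MulAut.conj w).toMonoidHom = closure D := by
        apply Subgroup.eq_of_le_of_card_ge h1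
        exact (Nat.card_congr ((closure D).equivMapOfInjective _ (MulAut.conj w).injective).toEquiv).le
      rw [mem_normalizer_iff]
      intro g
      constructor
      · intro hg
        exact h1 ⟨g, hg, rfl⟩
      · intro hg
        change w * g * w⁻¹ ∈ closure D at hg
        rw [← h2] at hg
        obtain ⟨g', hg', he⟩ := hg
        have : g' = g := (MulAut.conj w).injective he
        exact this ▸ hg'
    rintro w (rfl | rfl)
    · exact aux _ hyn
    · exact aux _ hzn
  have hTp := (hpair y hyC z hzC).to_sup_of_normal_right' hDp hnorm
  obtain ⟨T, hT⟩ := hTp.exists_le_sylow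
  have hyT : y ∈ T := hT (le_sup_left (a := closure {y, z}) (subset_closure (by simp)))
  have hzT : z ∈ T := hT (le_sup_left (a := closure {y, z}) (subset_closure (by simp)))
  have hDT : D ⊆ T := fun d hd => hT (le_sup_right (a := closure {y, z}) (subset_closure hd))
  have e1 : C ∩ (P : Set G) = C ∩ (T : Set G) := by
    by_contra hcon
    refine hmax' P T hcon (Set.ncard_lt_ncard ?_)
    refine ⟨fun d hd => ⟨hd.1, hDT hd⟩, fun hs => hyD (hs ⟨⟨hyC, hyP⟩, hyT⟩)⟩
  have e2 : C ∩ (Q : Set G) = C ∩ (T : Set G) := by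
    by_contra hcon
    refine hmax' Q T hcon (Set.ncard_lt_ncard ?_)
    refine ⟨fun d hd => ⟨⟨hd.1.1, hd.2⟩, hDT hd⟩, fun hs => hzD (hs ⟨⟨hzC, hzQ⟩, hzT⟩)⟩
  exact hne (e1.trans e2.symm)

end

/-! ### `p`-stability in groups of odd order -/

section
open Subgroup

/-- The rigid part of `p`-stability: if `ab + ba` is bijective then `V` splits as
`ker a ⊕ ker b`, and the involution `φ` that is `1` on `ker a` and `-1` on `ker b` inverts both
generators by conjugation.  A Sylow conjugation carries a vector of `ker a` into `ker b`,
and unique square roots in a group of odd order turn this into `2 v = 0`. -/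
theorem pstable_rigid {V : Type*} [AddCommGroup V] [Finite V] (p : ℕ) [hp : Fact p.Prime]
    (hp2 : Odd p) (m : ℕ) (hV : ∀ v : V, p ^ m • v = 0)
    (X Y : (Module.End ℤ V)ˣ)
    (hX : ((X : Module.End ℤ V) - 1) * ((X : Module.End ℤ V) - 1) = 0)
    (hY : ((Y : Module.End ℤ V) - 1) * ((Y : Module.End ℤ V) - 1) = 0)
    (hodd : Odd (Nat.card (closure {X, Y})))
    (hκ : Function.Bijective (((X : Module.End ℤ V) - 1) * ((Y : Module.End ℤ V) - 1) +
      ((Y : Module.End ℤ V) - 1) * ((X : Module.End ℤ V) - 1) : Module.End ℤ V)) :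
    Subsingleton V := by
  classical
  have : Finite (Module.End ℤ V) := DFunLike.finite _
  by_contra hns
  rw [not_subsingleton_iff_nontrivial] at hns
  set a : Module.End ℤ V := (X : Module.End ℤ V) - 1 with ha
  set b : Module.End ℤ V := (Y : Module.End ℤ V) - 1 with hb
  have hu : IsUnit (a * b + b * a) := (Module.End.isUnit_iff _).2 hκ
  obtain ⟨K, hK⟩ := hu
  have hKa : (K : Module.End ℤ V) * a = a * K := by
    rw [hK, add_mul, mul_add, mul_assoc, mul_assoc b, hX, ← mul_assoc a a, hX]; simp [mul_assoc]
  have hKb : (K : Module.End ℤ V) * b = b * K := by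
    rw [hK, add_mul, mul_add, mul_assoc a, hY, ← mul_assoc b b, hY]; simp [mul_assoc]
  have hKia : ((K⁻¹ : (Module.End ℤ V)ˣ) : Module.End ℤ V) * a = a * ((K⁻¹ : (Module.End ℤ V)ˣ) : Module.End ℤ V) := by
    rw [Units.inv_mul_eq_iff_eq_mul, ← mul_assoc, hKa, mul_assoc, Units.mul_inv, mul_one]
  have hKib : ((K⁻¹ : (Module.End ℤ V)ˣ) : Module.End ℤ V) * b = b * ((K⁻¹ : (Module.End ℤ V)ˣ) : Module.End ℤ V) := by
    rw [Units.inv_mul_eq_iff_eq_mul, ← mul_assoc, hKb, mul_assoc, Units.mul_inv, mul_one]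
  set Ki : Module.End ℤ V := ((K⁻¹ : (Module.End ℤ V)ˣ) : Module.End ℤ V) with hKi
  have hKK : Ki * (a * b + b * a) = 1 := by rw [← hK]; exact Units.inv_mul K
  let f : Module.End ℤ V := Ki * (a * b - b * a)
  have hfa : f * a = a := by
    have h1 : (a * b - b * a) * a = (a * b + b * a) * a := by
      rw [sub_mul, add_mul, mul_assoc b a a, hX]; simp
    change Ki * (a * b - b * a) * a = a
    rw [mul_assoc, h1, ← mul_assoc, hKK, one_mul]
  have hfb : f * b = -b := by
    have h1 : (a * b - b * a) * b = - ((a * b + b * a) * b) := by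
      rw [sub_mul, add_mul, mul_assoc a b b, hY]; simp
    change Ki * (a * b - b * a) * b = -b
    rw [mul_assoc, h1, mul_neg, ← mul_assoc, hKK, one_mul]
  have haf : a * f = -a := by
    have h1 : a * (a * b - b * a) = - ((a * b + b * a) * a) := by
      rw [mul_sub, add_mul, ← mul_assoc a a b, hX, mul_assoc b a a, hX]; simp [mul_assoc]
    change a * (Ki * (a * b - b * a)) = -a
    rw [← mul_assoc, ← hKia, mul_assoc, h1, mul_neg, ← mul_assoc, hKK, one_mul]
  have hbf : b * f = b := by
    have h1 : b * (a * b - b * a) = ((a * b + b * a) * b) := by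
      rw [mul_sub, add_mul, ← mul_assoc b b a, hY, mul_assoc a b b, hY]; simp [mul_assoc]
    change b * (Ki * (a * b - b * a)) = b
    rw [← mul_assoc, ← hKib, mul_assoc, h1, ← mul_assoc, hKK, one_mul]
  have hff : f * f = 1 := by
    change Ki * (a * b - b * a) * f = 1
    have h1 : (a * b - b * a) * f = a * b + b * a := by
      rw [sub_mul, mul_assoc, hbf, mul_assoc, haf]; simp
    rw [mul_assoc, h1, hKK]
  let Φ : (Module.End ℤ V)ˣ := ⟨f, f, hff, hff⟩
  have hXv : (X : Module.End ℤ V) = 1 + a := by rw [ha]; abel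
  have hYv : (Y : Module.End ℤ V) = 1 + b := by rw [hb]; abel
  -- `a` vanishes exactly on the `+1` part, `b` on the `-1` part
  have hkera : ∀ v : V, a v = 0 → f v = v := by
    intro v hv
    have h1 : (a * b - b * a) v = (a * b + b * a) v := by
      simp [Module.End.mul_apply, hv]
    change Ki ((a * b - b * a) v) = v
    rw [h1]
    exact congrArg (fun g : Module.End ℤ V => g v) hKK
  have hkerb : ∀ v : V, b v = 0 → f v = -v := by
    intro v hv
    have h1 : (a * b - b * a) v = - (a * b + b * a) v := by
      simp [Module.End.mul_apply, hv]
    change Ki ((a * b - b * a) v) = -v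
    rw [h1, map_neg]
    exact congrArg (fun g : Module.End ℤ V => -(g v)) hKK
  have hΦX : Φ * X * Φ⁻¹ = X⁻¹ := by
    rw [eq_inv_iff_mul_eq_one]
    ext1
    change f * (X : Module.End ℤ V) * f * X = 1
    rw [hXv]
    have : f * (1 + a) * f = 1 - a := by
      rw [mul_add, mul_one, hfa, add_mul, hff, haf]; abel
    rw [this, sub_mul, mul_add, mul_add, hX]; simp
  have hΦY : Φ * Y * Φ⁻¹ = Y⁻¹ := by
    rw [eq_inv_iff_mul_eq_one]
    ext1
    change f * (Y : Module.End ℤ V) * f * Y = 1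
    rw [hYv]
    have : f * (1 + b) * f = 1 - b := by
      rw [mul_add, mul_one, hfb, add_mul, hff, neg_mul, hbf]; abel
    rw [this, sub_mul, mul_add, mul_add, hY]; simp
  set Γ : Subgroup (Module.End ℤ V)ˣ := closure {X, Y} with hΓ
  have hXΓ : X ∈ Γ := subset_closure (by simp)
  have hYΓ : Y ∈ Γ := subset_closure (by simp)
  have hσ : ∀ h ∈ Γ, Φ * h * Φ⁻¹ ∈ Γ := by
    intro h hh
    have h1 : Γ.map (MulAut.conj Φ).toMonoidHom ≤ Γ := by
      rw [hΓ, MonoidHom.map_closure, closure_le]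
      rintro _ ⟨d, rfl | rfl, rfl⟩
      · change Φ * _ * Φ⁻¹ ∈ Γ
        rw [hΦX]; exact inv_mem hXΓ
      · change Φ * _ * Φ⁻¹ ∈ Γ
        rw [hΦY]; exact inv_mem hYΓ
    exact h1 ⟨h, hh, rfl⟩
  -- both generators are `p`-elements
  have hpel : ∀ Z : (Module.End ℤ V)ˣ,
      ((Z : Module.End ℤ V) - 1) * ((Z : Module.End ℤ V) - 1) = 0 → Z ^ p ^ m = 1 := by
    intro Z hZ
    have h1 : ∀ n : ℕ, ((Z : Module.End ℤ V)) ^ n = 1 + n • ((Z : Module.End ℤ V) - 1) := by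
      intro n
      induction n with
      | zero => simp
      | succ n ih =>
        set c := (Z : Module.End ℤ V) - 1 with hc
        have hZc : (Z : Module.End ℤ V) = 1 + c := by rw [hc]; abel
        rw [pow_succ, ih, hZc, add_mul, mul_add, mul_add, smul_mul_assoc, smul_mul_assoc, hZ,
          add_smul]
        simp; abel
    ext1
    push_cast
    rw [h1]
    have : p ^ m • ((Z : Module.End ℤ V) - 1) = 0 := by
      ext v
      exact hV (((Z : Module.End ℤ V) - 1) v)
    rw [this, add_zero]
  have hzp : ∀ Z : Γ, (Z : (Module.End ℤ V)ˣ) ^ p ^ m = 1 → IsPGroup p (zpowers Z) := by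
    intro Z hZ
    apply IsPGroup.of_card_dvd_pow (n := m)
    rw [Nat.card_zpowers]
    exact orderOf_dvd_of_pow_eq_one (by ext1; simpa using hZ)
  obtain ⟨P, hP⟩ := (hzp ⟨X, hXΓ⟩ (hpel X hX)).exists_le_sylow
  obtain ⟨Q, hQ⟩ := (hzp ⟨Y, hYΓ⟩ (hpel Y hY)).exists_le_sylow
  obtain ⟨h, hh⟩ := MulAction.exists_smul_eq Γ P Q
  -- a nonzero vector fixed by `P`
  obtain ⟨v, hv0, hvP⟩ : ∃ v : V, v ≠ 0 ∧ ∀ g ∈ P, ((g : (Module.End ℤ V)ˣ) : Module.End ℤ V) v = v := by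
    let act : MulAction P V :=
      { smul := fun g v => (((g : Γ) : (Module.End ℤ V)ˣ) : Module.End ℤ V) v
        one_smul := fun v => rfl
        mul_smul := fun g h v => rfl }
    have hpdvd : p ∣ Nat.card V := by
      have hpg : IsPGroup p (Multiplicative V) := fun v => ⟨m, hV v.toAdd⟩
      rcases (show IsPGroup p (Multiplicative V) from hpg).card_eq_or_dvd with h1 | h1
      · exfalso
        have : Nat.card V = 1 := h1
        have := (Nat.card_eq_one_iff_unique.1 this).1
        exact not_subsingleton V this
      · exact h1
    obtain ⟨w, hw, hw0⟩ := (P.2 : IsPGroup p P).exists_fixed_point_of_prime_dvd_card_of_fixed_point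
      V hpdvd (a := 0) (fun g => map_zero (((g : Γ) : (Module.End ℤ V)ˣ) : Module.End ℤ V))
    exact ⟨w, fun h => hw0 h.symm, fun g hg => hw ⟨g, hg⟩⟩
  set H : (Module.End ℤ V)ˣ := (h : (Module.End ℤ V)ˣ) with hH
  have hav : a v = 0 := by
    have := hvP _ (hP (mem_zpowers _))
    rw [ha]
    change (X : Module.End ℤ V) v - v = 0
    exact sub_eq_zero.2 this
  have hbv : b ((H : Module.End ℤ V) v) = 0 := by
    have hYQ : (⟨Y, hYΓ⟩ : Γ) ∈ Q := hQ (mem_zpowers _)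
    rw [← hh] at hYQ
    have hYQ' : (⟨Y, hYΓ⟩ : Γ) ∈ ((h • P : Sylow p Γ) : Set Γ) := hYQ
    rw [Sylow.coe_smul] at hYQ'
    obtain ⟨g, hg, hgY⟩ := hYQ'
    have hgv := hvP g hg
    have e : (Y : (Module.End ℤ V)ˣ) = H * g * H⁻¹ := by
      have := congrArg (fun z : Γ => (z : (Module.End ℤ V)ˣ)) hgY
      simpa using this.symm
    have e2 : Y * H = H * g := by rw [e]; group
    have e3 := congrArg (fun z : (Module.End ℤ V)ˣ => (z : Module.End ℤ V) v) e2
    change (Y : Module.End ℤ V) ((H : Module.End ℤ V) v) = (H : Module.End ℤ V) (((g : (Module.End ℤ V)ˣ) : Module.End ℤ V) v) at e3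
    rw [hgv] at e3
    rw [hb]
    exact sub_eq_zero.2 e3
  have hHΓ : H ∈ Γ := h.2
  -- square roots in the odd-order group `Γ`
  set k : (Module.End ℤ V)ˣ := (Φ * H * Φ⁻¹)⁻¹ * H with hk
  have hkΓ : k ∈ Γ := mul_mem (inv_mem (hσ H hHΓ)) hHΓ
  have hΦ2 : Φ * Φ = 1 := Units.ext hff
  have hΦi : Φ⁻¹ = Φ := inv_eq_of_mul_eq_one_left hΦ2
  have hσk : Φ * k * Φ⁻¹ = k⁻¹ := by
    rw [hk, hΦi]
    simp only [mul_inv_rev, hΦi, inv_inv]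
    calc Φ * (Φ * (H⁻¹ * Φ) * H) * Φ = (Φ * Φ) * (H⁻¹ * Φ * H * Φ) := by group
      _ = H⁻¹ * (Φ * H * Φ) := by rw [hΦ2]; group
  set o := orderOf k with ho
  have hoodd : Odd o := by
    apply hodd.of_dvd_nat
    rw [ho]
    have := orderOf_dvd_natCard (⟨k, hkΓ⟩ : Γ)
    rwa [← Subgroup.orderOf_coe] at this
  obtain ⟨j, hj⟩ := hoodd
  set r := k ^ (j + 1) with hr
  have hr2 : r * r = k := by
    rw [hr, ← pow_add, show j + 1 + (j + 1) = o + 1 by omega, pow_succ, ho, pow_orderOf_eq_one,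
      one_mul]
  have hσr : Φ * r * Φ⁻¹ = r⁻¹ := by
    rw [hr, ← conj_pow, hσk, inv_pow]
  have hσH : Φ * H * Φ⁻¹ = H * r⁻¹ * r⁻¹ := by
    have : (Φ * H * Φ⁻¹) * k = H := by rw [hk]; group
    rw [← hr2] at this
    rw [← eq_mul_inv_iff_mul_eq] at this
    rw [this]; group
  have hcomm : Φ * (H * r⁻¹) * Φ⁻¹ = H * r⁻¹ := by
    have : Φ * (H * r⁻¹) * Φ⁻¹ = (Φ * H * Φ⁻¹) * (Φ * r * Φ⁻¹)⁻¹ := by group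
    rw [this, hσH, hσr]; group
  set c := H * r⁻¹ with hc
  have hcΦ : c⁻¹ * Φ = Φ * c⁻¹ := by
    have h1 : Φ * c = c * Φ := by rw [← hcomm]; nth_rewrite 2 [← hcomm]; group
    rw [inv_mul_eq_iff_eq_mul, ← mul_assoc, ← h1]; group
  have hrv : (r : Module.End ℤ V) v = ((c⁻¹ : (Module.End ℤ V)ˣ) : Module.End ℤ V) ((H : Module.End ℤ V) v) := by
    have : r = c⁻¹ * H := by rw [hc]; group
    rw [this]; rfl
  have hΦrv : f ((r : Module.End ℤ V) v) = - (r : Module.End ℤ V) v := by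
    rw [hrv]
    have e := congrArg (fun z : (Module.End ℤ V)ˣ => (z : Module.End ℤ V) ((H : Module.End ℤ V) v)) hcΦ
    change ((c⁻¹ : (Module.End ℤ V)ˣ) : Module.End ℤ V) (f ((H : Module.End ℤ V) v)) =
      f (((c⁻¹ : (Module.End ℤ V)ˣ) : Module.End ℤ V) ((H : Module.End ℤ V) v)) at e
    rw [← e, hkerb _ hbv, map_neg]
  have hrinv : ((r⁻¹ : (Module.End ℤ V)ˣ) : Module.End ℤ V) v = - (r : Module.End ℤ V) v := by
    rw [← hΦrv]
    have e1 : r⁻¹ * Φ = Φ * r := by rw [← hσr]; group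
    have e := congrArg (fun z : (Module.End ℤ V)ˣ => (z : Module.End ℤ V) v) e1
    change ((r⁻¹ : (Module.End ℤ V)ˣ) : Module.End ℤ V) (f v) = f ((r : Module.End ℤ V) v) at e
    rw [← e, hkera v hav]
  have hkv : (k : Module.End ℤ V) v = -v := by
    have e1 : v = - (k : Module.End ℤ V) v := by
      have e := congrArg (fun w => (r : Module.End ℤ V) w) hrinv
      simp only [map_neg] at e
      rw [← hr2]
      change v = - (r : Module.End ℤ V) ((r : Module.End ℤ V) v)
      rw [← e]
      change v = ((r * r⁻¹ : (Module.End ℤ V)ˣ) : Module.End ℤ V) v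
      rw [mul_inv_cancel]; rfl
    exact neg_eq_iff_eq_neg.1 e1.symm
  have hpow : ∀ i : ℕ, ((k ^ i : (Module.End ℤ V)ˣ) : Module.End ℤ V) v = (-1 : ℤ) ^ i • v := by
    intro i
    induction i with
    | zero => simp
    | succ i ih =>
      rw [pow_succ]
      change ((k ^ i : (Module.End ℤ V)ˣ) : Module.End ℤ V) ((k : Module.End ℤ V) v) = _
      rw [hkv, map_neg, ih, pow_succ]; simp
  have hfin := hpow o
  rw [ho, pow_orderOf_eq_one, ← ho, hj, Odd.neg_one_pow ⟨j, rfl⟩] at hfin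
  have h2v : (2 : ℕ) • v = 0 := by
    have : v = -v := by simpa using hfin
    rw [two_smul]; nth_rewrite 2 [this]; simp
  have hcop : Nat.Coprime 2 (p ^ m) := (Nat.coprime_two_left.2 hp2.pow)
  apply hv0
  have h1 : addOrderOf v ∣ 2 := addOrderOf_dvd_of_nsmul_eq_zero h2v
  have h2 : addOrderOf v ∣ p ^ m := addOrderOf_dvd_of_nsmul_eq_zero (hV v)
  have := Nat.eq_one_of_dvd_coprimes hcop h1 h2
  exact AddMonoid.addOrderOf_eq_one_iff.1 this

/-- `p`-stability of groups of odd order: if `x` and `y` act quadratically on a finite abelian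
`p`-group `V`, then the elements of `⟨x, y⟩` of order prime to `p` act trivially on `V`. -/
theorem pstable {G V : Type*} [Group G] [Finite G] (hG : Odd (Nat.card G))
    [AddCommGroup V] [Finite V] (p : ℕ) [hp : Fact p.Prime]
    (hp2 : Odd p) (m : ℕ) (hV : ∀ v : V, p ^ m • v = 0)
    (ρ : G →* Module.End ℤ V) (x y : G)
    (hx : (ρ x - 1) * (ρ x - 1) = 0) (hy : (ρ y - 1) * (ρ y - 1) = 0) :
    ∀ h ∈ closure {x, y}, (orderOf h).Coprime p → ρ h = 1 := by
  classical
  set a : Module.End ℤ V := ρ x - 1 with ha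
  set b : Module.End ℤ V := ρ y - 1 with hb
  set κ : Module.End ℤ V := a * b + b * a with hκ
  have hka : κ * a = a * κ := by
    rw [hκ, add_mul, mul_add, mul_assoc, mul_assoc b, hx, ← mul_assoc a a, hx]; simp
  have hkb : κ * b = b * κ := by
    rw [hκ, add_mul, mul_add, mul_assoc a, hy, ← mul_assoc b b, hy]; simp [mul_assoc]
  have hρx : ρ x = 1 + a := by rw [ha]; abel
  have hρy : ρ y = 1 + b := by rw [hb]; abel
  -- induction over the submonoid generated by `x` and `y`
  have hind : ∀ (q : G → Prop), q 1 → q x → q y → (∀ g h, q g → q h → q (g * h)) →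
      ∀ h ∈ closure {x, y}, q h := by
    intro q q1 qx qy qm h hh
    have : h ∈ Submonoid.closure {x, y} := by
      rw [← Subgroup.closure_toSubmonoid_of_finite]; exact hh
    induction this using Submonoid.closure_induction with
    | mem z hz =>
      rcases hz with rfl | rfl
      · exact qx
      · exact qy
    | one => exact q1
    | mul g h hg hh' ihg ihh =>
      refine qm g h (ihg ?_) (ihh ?_)
      · rw [← Subgroup.closure_toSubmonoid_of_finite] at hg; exact hg
      · rw [← Subgroup.closure_toSubmonoid_of_finite] at hh'; exact hh'
  have hkcomm : ∀ h ∈ closure {x, y}, Commute κ (ρ h) := by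
    apply hind
    · simp
    · rw [hρx]; exact (Commute.one_right _).add_right hka
    · rw [hρy]; exact (Commute.one_right _).add_right hkb
    · intro g h hg hh; rw [map_mul]; exact hg.mul_right hh
  -- `κ` is nilpotent
  obtain ⟨N, hN⟩ : ∃ N : ℕ, κ ^ N = 0 := by
    obtain ⟨N0, hN0⟩ := Filter.eventually_atTop.1 (LinearMap.eventually_isCompl_ker_pow_range_pow κ)
    refine ⟨N0 + 1, ?_⟩
    set N := N0 + 1
    have hc := hN0 N (Nat.le_succ _)
    set V1 : Submodule ℤ V := LinearMap.range (κ ^ N) with hV1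
    have hst : ∀ h ∈ closure {x, y}, ∀ v ∈ V1, ρ h v ∈ V1 := by
      rintro h hh _ ⟨w, rfl⟩
      refine ⟨ρ h w, ?_⟩
      have := ((hkcomm h hh).pow_left N).eq
      exact congrArg (fun z : Module.End ℤ V => z w) this
    let ρ1 : closure {x, y} →* Module.End ℤ V1 :=
      { toFun := fun h => (ρ h).restrict (hst h h.2)
        map_one' := by ext v; simp
        map_mul' := by intro g h; ext v; simp }
    have hx' : x ∈ closure {x, y} := subset_closure (by simp)
    have hy' : y ∈ closure {x, y} := subset_closure (by simp)
    set X := ρ1.toHomUnits ⟨x, hx'⟩ with hX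
    set Y := ρ1.toHomUnits ⟨y, hy'⟩ with hY
    have hXa : ∀ v : V1, ((((X : Module.End ℤ V1) - 1) v : V1) : V) = a v := by
      intro v; rfl
    have hYb : ∀ v : V1, ((((Y : Module.End ℤ V1) - 1) v : V1) : V) = b v := by
      intro v; rfl
    have hss : Subsingleton V1 := by
      apply pstable_rigid p hp2 m (fun v => by ext; exact hV v) X Y
      · ext v
        rw [Module.End.mul_apply, hXa, hXa]
        exact congrArg (fun z : Module.End ℤ V => z v) hx
      · ext v
        rw [Module.End.mul_apply, hYb, hYb]
        exact congrArg (fun z : Module.End ℤ V => z v) hy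
      · have hle : closure {X, Y} ≤ ρ1.toHomUnits.range := by
          rw [closure_le]
          rintro z (rfl | rfl)
          · exact ⟨_, rfl⟩
          · exact ⟨_, rfl⟩
        apply Odd.of_dvd_nat _ (Subgroup.card_dvd_of_le hle)
        apply Odd.of_dvd_nat _ (Subgroup.card_range_dvd _)
        exact Odd.of_dvd_nat hG (Subgroup.card_subgroup_dvd_card _)
      · apply Finite.injective_iff_bijective.1
        rw [injective_iff_map_eq_zero]
        intro v hv
        have h1 : κ v = 0 := by
          have := congrArg (fun z : V1 => (z : V)) hv
          simp only [LinearMap.add_apply, Module.End.mul_apply, Submodule.coe_add, hXa, hYb] at this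
          exact this
        have h2 : (v : V) ∈ LinearMap.ker (κ ^ N) := by
          rw [LinearMap.mem_ker, pow_succ, Module.End.mul_apply, h1, map_zero]
        have h3 := (Submodule.disjoint_def.1 hc.disjoint) v h2 v.2
        ext; exact h3
    ext v
    have : (⟨(κ ^ N) v, v, rfl⟩ : V1) = 0 := Subsingleton.elim _ _
    exact congrArg (fun z : V1 => (z : V)) this
  -- submodules on which everything of order prime to `p` acts trivially
  let good : Submodule ℤ V → Prop := fun U =>
    (∀ v ∈ U, a v ∈ U) ∧ (∀ v ∈ U, b v ∈ U) ∧
      ∀ h ∈ closure {x, y}, (orderOf h).Coprime p → ∀ v ∈ U, ρ h v = v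
  have hstep : ∀ U, good U → good (U.comap a ⊓ U.comap b) ∧ U ≤ U.comap a ⊓ U.comap b := by
    rintro U ⟨h1, h2, h3⟩
    have hle : U ≤ U.comap a ⊓ U.comap b := fun v hv => ⟨h1 v hv, h2 v hv⟩
    refine ⟨⟨fun v hv => hle hv.1, fun v hv => hle hv.2, ?_⟩, hle⟩
    intro h hh hcop v hv
    have key : ∀ h ∈ closure {x, y}, (∀ u ∈ U, ρ h u ∈ U) ∧ ρ h v - v ∈ U := by
      apply hind
      · simp
      · refine ⟨fun u hu => ?_, hv.1⟩
        rw [hρx]; exact U.add_mem hu (h1 u hu)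
      · refine ⟨fun u hu => ?_, hv.2⟩
        rw [hρy]; exact U.add_mem hu (h2 u hu)
      · rintro g h ⟨hg1, hg2⟩ ⟨hh1, hh2⟩
        refine ⟨fun u hu => ?_, ?_⟩
        · rw [map_mul]; exact hg1 _ (hh1 _ hu)
        · have : ρ (g * h) v - v = ρ g (ρ h v - v) + (ρ g v - v) := by
            rw [map_mul, Module.End.mul_apply, map_sub]; abel
          rw [this]; exact U.add_mem (hg1 _ hh2) hg2
    set f := ρ h v - v with hf
    have hfU : f ∈ U := (key h hh).2
    have hfix : ρ h f = f := h3 h hh hcop f hfU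
    have hpow : ∀ i : ℕ, ρ (h ^ i) v = v + i • f := by
      intro i
      induction i with
      | zero => simp
      | succ i ih =>
        rw [pow_succ', map_mul, Module.End.mul_apply, ih, map_add, map_nsmul, hfix, add_smul,
          one_smul]
        have : ρ h v = v + f := by rw [hf]; abel
        rw [this]; abel
    have h4 := hpow (orderOf h)
    rw [pow_orderOf_eq_one, map_one] at h4
    have h5 : orderOf h • f = 0 := by simpa using h4
    have h6 := Nat.eq_one_of_dvd_coprimes (Nat.Coprime.pow_right m hcop)
      (addOrderOf_dvd_of_nsmul_eq_zero h5) (addOrderOf_dvd_of_nsmul_eq_zero (hV f))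
    have h7 : f = 0 := AddMonoid.addOrderOf_eq_one_iff.1 h6
    exact sub_eq_zero.1 h7
  have hker : ∀ i, good (LinearMap.ker (κ ^ i)) := by
    intro i
    induction i with
    | zero =>
      refine ⟨?_, ?_, ?_⟩
      · intro v hv; simp at hv; simp [hv]
      · intro v hv; simp at hv; simp [hv]
      · intro h _ _ v hv; simp at hv; simp [hv]
    | succ i ih =>
      set U := LinearMap.ker (κ ^ i) with hU
      obtain ⟨g1, l1⟩ := hstep U ih
      set U1 := U.comap a ⊓ U.comap b with hU1
      obtain ⟨g2, l2⟩ := hstep U1 g1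
      set U2 := U1.comap a ⊓ U1.comap b with hU2
      obtain ⟨g3, l3⟩ := hstep U2 g2
      set U3 := U2.comap a ⊓ U2.comap b with hU3
      have haa : ∀ v, a (a v) = 0 := fun v => congrArg (fun z : Module.End ℤ V => z v) hx
      have hbb : ∀ v, b (b v) = 0 := fun v => congrArg (fun z : Module.End ℤ V => z v) hy
      have hsub : LinearMap.ker (κ ^ (i + 1)) ≤ U3 := by
        intro w hw
        have hκw : κ w ∈ U := by
          rw [LinearMap.mem_ker, pow_succ, Module.End.mul_apply] at hw; exact hw
        have e : κ w = a (b w) + b (a w) := rfl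
        have m1 : a (b w) ∈ U1 := by
          refine ⟨?_, ?_⟩
          · change a (a (b w)) ∈ U; rw [haa]; exact U.zero_mem
          · change b (a (b w)) ∈ U
            have := ih.2.1 _ hκw
            rw [e, map_add, hbb, add_zero] at this; exact this
        have m2 : b (a w) ∈ U1 := by
          refine ⟨?_, ?_⟩
          · change a (b (a w)) ∈ U
            have := ih.1 _ hκw
            rw [e, map_add, haa, zero_add] at this; exact this
          · change b (b (a w)) ∈ U; rw [hbb]; exact U.zero_mem
        have m3 : a w ∈ U2 := by
          refine ⟨?_, m2⟩
          change a (a w) ∈ U1; rw [haa]; exact U1.zero_mem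
        have m4 : b w ∈ U2 := by
          refine ⟨m1, ?_⟩
          change b (b w) ∈ U1; rw [hbb]; exact U1.zero_mem
        exact ⟨m3, m4⟩
      refine ⟨?_, ?_, fun h hh hc v hv => g3.2.2 h hh hc v (hsub hv)⟩
      · intro v hv
        rw [LinearMap.mem_ker] at hv ⊢
        rw [← Module.End.mul_apply, (Commute.pow_left (show Commute κ a from hka) (i+1)).eq,
          Module.End.mul_apply, hv, map_zero]
      · intro v hv
        rw [LinearMap.mem_ker] at hv ⊢
        rw [← Module.End.mul_apply, (Commute.pow_left (show Commute κ b from hkb) (i+1)).eq,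
          Module.End.mul_apply, hv, map_zero]
  intro h hh hcop
  ext v
  exact (hker N).2.2 h hh hcop v (by rw [hN]; simp)

end

section
open Subgroup

theorem isPGroup_of_coprime_trivial {G : Type*} [Group G] [Finite G] (p : ℕ) [hp : Fact p.Prime]
    (K : Subgroup G) (h : ∀ z ∈ K, (orderOf z).Coprime p → z = 1) : IsPGroup p K := by
  rintro ⟨g, hg⟩
  obtain ⟨k, r, hr, hk⟩ := Nat.exists_eq_pow_mul_and_not_dvd (n := orderOf g)
    (orderOf_pos g).ne' p hp.out.ne_one
  refine ⟨k, ?_⟩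
  ext
  apply h _ (K.pow_mem hg _)
  change (orderOf (g ^ p ^ k)).Coprime p
  rw [orderOf_pow_of_dvd (pow_ne_zero _ hp.out.ne_zero) (by rw [hk]; exact dvd_mul_right _ _), hk,
    Nat.mul_div_cancel_left _ (pow_pos hp.out.pos k)]
  exact ((Nat.Prime.coprime_iff_not_dvd hp.out).2 hr).symm

/-- `pstable` for multiplicatively written abelian `p`-groups with an action by automorphisms. -/
theorem pstable_mul {G C : Type*} [Group G] [Finite G] (hG : Odd (Nat.card G))
    [CommGroup C] [Finite C] (p : ℕ) [hp : Fact p.Prime] (hp2 : Odd p) (hC : IsPGroup p C)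
    (φ : G →* MulAut C) (x y : G)
    (hx : ∀ c, φ x (φ x c * c⁻¹) = φ x c * c⁻¹) (hy : ∀ c, φ y (φ y c * c⁻¹) = φ y c * c⁻¹) :
    ∀ h ∈ closure {x, y}, (orderOf h).Coprime p → φ h = 1 := by
  obtain ⟨m, hm⟩ := IsPGroup.iff_card.1 hC
  let ρ : G →* Module.End ℤ (Additive C) :=
    { toFun := fun g => (MonoidHom.toAdditive (φ g).toMonoidHom).toIntLinearMap
      map_one' := by ext v; simp
      map_mul' := by intro g h; ext v; simp }
  have hρ : ∀ g (c : C), ρ g (Additive.ofMul c) = Additive.ofMul (φ g c) := fun g c => rfl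
  have key : ∀ z, (∀ c, φ z (φ z c * c⁻¹) = φ z c * c⁻¹) → (ρ z - 1) * (ρ z - 1) = 0 := by
    intro z hz
    ext c
    induction c using Additive.rec with
    | ofMul c =>
      have h1 : (ρ z - 1) (Additive.ofMul c) = Additive.ofMul (φ z c * c⁻¹) := by
        rw [LinearMap.sub_apply, hρ, ofMul_mul, ofMul_inv, sub_eq_add_neg]; rfl
      rw [Module.End.mul_apply, h1, LinearMap.sub_apply, hρ, hz]
      simp
  intro h hh hc
  have := pstable hG p hp2 m (V := Additive C)
    (fun v => by
      have : (v.toMul) ^ (p ^ m) = 1 := by rw [← hm]; exact pow_card_eq_one'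
      exact this) ρ x y (key x hx) (key y hy) h hh hc
  ext c
  have h2 := congrArg (fun z : Module.End ℤ (Additive C) => z (Additive.ofMul c)) this
  exact h2

/-- A `p'`-element acting trivially on `H / H'`, for a normal `p`-subgroup `H`, centralizes `H`. -/
theorem centralizes_of_trivial_abelianization {G : Type*} [Group G] [Finite G] (p : ℕ)
    [hp : Fact p.Prime] (H : Subgroup G) [H.Normal] (hH : IsPGroup p H) (z : G)
    (hz : (orderOf z).Coprime p)
    (htriv : ∀ h : H, Abelianization.of (MulAut.conjNormal z h) = Abelianization.of h) :
    z ∈ centralizer (H : Set G) := by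
  classical
  -- reduction to elements of prime power order
  suffices hq : ∀ q : ℕ, q.Prime → ∀ w ∈ zpowers z, (∃ k, orderOf w = q ^ k) →
      w ∈ centralizer (H : Set G) by
    by_contra hcon
    set S : Subgroup G := zpowers z ⊓ centralizer (H : Set G) with hS
    let K := S.subgroupOf (zpowers z)
    have hK1 : K.index ≠ 1 := by
      rw [Ne, Subgroup.index_eq_one]
      intro h
      have : (⟨z, mem_zpowers z⟩ : zpowers z) ∈ K := by rw [h]; trivial
      exact hcon this.2
    obtain ⟨q, hqp, hqd⟩ := Nat.exists_prime_and_dvd hK1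
    have : Fact q.Prime := ⟨hqp⟩
    obtain ⟨Q⟩ : Nonempty (Sylow q (zpowers z)) := inferInstance
    have hQK : (Q : Subgroup (zpowers z)) ≤ K := by
      intro w hw
      have hwz : (w : G) ∈ zpowers z := w.2
      refine ⟨hwz, hq q hqp w hwz ?_⟩
      obtain ⟨k, hk⟩ := (IsPGroup.iff_orderOf.1 Q.2) ⟨w, hw⟩
      refine ⟨k, ?_⟩
      rw [← hk, Subgroup.orderOf_coe, ← Subgroup.orderOf_mk]
    exact Q.not_dvd_index (hqd.trans (Subgroup.index_dvd_of_le hQK))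
  intro q hqp w hwz ⟨k, hk⟩
  have : Fact q.Prime := ⟨hqp⟩
  by_cases hw1 : w = 1
  · rw [hw1]; exact one_mem _
  have hqz : q ≠ p := by
    rintro rfl
    have h1 : q ∣ orderOf w := by
      rw [hk]; apply dvd_pow_self
      rintro rfl
      exact hw1 (orderOf_eq_one_iff.1 (by simpa using hk))
    have h2 : orderOf w ∣ orderOf z := orderOf_dvd_of_mem_zpowers hwz
    have := Nat.Coprime.eq_one_of_dvd (hz.symm) (h1.trans h2)
    exact hqp.one_lt.ne' this
  -- powers of `z` act trivially on the abelianization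
  have htw : ∀ u ∈ zpowers z, ∀ h : H,
      Abelianization.of (MulAut.conjNormal u h) = Abelianization.of h := by
    intro u hu
    let φ : G →* MulAut H := MulAut.conjNormal
    let T : Subgroup G :=
      { carrier := {u | ∀ h : H, Abelianization.of (φ u h) = Abelianization.of h}
        one_mem' := by intro h; simp
        mul_mem' := by
          intro a b ha hb h
          rw [map_mul, MulAut.mul_apply]
          exact (ha _).trans (hb _)
        inv_mem' := by
          intro a ha h
          have := ha ((φ a)⁻¹ h)
          rw [MulAut.apply_inv_self] at this
          rw [map_inv, this] }
    exact (zpowers_le (H := T)).2 htriv hu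
  let W := zpowers w
  have hWz : W ≤ zpowers z := zpowers_le.2 hwz
  have hWq : IsPGroup q W := IsPGroup.of_card (n := k) (by rw [Nat.card_zpowers, hk])
  let K : Subgroup H := (centralizer (W : Set G)).subgroupOf H
  have hKsup : K ⊔ commutator H = ⊤ := by
    rw [eq_top_iff]
    intro h _
    -- the coset of `h` modulo the derived subgroup has a fixed point
    let X := {a : H // Abelianization.of a = Abelianization.of h}
    let act : MulAction W X :=
      { smul := fun u a => ⟨MulAut.conjNormal (u : G) a.1, (htw u (hWz u.2) a.1).trans a.2⟩
        one_smul := fun a => by ext; change (((MulAut.conjNormal ((1 : W) : G) a.1 : H)) : G) = _; simp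
        mul_smul := fun u v a => by
          ext; change (((MulAut.conjNormal ((u * v : W) : G) a.1 : H)) : G) = _
          rw [Subgroup.coe_mul, map_mul]; rfl }
    have hcardX : Nat.card X = Nat.card (commutator H) := by
      refine Nat.card_congr
        { toFun := fun a => ⟨h⁻¹ * a.1, ?_⟩
          invFun := fun c => ⟨h * c.1, ?_⟩
          left_inv := fun a => by ext; simp
          right_inv := fun c => by ext; simp }
      · rw [← Abelianization.ker_of, MonoidHom.mem_ker, map_mul, map_inv, a.2, inv_mul_cancel]
      · have : Abelianization.of c.1 = 1 := by
          rw [← MonoidHom.mem_ker, Abelianization.ker_of]; exact c.2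
        rw [map_mul, this, mul_one]
    have hnd : ¬ q ∣ Nat.card X := by
      rw [hcardX]
      intro hd
      obtain ⟨e, he⟩ := IsPGroup.iff_card.1 (hH.to_subgroup (commutator H))
      rw [he] at hd
      exact hqz ((Nat.prime_dvd_prime_iff_eq hqp hp.out).1 (hqp.dvd_of_dvd_pow hd))
    obtain ⟨a, ha⟩ := hWq.nonempty_fixed_point_of_prime_not_dvd_card X hnd
    have haK : a.1 ∈ K := by
      change (a.1 : G) ∈ centralizer (W : Set G)
      rw [mem_centralizer_iff]
      intro u hu
      have := congrArg (fun c : X => ((c.1 : H) : G)) (ha ⟨u, hu⟩)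
      change u * (a.1 : G) * u⁻¹ = a.1 at this
      rw [mul_inv_eq_iff_eq_mul] at this
      exact this
    have e : h = a.1 * (a.1⁻¹ * h) := by group
    rw [e]
    refine mul_mem (mem_sup_left haK) (mem_sup_right ?_)
    rw [← Abelianization.ker_of, MonoidHom.mem_ker, map_mul, map_inv, a.2, inv_mul_cancel]
  have hnil : Group.IsNilpotent H := hH.isNilpotent
  have hKtop : K = ⊤ := by
    by_contra hne
    obtain ⟨M, hM, hKM⟩ := (eq_top_or_exists_le_coatom K).resolve_left hne
    have hMn : M.Normal :=
      NormalizerCondition.normal_of_coatom M Group.normalizerCondition_of_isNilpotent hM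
    have hcM : commutator H ≤ M := by
      have hs : IsSimpleGroup (H ⧸ M) := by
        have : Nontrivial (H ⧸ M) := QuotientGroup.nontrivial_iff.2 hM.1
        refine ⟨fun N hN => ?_⟩
        have h1 : M ≤ N.comap (QuotientGroup.mk' M) := by
          intro x hx
          rw [mem_comap, QuotientGroup.mk'_apply, (QuotientGroup.eq_one_iff x).2 hx]; exact one_mem _
        rcases hM.le_iff.1 h1 with h2 | h2
        · right
          rw [← map_comap_eq_self_of_surjective (QuotientGroup.mk'_surjective M) N, h2]
          exact map_top_of_surjective _ (QuotientGroup.mk'_surjective M)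
        · left
          rw [← map_comap_eq_self_of_surjective (QuotientGroup.mk'_surjective M) N, h2]
          simp
      have hcomm := (IsSimpleGroup.comm_iff_isSolvable (G := H ⧸ M)).2 inferInstance
      rw [commutator_def, commutator_le]
      intro a _ b _
      rw [← QuotientGroup.eq_one_iff]
      change QuotientGroup.mk' M (a * b * a⁻¹ * b⁻¹) = 1
      rw [map_mul, map_mul, map_mul, hcomm (QuotientGroup.mk' M a), map_inv, map_inv]; group
    have : (⊤ : Subgroup H) ≤ M := by rw [← hKsup]; exact sup_le hKM hcM
    exact hM.1 (top_le_iff.1 this)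
  rw [mem_centralizer_iff]
  intro h hh
  have : (⟨h, hh⟩ : H) ∈ K := by rw [hKtop]; trivial
  have h2 : h ∈ centralizer (W : Set G) := this
  exact (mem_centralizer_iff.1 h2 w (mem_zpowers w)).symm

end

/-! ### The subgroup `Dstar P` and its normality -/

section
open Subgroup

/-- The members of the family defining `Dstar P`: abelian subgroups `A` of `P` normalized by `P`
such that every element of `P` acting quadratically on `A` centralizes `A`.  Quadratic action
`[[a, x], x] = 1` is expressed as: `x` commutes with `a x a⁻¹`. -/
structure DMem {G : Type*} [Group G] (P A : Subgroup G) : Prop where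
  le : A ≤ P
  norm : ∀ x ∈ P, ∀ a ∈ A, x * a * x⁻¹ ∈ A
  comm : ∀ a ∈ A, ∀ b ∈ A, Commute a b
  quad : ∀ x ∈ P, (∀ a ∈ A, Commute x (a * x * a⁻¹)) → ∀ a ∈ A, Commute x a

/-- The characteristic abelian subgroup of a `p`-group `P` (a variant of Glauberman's
`ZJ`-subgroup) generated by the members of the family `DMem P`. -/
def Dstar {G : Type*} [Group G] (P : Subgroup G) : Subgroup G :=
  closure {a | ∃ A : Subgroup G, DMem P A ∧ a ∈ A}

section
variable {G : Type*} [Group G] {P A B : Subgroup G}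

theorem DMem.le_Dstar (h : DMem P A) : A ≤ Dstar P := fun _ ha => subset_closure ⟨A, h, ha⟩

theorem DMem.commute (hA : DMem P A) (hB : DMem P B) : ∀ a ∈ A, ∀ b ∈ B, Commute a b := by
  intro a ha b hb
  refine hB.quad a (hA.le ha) (fun c hc => ?_) b hb
  exact hA.comm _ ha _ (hA.norm c (hB.le hc) a ha)

theorem Dstar_mem (P : Subgroup G) : DMem P (Dstar P) := by
  have hcen : ∀ x, (∀ A, DMem P A → ∀ a ∈ A, Commute x a) → ∀ a ∈ Dstar P, Commute x a := by
    intro x h a ha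
    induction ha using closure_induction with
    | mem y hy => obtain ⟨A, hA, hy⟩ := hy; exact h A hA y hy
    | one => exact Commute.one_right x
    | mul y z _ _ hy hz => exact hy.mul_right hz
    | inv y _ hy => exact hy.inv_right
  refine ⟨?_, ?_, ?_, ?_⟩
  · rw [Dstar, closure_le]; rintro a ⟨A, hA, ha⟩; exact hA.le ha
  · intro x hx a ha
    induction ha using closure_induction with
    | mem y hy => obtain ⟨A, hA, hy⟩ := hy; exact hA.le_Dstar (hA.norm x hx y hy)
    | one => simp
    | mul y z _ _ hy hz =>
      have : x * (y * z) * x⁻¹ = (x * y * x⁻¹) * (x * z * x⁻¹) := by group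
      rw [this]; exact mul_mem hy hz
    | inv y _ hy =>
      have : x * y⁻¹ * x⁻¹ = (x * y * x⁻¹)⁻¹ := by group
      rw [this]; exact inv_mem hy
  · intro a ha b hb
    refine hcen a (fun B hB c hc => ?_) b hb
    refine Commute.symm (hcen c (fun A hA d hd => ?_) a ha)
    exact hB.commute hA c hc d hd
  · intro x hx h
    refine hcen x (fun A hA => ?_)
    exact hA.quad x hx (fun a ha => h a (hA.le_Dstar ha))

theorem Dstar_le (P : Subgroup G) : Dstar P ≤ P := (Dstar_mem P).le

theorem le_normalizer_Dstar (P : Subgroup G) : P ≤ normalizer (Dstar P : Set G) := by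
  intro x hx
  rw [mem_normalizer_iff]
  intro a
  refine ⟨(Dstar_mem P).norm x hx a, fun h => ?_⟩
  have := (Dstar_mem P).norm x⁻¹ (inv_mem hx) _ h
  have e : x⁻¹ * (x * a * x⁻¹) * x⁻¹⁻¹ = a := by group
  rwa [e] at this

theorem DMem_center (P : Subgroup G) : DMem P (P ⊓ centralizer (P : Set G)) := by
  have hc : ∀ x ∈ P, ∀ a ∈ P ⊓ centralizer (P : Set G), Commute x a := fun x hx a ha =>
    mem_centralizer_iff.1 ha.2 x hx
  refine ⟨inf_le_left, ?_, fun a ha b hb => hc a ha.1 b hb, fun x hx _ a ha => hc x hx a ha⟩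
  intro x hx a ha
  rw [(hc x hx a ha).eq, mul_inv_cancel_right]; exact ha

theorem Dstar_ne_bot [Finite G] (p : ℕ) [Fact p.Prime] (hP : IsPGroup p P) (h : P ≠ ⊥) :
    Dstar P ≠ ⊥ := by
  intro hD
  have hn : Nontrivial P := (nontrivial_iff_ne_bot P).2 h
  obtain ⟨z, hz⟩ := @exists_ne _ hP.center_nontrivial 1
  have h1 : ((z : P) : G) ∈ P ⊓ centralizer (P : Set G) := by
    refine mem_inf.2 ⟨(z : P).2, ?_⟩
    rw [mem_centralizer_iff]
    intro y hy
    exact congrArg (Subtype.val) (mem_center_iff.1 z.2 ⟨y, hy⟩)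
  have h2 := (DMem_center P).le_Dstar h1
  rw [hD, mem_bot] at h2
  exact hz (by ext; exact h2)

theorem DMem.map {G' : Type*} [Group G'] (f : G →* G') (hf : Set.InjOn f P) (hA : DMem P A) :
    DMem (P.map f) (A.map f) := by
  refine ⟨map_mono hA.le, ?_, ?_, ?_⟩
  · rintro _ ⟨x, hx, rfl⟩ _ ⟨a, ha, rfl⟩
    exact ⟨x * a * x⁻¹, hA.norm x hx a ha, by simp⟩
  · rintro _ ⟨x, hx, rfl⟩ _ ⟨a, ha, rfl⟩
    exact (hA.comm x hx a ha).map f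
  · rintro _ ⟨x, hx, rfl⟩ h _ ⟨a, ha, rfl⟩
    refine Commute.map (hA.quad x hx (fun b hb => ?_) a ha) f
    have := h (f b) ⟨b, hb, rfl⟩
    have hbP := hA.le hb
    have hy : b * x * b⁻¹ ∈ P := mul_mem (mul_mem hbP hx) (inv_mem hbP)
    apply hf (mul_mem hx hy) (mul_mem hy hx)
    simpa [Commute, SemiconjBy] using this

theorem Dstar_map {G' : Type*} [Group G'] (f : G →* G') (hf : Set.InjOn f P) :
    Dstar (P.map f) = (Dstar P).map f := by
  apply le_antisymm
  · rw [Dstar, closure_le]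
    rintro b ⟨B, hB, hb⟩
    have hB' : (P ⊓ B.comap f).map f = B := by
      apply le_antisymm
      · rintro _ ⟨x, hx, rfl⟩; exact hx.2
      · intro y hy
        obtain ⟨x, hx, rfl⟩ := hB.le hy
        exact ⟨x, ⟨hx, hy⟩, rfl⟩
    have : DMem P (P ⊓ B.comap f) := by
      have hcm : ∀ x ∈ P, ∀ y ∈ P, Commute (f x) (f y) → Commute x y := by
        intro x hx y hy h
        apply hf (mul_mem hx hy) (mul_mem hy hx)
        rw [map_mul, map_mul]; exact h
      refine ⟨inf_le_left, ?_, ?_, ?_⟩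
      · intro x hx a ha
        refine mem_inf.2 ⟨mul_mem (mul_mem hx ha.1) (inv_mem hx), ?_⟩
        rw [mem_comap, map_mul, map_mul, map_inv]
        exact hB.norm _ ⟨x, hx, rfl⟩ _ ha.2
      · intro a ha b hb
        exact hcm a ha.1 b hb.1 (hB.comm _ ha.2 _ hb.2)
      · intro x hx h a ha
        refine hcm x hx a ha.1 (hB.quad _ ⟨x, hx, rfl⟩ (fun b hb => ?_) _ ha.2)
        obtain ⟨c, hc, rfl⟩ := hB.le hb
        have := (h c ⟨hc, hb⟩).map f
        simpa using this
    rw [← hB'] at hb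
    exact map_mono this.le_Dstar hb
  · exact ((Dstar_mem P).map f hf).le_Dstar

theorem Dstar_conj (P : Subgroup G) (g : G) :
    Dstar (P.map (MulAut.conj g).toMonoidHom) = (Dstar P).map (MulAut.conj g).toMonoidHom :=
  Dstar_map _ ((MulAut.conj g).injective.injOn)

end

/-- If every conjugate of `x` acts quadratically on the abelian `p`-group `C`, then the image of
`x` in the group of automorphisms induced by `G` lies in a normal `p`-subgroup, by `p`-stability
and Baer–Suzuki. -/
theorem quad_normal_p {G C : Type*} [Group G] [Finite G] (hG : Odd (Nat.card G))
    [CommGroup C] [Finite C] (p : ℕ) [hp : Fact p.Prime] (hp2 : Odd p) (hC : IsPGroup p C)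
    (φ : G →* MulAut C) (x : G)
    (hx : ∀ g c, φ (g * x * g⁻¹) (φ (g * x * g⁻¹) c * c⁻¹) = φ (g * x * g⁻¹) c * c⁻¹) :
    ∃ N : Subgroup φ.range, N.Normal ∧ IsPGroup p N ∧ φ.rangeRestrict x ∈ N := by
  apply baer_suzuki
  rintro ⟨_, g, rfl⟩
  have hst := pstable_mul hG p hp2 hC φ x (g * x * g⁻¹) (by simpa using hx 1) (hx g)
  have hK : closure {φ.rangeRestrict x, ⟨φ g, g, rfl⟩ * φ.rangeRestrict x * ⟨φ g, g, rfl⟩⁻¹} =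
      (closure {x, g * x * g⁻¹}).map φ.rangeRestrict := by
    rw [MonoidHom.map_closure, Set.image_pair, map_mul, map_mul, map_inv]
    rfl
  rw [hK]
  rintro ⟨_, z, hz, rfl⟩
  obtain ⟨k, r, hr, hk⟩ := Nat.exists_eq_pow_mul_and_not_dvd (n := orderOf z)
    (orderOf_pos z).ne' p hp.out.ne_one
  refine ⟨k, ?_⟩
  ext1
  change (φ.rangeRestrict z) ^ p ^ k = 1
  rw [← map_pow]
  ext1
  apply hst _ (pow_mem hz _)
  rw [orderOf_pow_of_dvd (pow_ne_zero _ hp.out.ne_zero) (by rw [hk]; exact dvd_mul_right _ _), hk,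
    Nat.mul_div_cancel_left _ (pow_pos hp.out.pos k)]
  exact ((Nat.Prime.coprime_iff_not_dvd hp.out).2 hr).symm

/-- If `x` commutes with all `h x h⁻¹`, `h ∈ H`, then `x` lies in a normal `p`-subgroup,
provided `H` is a self-centralizing normal `p`-subgroup. -/
theorem quad_mem_core {G : Type*} [Group G] [Finite G] (hG : Odd (Nat.card G))
    (p : ℕ) [hp : Fact p.Prime] (hp2 : Odd p) (H : Subgroup G) [H.Normal] (hH : IsPGroup p H)
    (hcen : centralizer (H : Set G) ≤ H) (x : G)
    (hx : ∀ h ∈ H, Commute x (h * x * h⁻¹)) :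
    ∃ N : Subgroup G, N.Normal ∧ IsPGroup p N ∧ x ∈ N := by
  let φ : G →* MulAut (Abelianization H) :=
    { toFun := fun g => (MulAut.conjNormal g : MulAut H).abelianizationCongr
      map_one' := by
        ext c
        obtain ⟨c, rfl⟩ := QuotientGroup.mk_surjective c
        change Abelianization.of (MulAut.conjNormal (1 : G) c) = Abelianization.of c
        simp
      map_mul' := by
        intro g h
        ext c
        obtain ⟨c, rfl⟩ := QuotientGroup.mk_surjective c
        change Abelianization.of (MulAut.conjNormal (g * h) c) =
          Abelianization.of (MulAut.conjNormal g (MulAut.conjNormal h c))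
        simp }
  have hφ : ∀ g (h : H), φ g (Abelianization.of h) = Abelianization.of (MulAut.conjNormal g h) :=
    fun g h => rfl
  have hquad : ∀ y, (∀ h ∈ H, Commute y (h * y * h⁻¹)) →
      ∀ c, φ y (φ y c * c⁻¹) = φ y c * c⁻¹ := by
    intro y hy c
    obtain ⟨h, rfl⟩ := QuotientGroup.mk_surjective c
    change φ y (φ y (Abelianization.of h) * (Abelianization.of h)⁻¹) =
      φ y (Abelianization.of h) * (Abelianization.of h)⁻¹
    rw [hφ, ← map_inv, ← map_mul, hφ]
    congr 1
    ext
    simp only [MulAut.conjNormal_apply, coe_mul, coe_inv]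
    have := (hy h h.2).inv_right
    have e : ((h : G) * y * (h : G)⁻¹)⁻¹ = h * y⁻¹ * (h : G)⁻¹ := by group
    rw [e] at this
    have h2 : Commute y (y * (h * y⁻¹ * (h : G)⁻¹)) := (Commute.refl y).mul_right this
    have e2 : y * (h : G) * y⁻¹ * (h : G)⁻¹ = y * (h * y⁻¹ * (h : G)⁻¹) := by group
    rw [e2, h2.eq, mul_inv_cancel_right]
  have hxg : ∀ g, ∀ h ∈ H, Commute (g * x * g⁻¹) (h * (g * x * g⁻¹) * h⁻¹) := by
    intro g h hh
    have h1 : g⁻¹ * h * g ∈ H := by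
      simpa using (inferInstance : H.Normal).conj_mem h hh g⁻¹
    have := (hx _ h1).map (MulAut.conj g).toMonoidHom
    simp only [MulEquiv.toMonoidHom_eq_coe, MonoidHom.coe_coe, MulAut.conj_apply] at this
    convert this using 1
    group
  apply baer_suzuki
  intro g
  apply isPGroup_of_coprime_trivial
  intro z hz hzc
  have hpC : IsPGroup p (Abelianization H) := hH.to_quotient _
  have := pstable_mul hG p hp2 hpC φ x (g * x * g⁻¹) (hquad x hx) (hquad _ (hxg g)) z hz hzc
  have hzH : z ∈ H := hcen (centralizes_of_trivial_abelianization p H hH z hzc (fun h => by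
    rw [← hφ, this]; rfl))
  obtain ⟨k, hk⟩ := IsPGroup.iff_orderOf.1 hH ⟨z, hzH⟩
  rw [Subgroup.orderOf_mk] at hk
  rw [hk] at hzc
  rcases Nat.eq_zero_or_pos k with rfl | hk0
  · exact orderOf_eq_one_iff.1 (by simpa using hk)
  · exfalso
    have := Nat.Coprime.eq_one_of_dvd hzc.symm (dvd_pow_self p hk0.ne')
    exact hp.out.one_lt.ne' this

end

section
open Subgroup

/-- A Glauberman-type theorem for `Dstar`: in a group of odd order with a normal `p`-subgroup
containing its centralizer, `Dstar P` is normal. -/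
theorem Dstar_normal {G : Type*} [Group G] [Finite G] (hG : Odd (Nat.card G))
    (p : ℕ) [hp : Fact p.Prime] (hp2 : Odd p) (H : Subgroup G) [H.Normal] (hH : IsPGroup p H)
    (hcen : centralizer (H : Set G) ≤ H) (P : Sylow p G) :
    (Dstar (P : Subgroup G)).Normal := by
  set D := Dstar (P : Subgroup G) with hD
  have hDm : DMem (P : Subgroup G) D := Dstar_mem _
  have hHP : H ≤ P := hH.le_sylow_of_normal P
  -- `D` lies in the largest normal `p`-subgroup
  have hcore : ∀ x ∈ D, ∃ N : Subgroup G, N.Normal ∧ IsPGroup p N ∧ x ∈ N := by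
    intro x hx
    apply quad_mem_core hG p hp2 H hH hcen
    intro h hh
    exact hDm.comm x hx _ (hDm.norm h (hHP hh) x hx)
  have hDP : ∀ x ∈ D, ∀ g : G, g * x * g⁻¹ ∈ (P : Subgroup G) := by
    intro x hx g
    obtain ⟨N, hN, hNp, hxN⟩ := hcore x hx
    exact hNp.le_sylow_of_normal P (hN.conj_mem x hxN g)
  -- conjugates of `D` commute with `D`
  have hcomm1 : ∀ g : G, ∀ d ∈ D, ∀ a ∈ D, Commute (g * d * g⁻¹) a := by
    intro g d hd
    refine hDm.quad _ (hDP d hd g) (fun a ha => ?_)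
    have h1 := hDP a ha g⁻¹
    rw [inv_inv] at h1
    have h2 := (hDm.comm d hd _ (hDm.norm _ h1 d hd)).map (MulAut.conj g).toMonoidHom
    simp only [MulEquiv.toMonoidHom_eq_coe, MonoidHom.coe_coe, MulAut.conj_apply] at h2
    convert h2 using 1
    group
  have hcomm : ∀ g g' : G, ∀ d ∈ D, ∀ a ∈ D, Commute (g * d * g⁻¹) (g' * a * g'⁻¹) := by
    intro g g' d hd a ha
    have h2 := (hcomm1 (g'⁻¹ * g) d hd a ha).map (MulAut.conj g').toMonoidHom
    simp only [MulEquiv.toMonoidHom_eq_coe, MonoidHom.coe_coe, MulAut.conj_apply] at h2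
    convert h2 using 1
    group
  set E := normalClosure (D : Set G) with hE
  have hEi : ∀ q : G → Prop, (∀ g, ∀ d ∈ D, q (g * d * g⁻¹)) → q 1 →
      (∀ a b, q a → q b → q (a * b)) → (∀ a, q a → q a⁻¹) → ∀ e ∈ E, q e := by
    intro q h1 h2 h3 h4 e he
    induction he using closure_induction with
    | mem y hy =>
      obtain ⟨d, hd, hdy⟩ := Group.mem_conjugatesOfSet_iff.1 hy
      obtain ⟨g, rfl⟩ := isConj_iff.1 hdy
      exact h1 g d hd
    | one => exact h2
    | mul y z _ _ hy hz => exact h3 _ _ hy hz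
    | inv y _ hy => exact h4 _ hy
  have hcE : ∀ x, (∀ g, ∀ d ∈ D, Commute x (g * d * g⁻¹)) → ∀ e ∈ E, Commute x e := by
    intro x hx
    exact hEi (fun e => Commute x e) hx (Commute.one_right x) (fun a b => Commute.mul_right)
      (fun a => Commute.inv_right)
  have hEcomm : ∀ e ∈ E, ∀ e' ∈ E, Commute e e' := by
    intro e he
    refine hcE e (fun g d hd => ?_)
    refine (hcE (g * d * g⁻¹) (fun g' d' hd' => hcomm _ _ _ hd _ hd') e he).symm
  have hDE : D ≤ E := subset_normalClosure
  have hEP : E ≤ P := by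
    intro e he
    refine hEi (fun e => e ∈ (P : Subgroup G)) (fun g d hd => hDP d hd g) (one_mem _) (fun a b => mul_mem)
      (fun a => inv_mem) e he
  have hEn : E.Normal := normalClosure_normal
  have hDE' : ∀ g, ∀ d ∈ D, g * d * g⁻¹ ∈ E := fun g d hd => hEn.conj_mem d (hDE hd) g
  have hmem : DMem (P : Subgroup G) E := by
    refine ⟨hEP, fun x _ a ha => hEn.conj_mem a ha x, hEcomm, ?_⟩
    intro x hxP hx
    let cg : CommGroup E :=
      { (inferInstance : Group E) with mul_comm := fun a b => by ext; exact hEcomm a a.2 b b.2 }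
    have hEp : IsPGroup p E := P.2.to_le hEP
    let φ : G →* MulAut E := MulAut.conjNormal
    have hφ : ∀ g (e : E), ((φ g e : E) : G) = g * e * g⁻¹ := fun g e => rfl
    have hact : ∀ y : G, ∀ e : E, Commute y ((e : G) * y * (e : G)⁻¹) →
        φ y (φ y e * e⁻¹) = φ y e * e⁻¹ := by
      intro y e h
      ext
      rw [hφ, coe_mul, hφ, coe_inv]
      have h1 := h.inv_right
      have e1 : ((e : G) * y * (e : G)⁻¹)⁻¹ = e * y⁻¹ * (e : G)⁻¹ := by group
      rw [e1] at h1
      have h2 : Commute y (y * (e * y⁻¹ * (e : G)⁻¹)) := (Commute.refl y).mul_right h1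
      have e2 : y * (e : G) * y⁻¹ * (e : G)⁻¹ = y * (e * y⁻¹ * (e : G)⁻¹) := by group
      rw [e2, h2.eq, mul_inv_cancel_right]
    obtain ⟨N, hN, hNp, hxN⟩ := quad_normal_p hG p hp2 hEp φ x (by
      intro g c
      apply hact
      have h1 : g⁻¹ * (c : G) * g ∈ E := by simpa using hEn.conj_mem c c.2 g⁻¹
      have h2 := (hx _ h1).map (MulAut.conj g).toMonoidHom
      simp only [MulEquiv.toMonoidHom_eq_coe, MonoidHom.coe_coe, MulAut.conj_apply] at h2
      convert h2 using 1
      group)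
    apply hcE
    intro g d hd
    -- replace `x` by an element of the Sylow subgroup `g P g⁻¹` with the same action on `E`
    obtain ⟨u, hu, hux⟩ : ∃ u ∈ ((g • P : Sylow p G) : Subgroup G), φ u = φ x := by
      have h1 := hNp.le_sylow_of_normal ((g • P).mapSurjective φ.rangeRestrict_surjective) hxN
      obtain ⟨u, hu, hux⟩ := h1
      exact ⟨u, hu, congrArg Subtype.val hux⟩
    have hue : ∀ e ∈ E, u * e * u⁻¹ = x * e * x⁻¹ := by
      intro e he
      have := congrArg (fun z : MulAut E => ((z ⟨e, he⟩ : E) : G)) hux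
      exact this
    obtain ⟨v, hv, rfl⟩ : ∃ v ∈ (P : Subgroup G), g * v * g⁻¹ = u := by
      rw [Sylow.coe_subgroup_smul] at hu
      obtain ⟨v, hv, hvu⟩ := hu
      exact ⟨v, hv, hvu⟩
    have hva : ∀ a ∈ D, Commute v (a * v * a⁻¹) := by
      intro a ha
      set u := g * v * g⁻¹ with hu'
      set b := g * a * g⁻¹ with hb
      have hbE : b ∈ E := hDE' g a ha
      set c := b * (x * b⁻¹ * x⁻¹) with hc
      have hcE' : c ∈ E := mul_mem hbE (hEn.conj_mem _ (inv_mem hbE) x)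
      have hxc : Commute x c := by
        have := (hx b hbE).mul_right ((Commute.refl x).inv_right)
        have e : b * x * b⁻¹ * x⁻¹ = c := by rw [hc]; group
        rwa [e] at this
      have huc : Commute u c := by
        have h1 := hue c hcE'
        rw [hxc.eq, mul_inv_cancel_right, mul_inv_eq_iff_eq_mul] at h1
        exact h1
      have hcu : b * u * b⁻¹ = c * u := by
        have h1 := hue b⁻¹ (inv_mem hbE)
        rw [hc, ← h1]; group
      have h2 : Commute u (b * u * b⁻¹) := by rw [hcu]; exact huc.mul_right (Commute.refl u)
      have h3 := h2.map (MulAut.conj g⁻¹).toMonoidHom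
      simp only [MulEquiv.toMonoidHom_eq_coe, MonoidHom.coe_coe, MulAut.conj_apply] at h3
      convert h3 using 1
      · rw [hu']; group
      · rw [hu', hb]; group
    have hvd := hDm.quad v hv hva d hd
    have h4 := hvd.map (MulAut.conj g).toMonoidHom
    simp only [MulEquiv.toMonoidHom_eq_coe, MonoidHom.coe_coe, MulAut.conj_apply] at h4
    have h5 := hue _ (hDE' g d hd)
    rw [h4.eq, mul_inv_cancel_right] at h5
    exact (mul_inv_eq_iff_eq_mul.1 h5.symm)
  have hEq : D = E := le_antisymm hDE hmem.le_Dstar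
  rw [hEq]; exact hEn

end

/-! ### Control of fusion by the normalizer of `Dstar P` -/

section
open Subgroup

section conj
variable {G : Type*} [Group G]

/-- The conjugate subgroup `g H g⁻¹`. -/
def cj (g : G) (H : Subgroup G) : Subgroup G := H.map (MulAut.conj g).toMonoidHom

theorem mem_cj {g : G} {H : Subgroup G} {x : G} : x ∈ cj g H ↔ g⁻¹ * x * g ∈ H := by
  constructor
  · rintro ⟨y, hy, rfl⟩
    have : g⁻¹ * (g * y * g⁻¹) * g = y := by group
    change g⁻¹ * (g * y * g⁻¹) * g ∈ H
    rw [this]; exact hy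
  · intro h
    refine ⟨_, h, ?_⟩
    change g * (g⁻¹ * x * g) * g⁻¹ = x
    group

theorem conj_mem_cj {g : G} {H : Subgroup G} {x : G} (h : x ∈ H) : g * x * g⁻¹ ∈ cj g H :=
  ⟨x, h, rfl⟩

theorem cj_le_iff {g : G} {H K : Subgroup G} : cj g H ≤ K ↔ ∀ h ∈ H, g * h * g⁻¹ ∈ K := by
  constructor
  · intro h x hx; exact h (conj_mem_cj hx)
  · rintro h _ ⟨y, hy, rfl⟩; exact h y hy

theorem cj_mul (g h : G) (H : Subgroup G) : cj (g * h) H = cj g (cj h H) := by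
  ext x; simp only [mem_cj]; rw [mul_inv_rev]; simp only [mul_assoc]

theorem cj_one (H : Subgroup G) : cj 1 H = H := by ext x; simp [mem_cj]

theorem cj_inv_cj (g : G) (H : Subgroup G) : cj g⁻¹ (cj g H) = H := by
  rw [← cj_mul, inv_mul_cancel, cj_one]

theorem cj_cj_inv (g : G) (H : Subgroup G) : cj g (cj g⁻¹ H) = H := by
  rw [← cj_mul, mul_inv_cancel, cj_one]

theorem cj_mono {g : G} {H K : Subgroup G} (h : H ≤ K) : cj g H ≤ cj g K := map_mono h

theorem card_cj (g : G) (H : Subgroup G) : Nat.card (cj g H) = Nat.card H :=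
  Subgroup.card_map_of_injective (MulAut.conj g).injective

theorem isPGroup_cj {p : ℕ} {H : Subgroup G} (h : IsPGroup p H) (g : G) : IsPGroup p (cj g H) :=
  h.map _

theorem cj_eq_of_mem_normalizer {g : G} {H : Subgroup G} (h : g ∈ normalizer (H : Set G)) :
    cj g H = H := by
  ext x
  rw [mem_cj]
  have := mem_normalizer_iff.1 (inv_mem h) x
  rw [inv_inv] at this
  exact this.symm

theorem mem_normalizer_of_cj_eq {g : G} {H : Subgroup G} (h : cj g H = H) :
    g ∈ normalizer (H : Set G) := by
  rw [mem_normalizer_iff]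
  intro x
  constructor
  · intro hx; rw [← h]; exact conj_mem_cj hx
  · intro hx
    rw [← h, mem_cj] at hx
    convert hx using 1; group

theorem mem_normalizer_of_cj_le [Finite G] {g : G} {H : Subgroup G} (h : cj g H ≤ H) :
    g ∈ normalizer (H : Set G) :=
  mem_normalizer_of_cj_eq (eq_of_le_of_card_ge h (card_cj g H).ge)

theorem cj_normalizer (g : G) (H : Subgroup G) :
    cj g (normalizer (H : Set G)) = normalizer (cj g H : Set G) := by
  ext x
  rw [mem_cj]
  constructor
  · intro h
    apply mem_normalizer_of_cj_eq
    have e := cj_eq_of_mem_normalizer h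
    rw [mul_assoc, cj_mul, cj_mul] at e
    rw [← cj_cj_inv g (cj x (cj g H)), e]
  · intro h
    apply mem_normalizer_of_cj_eq
    rw [mul_assoc, cj_mul, cj_mul, cj_eq_of_mem_normalizer h, cj_inv_cj]

theorem cj_inf (g : G) (H K : Subgroup G) : cj g (H ⊓ K) = cj g H ⊓ cj g K := by
  ext x; simp [mem_cj]

theorem cj_eq_of_mem {g : G} {H : Subgroup G} (h : g ∈ H) : cj g H = H :=
  cj_eq_of_mem_normalizer (le_normalizer h)

theorem cj_of_normal {H : Subgroup G} [hn : H.Normal] (g : G) : cj g H = H := by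
  ext x
  rw [mem_cj, hn.mem_comm_iff, mul_inv_cancel_left]

theorem Dstar_cj (g : G) (P : Subgroup G) : Dstar (cj g P) = cj g (Dstar P) := Dstar_conj P g

theorem normalizer_le_normalizer_Dstar (P : Subgroup G) :
    normalizer (P : Set G) ≤ normalizer (Dstar P : Set G) := by
  intro g hg
  apply mem_normalizer_of_cj_eq
  rw [← Dstar_cj, cj_eq_of_mem_normalizer hg]

end conj

section sylow
variable {G : Type*} [Group G] [Finite G] {p : ℕ} [hp : Fact p.Prime]

/-- Sylow's theorem inside a subgroup `K`, for a `p`-subgroup `B` of index prime to `p` in `K`. -/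
theorem sylow_conj_sub {K A B : Subgroup G} (hBK : B ≤ K) (hB : IsPGroup p B)
    (hBi : ¬ p ∣ B.relIndex K) (hAK : A ≤ K) (hA : IsPGroup p A) : ∃ k ∈ K, cj k A ≤ B := by
  have hB' : IsPGroup p (B.subgroupOf K) := hB.comap_subtype
  let SB : Sylow p K := hB'.toSylow hBi
  have hA' : IsPGroup p (A.subgroupOf K) := hA.comap_subtype
  obtain ⟨SA, hSA⟩ := hA'.exists_le_sylow
  obtain ⟨k, hk⟩ := MulAction.exists_smul_eq K SA SB
  refine ⟨k, k.2, ?_⟩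
  rw [cj_le_iff]
  intro a ha
  have h1 : k * ⟨a, hAK ha⟩ * k⁻¹ ∈ (SB : Subgroup K) := by
    rw [← hk, Sylow.coe_subgroup_smul]
    exact ⟨⟨a, hAK ha⟩, hSA ha, rfl⟩
  exact h1

theorem relIndex_eq_of_mul {K Y B : Subgroup G} (hY : Y ≤ K)
    (h : ∀ k ∈ K, ∃ y ∈ Y, ∃ b ∈ B, k = y * b) : B.relIndex K = B.relIndex Y := by
  symm
  have hinj := (quotientSubgroupOfEmbeddingOfLE B hY).injective
  refine Nat.card_congr (Equiv.ofBijective _ ⟨hinj, fun q => ?_⟩)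
  obtain ⟨k, rfl⟩ := QuotientGroup.mk_surjective q
  obtain ⟨y, hy, b, hb, e⟩ := h k k.2
  refine ⟨QuotientGroup.mk ⟨y, hy⟩, ?_⟩
  rw [quotientSubgroupOfEmbeddingOfLE_apply_mk]
  rw [QuotientGroup.eq, mem_subgroupOf]
  change y⁻¹ * (k : G) ∈ B
  rw [e, inv_mul_cancel_left]; exact hb

theorem exists_mul_of_mem_sup {Y B : Subgroup G} (hB : B ≤ normalizer (Y : Set G)) {k : G}
    (hk : k ∈ Y ⊔ B) : ∃ y ∈ Y, ∃ b ∈ B, k = y * b := by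
  have : k ∈ ((Y ⊔ B : Subgroup G) : Set G) := hk
  rw [coe_mul_of_right_le_normalizer_left Y B hB] at this
  obtain ⟨y, hy, b, hb, e⟩ := this
  exact ⟨y, hy, b, hb, e.symm⟩

theorem cop_relIndex {Y B : Subgroup G} (hB : B ≤ normalizer (Y : Set G))
    (hY : (Nat.card Y).Coprime p) : ¬ p ∣ B.relIndex (Y ⊔ B) := by
  intro hd
  rw [relIndex_eq_of_mul le_sup_left (fun k hk => exists_mul_of_mem_sup hB hk)] at hd
  have h1 : B.relIndex Y ∣ Nat.card Y := index_dvd_card _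
  exact hp.out.one_lt.ne' (Nat.Coprime.eq_one_of_dvd hY.symm (hd.trans h1))

/-- Sylow's theorem in the product `Y B` of a `p`-group `B` with a `p'`-group `Y` which it
normalizes; the conjugating element can be taken in `Y`. -/
theorem cop_conj {Y A B : Subgroup G} (hB : B ≤ normalizer (Y : Set G))
    (hY : (Nat.card Y).Coprime p) (hBp : IsPGroup p B) (hA : IsPGroup p A) (hAB : A ≤ Y ⊔ B) :
    ∃ y ∈ Y, cj y A ≤ B := by
  obtain ⟨k, hk, hkA⟩ := sylow_conj_sub le_sup_right hBp (cop_relIndex hB hY) hAB hA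
  obtain ⟨b, hb, y, hy, rfl⟩ : ∃ b ∈ B, ∃ y ∈ Y, k = b * y := by
    obtain ⟨y, hy, b, hb, e⟩ := exists_mul_of_mem_sup hB (inv_mem hk)
    exact ⟨b⁻¹, inv_mem hb, y⁻¹, inv_mem hy, by rw [← mul_inv_rev, ← e, inv_inv]⟩
  refine ⟨y, hy, ?_⟩
  rw [cj_mul] at hkA
  have := cj_mono (g := b⁻¹) hkA
  rwa [cj_inv_cj, cj_eq_of_mem (inv_mem hb)] at this

end sylow

section ctl
variable {G : Type*} [Group G] {N H : Subgroup G} {g : G}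

/-- The conjugation `H → g H g⁻¹` is realized by an element of `N`. -/
def Ctl (N H : Subgroup G) (g : G) : Prop := ∃ n ∈ N, ∀ h ∈ H, n * h * n⁻¹ = g * h * g⁻¹

theorem Ctl.of_mem (h : g ∈ N) : Ctl N H g := ⟨g, h, fun _ _ => rfl⟩

theorem Ctl.mono {H' : Subgroup G} (h : Ctl N H g) (hH : H' ≤ H) : Ctl N H' g := by
  obtain ⟨n, hn, e⟩ := h
  exact ⟨n, hn, fun x hx => e x (hH hx)⟩

theorem Ctl.mul {g' : G} (h : Ctl N H g) (h' : Ctl N (cj g H) g') : Ctl N H (g' * g) := by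
  obtain ⟨n, hn, e⟩ := h
  obtain ⟨n', hn', e'⟩ := h'
  refine ⟨n' * n, mul_mem hn' hn, fun x hx => ?_⟩
  have := e' _ (conj_mem_cj hx)
  rw [← e x hx] at this
  calc n' * n * x * (n' * n)⁻¹ = n' * (n * x * n⁻¹) * n'⁻¹ := by group
    _ = g' * (n * x * n⁻¹) * g'⁻¹ := this
    _ = g' * (g * x * g⁻¹) * g'⁻¹ := by rw [e x hx]
    _ = _ := by group

theorem Ctl.inv (h : Ctl N H g) : Ctl N (cj g H) g⁻¹ := by
  obtain ⟨n, hn, e⟩ := h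
  refine ⟨n⁻¹, inv_mem hn, fun x hx => ?_⟩
  rw [mem_cj] at hx
  have := e _ hx
  have e2 : g * (g⁻¹ * x * g) * g⁻¹ = x := by group
  rw [e2] at this
  rw [inv_inv, inv_inv]
  nth_rewrite 1 [← this]
  group

theorem Ctl.congr {g' : G} (h : Ctl N H g) (e : ∀ h ∈ H, g * h * g⁻¹ = g' * h * g'⁻¹) :
    Ctl N H g' := by
  obtain ⟨n, hn, e'⟩ := h
  exact ⟨n, hn, fun x hx => (e' x hx).trans (e x hx)⟩

theorem cj_congr {g g' : G} (e : ∀ h ∈ H, g * h * g⁻¹ = g' * h * g'⁻¹) : cj g H = cj g' H := by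
  apply le_antisymm <;> rw [cj_le_iff] <;> intro h hh
  · rw [e h hh]; exact conj_mem_cj hh
  · rw [← e h hh]; exact conj_mem_cj hh

end ctl

section F
variable {G : Type*} [Group G] [Finite G] {p : ℕ} [hp : Fact p.Prime]

/-- `N_G(D*(P))` controls fusion in `P`. -/
def FProp (p : ℕ) (G : Type*) [Group G] : Prop :=
  ∀ P : Sylow p G, ∀ H : Subgroup G, H ≤ P → ∀ g : G, cj g H ≤ P →
    Ctl (normalizer (Dstar (P : Subgroup G) : Set G)) H g

/-- Fusion control in a subgroup `M`, expressed by elements and subgroups of the ambient group;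
`Q` is a Sylow `p`-subgroup of `M`. -/
theorem F_sub {M Q H : Subgroup G} (hF : FProp p M) (hQM : Q ≤ M) (hQ : IsPGroup p Q)
    (hQi : ¬ p ∣ Q.relIndex M) (hH : H ≤ Q) {g : G} (hg : g ∈ M) (hgH : cj g H ≤ Q) :
    Ctl (M ⊓ normalizer (Dstar Q : Set G)) H g := by
  have hQ' : IsPGroup p (Q.subgroupOf M) := hQ.comap_subtype
  let S : Sylow p M := hQ'.toSylow hQi
  have hmapS : (S : Subgroup M).map M.subtype = Q := by
    change (Q.subgroupOf M).map M.subtype = Q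
    rw [subgroupOf_map_subtype, inf_eq_left.2 hQM]
  have hc : cj (⟨g, hg⟩ : M) (H.subgroupOf M) ≤ S := by
    rw [cj_le_iff]
    intro h hh
    exact hgH (conj_mem_cj (mem_subgroupOf.1 hh))
  obtain ⟨n, hn, e⟩ := hF S (H.subgroupOf M) (fun x hx => hH hx) ⟨g, hg⟩ hc
  refine ⟨n, mem_inf.2 ⟨n.2, ?_⟩, fun h hh => ?_⟩
  · have hD : Dstar Q = (Dstar (S : Subgroup M)).map M.subtype := by
      rw [← hmapS, Dstar_map _ (M.subtype_injective.injOn)]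
    rw [hD]
    apply mem_normalizer_of_cj_le
    rw [cj_le_iff]
    rintro _ ⟨x, hx, rfl⟩
    exact ⟨n * x * n⁻¹, (mem_normalizer_iff.1 hn x).1 hx, by simp⟩
  · have := e ⟨h, hQM (hH hh)⟩ hh
    exact congrArg Subtype.val this

end F

end

section
open Subgroup

section
variable {G : Type*} [Group G] [Finite G] {p : ℕ} [hp : Fact p.Prime]

theorem Ctl.mono_left {N N' H : Subgroup G} {g : G} (h : Ctl N H g) (hN : N ≤ N') :
    Ctl N' H g := by
  obtain ⟨n, hn, e⟩ := h
  exact ⟨n, hN hn, e⟩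

theorem cop_inf_eq_bot {Y P : Subgroup G} (hY : (Nat.card Y).Coprime p) (hP : IsPGroup p P) :
    Y ⊓ P = ⊥ := by
  refine disjoint_iff.1 (Subgroup.disjoint_of_coprime_natCard ?_)
  obtain ⟨n, hn⟩ := (IsPGroup.iff_card).1 hP
  rw [hn]
  exact hY.pow_right n

/-- Fusion control passes from `G / Y` to `G` when `Y` is a normal `p'`-subgroup. -/
theorem FProp_of_quotient (Y : Subgroup G) [hYn : Y.Normal] (hY : (Nat.card Y).Coprime p)
    (hF : FProp p (G ⧸ Y)) : FProp p G := by
  intro P H hH g hg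
  set π := QuotientGroup.mk' Y with hπ
  have hsurj : Function.Surjective π := QuotientGroup.mk'_surjective Y
  have hπ1 : ∀ x, π x = 1 ↔ x ∈ Y := fun x => QuotientGroup.eq_one_iff x
  have hπe : ∀ x y, π x = π y → x * y⁻¹ ∈ Y := fun x y h => by
    rw [← hπ1, map_mul, map_inv, h, mul_inv_cancel]
  have hinj : Set.InjOn π (P : Subgroup G) := by
    intro x hx y hy hxy
    have : x * y⁻¹ ∈ Y ⊓ P := mem_inf.2 ⟨hπe _ _ hxy, mul_mem hx (inv_mem hy)⟩
    rw [cop_inf_eq_bot hY P.2, mem_bot] at this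
    exact mul_inv_eq_one.1 this
  set D := Dstar (P : Subgroup G) with hD
  set N := normalizer (D : Set G) with hN
  have hDP : D ≤ P := Dstar_le _
  have hPN : (P : Subgroup G) ≤ N := le_normalizer_Dstar _
  have hPbar : ((P.mapSurjective hsurj : Sylow p (G ⧸ Y)) : Subgroup (G ⧸ Y)) =
    (P : Subgroup G).map π := rfl
  obtain ⟨nb, hnb, e⟩ := hF (P.mapSurjective hsurj) (H.map π) (by rw [hPbar]; exact map_mono hH)
    (π g) (by
      rw [hPbar, cj_le_iff]
      rintro _ ⟨h, hh, rfl⟩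
      exact ⟨g * h * g⁻¹, hg (conj_mem_cj hh), by simp⟩)
  obtain ⟨n1, rfl⟩ := hsurj nb
  rw [hPbar, Dstar_map π hinj] at hnb
  have hpD : IsPGroup p D := P.2.to_le hDP
  have hle : cj n1 D ≤ Y ⊔ D := by
    rw [cj_le_iff]
    intro d hd
    obtain ⟨d', hd', e'⟩ := (mem_normalizer_iff.1 hnb (π d)).1 ⟨d, hd, rfl⟩
    have h1 : (n1 * d * n1⁻¹) * d'⁻¹ ∈ Y := hπe _ _ (by rw [e']; simp)
    have := mul_mem (mem_sup_left (T := D) h1) (mem_sup_right (S := Y) hd')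
    rwa [inv_mul_cancel_right] at this
  have hYN : ∀ B : Subgroup G, B ≤ normalizer (Y : Set G) := fun B => by
    rw [normalizer_eq_top]; exact le_top
  obtain ⟨y, hy, hyD⟩ := cop_conj (hYN D) hY hpD (isPGroup_cj hpD n1) hle
  rw [← cj_mul] at hyD
  set n := y * n1 with hn
  have hnN : n ∈ N := mem_normalizer_of_cj_le hyD
  have e1 : ∀ h ∈ H, π (n * h * n⁻¹) = π (g * h * g⁻¹) := by
    intro h hh
    have := e (π h) ⟨h, hh, rfl⟩
    simp only [map_mul, map_inv, hn, (hπ1 y).2 hy, one_mul]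
    exact this
  have hH1N : cj g H ≤ N := hg.trans hPN
  have hle2 : cj n H ≤ (N ⊓ Y) ⊔ cj g H := by
    rw [cj_le_iff]
    intro h hh
    have h1 : (n * h * n⁻¹) * (g * h * g⁻¹)⁻¹ ∈ N ⊓ Y :=
      mem_inf.2 ⟨mul_mem (mul_mem (mul_mem hnN (hPN (hH hh))) (inv_mem hnN))
        (inv_mem (hH1N (conj_mem_cj hh))), hπe _ _ (e1 h hh)⟩
    have := mul_mem (mem_sup_left (T := cj g H) h1)
      (mem_sup_right (S := N ⊓ Y) (conj_mem_cj (g := g) hh))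
    rwa [inv_mul_cancel_right] at this
  have hpH : IsPGroup p H := P.2.to_le hH
  have hNY : cj g H ≤ normalizer ((N ⊓ Y : Subgroup G) : Set G) := by
    intro x hx
    apply mem_normalizer_of_cj_eq
    rw [cj_inf, cj_eq_of_mem (hH1N hx), cj_of_normal]
  have hcop : (Nat.card (N ⊓ Y : Subgroup G)).Coprime p :=
    Nat.Coprime.coprime_dvd_left (card_dvd_of_le inf_le_right) hY
  obtain ⟨w, hw, hwH⟩ := cop_conj hNY hcop (isPGroup_cj hpH g) (isPGroup_cj hpH n) hle2
  have hwm := mem_inf.1 hw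
  refine ⟨w * n, mul_mem hwm.1 hnN, fun h hh => ?_⟩
  rw [← cj_mul] at hwH
  apply hinj (hg (hwH (conj_mem_cj hh))) (hg (conj_mem_cj hh))
  rw [← e1 h hh]
  simp [(hπ1 w).2 hwm.2]

theorem Sylow.not_dvd_relIndex (P : Sylow p G) {K : Subgroup G} (h : (P : Subgroup G) ≤ K) :
    ¬ p ∣ (P : Subgroup G).relIndex K := fun hd =>
  P.not_dvd_index (hd.trans ⟨_, (relIndex_mul_index h).symm⟩)

/-- If `G = G1 G2` with both factors containing `P`, fusion in `P` is composed of fusion in `G1`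
and in `G2`, by Sylow's theorem. -/
theorem F_factor {P : Sylow p G} {G1 G2 N : Subgroup G} (hP1 : (P : Subgroup G) ≤ G1)
    (hP2 : (P : Subgroup G) ≤ G2)
    (h1 : ∀ H : Subgroup G, H ≤ P → ∀ g ∈ G1, cj g H ≤ P → Ctl N H g)
    (h2 : ∀ H : Subgroup G, H ≤ P → ∀ g ∈ G2, cj g H ≤ P → Ctl N H g)
    (hfac : ∀ g : G, ∃ m ∈ G1, ∃ c ∈ G2, g = m * c) :
    ∀ H : Subgroup G, H ≤ P → ∀ g, cj g H ≤ P → Ctl N H g := by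
  intro H hH g hg
  obtain ⟨m, hm, c, hc, rfl⟩ := hfac g
  have hT1 : cj c H ≤ G1 := by
    have : cj c H = cj m⁻¹ (cj (m * c) H) := by rw [cj_mul, cj_inv_cj]
    rw [this, ← cj_eq_of_mem (inv_mem hm)]
    exact cj_mono (hg.trans hP1)
  have hT2 : cj c H ≤ G2 := by
    rw [← cj_eq_of_mem hc]
    exact cj_mono (hH.trans hP2)
  have hPK : (P : Subgroup G) ≤ G1 ⊓ G2 := le_inf hP1 hP2
  obtain ⟨d, hd, hdT⟩ := sylow_conj_sub hPK P.2 (P.not_dvd_relIndex hPK) (le_inf hT1 hT2)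
    (isPGroup_cj (P.2.to_le hH) c)
  have hd' := mem_inf.1 hd
  rw [← cj_mul] at hdT
  have e : m * c = (m * d⁻¹) * (d * c) := by group
  rw [e] at hg ⊢
  refine (h2 H hH (d * c) (mul_mem hd'.2 hc) hdT).mul ?_
  refine h1 _ hdT _ (mul_mem hm (inv_mem hd'.1)) ?_
  rwa [← cj_mul]

/-- The largest normal `p`-subgroup. -/
def pcore (p : ℕ) (G : Type*) [Group G] : Subgroup G :=
  sSup {N : Subgroup G | N.Normal ∧ IsPGroup p N}

theorem le_pcore {N : Subgroup G} (h : N.Normal) (h' : IsPGroup p N) : N ≤ pcore p G :=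
  le_sSup ⟨h, h'⟩

instance pcore_normal : (pcore p G).Normal :=
  Subgroup.sSup_normal _ (fun _ h => h.1)

theorem pcore_isPGroup : IsPGroup p (pcore p G) := Sylow.sSup_of_normal _ (fun _ h => h.2) (fun _ h => h.1)

/-- In a group whose image under `φ` has Sylow subgroup `φ(S)`, a normal subgroup `U` with
`φ(U)` a `p`-group satisfies `φ(U) ≤ φ(S)`. -/
theorem normal_p_image {L : Type*} [Group L] (φ : G →* L) (S : Sylow p G) (U : Subgroup G)
    [hU : U.Normal] (h : ∀ v ∈ U, ∃ k, φ v ^ p ^ k = 1) : ∀ v ∈ U, ∃ w ∈ S, φ w = φ v := by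
  have hs := φ.rangeRestrict_surjective
  have : (U.map φ.rangeRestrict).Normal := hU.map _ hs
  have hp1 : IsPGroup p (U.map φ.rangeRestrict) := by
    rintro ⟨_, v, hv, rfl⟩
    obtain ⟨k, hk⟩ := h v hv
    refine ⟨k, ?_⟩
    ext
    simpa using hk
  have := hp1.le_sylow_of_normal (S.mapSurjective hs)
  intro v hv
  obtain ⟨w, hw, e⟩ := this ⟨v, hv, rfl⟩
  exact ⟨w, hw, congrArg Subtype.val e⟩

theorem lt_inf_normalizer {P X : Subgroup G} (hP : IsPGroup p P) (h : X < P) :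
    X < P ⊓ normalizer (X : Set G) := by
  have := hP.isNilpotent
  have hnc := Group.normalizerCondition_of_isNilpotent (G := P)
  have hlt : X.subgroupOf P < ⊤ := by
    rw [lt_top_iff_ne_top, Ne, subgroupOf_eq_top]
    exact not_le_of_gt h
  have := hnc _ hlt
  obtain ⟨y, hy, hyn⟩ := SetLike.exists_of_lt this
  refine lt_of_le_of_ne (le_inf h.le le_normalizer) (fun e => hyn ?_)
  rw [mem_subgroupOf, e]
  refine mem_inf.2 ⟨y.2, ?_⟩
  apply mem_normalizer_of_cj_le
  rw [cj_le_iff]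
  intro x hx
  exact (mem_normalizer_iff.1 hy ⟨x, h.le hx⟩).1 hx

/-- `X` is fully normalized in the Sylow subgroup `P`. -/
def FN (p : ℕ) (P X : Subgroup G) : Prop :=
  X ≤ P ∧ ¬ p ∣ (P ⊓ normalizer (X : Set G)).relIndex (normalizer (X : Set G))

/-- Every subgroup of `P` has a fully normalized conjugate, and any other conjugate in `P` can be
carried to it together with its normalizer in `P`. -/
theorem exists_FN (P : Sylow p G) {X : Subgroup G} (hX : X ≤ P) :
    ∃ X' : Subgroup G, (∃ a, cj a X = X') ∧ FN p (P : Subgroup G) X' ∧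
      ∀ X1 : Subgroup G, X1 ≤ P → (∃ b, cj b X1 = X') →
        ∃ a, cj a X1 = X' ∧ cj a ((P : Subgroup G) ⊓ normalizer (X1 : Set G)) ≤ (P : Subgroup G) ⊓ normalizer (X' : Set G) := by
  set M := normalizer (X : Set G) with hM
  have hXp : IsPGroup p (X.subgroupOf M) := (P.2.to_le hX).comap_subtype
  obtain ⟨S, hS⟩ := hXp.exists_le_sylow
  set S' := (S : Subgroup M).map M.subtype with hS'
  have hS'p : IsPGroup p S' := S.2.map _
  obtain ⟨a, -, ha⟩ := sylow_conj_sub (K := ⊤) (B := (P : Subgroup G)) le_top P.2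
    (P.not_dvd_relIndex le_top) (A := S') le_top hS'p
  have hXS : X ≤ S' := fun x hx => ⟨⟨x, le_normalizer hx⟩, hS hx, rfl⟩
  have hS'M : S' ≤ M := map_subtype_le _
  have hi : S'.relIndex M = (S : Subgroup M).index := by
    rw [relIndex]; congr 1
    exact comap_map_eq_self_of_injective M.subtype_injective _
  have hFN : FN p (P : Subgroup G) (cj a X) := by
    refine ⟨(cj_mono hXS).trans ha, ?_⟩
    have h1 : cj a S' ≤ (P : Subgroup G) ⊓ normalizer (cj a X : Set G) := by
      rw [← cj_normalizer]
      exact le_inf ha (cj_mono hS'M)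
    intro hd
    have h2 := hd.trans (relIndex_dvd_of_le_left (normalizer (cj a X : Set G)) h1)
    rw [← cj_normalizer] at h2
    have h3 : (cj a S').relIndex (cj a M) = S'.relIndex M :=
      relIndex_map_map_of_injective S' M (MulAut.conj a).injective
    rw [h3, hi] at h2
    exact S.not_dvd_index h2
  refine ⟨cj a X, ⟨a, rfl⟩, hFN, ?_⟩
  rintro X1 hX1 ⟨b, hb⟩
  have h1 : cj b ((P : Subgroup G) ⊓ normalizer (X1 : Set G)) ≤ normalizer (cj a X : Set G) := by
    rw [← hb, ← cj_normalizer]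
    exact cj_mono inf_le_right
  obtain ⟨k, hk, hkk⟩ := sylow_conj_sub inf_le_right (P.2.to_le inf_le_left) hFN.2 h1
    (isPGroup_cj (P.2.to_le inf_le_left) b)
  refine ⟨k * b, ?_, ?_⟩
  · rw [cj_mul, hb, cj_eq_of_mem_normalizer hk]
  · rw [cj_mul]; exact hkk

/-- Alperin-type descending induction on `|H|`: to control fusion in `P` it suffices to control
the automorphisms induced on fully normalized subgroups, given control for all larger subgroups.
-/
theorem desc_ind (P : Sylow p G) {N : Subgroup G} (hPN : normalizer (P : Set G) ≤ N)
    (step : ∀ s, (∀ H : Subgroup G, H ≤ P → s < Nat.card H → ∀ g, cj g H ≤ P → Ctl N H g) →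
      ∀ H : Subgroup G, Nat.card H = s → FN p (P : Subgroup G) H →
        ∀ u ∈ normalizer (H : Set G), Ctl N H u) :
    ∀ H : Subgroup G, H ≤ P → ∀ g, cj g H ≤ P → Ctl N H g := by
  suffices h : ∀ k, ∀ H : Subgroup G, H ≤ P → Nat.card (P : Subgroup G) - Nat.card H = k →
      ∀ g, cj g H ≤ P → Ctl N H g from fun H hH g hg => h _ H hH rfl g hg
  intro k
  induction k using Nat.strong_induction_on with
  | _ k ih =>
    intro H hH hk g hg
    have hcard : ∀ K : Subgroup G, K ≤ P → Nat.card K ≤ Nat.card (P : Subgroup G) :=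
      fun K hK => card_le_of_le hK
    have full : ∀ K : Subgroup G, K ≤ P → Nat.card H < Nat.card K → ∀ g, cj g K ≤ P → Ctl N K g := by
      intro K hK hlt g hg
      refine ih (Nat.card (P : Subgroup G) - Nat.card K) ?_ K hK rfl g hg
      have := hcard K hK
      omega
    by_cases hHP : H = P
    · subst hHP
      exact Ctl.of_mem (hPN (mem_normalizer_of_cj_le hg))
    obtain ⟨X', ⟨a0, ha0⟩, hFN, hX'⟩ := exists_FN P hH
    have reach : ∀ X1 : Subgroup G, X1 ≤ P → Nat.card X1 = Nat.card H → (∃ b, cj b X1 = X') →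
        ∃ a, cj a X1 = X' ∧ Ctl N X1 a := by
      intro X1 hX1 hc hb
      obtain ⟨a, ha, haa⟩ := hX' X1 hX1 hb
      refine ⟨a, ha, ?_⟩
      have hlt : X1 < P := by
        refine lt_of_le_of_ne hX1 (fun e => hHP ?_)
        refine eq_of_le_of_card_ge hH ?_
        rw [← hc, e]
      have h2 := lt_inf_normalizer P.2 hlt
      have h3 : Nat.card X1 < Nat.card ((P : Subgroup G) ⊓ normalizer (X1 : Set G) : Subgroup G) :=
        lt_of_not_ge fun h => h2.ne (eq_of_le_of_card_ge h2.le h)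
      exact (full _ inf_le_left (hc ▸ h3) a (haa.trans inf_le_left)).mono h2.le
    obtain ⟨a, ha, hca⟩ := reach H hH rfl ⟨a0, ha0⟩
    obtain ⟨b, hb, hcb⟩ := reach (cj g H) hg (card_cj g H) ⟨a0 * g⁻¹, by
      rw [cj_mul, cj_inv_cj, ha0]⟩
    have hX'c : Nat.card X' = Nat.card H := by rw [← ha, card_cj]
    have hu : b * g * a⁻¹ ∈ normalizer (X' : Set G) := by
      apply mem_normalizer_of_cj_eq
      rw [cj_mul, ← ha, cj_inv_cj, cj_mul, hb, ha]
    have h1 := step _ full X' hX'c hFN _ hu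
    have e : g = b⁻¹ * ((b * g * a⁻¹) * a) := by group
    rw [e]
    refine (hca.mul (ha.symm ▸ h1)).mul ?_
    rw [cj_mul, ha, cj_eq_of_mem_normalizer hu]
    have := hcb.inv
    rwa [hb] at this

end

end

section
open Subgroup

section
variable {G : Type*} [Group G] [Finite G] {p : ℕ} [hp : Fact p.Prime]

theorem relIndex_normal_not_dvd (P : Sylow p G) (C : Subgroup G) [hC : C.Normal] :
    ¬ p ∣ ((P : Subgroup G) ⊓ C).relIndex C := by
  intro hd
  rw [inf_relIndex_right] at hd
  have hn : (P : Subgroup G) ≤ normalizer (C : Set G) := by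
    rw [normalizer_eq_top]; exact le_top
  rw [← relIndex_eq_of_mul (K := C ⊔ P) le_sup_left
    (fun k hk => exists_mul_of_mem_sup hn hk)] at hd
  exact P.not_dvd_relIndex le_sup_right hd

theorem coprime_pow_eq_one {z : G} {a b : ℕ} (h : a.Coprime b) (ha : z ^ a = 1) (hb : z ^ b = 1) :
    z = 1 := by
  have h1 := Nat.dvd_gcd (orderOf_dvd_of_pow_eq_one ha) (orderOf_dvd_of_pow_eq_one hb)
  rw [h] at h1
  exact orderOf_eq_one_iff.1 (Nat.dvd_one.1 h1)

theorem pow_card_of_mem {H : Type*} [Group H] {K : Subgroup H} {k : H} (hk : k ∈ K) :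
    k ^ Nat.card K = 1 :=
  congrArg Subtype.val (pow_card_eq_one' (G := K) (x := ⟨k, hk⟩))

/-- If `G` has no non-trivial normal `p'`-subgroup and the Sylow subgroup of `C_G(O)` lies in `O`,
then it is central in `C_G(O)`, so that `C_G(O)` has a normal `p`-complement, which is trivial. -/
theorem centralizer_le_of_inf_le (P : Sylow p G) (O : Subgroup G) [hO : O.Normal]
    (hOp : IsPGroup p O) (hle : (P : Subgroup G) ⊓ centralizer (O : Set G) ≤ O)
    (hY : ∀ Y : Subgroup G, Y.Normal → (Nat.card Y).Coprime p → Y = ⊥) :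
    centralizer (O : Set G) ≤ O := by
  set C := centralizer (O : Set G) with hC
  have hCn : C.Normal := inferInstance
  set Z := ((P : Subgroup G) ⊓ C).subgroupOf C with hZ
  have hZc : ∀ z ∈ Z, ∀ c : C, z * c = c * z := by
    intro z hz c
    ext
    exact (mem_centralizer_iff.1 c.2 _ (hle hz))
  have hZn : Z.Normal := ⟨fun z hz c => by
    rw [← hZc z hz, mul_inv_cancel_right]; exact hz⟩
  have hZp : IsPGroup p Z := (P.2.to_le inf_le_left).comap_subtype
  have hcop1 : (Z.index).Coprime p := by
    rw [Nat.coprime_comm, hp.out.coprime_iff_not_dvd]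
    exact relIndex_normal_not_dvd P C
  obtain ⟨m, hm⟩ := (IsPGroup.iff_card).1 hZp
  have hcop : (Nat.card Z).Coprime Z.index := by
    rw [hm]; exact (hcop1.pow_right m).symm
  obtain ⟨K, hK⟩ := exists_right_complement'_of_coprime hcop
  have hKi : Nat.card K = Z.index := (hK.symm.index_eq_card).symm
  have hKm : ∀ c : C, c ^ Nat.card K = 1 → c ∈ K := by
    intro c hc
    obtain ⟨⟨z, k⟩, e⟩ := hK.2 c
    simp only at e
    have h1 : (z : C) ^ Nat.card K = 1 := by
      rw [← e, (show Commute (z : C) k from hZc z z.2 k).mul_pow] at hc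
      rw [pow_card_of_mem k.2, mul_one] at hc
      exact hc
    have h2 : (z : C) ^ Nat.card Z = 1 := pow_card_of_mem z.2
    have h3 := coprime_pow_eq_one (hKi ▸ hcop.symm) h1 h2
    rw [h3, one_mul] at e
    rw [← e]; exact k.2
  have hKn : (K.map C.subtype).Normal := by
    refine ⟨?_⟩
    rintro _ ⟨k, hk, rfl⟩ g
    refine ⟨⟨g * k * g⁻¹, hCn.conj_mem _ k.2 g⟩, hKm _ ?_, rfl⟩
    ext
    have : (k : C) ^ Nat.card K = 1 := pow_card_of_mem hk
    have h' : (k : G) ^ Nat.card K = 1 := by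
      have := congrArg Subtype.val this
      simpa using this
    simp [conj_pow, h']
  have hKb := hY _ hKn (by
    rw [card_map_of_injective C.subtype_injective, hKi]; exact hcop1)
  rw [map_eq_bot_iff_of_injective _ C.subtype_injective] at hKb
  subst hKb
  intro c hc
  obtain ⟨⟨z, k⟩, e⟩ := hK.2 ⟨c, hc⟩
  have hk : (k : C) = 1 := mem_bot.1 k.2
  simp only [hk, mul_one] at e
  have := z.2
  rw [e] at this
  exact hle this

/-- The step of the fusion induction when `G = C_G(O) P` for a normal `p`-subgroup `O`. -/
theorem step_biii (P : Sylow p G) {N : Subgroup G} (O : Subgroup G) [hO : O.Normal]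
    (hOp : IsPGroup p O) (hOmax : ∀ X : Subgroup G, X.Normal → IsPGroup p X → X ≤ O)
    (hPN : normalizer (P : Set G) ≤ N)
    (hF : FProp p (G ⧸ O))
    (hsub : ∀ M : Subgroup G, (P : Subgroup G) ≤ M → M ≠ ⊤ →
      ∀ H : Subgroup G, H ≤ P → ∀ g ∈ M, cj g H ≤ P → Ctl N H g)
    (hCP : centralizer (O : Set G) ⊔ P = ⊤) (s : ℕ)
    (full : ∀ H : Subgroup G, H ≤ P → s < Nat.card H → ∀ g, cj g H ≤ P → Ctl N H g)
    (H : Subgroup G) (hs : Nat.card H = s) (hFN : FN p (P : Subgroup G) H)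
    (u : G) (hu : u ∈ normalizer (H : Set G)) : Ctl N H u := by
  have hOP : O ≤ P := hOp.le_sylow_of_normal P
  have hHP := hFN.1
  by_cases hOH : O ≤ H
  swap
  · have hlt : H < H ⊔ O := lt_of_le_of_ne le_sup_left (fun e => hOH (e ▸ le_sup_right))
    have hc : s < Nat.card (H ⊔ O : Subgroup G) :=
      lt_of_not_ge fun h => hlt.ne (eq_of_le_of_card_ge hlt.le (hs ▸ h))
    refine (full (H ⊔ O) (sup_le hHP hOP) hc u ?_).mono le_sup_left
    have : cj u (H ⊔ O) = cj u H ⊔ cj u O := map_sup _ _ _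
    rw [this, cj_eq_of_mem_normalizer hu, cj_of_normal]
    exact sup_le hHP hOP
  by_cases hPO : (P : Subgroup G) ≤ O
  · refine Ctl.of_mem (hPN ?_)
    apply mem_normalizer_of_cj_eq
    rw [show (P : Subgroup G) = O from le_antisymm hPO hOP, cj_of_normal]
  set π := QuotientGroup.mk' O with hπ
  have hsurj : Function.Surjective π := QuotientGroup.mk'_surjective O
  have hker : π.ker = O := QuotientGroup.ker_mk' O
  have hπ1 : ∀ x, π x = 1 ↔ x ∈ O := fun x => QuotientGroup.eq_one_iff x
  have hπe : ∀ x y, π x = π y → x * y⁻¹ ∈ O := fun x y h => by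
    rw [← hπ1, map_mul, map_inv, h, mul_inv_cancel]
  have hPbar : ((P.mapSurjective hsurj : Sylow p (G ⧸ O)) : Subgroup (G ⧸ O)) =
    (P : Subgroup G).map π := rfl
  obtain ⟨nb, hnb, e⟩ := hF (P.mapSurjective hsurj) (H.map π) (by rw [hPbar]; exact map_mono hHP)
    (π u) (by
      rw [hPbar, cj_le_iff]
      rintro _ ⟨h, hh, rfl⟩
      exact ⟨u * h * u⁻¹, hHP ((mem_normalizer_iff.1 hu h).1 hh), by simp⟩)
  rw [hPbar] at hnb
  obtain ⟨n, rfl⟩ := hsurj nb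
  set Pb := (P : Subgroup G).map π with hPb
  have hPb0 : Pb ≠ ⊥ := by
    rw [hPb, Ne, Subgroup.map_eq_bot_iff, hker]; exact hPO
  have hPbp : IsPGroup p Pb := P.2.map _
  have hD0 := Dstar_ne_bot p hPbp hPb0
  set E := (Dstar Pb).comap π with hE
  have hEP : E ≤ P := by
    have h1 : E ≤ Pb.comap π := comap_mono (Dstar_le Pb)
    rwa [hPb, comap_map_eq_self (by rw [hker]; exact hOP)] at h1
  have hEO : ¬ E ≤ O := by
    intro h
    apply hD0
    rw [eq_bot_iff]
    intro x hx
    obtain ⟨y, rfl⟩ := hsurj x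
    exact mem_bot.2 ((hπ1 y).2 (h hx))
  have hEn : ∀ x, π x ∈ normalizer (Dstar Pb : Set (G ⧸ O)) → x ∈ normalizer (E : Set G) := by
    intro x hx
    rw [mem_normalizer_iff]
    intro y
    have := mem_normalizer_iff.1 hx (π y)
    rw [hE, mem_comap, mem_comap, map_mul, map_mul, map_inv]
    exact this
  set M := normalizer (E : Set G) with hM
  have hMt : M ≠ ⊤ := by
    intro h
    exact hEO (hOmax E (normalizer_eq_top_iff.1 h) (P.2.to_le hEP))
  have hPM : (P : Subgroup G) ≤ M := fun x hx =>
    hEn x (le_normalizer_Dstar Pb ⟨x, hx, rfl⟩)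
  have hnM : n ∈ M := hEn n hnb
  have e1 : ∀ h ∈ H, (n * h * n⁻¹) * (u * h * u⁻¹)⁻¹ ∈ O := fun h hh => by
    apply hπe
    have := e (π h) ⟨h, hh, rfl⟩
    simpa using this
  have hnH : n ∈ normalizer (H : Set G) := by
    apply mem_normalizer_of_cj_le
    rw [cj_le_iff]
    intro h hh
    have := mul_mem (hOH (e1 h hh)) ((mem_normalizer_iff.1 hu h).1 hh)
    rwa [inv_mul_cancel_right] at this
  have hn : Ctl N H n := hsub M hPM hMt H hHP n hnM (by rw [cj_eq_of_mem_normalizer hnH]; exact hHP)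
  have hv : n⁻¹ * u ∈ normalizer (H : Set G) := mul_mem (inv_mem hnH) hu
  have e2 : ∀ h ∈ H, (n⁻¹ * u) * h * (n⁻¹ * u)⁻¹ * h⁻¹ ∈ O := fun h hh => by
    have h1 := hO.conj_mem _ (inv_mem (e1 h hh)) n⁻¹
    have : n⁻¹ * (n * h * n⁻¹ * (u * h * u⁻¹)⁻¹)⁻¹ * n⁻¹⁻¹ =
      (n⁻¹ * u) * h * (n⁻¹ * u)⁻¹ * h⁻¹ := by group
    rwa [this] at h1
  have eu : u = n * (n⁻¹ * u) := by group
  generalize n⁻¹ * u = v at hv e2 eu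
  suffices hcv : ∃ w ∈ (P : Subgroup G), ∀ h ∈ H, w * h * w⁻¹ = v * h * v⁻¹ by
    obtain ⟨w, hw, ew⟩ := hcv
    have hvc : Ctl N H v := ⟨w, hPN (le_normalizer hw), ew⟩
    rw [eu]
    refine hvc.mul ?_
    rw [cj_eq_of_mem_normalizer hv]
    exact hn
  -- `p'`-elements of `G` centralize `O`
  have hp' : ∀ z : G, (orderOf z).Coprime p → z ∈ centralizer (O : Set G) := by
    intro z hz
    have hn : (P : Subgroup G) ≤ normalizer (centralizer (O : Set G) : Set G) := by
      rw [normalizer_eq_top]; exact le_top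
    set ρ := QuotientGroup.mk' (centralizer (O : Set G)) with hρ
    have hzt : z ∈ centralizer (O : Set G) ⊔ P := by rw [hCP]; trivial
    obtain ⟨c, hc, q, hq, ez⟩ := exists_mul_of_mem_sup hn hzt
    have h1 : ρ z = ρ q := by
      rw [ez, map_mul, (QuotientGroup.eq_one_iff c).2 hc |> (fun h => (h : ρ c = 1)), one_mul]
    obtain ⟨k, hk⟩ := P.2 ⟨q, hq⟩
    have h2 : q ^ p ^ k = 1 := congrArg Subtype.val hk
    have h3 : ρ z ^ p ^ k = 1 := by rw [h1, ← map_pow, h2, map_one]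
    have h4 : ρ z ^ orderOf z = 1 := by rw [← map_pow, pow_orderOf_eq_one, map_one]
    have := coprime_pow_eq_one (hz.pow_right k) h4 h3
    exact (QuotientGroup.eq_one_iff z).1 this
  have hcent : ∀ z : G, (orderOf z).Coprime p → (∀ h ∈ H, z * h * z⁻¹ * h⁻¹ ∈ O) →
      ∀ h ∈ H, z * h * z⁻¹ = h := by
    intro z hz hzO h hh
    set o := z * h * z⁻¹ * h⁻¹ with ho
    have hoO := hzO h hh
    have hzo : z * o = o * z := (mem_centralizer_iff.1 (hp' z hz) o hoO).symm
    have h1 : z * h * z⁻¹ = o * h := by rw [ho]; group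
    have h2 : ∀ i : ℕ, z ^ i * h * (z ^ i)⁻¹ = o ^ i * h := by
      intro i
      induction i with
      | zero => simp
      | succ i ih =>
        have : z ^ (i + 1) * h * (z ^ (i + 1))⁻¹ = z * (z ^ i * h * (z ^ i)⁻¹) * z⁻¹ := by
          rw [pow_succ']; group
        rw [this, ih]
        have hc : z * o ^ i = o ^ i * z := (show Commute z o from hzo).pow_right i
        calc z * (o ^ i * h) * z⁻¹ = (z * o ^ i) * h * z⁻¹ := by group
          _ = o ^ i * (z * h * z⁻¹) := by rw [hc]; group
          _ = o ^ (i + 1) * h := by rw [h1, pow_succ]; group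
    have h3 := h2 (orderOf z)
    rw [pow_orderOf_eq_one] at h3
    have h4 : o ^ orderOf z = 1 := by
      simpa using h3.symm
    obtain ⟨k, hk⟩ := hOp ⟨o, hoO⟩
    have h5 : o ^ p ^ k = 1 := congrArg Subtype.val hk
    have h6 := coprime_pow_eq_one (hz.pow_right k) h4 h5
    rw [h1, h6, one_mul]
  set B := (P : Subgroup G) ⊓ normalizer (H : Set G) with hB
  have hBp : IsPGroup p (B.subgroupOf (normalizer (H : Set G))) :=
    (P.2.to_le inf_le_left).comap_subtype
  let S : Sylow p (normalizer (H : Set G)) := hBp.toSylow hFN.2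
  let U : Subgroup (normalizer (H : Set G)) :=
    { carrier := {v | ∀ h ∈ H, (v : G) * h * (v : G)⁻¹ * h⁻¹ ∈ O}
      one_mem' := fun h _ => by simp
      mul_mem' := by
        intro a b ha hb h hh
        have h1 := hb h hh
        have h2 := ha _ ((mem_normalizer_iff.1 b.2 h).1 hh)
        have := mul_mem h2 h1
        convert this using 1
        simp; group
      inv_mem' := by
        intro a ha h hh
        have h1 := ha _ ((mem_normalizer_iff.1 (inv_mem a.2) h).1 hh)
        have := inv_mem h1
        convert this using 1
        simp; group }
  have hUm : ∀ x : normalizer (H : Set G), x ∈ U ↔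
    ∀ h ∈ H, (x : G) * h * (x : G)⁻¹ * h⁻¹ ∈ O := fun x => Iff.rfl
  have hUn : U.Normal := by
    refine ⟨fun a ha g h hh => ?_⟩
    have h1 := ha _ ((mem_normalizer_iff.1 (inv_mem g.2) h).1 hh)
    have := hO.conj_mem _ h1 g
    convert this using 1
    simp; group
  obtain ⟨w, hw, ew⟩ := normal_p_image H.normalizerMonoidHom S U (by
    intro a ha
    obtain ⟨k, m, hm, hk⟩ := Nat.exists_eq_pow_mul_and_not_dvd (n := orderOf a)
      (orderOf_pos a).ne' p hp.out.ne_one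
    refine ⟨k, ?_⟩
    rw [← map_pow]
    have hb : a ^ p ^ k ∈ U := pow_mem ha _
    have ho : (orderOf ((a ^ p ^ k : normalizer (H : Set G)) : G)).Coprime p := by
      rw [orderOf_coe]
      have : orderOf (a ^ p ^ k) ∣ m := by
        apply orderOf_dvd_of_pow_eq_one
        rw [← pow_mul, ← hk, pow_orderOf_eq_one]
      exact Nat.Coprime.coprime_dvd_left this ((hp.out.coprime_iff_not_dvd.2 hm).symm)
    have := hcent _ ho hb
    ext h
    exact this h h.2) ⟨v, hv⟩ e2
  refine ⟨w, (mem_inf.1 hw).1, fun h hh => ?_⟩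
  have := DFunLike.congr_fun ew ⟨h, hh⟩
  exact congrArg Subtype.val this

end

end

section
open Subgroup

section
variable {G : Type*} [Group G] [Finite G] {p : ℕ} [hp : Fact p.Prime]

/-- The step of the fusion induction when `O_p(G) = 1`: normalizers of non-trivial fully
normalized subgroups of `P` are handled by descending induction on `|N_P(X)|`. -/
theorem step_c (P : Sylow p G)
    (hcore : ∀ X : Subgroup G, X.Normal → X ≤ P → X = ⊥)
    (hF : ∀ M : Subgroup G, M ≠ ⊤ → FProp p M) (s : ℕ)
    (full : ∀ H : Subgroup G, H ≤ P → s < Nat.card H → ∀ g, cj g H ≤ P →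
      Ctl (normalizer (Dstar (P : Subgroup G) : Set G)) H g) :
    ∀ X : Subgroup G, X ≠ ⊥ → FN p (P : Subgroup G) X →
      ∀ K : Subgroup G, K ≤ (P : Subgroup G) ⊓ normalizer (X : Set G) → s ≤ Nat.card K →
      ∀ g ∈ normalizer (X : Set G), cj g K ≤ (P : Subgroup G) ⊓ normalizer (X : Set G) →
        Ctl (normalizer (Dstar (P : Subgroup G) : Set G)) K g := by
  set N := normalizer (Dstar (P : Subgroup G) : Set G) with hN
  suffices h : ∀ k, ∀ X : Subgroup G, X ≠ ⊥ → FN p (P : Subgroup G) X →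
      Nat.card (P : Subgroup G) - Nat.card ((P : Subgroup G) ⊓ normalizer (X : Set G) : Subgroup G)
        = k →
      ∀ K : Subgroup G, K ≤ (P : Subgroup G) ⊓ normalizer (X : Set G) → s ≤ Nat.card K →
      ∀ g ∈ normalizer (X : Set G), cj g K ≤ (P : Subgroup G) ⊓ normalizer (X : Set G) →
        Ctl N K g from fun X h1 h2 => h _ X h1 h2 rfl
  intro k
  induction k using Nat.strong_induction_on with
  | _ k ih =>
    intro X hX hFN hk K hK hs g hg hgK
    set Q := (P : Subgroup G) ⊓ normalizer (X : Set G) with hQ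
    have hQP : Q ≤ P := inf_le_left
    have hQp : IsPGroup p Q := P.2.to_le hQP
    have hMt : normalizer (X : Set G) ≠ ⊤ := fun h =>
      hX (hcore X (normalizer_eq_top_iff.1 h) hFN.1)
    have hXQ : X ≤ Q := le_inf hFN.1 le_normalizer
    obtain ⟨m, hm, em⟩ := F_sub (hF _ hMt) (inf_le_right : Q ≤ _) hQp hFN.2 hK hg hgK
    have hmE := (mem_inf.1 hm).2
    by_cases hQeq : Q = P
    · rw [← hQ, hQeq] at hmE
      exact ⟨m, hmE, em⟩
    refine Ctl.congr ?_ em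
    have hcjm : cj m K = cj g K := cj_congr em
    rw [← hcjm] at hgK
    have hQlt : Q < P := lt_of_le_of_ne hQP hQeq
    set E := Dstar Q with hE
    have hE0 : E ≠ ⊥ := Dstar_ne_bot p hQp (fun h => hX (le_bot_iff.1 (h ▸ hXQ)))
    have hEP : E ≤ P := (Dstar_le Q).trans hQP
    have h1 : Q < (P : Subgroup G) ⊓ normalizer (E : Set G) :=
      (lt_inf_normalizer P.2 hQlt).trans_le (inf_le_inf_left _ (normalizer_le_normalizer_Dstar Q))
    have h2 : Nat.card Q < Nat.card ((P : Subgroup G) ⊓ normalizer (E : Set G) : Subgroup G) :=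
      lt_of_not_ge fun h => h1.ne (eq_of_le_of_card_ge h1.le h)
    obtain ⟨E', ⟨a0, ha0⟩, hFN', hall⟩ := exists_FN P hEP
    obtain ⟨a, ha, haa⟩ := hall E hEP ⟨a0, ha0⟩
    have hKc : Nat.card K ≤ Nat.card Q := card_le_of_le hK
    have hCa := full _ inf_le_left (by omega) a (haa.trans inf_le_left)
    have hE'0 : E' ≠ ⊥ := by
      intro h
      have := card_cj a E
      rw [ha, h, card_bot] at this
      exact hE0 (eq_bot_of_card_eq E this.symm)
    have h3 := card_le_of_le haa
    rw [card_cj] at h3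
    have h4 : Nat.card ((P : Subgroup G) ⊓ normalizer (E' : Set G) : Subgroup G) ≤
      Nat.card (P : Subgroup G) := card_le_of_le inf_le_left
    have hKE : K ≤ (P : Subgroup G) ⊓ normalizer (E : Set G) := hK.trans h1.le
    have hmE' : a * m * a⁻¹ ∈ normalizer (E' : Set G) := by
      rw [← ha, ← cj_normalizer]
      exact conj_mem_cj hmE
    have e1 : cj (a * m * a⁻¹) (cj a K) = cj a (cj m K) := by
      rw [← cj_mul, ← cj_mul]; congr 1; group
    have h5 := ih _ (by omega) E' hE'0 hFN' rfl (cj a K) ((cj_mono hKE).trans haa)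
      (by rw [card_cj]; exact hs) (a * m * a⁻¹) hmE' (by
        rw [e1]; exact (cj_mono (hgK.trans h1.le)).trans haa)
    have e : m = a⁻¹ * ((a * m * a⁻¹) * a) := by group
    rw [e]
    refine ((hCa.mono hKE).mul h5).mul ?_
    rw [cj_mul, e1]
    exact (hCa.mono (hgK.trans h1.le)).inv

end

/-- In a group of odd order, `N_G(D*(P))` controls fusion in the Sylow `p`-subgroup `P`. -/
theorem fusion_control (p : ℕ) [hp : Fact p.Prime] (hp2 : Odd p) (n : ℕ) :
    ∀ (G : Type) [Group G] [Finite G], Nat.card G = n → Odd (Nat.card G) → FProp p G := by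
  induction n using Nat.strong_induction_on with
  | _ n ih =>
  intro G _ _ hn hodd
  have hsubF : ∀ M : Subgroup G, M ≠ ⊤ → FProp p M := by
    intro M hM
    refine ih (Nat.card M) ?_ M rfl (hodd.of_dvd_nat (card_subgroup_dvd_card M))
    rw [← hn]
    refine lt_of_not_ge fun h => hM ?_
    exact eq_of_le_of_card_ge le_top (by rw [card_top]; exact h)
  have hquoF : ∀ Y : Subgroup G, ∀ [Y.Normal], Y ≠ ⊥ → FProp p (G ⧸ Y) := by
    intro Y _ hY
    have h1 := card_eq_card_quotient_mul_card_subgroup Y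
    have h2 : 1 < Nat.card Y := one_lt_card_iff_ne_bot _ |>.2 hY
    have h3 : 0 < Nat.card (G ⧸ Y) := Nat.card_pos
    refine ih (Nat.card (G ⧸ Y)) ?_ (G ⧸ Y) rfl (hodd.of_dvd_nat ⟨_, h1⟩)
    rw [← hn, h1]
    nlinarith
  by_cases hY : ∀ Y : Subgroup G, Y.Normal → (Nat.card Y).Coprime p → Y = ⊥
  swap
  · push Not at hY
    obtain ⟨Y, hYn, hYc, hY0⟩ := hY
    exact FProp_of_quotient Y hYc (hquoF Y hY0)
  intro P
  set N := normalizer (Dstar (P : Subgroup G) : Set G) with hN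
  have hPN : normalizer (P : Set G) ≤ N := normalizer_le_normalizer_Dstar _
  have hsub : ∀ M : Subgroup G, (P : Subgroup G) ≤ M → M ≠ ⊤ →
      ∀ H : Subgroup G, H ≤ P → ∀ g ∈ M, cj g H ≤ P → Ctl N H g := by
    intro M hPM hM H hH g hg hgH
    exact (F_sub (hsubF M hM) hPM P.2 (P.not_dvd_relIndex hPM) hH hg hgH).mono_left inf_le_right
  by_cases hO : pcore p G = ⊥
  · refine desc_ind P hPN ?_
    intro s full H hs hFN u hu
    by_cases hH : H = ⊥
    · subst hH
      exact ⟨1, one_mem _, fun h hh => by rw [mem_bot.1 hh]; simp⟩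
    refine step_c P ?_ hsubF s full H hH hFN H (le_inf hFN.1 le_normalizer) hs.ge u hu ?_
    · intro X hX hXP
      rw [eq_bot_iff, ← hO]
      exact le_pcore hX (P.2.to_le hXP)
    · rw [cj_eq_of_mem_normalizer hu]
      exact le_inf hFN.1 le_normalizer
  · set O := pcore p G with hOdef
    have hOp : IsPGroup p O := pcore_isPGroup
    set C := centralizer (O : Set G) with hC
    by_cases hi : (P : Subgroup G) ⊓ C ≤ O
    · have hCO := centralizer_le_of_inf_le P O hOp hi hY
      have := Dstar_normal hodd p hp2 O hOp hCO P
      intro H hH g hg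
      refine Ctl.of_mem ?_
      rw [hN, normalizer_eq_top]; trivial
    by_cases hii : C ⊔ P = ⊤
    · refine desc_ind P hPN ?_
      intro s full H hs hFN u hu
      exact step_biii P O hOp (fun X h h' => le_pcore h h') hPN (hquoF O hO) hsub hii s full H hs
        hFN u hu
    · have hYn : normalizer (((P : Subgroup G) ⊓ C : Subgroup G) : Set G) ≠ ⊤ := fun h =>
        hi (le_pcore (normalizer_eq_top_iff.1 h) (P.2.to_le inf_le_left))
      have hP1 : (P : Subgroup G) ≤ normalizer (((P : Subgroup G) ⊓ C : Subgroup G) : Set G) := by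
        intro x hx
        apply mem_normalizer_of_cj_eq
        rw [cj_inf, cj_eq_of_mem hx, cj_of_normal]
      refine F_factor hP1 (le_sup_right : (P : Subgroup G) ≤ C ⊔ P) (hsub _ hP1 hYn)
        (hsub _ le_sup_right hii) ?_
      intro g
      have h1 : cj g⁻¹ ((P : Subgroup G) ⊓ C) ≤ C := by
        rw [cj_inf, cj_of_normal (H := C)]; exact inf_le_right
      have hYp : IsPGroup p ((P : Subgroup G) ⊓ C : Subgroup G) := P.2.to_le inf_le_left
      obtain ⟨c, hc, hcY⟩ := sylow_conj_sub inf_le_right hYp (relIndex_normal_not_dvd P C) h1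
        (isPGroup_cj hYp g⁻¹)
      rw [← cj_mul] at hcY
      refine ⟨(c * g⁻¹)⁻¹, inv_mem (mem_normalizer_of_cj_le hcY), c, mem_sup_left hc, ?_⟩
      group

end

/-! ### Ring endomorphisms of `ℂ` acting on roots of unity -/

theorem exists_ringHom_extend (R S : Type) [CommRing R] [IsDomain R] [Field S] [Algebra R S]
    [Module.IsTorsionFree R S] [Algebra.IsAlgebraic R S] (f : R →+* ℂ) (hf : Function.Injective f) :
    ∃ τ : S →+* ℂ, ∀ r : R, τ (algebraMap R S r) = f r := by
  let A2 : Algebra R ℂ := f.toAlgebra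
  have ft : FaithfulSMul R ℂ := by
    rw [faithfulSMul_iff_algebraMap_injective]; exact hf
  let τ : S →ₐ[R] ℂ := IsAlgClosed.lift
  exact ⟨τ.toRingHom, fun r => τ.commutes r⟩

/-- Every Galois automorphism `ζ ↦ ζ ^ m` of a cyclotomic field extends to a ring endomorphism
of `ℂ`: extend over a transcendence basis and then along an algebraic extension. -/
theorem exists_ringHom_pow_aux (F : Type) [Field F] [Algebra ℚ F] (N m : ℕ) (hN : N ≠ 0)
    [IsCyclotomicExtension {N} ℚ F] (h : m.Coprime N) : ∃ τ : ℂ →+* ℂ, ∀ z : ℂ, z ^ N = 1 → τ z = z ^ m := by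
  have : NeZero N := ⟨hN⟩
  have : Algebra.IsAlgebraic ℚ F := (IsCyclotomicExtension.integral {N} ℚ F).isAlgebraic
  let ζ : F := IsCyclotomicExtension.zeta N ℚ F
  have hζ : IsPrimitiveRoot ζ N := IsCyclotomicExtension.zeta_spec N ℚ F
  let φ : F →ₐ[ℚ] ℂ := IsAlgClosed.lift
  let : Algebra F ℂ := φ.toRingHom.toAlgebra
  have hirr : Irreducible (Polynomial.cyclotomic N ℚ) :=
    Polynomial.cyclotomic.irreducible_rat (Nat.pos_of_ne_zero hN)
  let σ : F ≃ₐ[ℚ] F :=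
    (IsCyclotomicExtension.autEquivPow F hirr).symm (ZMod.unitOfCoprime m h)
  have hσ : σ ζ = ζ ^ m := by
    have h2 := hζ.autToPow_spec ℚ σ
    have h3 : hζ.autToPow ℚ σ = ZMod.unitOfCoprime m h :=
      (IsCyclotomicExtension.autEquivPow F hirr).apply_symm_apply _
    rw [h3, ZMod.coe_unitOfCoprime] at h2
    rw [← h2, ZMod.val_natCast]
    conv_rhs => rw [← pow_mod_orderOf, ← hζ.eq_orderOf]
  obtain ⟨ι, v, hv⟩ := exists_isTranscendenceBasis' F ℂ
  let R := Algebra.adjoin F (Set.range v)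
  let e : MvPolynomial ι F ≃ₐ[F] R := hv.1.aevalEquiv
  let f : R →+* ℂ := ((MvPolynomial.aeval v : MvPolynomial ι F →ₐ[F] ℂ) : MvPolynomial ι F →+* ℂ).comp
    ((MvPolynomial.map (σ : F →+* F)).comp (e.symm : R →+* MvPolynomial ι F))
  have hf : Function.Injective f := by
    refine Function.Injective.comp (g := (MvPolynomial.aeval v : MvPolynomial ι F →ₐ[F] ℂ)) hv.1
      (Function.Injective.comp (g := MvPolynomial.map (σ : F →+* F)) ?_ e.symm.injective)
    exact MvPolynomial.map_injective _ σ.injective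
  have halg : Algebra.IsAlgebraic R ℂ := hv.isAlgebraic
  obtain ⟨τ, hτ⟩ := exists_ringHom_extend R ℂ f hf
  refine ⟨τ, fun z hz => ?_⟩
  have hζ' : IsPrimitiveRoot (φ ζ) N := hζ.map_of_injective φ.injective
  have h1 : τ (φ ζ) = φ ζ ^ m := by
    have h2 := hτ (algebraMap F R ζ)
    have h3 : algebraMap R ℂ (algebraMap F R ζ) = φ ζ := rfl
    rw [h3] at h2
    rw [h2]
    have h4 : e.symm (algebraMap F R ζ) = MvPolynomial.C ζ := e.symm.commutes ζ
    change MvPolynomial.aeval v (MvPolynomial.map (σ : F →+* F) (e.symm (algebraMap F R ζ))) = _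
    rw [h4, MvPolynomial.map_C, MvPolynomial.aeval_C]
    change φ (σ ζ) = _
    rw [hσ, map_pow]
  obtain ⟨i, -, rfl⟩ := hζ'.eq_pow_of_pow_eq_one hz
  rw [map_pow, h1, ← pow_mul, ← pow_mul, mul_comm]

theorem exists_ringHom_pow (N m : ℕ) (hN : N ≠ 0) (h : m.Coprime N) :
    ∃ τ : ℂ →+* ℂ, ∀ z : ℂ, z ^ N = 1 → τ z = z ^ m :=
  have : NeZero N := ⟨hN⟩
  have : NeZero ((N : ℕ) : ℚ) := ⟨by exact_mod_cast hN⟩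
  @exists_ringHom_pow_aux (CyclotomicField N ℚ) _ (CyclotomicField.algebra N ℚ) N m hN _ h

/-! ### Irreducible characters and matrix representations -/

open CategoryTheory in
theorem mem_Irr_of_rep {G : Type} [Group G] [Fintype G] {V : Type} [AddCommGroup V] [Module ℂ V]
    [FiniteDimensional ℂ V] (ρ : Representation ℂ G V)
    (h : ∑ g : G, ρ.character g * ρ.character g⁻¹ = Nat.card G) : ρ.character ∈ Irr G := by
  refine ⟨FDRep.of ρ, ?_, rfl⟩
  rw [FDRep.simple_iff_char_is_norm_one]
  exact h

/-- The representation on column vectors attached to a matrix representation. -/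
noncomputable def mrep {G : Type} [Group G] {t : ℕ} (ρ : G →* Matrix (Fin t) (Fin t) ℂ) :
    Representation ℂ G (Fin t → ℂ) :=
  ((Matrix.toLinAlgEquiv' (R := ℂ) (n := Fin t) : _ →* _)).comp ρ

theorem mrep_apply {G : Type} [Group G] {t : ℕ} (ρ : G →* Matrix (Fin t) (Fin t) ℂ) (g : G) :
    mrep ρ g = Matrix.toLin' (ρ g) := rfl

theorem mrep_character {G : Type} [Group G] {t : ℕ} (ρ : G →* Matrix (Fin t) (Fin t) ℂ) (g : G) :
    (mrep ρ).character g = (ρ g).trace := by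
  rw [Representation.character, mrep_apply, Matrix.trace_toLin'_eq]

theorem mem_Irr_of_matrix {G : Type} [Group G] [Fintype G] {t : ℕ}
    (ρ : G →* Matrix (Fin t) (Fin t) ℂ) (χ : G → ℂ) (hχ : ∀ g, χ g = (ρ g).trace)
    (h : ∑ g : G, χ g * χ g⁻¹ = Nat.card G) : χ ∈ Irr G := by
  have : χ = (mrep ρ).character := by
    ext g; rw [mrep_character, hχ]
  rw [this] at h ⊢
  exact mem_Irr_of_rep _ h

theorem Irr_norm {G : Type} [Group G] [Fintype G] {χ : G → ℂ} (hχ : χ ∈ Irr G) :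
    ∑ g : G, χ g * χ g⁻¹ = Nat.card G := by
  obtain ⟨V, hV, rfl⟩ := hχ
  exact (FDRep.simple_iff_char_is_norm_one V).1 hV

theorem Irr_orth {G : Type} [Group G] [Fintype G] {χ ψ : G → ℂ} (hχ : χ ∈ Irr G)
    (hψ : ψ ∈ Irr G) (hne : χ ≠ ψ) : ∑ g : G, χ g * ψ g⁻¹ = 0 := by
  obtain ⟨V, hV, rfl⟩ := hχ
  obtain ⟨W, hW, rfl⟩ := hψ
  have := invertibleOfNonzero (NeZero.ne (Nat.card G : ℂ))
  have h := FDRep.char_orthonormal V W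
  rw [if_neg (fun ⟨i⟩ => hne (FDRep.char_iso i))] at h
  rcases mul_eq_zero.1 h with h | h
  · exact absurd (inv_eq_zero.1 h) (NeZero.ne _)
  · exact h

/-- An irreducible character is afforded by a matrix representation. -/
theorem Irr_matrix {G : Type} [Group G] {χ : G → ℂ} (hχ : χ ∈ Irr G) :
    ∃ (t : ℕ) (ρ : G →* Matrix (Fin t) (Fin t) ℂ), ∀ g, χ g = (ρ g).trace := by
  obtain ⟨V, hV, rfl⟩ := hχ
  let b := Module.finBasis ℂ V
  refine ⟨Module.finrank ℂ V, ((LinearMap.toMatrixAlgEquiv b : _ →* _)).comp V.ρ, fun g => ?_⟩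
  change LinearMap.trace ℂ V (V.ρ g) = _
  rw [LinearMap.trace_eq_matrix_trace ℂ b]
  rfl

theorem finrank_intertwining_eq_one {G : Type} [Group G] [Fintype G] {t u : ℕ}
    (ρ : G →* Matrix (Fin t) (Fin t) ℂ) (σ : G →* Matrix (Fin u) (Fin u) ℂ) {χ : G → ℂ}
    (hχ : χ ∈ Irr G) (h1 : ∀ g, χ g = (ρ g).trace) (h2 : ∀ g, χ g = (σ g).trace) :
    Module.finrank ℂ (Representation.IntertwiningMap (mrep ρ) (mrep σ)) = 1 := by
  have := invertibleOfNonzero (NeZero.ne (Nat.card G : ℂ))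
  have h := Representation.card_inv_mul_sum_char_mul_char_eq_finrank (mrep ρ) (mrep σ)
  simp only [mrep_character, ← h1, ← h2] at h
  rw [Irr_norm hχ, inv_mul_cancel₀ (NeZero.ne _)] at h
  exact_mod_cast h.symm

/-- Schur's lemma for matrices. -/
theorem schur {G : Type} [Group G] [Fintype G] {t : ℕ}
    (ρ : G →* Matrix (Fin t) (Fin t) ℂ) {χ : G → ℂ} (hχ : χ ∈ Irr G)
    (h1 : ∀ g, χ g = (ρ g).trace) (A : Matrix (Fin t) (Fin t) ℂ)
    (hA : ∀ g, A * ρ g = ρ g * A) : ∃ c : ℂ, A = c • 1 := by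
  have h := finrank_intertwining_eq_one ρ ρ hχ h1 h1
  let f : Representation.IntertwiningMap (mrep ρ) (mrep ρ) := ⟨Matrix.toLin' A, fun g => by
    rw [mrep_apply, ← Matrix.toLin'_mul, ← Matrix.toLin'_mul, hA]⟩
  let e : Representation.IntertwiningMap (mrep ρ) (mrep ρ) := Representation.IntertwiningMap.id _
  have he : e ≠ 0 := by
    intro h0
    have hs : Subsingleton (Representation.IntertwiningMap (mrep ρ) (mrep ρ)) := by
      refine ⟨fun a b => ?_⟩
      have key : ∀ a : Representation.IntertwiningMap (mrep ρ) (mrep ρ), a = 0 := by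
        intro a
        apply Representation.IntertwiningMap.ext
        refine LinearMap.ext fun v => ?_
        have : e (a v) = 0 := by rw [h0]; rfl
        exact this
      rw [key a, key b]
    rw [Module.finrank_zero_of_subsingleton] at h
    exact zero_ne_one h
  obtain ⟨c, hc⟩ := (finrank_eq_one_iff_of_nonzero' e he).1 h f
  refine ⟨c, ?_⟩
  have h3 : Matrix.toLin' A = c • LinearMap.id := by
    have := congrArg (fun x => x.toLinearMap) hc
    exact this.symm
  apply Matrix.toLin'.injective
  rw [h3, map_smul, Matrix.toLin'_one]


/-- Matrix representations affording the same irreducible character are similar. -/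
theorem exists_intertwiner {G : Type} [Group G] [Fintype G] {t : ℕ}
    (ρ σ : G →* Matrix (Fin t) (Fin t) ℂ) {χ : G → ℂ}
    (hχ : χ ∈ Irr G) (h1 : ∀ g, χ g = (ρ g).trace) (h2 : ∀ g, χ g = (σ g).trace) :
    ∃ T : Matrix (Fin t) (Fin t) ℂ, IsUnit T ∧ ∀ g, T * ρ g = σ g * T := by
  have := invertibleOfNonzero (NeZero.ne (Nat.card G : ℂ))
  let V := FDRep.of (mrep ρ)
  let W := FDRep.of (mrep σ)
  have hVc : ∀ g, V.character g = χ g := fun g => (mrep_character ρ g).trans (h1 g).symm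
  have hWc : ∀ g, W.character g = χ g := fun g => (mrep_character σ g).trans (h2 g).symm
  have hV : CategoryTheory.Simple V := by
    rw [FDRep.simple_iff_char_is_norm_one]; simp only [hVc]; exact Irr_norm hχ
  have hW : CategoryTheory.Simple W := by
    rw [FDRep.simple_iff_char_is_norm_one]; simp only [hWc]; exact Irr_norm hχ
  have h := FDRep.char_orthonormal V W
  simp only [hVc, hWc] at h
  rw [Irr_norm hχ, inv_mul_cancel₀ (NeZero.ne _)] at h
  have hi : Nonempty (V ≅ W) := by
    by_contra hn
    rw [if_neg hn] at h
    simp at h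
  obtain ⟨i⟩ := hi
  let e : (Fin t → ℂ) ≃ₗ[ℂ] (Fin t → ℂ) := FDRep.isoToLinearEquiv i
  have he : ∀ g, mrep σ g = e.conj (mrep ρ g) := fun g => FDRep.Iso.conj_ρ i g
  refine ⟨LinearMap.toMatrix' (e : (Fin t → ℂ) →ₗ[ℂ] (Fin t → ℂ)), ?_, fun g => ?_⟩
  · refine IsUnit.of_mul_eq_one
      (LinearMap.toMatrix' (e.symm : (Fin t → ℂ) →ₗ[ℂ] (Fin t → ℂ))) ?_
    rw [← LinearMap.toMatrix'_comp]; simp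
  · apply Matrix.toLin'.injective
    rw [Matrix.toLin'_mul, Matrix.toLin'_mul, Matrix.toLin'_toMatrix', ← mrep_apply, ← mrep_apply,
      he g]
    refine LinearMap.ext fun v => ?_
    simp [LinearEquiv.conj_apply]

theorem Irr_of_isIrreducible {G : Type} [Group G] [Fintype G] {V : Type} [AddCommGroup V]
    [Module ℂ V] [FiniteDimensional ℂ V] (ρ : Representation ℂ G V) [ρ.IsIrreducible] :
    ρ.character ∈ Irr G := by
  have := invertibleOfNonzero (NeZero.ne (Nat.card G : ℂ))
  refine mem_Irr_of_rep ρ ?_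
  have h := Representation.char_orthonormal ρ ρ
  rw [if_pos ⟨Representation.Equiv.refl ρ⟩, inv_mul_eq_one₀ (NeZero.ne _)] at h
  exact h.symm

theorem Irr_conj {G : Type} [Group G] {χ : G → ℂ} (hχ : χ ∈ Irr G) (g h : G) :
    χ (h * g * h⁻¹) = χ g := by
  obtain ⟨V, hV, rfl⟩ := hχ
  exact FDRep.char_conj V g h

theorem Irr_degree {G : Type} [Group G] [Finite G] {χ : G → ℂ} (hχ : χ ∈ Irr G) :
    ∃ (t : ℕ) (ρ : G →* Matrix (Fin t) (Fin t) ℂ), 0 < t ∧ χ 1 = t ∧ ∀ g, χ g = (ρ g).trace := by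
  have := Fintype.ofFinite G
  obtain ⟨t, ρ, h⟩ := Irr_matrix hχ
  refine ⟨t, ρ, ?_, by rw [h 1, map_one, Matrix.trace_one, Fintype.card_fin], h⟩
  rcases Nat.eq_zero_or_pos t with rfl | ht
  · have h2 := Irr_norm hχ
    have : ∀ g, χ g = 0 := fun g => by rw [h g]; simp [Matrix.trace]
    simp only [this, mul_zero, Finset.sum_const_zero] at h2
    exact absurd h2.symm (NeZero.ne _)
  · exact ht

theorem classSum_eq_zero {G : Type} [Group G] [Fintype G] {V : Type} [AddCommGroup V]
    [Module ℂ V] [FiniteDimensional ℂ V] (ρ : Representation ℂ G V) [ρ.IsIrreducible]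
    (f : G → ℂ) (hf : ∀ g h, f (h * g * h⁻¹) = f g)
    (h0 : ∀ χ ∈ Irr G, ∑ g, f g * χ g = 0) : ∑ g, f g • ρ g = 0 := by
  let T : Representation.IntertwiningMap ρ ρ := ⟨∑ g, f g • ρ g, fun h => by
    change (∑ g, f g • ρ g) * ρ h = ρ h * (∑ g, f g • ρ g)
    rw [Finset.sum_mul, Finset.mul_sum]
    refine Fintype.sum_equiv (MulAut.conj h⁻¹).toEquiv _ _ fun g => ?_
    have : (MulAut.conj h⁻¹).toEquiv g = h⁻¹ * g * h⁻¹⁻¹ := rfl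
    rw [this, hf, smul_mul_assoc, mul_smul_comm, ← map_mul, ← map_mul]
    congr 2
    group⟩
  obtain ⟨c, hc⟩ := (Representation.IsIrreducible.algebraMap_intertwiningMap_bijective_of_isAlgClosed
    (ρ := ρ)).2 T
  have hc' : ∑ g, f g • ρ g = c • LinearMap.id := by
    have := congrArg (fun x => x.toLinearMap) hc
    exact this.symm
  have htr := congrArg (LinearMap.trace ℂ V) hc'
  rw [map_sum, map_smul, LinearMap.trace_id] at htr
  have h1 : ∑ g, f g * ρ.character g = 0 := h0 _ (Irr_of_isIrreducible ρ)
  simp only [map_smul, smul_eq_mul] at htr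
  rw [show (∑ x, f x * LinearMap.trace ℂ V (ρ x)) = 0 from h1] at htr
  rcases mul_eq_zero.1 htr.symm with h | h
  · rw [hc', h, zero_smul]
  · have : Module.finrank ℂ V = 0 := by exact_mod_cast h
    have : Subsingleton V := Module.finrank_zero_iff.1 this
    exact Subsingleton.elim _ _

theorem classSum_smul_eq_zero {G : Type} [Group G] [Fintype G] (M : Type) [AddCommGroup M]
    [Module ℂ M] [Module (MonoidAlgebra ℂ G) M] [IsScalarTower ℂ (MonoidAlgebra ℂ G) M]
    [IsSimpleModule (MonoidAlgebra ℂ G) M]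
    (f : G → ℂ) (hf : ∀ g h, f (h * g * h⁻¹) = f g)
    (h0 : ∀ χ ∈ Irr G, ∑ g, f g * χ g = 0) (x : M) :
    (∑ g, MonoidAlgebra.single g (f g) : MonoidAlgebra ℂ G) • x = 0 := by
  let ρ := Representation.ofModule' (k := ℂ) (G := G) M
  have halg : ∀ (r : MonoidAlgebra ℂ G) (y : M), ρ.asAlgebraHom r y = r • y := by
    intro r y
    have : ρ.asAlgebraHom = Algebra.lsmul ℂ ℂ M :=
      (MonoidAlgebra.lift ℂ (M →ₗ[ℂ] M) G).apply_symm_apply _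
    rw [this]; rfl
  let e : ρ.asModule ≃ₗ[MonoidAlgebra ℂ G] M :=
    { ρ.asModuleEquiv with
      map_smul' := fun r y => by
        refine (Representation.asModuleEquiv_map_smul ρ r y).trans ?_
        exact halg r _ }
  have hirr : ρ.IsIrreducible :=
    (Representation.irreducible_iff_isSimpleModule_asModule ρ).2 (IsSimpleModule.congr e)
  have hfin : Module.Finite (MonoidAlgebra ℂ G) M := inferInstance
  have hA : FiniteDimensional ℂ (MonoidAlgebra ℂ G) := inferInstance
  have hfd : FiniteDimensional ℂ M := Module.Finite.trans (MonoidAlgebra ℂ G) _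
  have hz := classSum_eq_zero ρ f hf h0
  rw [← halg, map_sum]
  have h2 : ∑ g, ρ.asAlgebraHom (MonoidAlgebra.single g (f g)) = ∑ g, f g • ρ g :=
    Finset.sum_congr rfl fun g _ => Representation.asAlgebraHom_single ρ g (f g)
  rw [h2, hz, LinearMap.zero_apply]

/-- A class function orthogonal to all irreducible characters vanishes. -/
theorem Irr_complete {G : Type} [Group G] [Fintype G]
    (f : G → ℂ) (hf : ∀ g h, f (h * g * h⁻¹) = f g)
    (h0 : ∀ χ ∈ Irr G, ∑ g, f g * χ g = 0) : f = 0 := by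
  classical
  have : NeZero (Nat.card G : ℂ) := ⟨NeZero.ne _⟩

  let a : (MonoidAlgebra ℂ G) := ∑ g, MonoidAlgebra.single g (f g)
  have ha : ∀ x : (MonoidAlgebra ℂ G), a * x = x * a := by
    intro x
    induction x using MonoidAlgebra.induction_on with
    | of h =>
      simp only [a, MonoidAlgebra.of_apply, Finset.sum_mul, Finset.mul_sum,
        MonoidAlgebra.single_mul_single]
      refine Fintype.sum_equiv (MulAut.conj h⁻¹).toEquiv _ _ fun g => ?_
      have : (MulAut.conj h⁻¹).toEquiv g = h⁻¹ * g * h⁻¹⁻¹ := rfl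
      rw [this, hf, mul_one, one_mul]
      congr 1
      group
    | add x y hx hy => rw [mul_add, add_mul, hx, hy]
    | smul r x hx => rw [mul_smul_comm, smul_mul_assoc, hx]
  let K : Submodule (MonoidAlgebra ℂ G) (MonoidAlgebra ℂ G) :=
    { carrier := {x | a * x = 0}
      add_mem' := fun {x y} hx hy => by
        change a * (x + y) = 0
        rw [mul_add, (hx : a * x = 0), (hy : a * y = 0), add_zero]
      zero_mem' := mul_zero a
      smul_mem' := fun r x hx => by
        change a * (r * x) = 0
        rw [← mul_assoc, ha, mul_assoc, (hx : a * x = 0), mul_zero] }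
  have hK : K = ⊤ := by
    rw [eq_top_iff, ← IsSemisimpleModule.sSup_simples_eq_top (MonoidAlgebra ℂ G) (MonoidAlgebra ℂ G)]
    refine sSup_le fun S hS => ?_
    have hS : IsSimpleModule (MonoidAlgebra ℂ G) S := hS
    intro x hx
    have h1 := classSum_smul_eq_zero S f hf h0 ⟨x, hx⟩
    exact congrArg Subtype.val h1
  have h1 : a * 1 = 0 := by
    have : (1 : (MonoidAlgebra ℂ G)) ∈ K := by rw [hK]; trivial
    exact this
  rw [mul_one] at h1
  ext g
  have h2 := congrArg (fun y : (MonoidAlgebra ℂ G) => y.coeff g) h1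
  simpa [a, MonoidAlgebra.coeff_sum, Finsupp.single_apply] using h2

theorem trace_nat_of_idem {t : ℕ} (E : Matrix (Fin t) (Fin t) ℂ) (h : E * E = E) :
    ∃ r : ℕ, E.trace = r ∧ (r = 0 → E = 0) := by
  have h2 : IsIdempotentElem (Matrix.toLin' E) := by
    change Matrix.toLin' E * Matrix.toLin' E = _
    rw [Module.End.mul_eq_comp, ← Matrix.toLin'_mul, h]
  have h3 := (LinearMap.IsIdempotentElem.isProj_range _ h2).trace
  rw [Matrix.trace_toLin'_eq] at h3
  refine ⟨_, h3, fun h0 => ?_⟩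
  have h4 := (LinearMap.IsIdempotentElem.trace_eq_zero_iff h2).1 (by rw [Matrix.trace_toLin'_eq, h3, h0, Nat.cast_zero])
  exact Matrix.toLin'.injective (by rw [h4, map_zero])

/-- The average of the powers of a matrix of finite order is an idempotent. -/
theorem avg_idem {t N : ℕ} (hN : N ≠ 0) (A : Matrix (Fin t) (Fin t) ℂ) (h : A ^ N = 1) :
    ((N : ℂ)⁻¹ • ∑ i ∈ Finset.range N, A ^ i) * ((N : ℂ)⁻¹ • ∑ i ∈ Finset.range N, A ^ i)
      = (N : ℂ)⁻¹ • ∑ i ∈ Finset.range N, A ^ i := by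
  set S := ∑ i ∈ Finset.range N, A ^ i with hS
  have h1 : S * A = S := by
    have h3 : S * (A - 1) = A ^ N - 1 := by rw [hS, geom_sum_mul]
    rw [h, sub_self, mul_sub, mul_one, sub_eq_zero] at h3
    exact h3
  have h2 : ∀ i, S * A ^ i = S := by
    intro i
    induction i with
    | zero => simp
    | succ i ih => rw [pow_succ, ← mul_assoc, ih, h1]
  have h3 : S * S = (N : ℂ) • S := by
    conv_lhs => rw [hS]
    rw [← hS, Finset.mul_sum]
    simp only [h2, Finset.sum_const, Finset.card_range]
    rw [Nat.cast_smul_eq_nsmul]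
  have hN' : (N : ℂ) ≠ 0 := by exact_mod_cast hN
  rw [smul_mul_smul_comm, h3, smul_smul]
  congr 1
  field_simp

/-- Eigenvalue multiplicities of a matrix of finite order, obtained by Fourier inversion. -/
theorem exists_mult {t N : ℕ} (hN : N ≠ 0) (A : Matrix (Fin t) (Fin t) ℂ) (h : A ^ N = 1)
    {ω : ℂ} (hω : IsPrimitiveRoot ω N) :
    ∃ m : ℕ → ℕ, (∀ k, (A ^ k).trace = ∑ j ∈ Finset.range N, (m j : ℂ) * ω ^ (j * k)) ∧
      ∀ j, (m j : ℂ) = (N : ℂ)⁻¹ * ∑ i ∈ Finset.range N, (ω⁻¹) ^ (i * j) * (A ^ i).trace := by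
  have hN' : (N : ℂ) ≠ 0 := by exact_mod_cast hN
  have hω0 : ω ≠ 0 := hω.ne_zero hN
  have key : ∀ j : ℕ, ∃ m : ℕ,
      (m : ℂ) = (N : ℂ)⁻¹ * ∑ i ∈ Finset.range N, (ω⁻¹) ^ (i * j) * (A ^ i).trace := by
    intro j
    have h1 : ((ω⁻¹ ^ j) • A) ^ N = 1 := by
      rw [smul_pow, h, ← pow_mul, mul_comm, pow_mul, inv_pow, hω.pow_eq_one]
      simp
    obtain ⟨r, hr, -⟩ := trace_nat_of_idem _ (avg_idem hN _ h1)
    refine ⟨r, ?_⟩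
    rw [← hr, Matrix.trace_smul, Matrix.trace_sum, smul_eq_mul]
    congr 1
    refine Finset.sum_congr rfl fun i _ => ?_
    rw [smul_pow, Matrix.trace_smul, smul_eq_mul, ← pow_mul, mul_comm j]
  choose m hm using key
  refine ⟨m, fun k => ?_, hm⟩
  have h4 : ∀ i, ∑ j ∈ Finset.range N, (ω ^ k * (ω⁻¹) ^ i) ^ j
      = if ω ^ k = ω ^ i then (N : ℂ) else 0 := by
    intro i
    split_ifs with h5
    · rw [h5, ← mul_pow, mul_inv_cancel₀ hω0]; simp
    · have h6 : (ω ^ k * (ω⁻¹) ^ i) ≠ 1 := by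
        intro h7; apply h5
        rw [inv_pow, mul_inv_eq_one₀ (pow_ne_zero _ hω0)] at h7; exact h7
      have h8 := geom_sum_mul (ω ^ k * (ω⁻¹) ^ i) N
      have h9 : (ω ^ k * (ω⁻¹) ^ i) ^ N = 1 := by
        rw [mul_pow, ← pow_mul, ← pow_mul, mul_comm k, mul_comm i, pow_mul, pow_mul, inv_pow,
          hω.pow_eq_one]; simp
      rw [h9, sub_self] at h8
      exact (mul_eq_zero.1 h8).resolve_right (sub_ne_zero.2 h6)
  have h5 : (A ^ k).trace = (A ^ (k % N)).trace := by
    conv_lhs => rw [← Nat.mod_add_div k N, pow_add, pow_mul A N, h, one_pow, mul_one]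
  have h6 : ∀ i ∈ Finset.range N, (ω ^ k = ω ^ i ↔ i = k % N) := by
    intro i hi
    rw [← Nat.mod_add_div k N, pow_add, pow_mul ω N, hω.pow_eq_one, one_pow, mul_one]
    simp only [Nat.add_mul_mod_self_left, Nat.mod_mod]
    exact ⟨fun h => (hω.pow_inj (Nat.mod_lt _ (Nat.pos_of_ne_zero hN)) (Finset.mem_range.1 hi) h).symm, fun h => by rw [h]⟩
  symm
  calc ∑ j ∈ Finset.range N, (m j : ℂ) * ω ^ (j * k)
      = ∑ j ∈ Finset.range N, ∑ i ∈ Finset.range N,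
          (N : ℂ)⁻¹ * (A ^ i).trace * (ω ^ k * (ω⁻¹) ^ i) ^ j := by
        refine Finset.sum_congr rfl fun j _ => ?_
        rw [hm, Finset.mul_sum, Finset.sum_mul]
        refine Finset.sum_congr rfl fun i _ => ?_
        rw [mul_pow, ← pow_mul, ← pow_mul, mul_comm k j]
        ring
    _ = ∑ i ∈ Finset.range N, (N : ℂ)⁻¹ * (A ^ i).trace * (if i = k % N then (N : ℂ) else 0) := by
        rw [Finset.sum_comm]
        refine Finset.sum_congr rfl fun i hi => ?_
        rw [← Finset.mul_sum, h4]
        simp only [h6 i hi]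
    _ = (A ^ k).trace := by
        rw [h5]
        simp only [mul_ite, mul_zero]
        rw [Finset.sum_ite_eq', if_pos (Finset.mem_range.2 (Nat.mod_lt _ (Nat.pos_of_ne_zero hN)))]
        field_simp

theorem trace_integral {t N : ℕ} (hN : N ≠ 0) (A : Matrix (Fin t) (Fin t) ℂ) (h : A ^ N = 1) :
    IsIntegral ℤ A.trace := by
  obtain ⟨m, hm, -⟩ := exists_mult hN A h (Complex.isPrimitiveRoot_exp N hN)
  have := hm 1
  rw [pow_one] at this
  rw [this]
  refine IsIntegral.sum _ fun j _ => IsIntegral.mul ?_ (IsIntegral.pow ?_ _)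
  · exact_mod_cast isIntegral_algebraMap (R := ℤ) (A := ℂ) (x := (m j : ℤ))
  · exact (Complex.isPrimitiveRoot_exp N hN).isIntegral (Nat.pos_of_ne_zero hN)

theorem ringHom_trace {t N m : ℕ} (hN : N ≠ 0) (A : Matrix (Fin t) (Fin t) ℂ) (h : A ^ N = 1)
    (τ : ℂ →+* ℂ) (hτ : ∀ z : ℂ, z ^ N = 1 → τ z = z ^ m) : τ A.trace = (A ^ m).trace := by
  have hω := Complex.isPrimitiveRoot_exp N hN
  obtain ⟨μ, hm, -⟩ := exists_mult hN A h hω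
  have := hm 1
  rw [pow_one] at this
  rw [this, hm m, map_sum]
  refine Finset.sum_congr rfl fun j _ => ?_
  rw [map_mul, map_natCast, mul_one, map_pow, hτ _ hω.pow_eq_one, ← pow_mul, mul_comm m]

section
variable {G : Type} [Group G] [Fintype G]

theorem Irr_integral {χ : G → ℂ} (hχ : χ ∈ Irr G) (g : G) : IsIntegral ℤ (χ g) := by
  obtain ⟨t, ρ, h⟩ := Irr_matrix hχ
  rw [h]
  refine trace_integral (N := Nat.card G) Nat.card_pos.ne' _ ?_
  rw [← map_pow, pow_card_eq_one', map_one]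

theorem ringHom_Irr {χ : G → ℂ} (hχ : χ ∈ Irr G) {m : ℕ} (τ : ℂ →+* ℂ)
    (hτ : ∀ z : ℂ, z ^ (Nat.card G) = 1 → τ z = z ^ m) (g : G) : τ (χ g) = χ (g ^ m) := by
  obtain ⟨t, ρ, h⟩ := Irr_matrix hχ
  rw [h, h, map_pow]
  refine ringHom_trace (N := Nat.card G) Nat.card_pos.ne' _ ?_ τ hτ
  rw [← map_pow, pow_card_eq_one', map_one]

theorem Irr_ringHom {χ : G → ℂ} (hχ : χ ∈ Irr G) (τ : ℂ →+* ℂ) : (fun g => τ (χ g)) ∈ Irr G := by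
  obtain ⟨t, ρ, h⟩ := Irr_matrix hχ
  refine mem_Irr_of_matrix ((τ.mapMatrix : Matrix (Fin t) (Fin t) ℂ →+* Matrix (Fin t) (Fin t) ℂ).toMonoidHom.comp ρ) _ (fun g => ?_) ?_
  · rw [h]
    change τ (ρ g).trace = ((ρ g).map τ).trace
    exact AddMonoidHom.map_trace τ _
  · simp only [← map_mul, ← map_sum]
    rw [Irr_norm hχ, map_natCast]

theorem Irr_pow {χ : G → ℂ} (hχ : χ ∈ Irr G) {m : ℕ} (hm : m.Coprime (Nat.card G)) :
    (fun g => χ (g ^ m)) ∈ Irr G := by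
  obtain ⟨τ, hτ⟩ := exists_ringHom_pow (Nat.card G) m Nat.card_pos.ne' hm
  have := Irr_ringHom hχ τ
  simpa only [ringHom_Irr hχ τ hτ] using this
end

/-! ### Characters and classes invariant under a power map: Brauer's permutation lemma -/

/-- The irreducible characters invariant under the power map `g ↦ g ^ n`. -/
def SChar (n : ℕ) (G : Type) [Group G] : Set (G → ℂ) := {χ ∈ Irr G | ∀ g, χ (g ^ n) = χ g}

/-- The conjugacy classes invariant under the power map `g ↦ g ^ n`. -/
def SCl (n : ℕ) (G : Type) [Group G] : Set (ConjClasses G) :=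
  {C | ∃ g, ConjClasses.mk g = C ∧ IsConj g (g ^ n)}

theorem IsConj_pow' {G : Type} [Group G] {g h : G} (a : IsConj g h) (n : ℕ) : IsConj (g ^ n) (h ^ n) := by
  obtain ⟨c, rfl⟩ := isConj_iff.1 a
  exact isConj_iff.2 ⟨c, by rw [conj_pow]⟩

theorem mk_mem_SCl {G : Type} [Group G] {n : ℕ} {g : G} : ConjClasses.mk g ∈ SCl n G ↔ IsConj g (g ^ n) := by
  refine ⟨?_, fun h => ⟨g, rfl, h⟩⟩
  rintro ⟨h, h1, h2⟩
  have h3 := ConjClasses.mk_eq_mk_iff_isConj.1 h1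
  exact (h3.symm.trans h2).trans (IsConj_pow' h3 n)

section
variable {G : Type} [Group G] [Fintype G]

open Classical in
theorem Irr_inner {χ ψ : G → ℂ} (hχ : χ ∈ Irr G) (hψ : ψ ∈ Irr G) :
    ∑ g : G, χ g * ψ g⁻¹ = if χ = ψ then (Nat.card G : ℂ) else 0 := by
  split_ifs with h
  · rw [h, Irr_norm hψ]
  · exact Irr_orth hχ hψ h

theorem Irr_finite : (Irr G).Finite := by
  have hli : LinearIndependent ℂ (Subtype.val : Irr G → (G → ℂ)) := by
    rw [linearIndependent_iff']
    intro s c hc ψ hψ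
    have h1 : ∑ g : G, (∑ χ ∈ s, c χ • (χ : G → ℂ)) g * (ψ : G → ℂ) g⁻¹ = 0 := by
      rw [hc]; simp
    simp only [Finset.sum_apply, Pi.smul_apply, smul_eq_mul, Finset.sum_mul, mul_assoc] at h1
    rw [Finset.sum_comm] at h1
    simp only [← Finset.mul_sum] at h1
    rw [Finset.sum_eq_single ψ] at h1
    · rw [Irr_norm ψ.2] at h1
      exact (mul_eq_zero.1 h1).resolve_right (NeZero.ne _)
    · intro χ _ hne
      rw [Irr_orth χ.2 ψ.2 (fun h => hne (Subtype.ext h)), mul_zero]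
    · intro h; exact absurd hψ h
  exact hli.setFinite

noncomputable instance : Fintype (Irr G) := Irr_finite.fintype

/-- Column orthogonality. -/
theorem column_orth (x g : G) [Decidable (IsConj x g)] :
    ∑ χ : Irr G, χ.1 x * χ.1 g⁻¹ =
      if IsConj x g then (Nat.card G : ℂ) / Nat.card {y // IsConj x y} else 0 := by
  classical
  have hc : (Nat.card {y // IsConj x y} : ℂ) ≠ 0 := by
    have : Nonempty {y // IsConj x y} := ⟨⟨x, IsConj.refl x⟩⟩
    exact_mod_cast Nat.card_pos.ne'
  have h := Irr_complete (fun g : G => (if IsConj x g then (Nat.card G : ℂ) /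
    Nat.card {y // IsConj x y} else 0) - ∑ χ : Irr G, χ.1 x * χ.1 g⁻¹) ?_ ?_
  · have h1 := congrFun h g
    simp only [Pi.zero_apply, sub_eq_zero] at h1
    rw [← h1]
    congr
  · intro g h
    have h1 : IsConj x (h * g * h⁻¹) ↔ IsConj x g := by
      have : IsConj g (h * g * h⁻¹) := isConj_iff.2 ⟨h, rfl⟩
      exact ⟨fun a => a.trans this.symm, fun a => a.trans this⟩
    simp only [h1]
    congr 1
    refine Finset.sum_congr rfl fun χ _ => ?_
    rw [← Irr_conj χ.2 g⁻¹ h]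
    congr 2; group
  · intro ψ hψ
    simp only [sub_mul]
    rw [Finset.sum_sub_distrib, sub_eq_zero]
    trans (Nat.card G : ℂ) * ψ x
    · simp only [ite_mul, zero_mul]
      rw [← Finset.sum_filter]
      have h2 : ∀ g ∈ Finset.univ.filter (fun g => IsConj x g),
          (Nat.card G : ℂ) / Nat.card {y // IsConj x y} * ψ g =
          (Nat.card G : ℂ) / Nat.card {y // IsConj x y} * ψ x := by
        intro g hg
        obtain ⟨h, rfl⟩ := isConj_iff.1 (Finset.mem_filter.1 hg).2
        rw [Irr_conj hψ]
      rw [Finset.sum_congr rfl h2, Finset.sum_const, nsmul_eq_mul, ← Fintype.card_subtype,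
        ← Nat.card_eq_fintype_card]
      field_simp
    · simp only [Finset.sum_mul]
      rw [Finset.sum_comm, Finset.sum_eq_single ⟨ψ, hψ⟩]
      · simp only [mul_assoc, ← Finset.mul_sum]
        rw [mul_comm]
        congr 1
        rw [← Irr_norm hψ]
        refine Finset.sum_congr rfl fun g _ => mul_comm _ _
      · intro χ _ hne
        simp only [mul_assoc, ← Finset.mul_sum]
        have := Irr_orth hψ χ.2 (fun h => hne (Subtype.ext h.symm))
        simp only [mul_comm (ψ _)] at this
        rw [this, mul_zero]
      · simp

theorem sum_inv_class (s : Set (ConjClasses G)) [DecidablePred (fun g : G => ConjClasses.mk g ∈ s)] :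
    ∑ g : G, (if ConjClasses.mk g ∈ s then (1 : ℂ) / Nat.card {y // IsConj g y} else 0)
      = Nat.card s := by
  classical
  rw [← Finset.sum_fiberwise (s := Finset.univ) (g := fun g : G => ConjClasses.mk g)]
  have h1 : ∀ C : ConjClasses G,
      ∑ g with ConjClasses.mk g = C,
        (if ConjClasses.mk g ∈ s then (1 : ℂ) / Nat.card {y // IsConj g y} else 0)
      = if C ∈ s then 1 else 0 := by
    intro C
    obtain ⟨x, rfl⟩ := ConjClasses.exists_rep C
    have hc : (Nat.card {y // IsConj x y} : ℂ) ≠ 0 := by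
      have : Nonempty {y // IsConj x y} := ⟨⟨x, IsConj.refl x⟩⟩
      exact_mod_cast Nat.card_pos.ne'
    have h2 : ∀ g ∈ Finset.univ.filter (fun g => ConjClasses.mk g = ConjClasses.mk x),
        (if ConjClasses.mk g ∈ s then (1 : ℂ) / Nat.card {y // IsConj g y} else 0)
        = if ConjClasses.mk x ∈ s then (1 : ℂ) / Nat.card {y // IsConj x y} else 0 := by
      intro g hg
      have h3 := (Finset.mem_filter.1 hg).2
      simp only [h3]
      have h4 := ConjClasses.mk_eq_mk_iff_isConj.1 h3
      have h5 : ∀ y, IsConj g y ↔ IsConj x y := fun y =>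
        ⟨fun a => h4.symm.trans a, fun a => h4.trans a⟩
      simp only [h5]
    rw [Finset.sum_congr rfl h2, Finset.sum_const, nsmul_eq_mul]
    have h6 : (Finset.univ.filter (fun g => ConjClasses.mk g = ConjClasses.mk x)).card
        = Nat.card {y // IsConj x y} := by
      rw [Nat.card_eq_fintype_card, Fintype.card_subtype]
      congr 1
      ext g
      simp only [Finset.mem_filter, Finset.mem_univ, true_and, ConjClasses.mk_eq_mk_iff_isConj]
      exact isConj_comm
    rw [h6]
    split_ifs
    · field_simp
    · simp
  rw [Finset.sum_congr rfl fun C _ => h1 C, Finset.sum_ite]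
  simp only [Finset.sum_const, nsmul_eq_mul, mul_one, mul_zero, add_zero]
  rw [Nat.card_eq_fintype_card, Fintype.card_subtype]

/-- Brauer's permutation lemma for the power map. -/
theorem card_SChar {n : ℕ} (hn : n.Coprime (Nat.card G)) :
    Nat.card (SChar n G) = Nat.card (SCl n G) := by
  classical
  have e1 : ∑ g : G, ∑ χ : Irr G, χ.1 (g ^ n) * χ.1 g⁻¹ =
      (Nat.card G : ℂ) * Nat.card (SCl n G) := by
    rw [← sum_inv_class, Finset.mul_sum]
    refine Finset.sum_congr rfl fun g _ => ?_
    rw [column_orth, mk_mem_SCl]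
    have h : IsConj (g ^ n) g ↔ IsConj g (g ^ n) := isConj_comm
    simp only [h]
    split_ifs with h1
    · have h5 : ∀ y, IsConj (g ^ n) y ↔ IsConj g y := fun y =>
        ⟨fun a => h1.trans a, fun a => h1.symm.trans a⟩
      simp only [h5]
      ring
    · simp
  have e2 : ∑ g : G, ∑ χ : Irr G, χ.1 (g ^ n) * χ.1 g⁻¹ =
      (Nat.card G : ℂ) * Nat.card (SChar n G) := by
    rw [Finset.sum_comm]
    have h1 : ∀ χ : Irr G, ∑ g : G, χ.1 (g ^ n) * χ.1 g⁻¹ =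
        if (fun g => χ.1 (g ^ n)) = χ.1 then (Nat.card G : ℂ) else 0 := fun χ =>
      Irr_inner (Irr_pow χ.2 hn) χ.2
    rw [Finset.sum_congr rfl fun χ _ => h1 χ, Finset.sum_ite]
    simp only [Finset.sum_const, nsmul_eq_mul, mul_zero, add_zero]
    rw [mul_comm]
    congr 2
    have : Nat.card (SChar n G) = Nat.card {χ : Irr G // (fun g => χ.1 (g ^ n)) = χ.1} := by
      refine Nat.card_congr ⟨fun χ => ⟨⟨χ.1, χ.2.1⟩, funext χ.2.2⟩,
        fun χ => ⟨χ.1.1, χ.1.2, fun g => congrFun χ.2 g⟩, fun _ => rfl, fun _ => rfl⟩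
    rw [this, Nat.card_eq_fintype_card, Fintype.card_subtype]
  have := e2.symm.trans e1
  exact_mod_cast mul_left_cancel₀ (NeZero.ne _) this
end

/-! ### The exponent `n` and parity arguments in odd order -/

theorem even_of_integral {z : ℂ} (hz : IsIntegral ℤ z) {m : ℤ} (h : (m : ℂ) = 2 * z) : Even m := by
  have h1 : z = algebraMap ℚ ℂ ((m : ℚ) / 2) := by
    push_cast
    simp only [eq_ratCast]
    push_cast
    rw [h]; ring
  rw [h1, isIntegral_algebraMap_iff (algebraMap ℚ ℂ).injective,
    IsIntegrallyClosed.isIntegral_iff] at hz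
  obtain ⟨y, hy⟩ := hz
  refine ⟨y, ?_⟩
  have : (y : ℚ) = m / 2 := by simpa using hy
  have h3 : (m : ℚ) = y + y := by rw [this]; ring
  exact_mod_cast h3

/-- A sum of algebraic integers over a set with a fixed point free involution preserving the
summands is twice an algebraic integer. -/
theorem pair_two {α : Type*} (s : Finset α) (f : α → ℂ) (hinteg : ∀ g, IsIntegral ℤ (f g))
    (σ : α → α) (h1 : ∀ g ∈ s, σ g ∈ s) (h2 : ∀ g ∈ s, σ (σ g) = g) (h3 : ∀ g ∈ s, σ g ≠ g)
    (h4 : ∀ g ∈ s, f (σ g) = f g) : ∃ z, IsIntegral ℤ z ∧ ∑ g ∈ s, f g = 2 * z := by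
  let F : α → integralClosure ℤ ℂ := fun g => ⟨f g, hinteg g⟩
  let I : Ideal (integralClosure ℤ ℂ) := Ideal.span {2}
  have h5 : ∑ g ∈ s, Ideal.Quotient.mk I (F g) = 0 := by
    refine Finset.sum_involution (fun g _ => σ g) ?_ ?_ ?_ ?_
    · intro g hg
      rw [← map_add, Ideal.Quotient.eq_zero_iff_mem, Ideal.mem_span_singleton]
      refine ⟨F g, ?_⟩
      apply Subtype.ext
      change f g + f (σ g) = 2 * f g
      rw [h4 g hg]; ring
    · intro g hg _; exact h3 g hg
    · intro g hg; exact h1 g hg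
    · intro g hg; exact h2 g hg
  rw [← map_sum, Ideal.Quotient.eq_zero_iff_mem, Ideal.mem_span_singleton] at h5
  obtain ⟨z, hz⟩ := h5
  refine ⟨z, z.2, ?_⟩
  have := congrArg (fun x : integralClosure ℤ ℂ => (x : ℂ)) hz
  rw [AddSubmonoidClass.coe_finsetSum] at this
  exact this

section
variable {G : Type} [Group G] [Fintype G]

theorem Irr_pos {χ : G → ℂ} (hχ : χ ∈ Irr G) : ∃ t : ℕ, 0 < t ∧ χ 1 = t := by
  obtain ⟨t, ρ, h, h1, -⟩ := Irr_degree hχ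
  exact ⟨t, h, h1⟩

theorem inv_ne_self_of_odd (hG : Odd (Nat.card G)) {g : G} (hg : g ≠ 1) : g⁻¹ ≠ g := by
  intro h
  apply hg
  have h2 : g ^ 2 = 1 := by rw [pow_two]; nth_rewrite 1 [← h]; simp
  have h3 : orderOf g ∣ 2 := orderOf_dvd_of_pow_eq_one h2
  have h4 : Odd (orderOf g) := hG.of_dvd_nat (orderOf_dvd_natCard g)
  rcases (Nat.dvd_prime Nat.prime_two).1 h3 with h5 | h5
  · exact orderOf_eq_one_iff.1 h5
  · rw [h5] at h4; exact absurd h4 (by decide)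

/-- Parity of the degree from `∑ χ(g) χ(g⁻¹) = |G|`, pairing `g` with `g⁻¹`. -/
theorem Irr_odd (hG : Odd (Nat.card G)) {χ : G → ℂ} (hχ : χ ∈ Irr G) {t : ℕ} (ht : χ 1 = t) :
    Odd t := by
  classical
  obtain ⟨z, hz, h⟩ := pair_two (Finset.univ.erase (1 : G)) (fun g => χ g * χ g⁻¹)
    (fun g => (Irr_integral hχ g).mul (Irr_integral hχ _)) (fun g => g⁻¹) (by simp) (by simp)
    (fun g hg => inv_ne_self_of_odd hG (Finset.ne_of_mem_erase hg)) (by intro g _; simp [mul_comm])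
  have h1 := Irr_norm hχ
  rw [← Finset.add_sum_erase _ _ (Finset.mem_univ (1 : G)), h, inv_one, ht] at h1
  have h2 : (((Nat.card G : ℤ) - t * t : ℤ) : ℂ) = 2 * z := by
    push_cast; rw [← h1]; ring
  have h3 := even_of_integral hz h2
  have h4 : Odd ((Nat.card G : ℤ)) := by exact_mod_cast hG
  have h5 : Odd ((t : ℤ) * t) := by
    by_contra h6
    rw [Int.not_odd_iff_even] at h6
    have := h3.add h6
    rw [sub_add_cancel] at this
    exact (Int.not_even_iff_odd.2 h4) this
  have := Int.odd_mul.1 h5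
  exact_mod_cast this.1

theorem one_mem_Irr : (fun _ : G => (1 : ℂ)) ∈ Irr G :=
  mem_Irr_of_matrix (t := 1) 1 _ (fun g => by simp) (by simp)

/-- Burnside: in odd order only the trivial irreducible character is real. -/
theorem Irr_real_trivial (hG : Odd (Nat.card G)) {χ : G → ℂ} (hχ : χ ∈ Irr G)
    (hr : ∀ g, χ g⁻¹ = χ g) : χ = fun _ => 1 := by
  classical
  by_contra hne
  obtain ⟨t, ht0, ht⟩ := Irr_pos hχ
  have h0 := Irr_orth hχ one_mem_Irr hne
  obtain ⟨z, hz, h⟩ := pair_two (Finset.univ.erase (1 : G)) (fun g => χ g)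
    (fun g => (Irr_integral hχ g)) (fun g => g⁻¹) (by simp) (by simp)
    (fun g hg => inv_ne_self_of_odd hG (Finset.ne_of_mem_erase hg)) (by intro g _; exact hr g)
  simp only [mul_one] at h0
  rw [← Finset.add_sum_erase _ _ (Finset.mem_univ (1 : G)), h, ht] at h0
  have h2 : ((t : ℤ) : ℂ) = 2 * (-z) := by
    push_cast; linear_combination h0
  have h3 := even_of_integral hz.neg h2
  have h4 := Irr_odd hG hχ ht
  exact (Nat.not_even_iff_odd.2 h4) (by exact_mod_cast h3)

end

/-- The arithmetic conditions on the exponent `n`: modulo the `p`-part of `N` it is `1 + p ^ c`,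
and modulo the `p'`-part of `N` it is `-1`. -/
structure NGood (p c n N : ℕ) : Prop where
  pp : ∀ i, p ^ i ∣ N → n ≡ 1 + p ^ c [MOD p ^ i]
  pq : ∀ d, d ∣ N → ¬ p ∣ d → d ∣ n + 1

theorem NGood.mono {p c n N N' : ℕ} (h : NGood p c n N) (hd : N' ∣ N) : NGood p c n N' :=
  ⟨fun i hi => h.pp i (hi.trans hd), fun d hd' => h.pq d (hd'.trans hd)⟩

/-- Being an element of `p`-power order. -/
def PElt (p : ℕ) {G : Type*} [Group G] (g : G) : Prop := ∃ k : ℕ, g ^ (p ^ k) = 1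

theorem exists_ppart {p N : ℕ} (hp : p.Prime) (hN : N ≠ 0) : ∃ i d, N = p ^ i * d ∧ ¬ p ∣ d := by
  obtain ⟨i, d, h1, h2⟩ := Nat.exists_eq_pow_mul_and_not_dvd hN p hp.ne_one
  exact ⟨i, d, h2, h1⟩

theorem NGood.coprime {p c n N : ℕ} (h : NGood p c n N) (hp : p.Prime) (hc : c ≠ 0) (hN : N ≠ 0) :
    n.Coprime N := by
  obtain ⟨i, d, rfl, hd⟩ := exists_ppart hp hN
  refine Nat.Coprime.mul_right ?_ ?_
  · rcases Nat.eq_zero_or_pos i with rfl | hi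
    · simp
    refine Nat.Coprime.pow_right _ ?_
    rw [Nat.coprime_comm, hp.coprime_iff_not_dvd]
    intro h1
    have h2 := h.pp 1 (by rw [pow_one]; exact (dvd_pow_self p hi.ne').trans (dvd_mul_right _ _))
    rw [pow_one] at h2
    have h3 := (h2.dvd_iff dvd_rfl).1 h1
    have h4 := (Nat.dvd_add_left (dvd_pow_self p hc)).1 h3
    exact hp.one_lt.ne' (Nat.dvd_one.1 h4)
  · have h1 := h.pq d (dvd_mul_left _ _) hd
    rw [Nat.coprime_comm]
    exact Nat.Coprime.coprime_dvd_left h1 (by simp)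

/-- The power `n ^ N` is `1` modulo the `p`-part and `-1` modulo the `p'`-part. -/
theorem NGood.tau {p c n N : ℕ} (h : NGood p c n N) (hp : p.Prime) (hc : c ≠ 0) (hN : Odd N) :
    (∀ i, p ^ i ∣ N → n ^ N ≡ 1 [MOD p ^ i]) ∧ (∀ d, d ∣ N → ¬ p ∣ d → d ∣ n ^ N + 1) := by
  constructor
  · intro i hi
    refine ((h.pp i hi).pow N).trans ?_
    obtain ⟨e, rfl⟩ := hi
    rw [pow_mul]
    have key : ∀ j, (1 + p ^ c) ^ p ^ j ≡ 1 [MOD p ^ (j + 1)] := by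
      intro j
      have h1 : (p : ℤ) ∣ (1 + (p : ℤ) ^ c) - 1 := by
        rw [add_sub_cancel_left]; exact dvd_pow_self _ hc
      have h2 := dvd_sub_pow_of_dvd_sub h1 j
      apply Nat.ModEq.symm
      rw [Nat.modEq_iff_dvd]
      push_cast
      simpa using h2
    have h2 := ((key i).of_dvd (pow_dvd_pow p (Nat.le_succ i))).pow e
    rwa [one_pow] at h2
  · intro d hd hpd
    have h1 := h.pq d hd hpd
    exact h1.trans (by simpa using hN.nat_add_dvd_pow_add_pow n 1)

section
variable {G : Type} [Group G] [Fintype G] {p c n : ℕ}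

/-- The fixed points of the involution `g ↦ g ^ (n ^ |G|)` are `p`-elements. -/
theorem tau_fixed (hG : Odd (Nat.card G)) (hp : p.Prime) (hc : c ≠ 0)
    (h : NGood p c n (Nat.card G)) {g : G} (hg : g ^ (n ^ Nat.card G) = g) : PElt p g := by
  obtain ⟨h1, h2⟩ := h.tau hp hc hG
  obtain ⟨i, d, hd, hpd⟩ := exists_ppart (N := orderOf g) hp (orderOf_pos g).ne'
  have hdo : d ∣ Nat.card G := (Dvd.intro_left _ hd.symm).trans (orderOf_dvd_natCard g)
  have h3 := h2 d hdo hpd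
  have h4 : n ^ Nat.card G ≡ 1 [MOD orderOf g] := pow_eq_pow_iff_modEq.1 (by rw [hg, pow_one])
  have h5 : n ^ Nat.card G ≡ 1 [MOD d] := h4.of_dvd (Dvd.intro_left _ hd.symm)
  have h6 : d ∣ 2 := by
    have := (h5.add_right 1).dvd_iff dvd_rfl
    exact this.1 h3
  have h7 : d = 1 := by
    have hodd : Odd d := hG.of_dvd_nat hdo
    rcases (Nat.dvd_prime Nat.prime_two).1 h6 with h | h
    · exact h
    · rw [h] at hodd; exact absurd hodd (by decide)
  exact ⟨i, by rw [h7, mul_one] at hd; rw [← hd, pow_orderOf_eq_one]⟩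

theorem tau_pElt (hG : Odd (Nat.card G)) (hp : p.Prime) (hc : c ≠ 0)
    (h : NGood p c n (Nat.card G)) {g : G} (hg : PElt p g) : g ^ (n ^ Nat.card G) = g := by
  obtain ⟨h1, -⟩ := h.tau hp hc hG
  obtain ⟨k, hk⟩ := hg
  obtain ⟨i, -, hi⟩ := (Nat.dvd_prime_pow hp).1 (orderOf_dvd_of_pow_eq_one hk)
  have h2 := h1 i (hi ▸ orderOf_dvd_natCard g)
  rw [← hi] at h2
  simpa using pow_eq_pow_iff_modEq.2 h2

theorem tau_tau (hG : Odd (Nat.card G)) (hp : p.Prime) (hc : c ≠ 0)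
    (h : NGood p c n (Nat.card G)) (g : G) : (g ^ (n ^ Nat.card G)) ^ (n ^ Nat.card G) = g := by
  obtain ⟨h1, h2⟩ := h.tau hp hc hG
  obtain ⟨i, d, hd, hpd⟩ := exists_ppart (N := orderOf g) hp (orderOf_pos g).ne'
  have hdo : d ∣ Nat.card G := (Dvd.intro_left _ hd.symm).trans (orderOf_dvd_natCard g)
  have hpo : p ^ i ∣ Nat.card G := (Dvd.intro _ hd.symm).trans (orderOf_dvd_natCard g)
  set τ := n ^ Nat.card G
  have e1 : τ * τ ≡ 1 [MOD p ^ i] := by simpa using (h1 i hpo).mul (h1 i hpo)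
  have e2 : τ * τ ≡ 1 [MOD d] := by
    have h3 := h2 d hdo hpd
    apply Nat.ModEq.symm
    rw [Nat.modEq_iff_dvd]
    have : (d : ℤ) ∣ (τ + 1) * (τ - 1) := Dvd.dvd.mul_right (by exact_mod_cast h3) _
    convert this using 1
    push_cast; ring
  have e3 : τ * τ ≡ 1 [MOD orderOf g] := by
    rw [hd]
    exact (Nat.modEq_and_modEq_iff_modEq_mul
      (Nat.Coprime.pow_left _ ((hp.coprime_iff_not_dvd).2 hpd))).1 ⟨e1, e2⟩
  rw [← pow_mul]
  simpa using pow_eq_pow_iff_modEq.2 e3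

/-- An element conjugate to its `n`-th power has `p`-power order. -/
theorem pElt_of_isConj (hG : Odd (Nat.card G)) (hp : p.Prime) (hc : c ≠ 0)
    (h : NGood p c n (Nat.card G)) {g : G} (hg : IsConj g (g ^ n)) : PElt p g := by
  obtain ⟨x, hx⟩ := isConj_iff.1 hg
  have key : ∀ j, x ^ j * g * (x ^ j)⁻¹ = g ^ (n ^ j) := by
    intro j
    induction j with
    | zero => simp
    | succ j ih =>
      have : x ^ (j + 1) * g * (x ^ (j + 1))⁻¹ = x ^ j * (x * g * x⁻¹) * (x ^ j)⁻¹ := by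
        rw [pow_succ]; group
      rw [this, hx, ← conj_pow, ih, ← pow_mul, pow_succ]
  have := key (Nat.card G)
  rw [pow_card_eq_one'] at this
  exact tau_fixed hG hp hc h (by rw [← this]; simp)

theorem SChar_tau {χ : G → ℂ} (hχ : χ ∈ SChar n G) (j : ℕ) (g : G) : χ (g ^ (n ^ j)) = χ g := by
  induction j with
  | zero => simp
  | succ j ih => rw [pow_succ, pow_mul, hχ.2, ih]

/-- Pairing the elements moved by the involution `g ↦ g ^ (n ^ |G|)` shows that the sum of `f` is
even, so it cannot be `|G|`. -/
theorem SChar_tau_sum (hG : Odd (Nat.card G)) (hp : p.Prime) (hc : c ≠ 0)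
    (h : NGood p c n (Nat.card G)) (f : G → ℂ) (hinteg : ∀ g, IsIntegral ℤ (f g))
    (hf : ∀ g, f (g ^ (n ^ Nat.card G)) = f g) (h0 : ∀ g, PElt p g → f g = 0)
    (hs : ∑ g, f g = Nat.card G) : False := by
  classical
  obtain ⟨z, hz, h1⟩ := pair_two (Finset.univ.filter (fun g : G => g ^ (n ^ Nat.card G) ≠ g)) f hinteg
    (fun g => g ^ (n ^ Nat.card G))
    (by
      intro g hg
      simp only [Finset.mem_filter, Finset.mem_univ, true_and] at hg ⊢
      rw [tau_tau hG hp hc h]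
      exact fun h => hg h.symm)
    (fun g _ => tau_tau hG hp hc h g) (fun g hg => (Finset.mem_filter.1 hg).2) (fun g _ => hf g)
  rw [Finset.sum_filter_of_ne] at h1
  · rw [hs] at h1
    have := even_of_integral (m := Nat.card G) hz (by exact_mod_cast h1)
    exact Nat.not_even_iff_odd.2 hG (by exact_mod_cast this)
  · intro g _ hne h2
    exact hne (h0 g (tau_fixed hG hp hc h h2))

/-- Irreducible characters invariant under the involution `g ↦ g ^ (n ^ |G|)` are determined by
their values on `p`-elements. -/
theorem SChar_ext (hG : Odd (Nat.card G)) (hp : p.Prime) (hc : c ≠ 0)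
    (h : NGood p c n (Nat.card G)) {χ ψ : G → ℂ} (hχ : χ ∈ Irr G) (hψ : ψ ∈ Irr G)
    (hχ' : ∀ g, χ (g ^ (n ^ Nat.card G)) = χ g) (hψ' : ∀ g, ψ (g ^ (n ^ Nat.card G)) = ψ g)
    (he : ∀ g, PElt p g → χ g = ψ g) : χ = ψ := by
  by_contra hne
  refine SChar_tau_sum hG hp hc h (fun g => (χ g - ψ g) * χ g⁻¹)
    (fun g => ((Irr_integral hχ g).sub (Irr_integral hψ g)).mul (Irr_integral hχ _)) ?_ ?_ ?_
  · intro g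
    rw [hχ', hψ', ← inv_pow, hχ']
  · intro g hg
    simp only [he g hg, sub_self, zero_mul]
  · simp only [sub_mul]
    rw [Finset.sum_sub_distrib, Irr_norm hχ, Irr_orth hψ hχ (Ne.symm hne), sub_zero]

/-- A character in `SChar n G` with all `p`-elements in its kernel is trivial. -/
theorem SChar_trivial (hG : Odd (Nat.card G)) (hp : p.Prime) (hc : c ≠ 0)
    (h : NGood p c n (Nat.card G)) {χ : G → ℂ} (hχ : χ ∈ SChar n G)
    (he : ∀ g, PElt p g → χ g = χ 1) : χ = fun _ => 1 := by
  by_contra hne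
  refine SChar_tau_sum hG hp hc h (fun g => (χ g - χ 1) * χ g⁻¹)
    (fun g => ((Irr_integral hχ.1 g).sub (Irr_integral hχ.1 1)).mul (Irr_integral hχ.1 _)) ?_ ?_ ?_
  · intro g
    rw [SChar_tau hχ, ← inv_pow, SChar_tau hχ]
  · intro g hg
    simp only [he g hg, sub_self, zero_mul]
  · simp only [sub_mul]
    have := Irr_orth one_mem_Irr hχ.1 (Ne.symm hne)
    simp only [one_mul] at this
    rw [Finset.sum_sub_distrib, Irr_norm hχ.1, ← Finset.mul_sum, this, mul_zero, sub_zero]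
end

/-! ### Twisting by linear characters -/

section
variable {G : Type} [Group G] [Fintype G]

/-- The product of a function on `G` with a linear character. -/
def tw {G : Type} [Group G] (μ : G →* ℂˣ) (χ : G → ℂ) : G → ℂ := fun g => (μ g : ℂ) * χ g

theorem tw_apply {G : Type} [Group G] (μ : G →* ℂˣ) (χ : G → ℂ) (g : G) :
    tw μ χ g = (μ g : ℂ) * χ g := rfl

theorem tw_tw {G : Type} [Group G] (μ ν : G →* ℂˣ) (χ : G → ℂ) :
    tw μ (tw ν χ) = tw (μ * ν) χ := by
  funext g; simp [tw, mul_assoc]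

theorem tw_one {G : Type} [Group G] (χ : G → ℂ) : tw 1 χ = χ := by
  funext g; simp [tw]

theorem tw_inj {G : Type} [Group G] (μ : G →* ℂˣ) {χ ψ : G → ℂ} (h : tw μ χ = tw μ ψ) : χ = ψ := by
  funext g
  exact mul_left_cancel₀ (Units.ne_zero (μ g)) (congrFun h g)

/-- The matrix representation `ρ` multiplied by a linear character. -/
def twRep {G : Type} [Group G] {t : ℕ} (μ : G →* ℂˣ) (ρ : G →* Matrix (Fin t) (Fin t) ℂ) :
    G →* Matrix (Fin t) (Fin t) ℂ where
  toFun g := (μ g : ℂ) • ρ g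
  map_one' := by simp
  map_mul' g h := by simp [smul_smul, mul_comm]

theorem twRep_apply {G : Type} [Group G] {t : ℕ} (μ : G →* ℂˣ)
    (ρ : G →* Matrix (Fin t) (Fin t) ℂ) (g : G) : twRep μ ρ g = (μ g : ℂ) • ρ g := rfl

theorem twRep_trace {G : Type} [Group G] {t : ℕ} (μ : G →* ℂˣ)
    (ρ : G →* Matrix (Fin t) (Fin t) ℂ) {χ : G → ℂ} (h : ∀ g, χ g = (ρ g).trace) (g : G) :
    tw μ χ g = (twRep μ ρ g).trace := by
  rw [twRep_apply, Matrix.trace_smul, ← h]; rfl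

theorem tw_mem_Irr (μ : G →* ℂˣ) {χ : G → ℂ} (hχ : χ ∈ Irr G) : tw μ χ ∈ Irr G := by
  obtain ⟨t, ρ, h⟩ := Irr_matrix hχ
  refine mem_Irr_of_matrix (twRep μ ρ) _ (twRep_trace μ ρ h) ?_
  rw [← Irr_norm hχ]
  refine Finset.sum_congr rfl fun g _ => ?_
  simp only [tw, map_inv]
  have : (μ g : ℂ) * ((μ g)⁻¹ : ℂˣ) = 1 := by simp
  linear_combination (χ g * χ g⁻¹) * this

theorem lin_mem_Irr (μ : G →* ℂˣ) : tw μ (fun _ => 1) ∈ Irr G := tw_mem_Irr μ one_mem_Irr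

theorem exists_lin {χ : G → ℂ} (hχ : χ ∈ Irr G) (h1 : χ 1 = 1) : ∃ μ, χ = tw μ (fun _ => 1) := by
  obtain ⟨t, ρ, ht0, ht, h⟩ := Irr_degree hχ
  have : t = 1 := by rw [h1] at ht; exact_mod_cast ht.symm
  subst this
  have h2 : ∀ g, χ g = ρ g 0 0 := fun g => by rw [h, Matrix.trace_fin_one]
  let f : G →* ℂ := ⟨⟨χ, h1⟩, fun a b => by
    simp only [h2, map_mul, Matrix.mul_apply, Fin.sum_univ_one]⟩
  refine ⟨f.toHomUnits, ?_⟩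
  funext g
  simp [tw]; rfl

theorem tw_one_injective : Function.Injective (fun μ : G →* ℂˣ => tw μ (fun _ => 1)) := by
  intro μ ν h
  ext g
  have := congrFun h g
  simpa [tw] using this

instance : Finite (G →* ℂˣ) :=
  Finite.of_injective (fun μ : G →* ℂˣ => (⟨_, lin_mem_Irr μ⟩ : Irr G)) (by
    intro μ ν h
    exact tw_one_injective (congrArg Subtype.val h))

/-- Inflation of irreducible characters. -/
theorem comp_mem_Irr {H : Type} [Group H] [Fintype H] (f : G →* H) (hf : Function.Surjective f)
    {χ : H → ℂ} (hχ : χ ∈ Irr H) : χ ∘ f ∈ Irr G := by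
  classical
  obtain ⟨t, ρ, h⟩ := Irr_matrix hχ
  refine mem_Irr_of_matrix (ρ.comp f) _ (fun g => h _) ?_
  have h1 : ∀ y : H, (Finset.univ.filter (fun g => f g = y)).card = Nat.card f.ker := by
    intro y
    obtain ⟨x, rfl⟩ := hf y
    rw [Nat.card_eq_fintype_card, Fintype.card_subtype]
    refine Finset.card_bij (fun g _ => x⁻¹ * g) ?_ ?_ ?_
    · intro g hg
      have := (Finset.mem_filter.1 hg).2
      simp [MonoidHom.mem_ker, this]
    · intro a _ b _ h; exact mul_left_cancel h
    · intro b hb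
      have := (Finset.mem_filter.1 hb).2
      exact ⟨x * b, by simp [MonoidHom.mem_ker.1 this], by simp⟩
  rw [← Finset.sum_fiberwise (s := Finset.univ) (g := fun g : G => f g)]
  have h2 : ∀ y : H, ∑ g with f g = y, (χ ∘ f) g * (χ ∘ f) g⁻¹
      = (Nat.card f.ker : ℂ) * (χ y * χ y⁻¹) := by
    intro y
    rw [← h1 y, ← nsmul_eq_mul, ← Finset.sum_const]
    refine Finset.sum_congr rfl fun g hg => ?_
    have := (Finset.mem_filter.1 hg).2
    simp [this]
  rw [Finset.sum_congr rfl fun y _ => h2 y, ← Finset.mul_sum, Irr_norm hχ]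
  have h3 := f.ker.card_mul_index
  rw [Subgroup.index_ker, MonoidHom.range_eq_top.2 hf, Subgroup.card_top] at h3
  exact_mod_cast h3

/-- Comparing determinants: a linear character fixing `χ` has order dividing `χ 1`. -/
theorem twist_pow_eq_one {μ : G →* ℂˣ} {χ : G → ℂ} (hχ : χ ∈ Irr G) (h : tw μ χ = χ) {t : ℕ}
    (ht : χ 1 = t) : μ ^ t = 1 := by
  obtain ⟨t', ρ, ht0, ht', h1⟩ := Irr_degree hχ
  have : t' = t := by rw [ht] at ht'; exact_mod_cast ht'.symm
  subst this
  obtain ⟨T, hT, h2⟩ := exists_intertwiner ρ (twRep μ ρ) hχ h1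
    (fun g => by rw [← twRep_trace μ ρ h1, h])
  ext g
  have h3 := congrArg Matrix.det (h2 g)
  have h4 : (ρ g).det ≠ 0 := by
    have : (ρ g).det * (ρ g⁻¹).det = 1 := by rw [← Matrix.det_mul, ← map_mul]; simp
    exact left_ne_zero_of_mul_eq_one this
  have h5 : T.det ≠ 0 := ((Matrix.isUnit_iff_isUnit_det _).1 hT).ne_zero
  rw [Matrix.det_mul, Matrix.det_mul, twRep_apply, Matrix.det_smul, Fintype.card_fin] at h3
  have h6 : (T.det * (ρ g).det) * ((μ g : ℂ) ^ t' - 1) = 0 := by linear_combination - h3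
  have h7 := (mul_eq_zero.1 h6).resolve_left (mul_ne_zero h5 h4)
  simpa [sub_eq_zero] using h7

end

/-- The linear characters of exponent dividing `q`. -/
def LinQ (q : ℕ) (G : Type) [Group G] : Subgroup (G →* ℂˣ) := (powMonoidHom q).ker

theorem mem_LinQ {q : ℕ} {G : Type} [Group G] {μ : G →* ℂˣ} : μ ∈ LinQ q G ↔ μ ^ q = 1 := Iff.rfl

theorem pow_n_eq_self_iff {M : Type*} [Group M] {p c n N : ℕ} (hp : p.Prime) (h : NGood p c n N)
    (hN : Odd N) {z : M} (hz : z ^ N = 1) : z ^ n = z ↔ z ^ (p ^ c) = 1 := by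
  have ho := orderOf_dvd_of_pow_eq_one hz
  constructor
  · intro h1
    have ho0 : orderOf z ≠ 0 := fun h => by
      rw [h, zero_dvd_iff] at ho; rw [ho] at hN; exact absurd hN (by decide)
    obtain ⟨i, d, hd, hpd⟩ := exists_ppart (N := orderOf z) hp ho0
    have hdo : d ∣ N := (Dvd.intro_left _ hd.symm).trans ho
    have h3 := h.pq d hdo hpd
    have h4 : n ≡ 1 [MOD orderOf z] := pow_eq_pow_iff_modEq.1 (by rw [h1, pow_one])
    have h5 : n ≡ 1 [MOD d] := h4.of_dvd (Dvd.intro_left _ hd.symm)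
    have h6 : d ∣ 2 := by
      have := (h5.add_right 1).dvd_iff dvd_rfl
      exact this.1 h3
    have h7 : d = 1 := by
      have hodd : Odd d := hN.of_dvd_nat hdo
      rcases (Nat.dvd_prime Nat.prime_two).1 h6 with h | h
      · exact h
      · rw [h] at hodd; exact absurd hodd (by decide)
    rw [h7, mul_one] at hd
    have h8 := h.pp i (hd ▸ ho)
    rw [hd] at h4
    have h9 : 1 + 0 ≡ 1 + p ^ c [MOD p ^ i] := h4.symm.trans h8
    have h10 := (Nat.modEq_zero_iff_dvd.1 (Nat.ModEq.add_left_cancel' 1 h9).symm)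
    rw [← hd] at h10
    exact orderOf_dvd_iff_pow_eq_one.1 h10
  · intro h1
    obtain ⟨i, -, hi⟩ := (Nat.dvd_prime_pow hp).1 (orderOf_dvd_of_pow_eq_one h1)
    have h2 := h.pp i (hi ▸ ho)
    rw [← hi] at h2
    rw [pow_eq_pow_iff_modEq.2 h2, pow_add, h1]; simp

section
variable {G : Type} [Group G] [Fintype G] {p c n : ℕ}

theorem lin_mem_SChar (hG : Odd (Nat.card G)) (hp : p.Prime)
    (h : NGood p c n (Nat.card G)) {μ : G →* ℂˣ} :
    (∀ g, μ (g ^ n) = μ g) ↔ μ ∈ LinQ (p ^ c) G := by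
  rw [mem_LinQ, MonoidHom.ext_iff]
  refine forall_congr' fun g => ?_
  rw [map_pow, MonoidHom.pow_apply, MonoidHom.one_apply]
  exact pow_n_eq_self_iff hp h hG (by rw [← map_pow, pow_card_eq_one', map_one])

theorem tw_mem_SChar (hG : Odd (Nat.card G)) (hp : p.Prime)
    (h : NGood p c n (Nat.card G)) {μ : G →* ℂˣ} (hμ : μ ∈ LinQ (p ^ c) G) {χ : G → ℂ}
    (hχ : χ ∈ SChar n G) : tw μ χ ∈ SChar n G :=
  ⟨tw_mem_Irr μ hχ.1, fun g => by simp only [tw, hχ.2, (lin_mem_SChar hG hp h).2 hμ]⟩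

theorem SChar_finite : (SChar n G).Finite := Irr_finite.subset fun _ h => h.1

open Classical in
/-- The quotient reduction for the comparison of `SChar` with `LinQ`. -/
theorem SChar_quotient (hG : Odd (Nat.card G)) (hp : p.Prime) (h : NGood p c n (Nat.card G))
    (T : Subgroup G) [T.Normal] (hQ : 2 * Nat.card (LinQ (p ^ c) (G ⧸ T)) ≤ Nat.card (SChar n (G ⧸ T))) :
    2 * Nat.card (LinQ (p ^ c) G) ≤ Nat.card (SChar n G) := by
  have := Fintype.ofFinite (G ⧸ T)
  have : Finite (SChar n (G ⧸ T)) := SChar_finite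
  have : Finite (SChar n G) := SChar_finite
  have := Fintype.ofFinite (LinQ (p ^ c) G × SChar n (G ⧸ T))
  let F : LinQ (p ^ c) G × SChar n (G ⧸ T) → SChar n G := fun x =>
    ⟨tw x.1.1 (x.2.1 ∘ QuotientGroup.mk' T), tw_mem_SChar hG hp h x.1.2
      ⟨comp_mem_Irr _ (QuotientGroup.mk'_surjective T) x.2.2.1, fun g => by
        simp only [Function.comp, map_pow]; exact x.2.2.2 _⟩⟩
  have key : ∀ x y, F x = F y → ∃ ν : LinQ (p ^ c) (G ⧸ T),
      y.1.1 = x.1.1 * ν.1.comp (QuotientGroup.mk' T) ∧ x.2.1 = tw ν.1 y.2.1 := by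
    intro x y hxy
    have h1 : ∀ g : G, (x.1.1 g : ℂ) * x.2.1 (QuotientGroup.mk' T g)
        = (y.1.1 g : ℂ) * y.2.1 (QuotientGroup.mk' T g) := fun g =>
      congrFun (congrArg Subtype.val hxy) g
    obtain ⟨t, ht0, ht⟩ := Irr_pos x.2.2.1
    have h2 : x.2.1 1 = y.2.1 1 := by simpa using h1 1
    have h3 : ∀ s ∈ T, (x.1.1⁻¹ * y.1.1) s = 1 := by
      intro s hs
      have h4 := h1 s
      have h5 : QuotientGroup.mk' T s = 1 := (QuotientGroup.eq_one_iff s).2 hs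
      have h6 : (t : ℂ) ≠ 0 := by exact_mod_cast ht0.ne'
      rw [h5, ← h2, ht] at h4
      have h7 := mul_right_cancel₀ h6 h4
      have h8 : x.1.1 s = y.1.1 s := Units.ext h7
      simp [h8]
    let ν : G ⧸ T →* ℂˣ := QuotientGroup.lift T (x.1.1⁻¹ * y.1.1) h3
    have hν : ν.comp (QuotientGroup.mk' T) = x.1.1⁻¹ * y.1.1 := by
      ext g; rfl
    refine ⟨⟨ν, ?_⟩, ?_, ?_⟩
    · rw [mem_LinQ]
      have h9 : (x.1.1⁻¹ * y.1.1) ^ (p ^ c) = 1 :=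
        (LinQ (p ^ c) G).mul_mem ((LinQ (p ^ c) G).inv_mem x.1.2) y.1.2
      refine MonoidHom.ext fun z => ?_
      obtain ⟨g, rfl⟩ := QuotientGroup.mk'_surjective T z
      have := DFunLike.congr_fun h9 g
      rw [← hν] at this
      exact this
    · rw [hν]; exact (mul_inv_cancel_left (G := G →* ℂˣ) x.1.1 y.1.1).symm
    · funext z
      obtain ⟨g, rfl⟩ := QuotientGroup.mk'_surjective T z
      have h10 := h1 g
      have h11 : ν (QuotientGroup.mk' T g) = (x.1.1⁻¹ * y.1.1) g := DFunLike.congr_fun hν g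
      rw [tw_apply, h11]
      simp only [MonoidHom.mul_apply, MonoidHom.inv_apply, Units.val_mul, mul_assoc]
      rw [← h10, ← mul_assoc]
      simp
  have e1 := Finset.card_le_mul_card_image (f := F) Finset.univ (Nat.card (LinQ (p ^ c) (G ⧸ T))) (by
    intro a ha
    obtain ⟨x, -, rfl⟩ := Finset.mem_image.1 ha
    have := Fintype.ofFinite (LinQ (p ^ c) (G ⧸ T))
    rw [Nat.card_eq_fintype_card, ← Finset.card_univ]
    have hk : ∀ y ∈ Finset.univ.filter (fun y => F y = F x), ∃ ν : LinQ (p ^ c) (G ⧸ T),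
      y.1.1 = x.1.1 * ν.1.comp (QuotientGroup.mk' T) ∧ x.2.1 = tw ν.1 y.2.1 := fun y hy =>
        key x y (Finset.mem_filter.1 hy).2.symm
    choose! φ hφ using hk
    refine Finset.card_le_card_of_injOn φ (fun _ _ => Finset.mem_coe.2 (Finset.mem_univ _)) ?_
    intro y hy z hz hyz
    have a1 := hφ y (Finset.mem_coe.1 hy)
    have a2 := hφ z (Finset.mem_coe.1 hz)
    rw [hyz] at a1
    refine Prod.ext (Subtype.ext (a1.1.trans a2.1.symm)) (Subtype.ext ?_)
    exact tw_inj _ (a1.2.symm.trans a2.2))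
  have := Fintype.ofFinite (SChar n G)
  have e2 : (Finset.univ.image F).card ≤ Nat.card (SChar n G) := by
    rw [Nat.card_eq_fintype_card]; exact Finset.card_le_univ _
  rw [Finset.card_univ, ← Nat.card_eq_fintype_card, Nat.card_prod] at e1
  have e3 : 0 < Nat.card (LinQ (p ^ c) (G ⧸ T)) := Nat.card_pos
  have e4 := e1.trans (Nat.mul_le_mul_left _ e2)
  nlinarith
end

/-! ### Frobenius' criterion and the counting step for `O_p(G) = 1` -/

section
open Subgroup
open scoped commutatorElement

/-- Nilpotency of the `p`-group `P`. -/
theorem eq_bot_of_le_commutator {G : Type*} [Group G] [Finite G] {p : ℕ} [hp : Fact p.Prime]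
    {P R : Subgroup G} (hP : IsPGroup p P) (hRP : R ≤ P) (h : R ≤ ⁅R, P⁆) : R = ⊥ := by
  have hnil : Group.IsNilpotent P := hP.isNilpotent
  have h1 : ∀ n, R ≤ P.lowerCentralSeries n := by
    intro n
    induction n with
    | zero => exact hRP
    | succ n ih => exact h.trans (by
        rw [Subgroup.lowerCentralSeries_succ]; exact commutator_mono ih le_rfl)
  obtain ⟨n, hn⟩ : ∃ n, P.lowerCentralSeries n = ⊥ :=
    (Subgroup.isNilpotent_iff_lowerCentralSeries P).1 hnil
  exact eq_bot_iff.2 (hn ▸ h1 n)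

/-- The subgroup generated by the elements of order prime to `p`. -/
def pRes (p : ℕ) (G : Type*) [Group G] : Subgroup G := closure {g | (orderOf g).Coprime p}

theorem pRes_normal {p : ℕ} {G : Type*} [Group G] : (pRes p G).Normal := by
  refine ⟨fun x hx g => ?_⟩
  have h : map (MulAut.conj g).toMonoidHom (pRes p G) ≤ pRes p G := by
    rw [pRes, MonoidHom.map_closure, closure_le]
    rintro _ ⟨y, hy, rfl⟩
    refine subset_closure ?_
    change (orderOf (MulAut.conj g y)).Coprime p
    rw [MulEquiv.orderOf_eq]; exact hy
  exact h ⟨x, hx, rfl⟩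

section
variable {G : Type} [Group G] [Finite G] {p : ℕ} [hp : Fact p.Prime]

/-- Some `p`-power power of every element has order prime to `p`, hence lies in `pRes p G`. -/
theorem pRes_pow (g : G) : ∃ k, g ^ p ^ k ∈ pRes p G := by
  obtain ⟨i, d, hd, hpd⟩ := exists_ppart (N := orderOf g) hp.out (orderOf_pos g).ne'
  refine ⟨i, subset_closure ?_⟩
  change (orderOf (g ^ p ^ i)).Coprime p
  rw [orderOf_pow_of_dvd (pow_ne_zero _ hp.out.ne_zero) (Dvd.intro _ hd.symm), hd,
    Nat.mul_div_cancel_left _ (pow_pos hp.out.pos _), Nat.coprime_comm]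
  exact (Nat.Prime.coprime_iff_not_dvd hp.out).2 hpd

theorem hnpc_of_pRes (h : (Nat.card (pRes p G)).Coprime p) : HasNormalPComplement G p := by
  have := pRes_normal (p := p) (G := G)
  refine ⟨pRes p G, pRes_normal, h, ?_⟩
  have h1 : IsPGroup p (G ⧸ pRes p G) := by
    intro x
    obtain ⟨g, rfl⟩ := QuotientGroup.mk'_surjective _ x
    obtain ⟨k, hk⟩ := pRes_pow (p := p) g
    exact ⟨k, by rw [← map_pow]; exact (QuotientGroup.eq_one_iff _).2 hk⟩
  obtain ⟨n, hn⟩ := IsPGroup.iff_card.1 h1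
  exact ⟨n, hn⟩

/-- A homomorphism from `pRes p G` to a `p`-group is trivial. -/
theorem pRes_hom_trivial {H : Type*} [Group H] [Finite H] (hH : IsPGroup p H) (f : pRes p G →* H)
    (x : pRes p G) : f x = 1 := by
  have h : pRes p G ≤ map (pRes p G).subtype f.ker := by
    conv_lhs => rw [pRes]
    rw [closure_le]
    intro g hg
    refine ⟨⟨g, subset_closure hg⟩, ?_, rfl⟩
    refine MonoidHom.mem_ker.2 ?_
    obtain ⟨k, hk⟩ := hH (f ⟨g, subset_closure hg⟩)
    refine coprime_pow_eq_one (Nat.Coprime.pow_right k hg) ?_ hk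
    rw [← map_pow]
    have : (⟨g, subset_closure hg⟩ : pRes p G) ^ orderOf g = 1 := by
      apply Subtype.ext; simp [pow_orderOf_eq_one]
    rw [this, map_one]
  obtain ⟨y, hy, e⟩ := h x.2
  have : y = x := Subtype.ext e
  rw [← this]; exact hy

/-- Frobenius: if a Sylow `p`-subgroup controls the fusion of its own elements, there is a normal
`p`-complement. -/
theorem hnpc_of_self_fusion (P : Sylow p G)
    (hf : ∀ x ∈ P, ∀ g, g * x * g⁻¹ ∈ P → ∃ u ∈ P, u * x * u⁻¹ = g * x * g⁻¹) :
    HasNormalPComplement G p := by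
  apply hnpc_of_pRes
  set K := pRes p G with hK
  have hKn : K.Normal := pRes_normal
  have hR : IsPGroup p ((P : Subgroup G).subgroupOf K) := P.2.comap_subtype
  have hRi : ¬ p ∣ ((P : Subgroup G).subgroupOf K).index := by
    have := relIndex_normal_not_dvd P K
    rwa [inf_relIndex_right] at this
  let S : Sylow p K := hR.toSylow hRi
  have h1 : ((P : Subgroup G).subgroupOf K).focalSubgroupOf = ⊤ := by
    rw [eq_top_iff]
    rintro x -
    have hs := transferFocal_surjective S
    obtain ⟨y, hy⟩ := hs (QuotientGroup.mk' _ x)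
    have h2 := pRes_hom_trivial (p := p) (G := G) (S.2.to_quotient _) S.transferFocal y
    rw [h2] at hy
    exact (QuotientGroup.eq_one_iff x).1 hy.symm
  have h2 : (P : Subgroup G) ⊓ K ≤ ⁅(P : Subgroup G) ⊓ K, (P : Subgroup G)⁆ := by
    have h3 : (P : Subgroup G).subgroupOf K
        ≤ comap K.subtype ⁅(P : Subgroup G) ⊓ K, (P : Subgroup G)⁆ := by
      have h4 : (P : Subgroup G).subgroupOf K ≤ ((P : Subgroup G).subgroupOf K).focalSubgroup := by
        rw [← map_focalSubgroupOf, h1]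
        intro x hx
        exact ⟨⟨x, hx⟩, trivial, rfl⟩
      refine h4.trans ?_
      rw [focalSubgroup_def, closure_le]
      rintro g ⟨hg, x, hx, u, rfl⟩
      have hx' : (x : G) ∈ (P : Subgroup G) := hx
      have hg' : ((⁅x, u⁆ : K) : G) ∈ (P : Subgroup G) := hg
      have e : ((⁅x, u⁆ : K) : G) = (x : G) * ((u : G) * (x : G) * (u : G)⁻¹)⁻¹ := by
        rw [commutatorElement_def]; push_cast; group
      have h5 : (u : G) * (x : G) * (u : G)⁻¹ ∈ (P : Subgroup G) := by
        rw [e] at hg'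
        exact inv_mem_iff.1 ((mul_mem_cancel_left hx').1 hg')
      obtain ⟨v, hv, hvx⟩ := hf x hx' u h5
      change ((⁅x, u⁆ : K) : G) ∈ ⁅(P : Subgroup G) ⊓ K, (P : Subgroup G)⁆
      rw [e, ← hvx]
      have e2 : (x : G) * (v * (x : G) * v⁻¹)⁻¹ = ⁅(x : G), v⁆ := by
        rw [commutatorElement_def]; group
      rw [e2]
      exact commutator_mem_commutator (mem_inf.2 ⟨hx', x.2⟩) hv
    rintro x ⟨hxP, hxK⟩
    exact h3 (show (⟨x, hxK⟩ : K) ∈ _ from hxP)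
  have h3 := eq_bot_of_le_commutator (p := p) P.2 inf_le_left h2
  have h4 := relIndex_normal_not_dvd P K
  rw [h3, relIndex_bot_left] at h4
  exact ((Nat.Prime.coprime_iff_not_dvd hp.out).2 h4).symm

/-- A linear character of `p`-power order is determined by its restriction to a Sylow
`p`-subgroup. -/
theorem lin_eq_one {c : ℕ} (P : Sylow p G) {μ : G →* ℂˣ} (hμ : μ ^ (p ^ c) = 1)
    (h : ∀ x ∈ P, μ x = 1) : μ = 1 := by
  have h1 : (P : Subgroup G) ≤ μ.ker := fun x hx => h x hx
  have h2 : IsPGroup p μ.range := by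
    rintro ⟨_, g, rfl⟩
    refine ⟨c, Subtype.ext ?_⟩
    exact DFunLike.congr_fun hμ g
  have hfin : Finite μ.range := Finite.of_surjective _ μ.rangeRestrict_surjective
  obtain ⟨j, hj⟩ := IsPGroup.iff_card.1 h2
  have h3 : ¬ p ∣ μ.ker.index := fun hd => P.not_dvd_index (hd.trans (index_dvd_of_le h1))
  rw [index_ker, hj] at h3
  have : j = 0 := by
    by_contra hj0; exact h3 (dvd_pow_self p hj0)
  rw [this, pow_zero, ← index_ker, index_eq_one] at hj
  ext g
  have : g ∈ μ.ker := hj ▸ mem_top g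
  rw [MonoidHom.mem_ker.1 this]; simp

/-- Restriction to a subgroup containing a Sylow `p`-subgroup is injective on linear characters of
`p`-power order. -/
theorem card_LinQ_le (P : Sylow p G) (c : ℕ) (N : Subgroup G) (hN : (P : Subgroup G) ≤ N) :
    Nat.card (LinQ (p ^ c) G) ≤ Nat.card (LinQ (p ^ c) N) := by
  have := Fintype.ofFinite N
  refine Nat.card_le_card_of_injective (fun μ => ⟨μ.1.comp N.subtype, ?_⟩) ?_
  · rw [mem_LinQ]
    refine MonoidHom.ext fun x => ?_
    exact DFunLike.congr_fun (mem_LinQ.1 μ.2) (x : G)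
  · intro μ ν h
    have h1 : μ.1.comp N.subtype = ν.1.comp N.subtype := congrArg Subtype.val h
    have h2 := lin_eq_one (c := c) (μ := μ.1 * ν.1⁻¹) P
      ((LinQ (p ^ c) G).mul_mem μ.2 ((LinQ (p ^ c) G).inv_mem ν.2)) (by
        intro x hx
        have := DFunLike.congr_fun h1 (⟨x, hN hx⟩ : N)
        have h3 : μ.1 x = ν.1 x := this
        rw [MonoidHom.mul_apply, MonoidHom.inv_apply, h3, mul_inv_cancel])
    apply Subtype.ext
    exact mul_inv_eq_one.1 h2
end

end

section
open Subgroup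

section
variable {G : Type} [Group G] {p : ℕ}

theorem PElt.zpowers {x : G} (h : PElt p x) : IsPGroup p (zpowers x) := by
  obtain ⟨k, hk⟩ := h
  rintro ⟨_, i, rfl⟩
  refine ⟨k, Subtype.ext ?_⟩
  change (x ^ i) ^ p ^ k = 1
  rw [← zpow_natCast, ← zpow_mul, mul_comm, zpow_mul, zpow_natCast, hk, one_zpow]

theorem cj_zpowers_le {g x : G} {P : Subgroup G} (h : g * x * g⁻¹ ∈ P) : cj g (zpowers x) ≤ P := by
  rw [cj_le_iff]
  rintro _ ⟨i, rfl⟩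
  simp only
  rw [← conj_zpow]
  exact zpow_mem h i

variable [Finite G] [hp : Fact p.Prime]

/-- An overgroup of a Sylow subgroup with a normal `p`-complement is the product of that complement
and the Sylow subgroup. -/
theorem exists_factor {N : Subgroup G} {P : Sylow p G} (hPN : (P : Subgroup G) ≤ N) {K : Subgroup N}
    (hK : K.Normal) {i : ℕ} (hi : K.index = p ^ i) (x : N) :
    ∃ y ∈ K, ∃ u : N, (u : G) ∈ P ∧ x = y * u := by
  have h1 : K ⊔ (P : Subgroup G).subgroupOf N = ⊤ := by
    rw [← index_eq_one]
    have h2 := index_dvd_of_le (le_sup_left : K ≤ K ⊔ (P : Subgroup G).subgroupOf N)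
    have h3 := index_dvd_of_le (le_sup_right : (P : Subgroup G).subgroupOf N
      ≤ K ⊔ (P : Subgroup G).subgroupOf N)
    rw [hi] at h2
    obtain ⟨j, -, hj⟩ := (Nat.dvd_prime_pow hp.out).1 h2
    rw [hj] at h3 ⊢
    have h4 : ¬ p ∣ ((P : Subgroup G).subgroupOf N).index := P.not_dvd_relIndex hPN
    have : j = 0 := by
      by_contra h0
      exact h4 ((dvd_pow_self p h0).trans h3)
    rw [this, pow_zero]
  obtain ⟨y, hy, u, hu, e⟩ := exists_mul_of_mem_sup (Y := K) (B := (P : Subgroup G).subgroupOf N)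
    (by rw [normalizer_eq_top]; exact le_top) (h1 ▸ mem_top x)
  exact ⟨y, hy, u, hu, e⟩

/-- If a subgroup `N` containing the Sylow subgroup `P` controls the fusion of elements of `P` and
has a normal `p`-complement, then so does `G`. -/
theorem hnpc_of_control (P : Sylow p G) {N : Subgroup G} (hPN : (P : Subgroup G) ≤ N)
    (hc : ∀ x ∈ P, ∀ g, g * x * g⁻¹ ∈ P → ∃ m ∈ N, m * x * m⁻¹ = g * x * g⁻¹)
    (hN : HasNormalPComplement N p) : HasNormalPComplement G p := by
  obtain ⟨K, hK, hKp, i, hi⟩ := hN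
  refine hnpc_of_self_fusion P fun x hx g hg => ?_
  obtain ⟨m, hm, e⟩ := hc x hx g hg
  obtain ⟨y, hy, u, hu, e'⟩ := exists_factor hPN hK hi ⟨m, hm⟩
  have e1 : m = y * u := congrArg Subtype.val e'
  refine ⟨u, hu, ?_⟩
  let x' : N := ⟨x, hPN hx⟩
  -- the two conjugates of `x` lie in `P` and agree modulo `K`
  have h1 : (y * (u * x' * u⁻¹) * y⁻¹) * (u * x' * u⁻¹)⁻¹ ∈ K := by
    have : (y * (u * x' * u⁻¹) * y⁻¹) * (u * x' * u⁻¹)⁻¹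
      = y * ((u * x' * u⁻¹) * y⁻¹ * (u * x' * u⁻¹)⁻¹) := by group
    rw [this]
    exact K.mul_mem hy (hK.conj_mem _ (K.inv_mem hy) _)
  have h2 : (y * (u * x' * u⁻¹) * y⁻¹) * (u * x' * u⁻¹)⁻¹ ∈ (P : Subgroup G).subgroupOf N := by
    rw [mem_subgroupOf]
    have e2 : (((y * (u * x' * u⁻¹) * y⁻¹) * (u * x' * u⁻¹)⁻¹ : N) : G) =
      (g * x * g⁻¹) * ((u : G) * x * (u : G)⁻¹)⁻¹ := by
      rw [← e, e1]; push_cast; simp only [x']; group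
    rw [e2]
    exact mul_mem hg (inv_mem (mul_mem (mul_mem hu hx) (inv_mem hu)))
  have h3 := cop_inf_eq_bot hKp (P := (P : Subgroup G).subgroupOf N) P.2.comap_subtype
  have h4 := (mem_bot (G := N)).1 (h3 ▸ mem_inf.2 ⟨h1, h2⟩)
  have h5 := mul_inv_eq_one.1 h4
  have h6 := congrArg Subtype.val h5
  push_cast at h6
  rw [← e, e1, ← h6]
  simp only [x']; group
end

section
variable {G : Type} [Group G] [Fintype G] {p c n : ℕ} [hp : Fact p.Prime]

/-- If `N` contains a Sylow `p`-subgroup and controls the fusion of its elements, the classes of `N`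
fixed by the power map inject into those of `G`. -/
theorem card_SCl_le_of_control (hG : Odd (Nat.card G)) (hc0 : c ≠ 0) (h : NGood p c n (Nat.card G))
    (P : Sylow p G) {N : Subgroup G} (hPN : (P : Subgroup G) ≤ N)
    (hc : ∀ x ∈ P, ∀ g, g * x * g⁻¹ ∈ P → ∃ m ∈ N, m * x * m⁻¹ = g * x * g⁻¹) :
    Nat.card (SCl n N) ≤ Nat.card (SCl n G) := by
  have := Fintype.ofFinite N
  have hN : Odd (Nat.card N) := Odd.of_dvd_nat hG (card_subgroup_dvd_card N)
  have hg := h.mono (card_subgroup_dvd_card N)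
  refine Nat.card_le_card_of_injective
    (fun C => (⟨ConjClasses.map N.subtype C.1, ?_⟩ : SCl n G)) ?_
  · obtain ⟨_, x, rfl, hx⟩ := C
    refine ⟨x, rfl, ?_⟩
    obtain ⟨y, hy⟩ := isConj_iff.1 hx
    refine isConj_iff.2 ⟨y, ?_⟩
    have := congrArg Subtype.val hy
    push_cast at this
    exact this
  · rintro ⟨_, x, rfl, hx⟩ ⟨_, y, rfl, hy⟩ e
    have e1 : ConjClasses.mk (x : G) = ConjClasses.mk (y : G) := congrArg Subtype.val e
    obtain ⟨g, hgxy⟩ := isConj_iff.1 (ConjClasses.mk_eq_mk_iff_isConj.1 e1)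
    apply Subtype.ext
    refine ConjClasses.mk_eq_mk_iff_isConj.2 ?_
    have hmove : ∀ z : N, IsConj z (z ^ n) → ∃ k ∈ N, k * (z : G) * k⁻¹ ∈ (P : Subgroup G) := by
      intro z hz
      obtain ⟨j, hj⟩ := pElt_of_isConj hN hp.out hc0 hg hz
      have hz' : PElt p (z : G) := ⟨j, by have := congrArg Subtype.val hj; push_cast at this; exact this⟩
      obtain ⟨k, hk, hk'⟩ := sylow_conj_sub hPN P.2 (P.not_dvd_relIndex hPN)
        (zpowers_le.2 z.2) hz'.zpowers
      exact ⟨k, hk, cj_le_iff.1 hk' _ (mem_zpowers _)⟩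
    obtain ⟨k, hk, hkx⟩ := hmove x hx
    obtain ⟨l, hl, hly⟩ := hmove y hy
    have e2 : (l * g * k⁻¹) * (k * (x : G) * k⁻¹) * (l * g * k⁻¹)⁻¹ = l * y * l⁻¹ := by
      rw [← hgxy]; group
    obtain ⟨m, hm, e3⟩ := hc _ hkx (l * g * k⁻¹) (by rw [e2]; exact hly)
    rw [e2] at e3
    refine isConj_iff.2 ⟨⟨l⁻¹ * m * k, mul_mem (mul_mem (inv_mem hl) hm) hk⟩, Subtype.ext ?_⟩
    push_cast
    calc l⁻¹ * m * k * (x : G) * (l⁻¹ * m * k)⁻¹ = l⁻¹ * (m * (k * x * k⁻¹) * m⁻¹) * l := by group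
      _ = y := by rw [e3]; group

/-- The inductive step of the counting theorem when `O_p(G) = 1`. -/
theorem claim_pcore_bot (hp2 : Odd p) (hG : Odd (Nat.card G)) (hc0 : c ≠ 0)
    (h : NGood p c n (Nat.card G))
    (hO : ∀ T : Subgroup G, T.Normal → IsPGroup p T → T = ⊥) (hnp : ¬ HasNormalPComplement G p)
    (ih : ∀ N : Subgroup G, N ≠ ⊤ → ¬ HasNormalPComplement N p →
      2 * Nat.card (LinQ (p ^ c) N) ≤ Nat.card (SChar n N)) :
    2 * Nat.card (LinQ (p ^ c) G) ≤ Nat.card (SChar n G) := by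
  let P : Sylow p G := default
  let N := normalizer (Dstar (P : Subgroup G) : Set G)
  have hPN : (P : Subgroup G) ≤ N := le_normalizer_Dstar _
  have hc : ∀ x ∈ P, ∀ g, g * x * g⁻¹ ∈ P → ∃ m ∈ N, m * x * m⁻¹ = g * x * g⁻¹ := by
    intro x hx g hg
    obtain ⟨m, hm, e⟩ := fusion_control p hp2 _ G rfl hG P (zpowers x) (zpowers_le.2 hx) g
      (cj_zpowers_le hg)
    exact ⟨m, hm, e x (mem_zpowers x)⟩
  have hP : (P : Subgroup G) ≠ ⊥ := by
    intro hP
    apply hnp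
    refine ⟨⊤, inferInstance, ?_, 0, by simp⟩
    have := P.not_dvd_index
    rw [hP, index_bot] at this
    rw [card_top]
    exact ((Nat.Prime.coprime_iff_not_dvd hp.out).2 this).symm
  have hNt : N ≠ ⊤ := by
    intro hN
    have := hO _ (normalizer_eq_top_iff.1 hN) (P.2.to_le (Dstar_le _))
    exact Dstar_ne_bot p P.2 hP this
  have h1 := ih N hNt fun hN => hnp (hnpc_of_control P hPN hc hN)
  have := Fintype.ofFinite N
  have hcop := h.coprime hp.out hc0 Nat.card_pos.ne'
  have h2 := card_SChar hcop
  have h3 := card_SChar (G := N) ((h.mono (card_subgroup_dvd_card N)).coprime hp.out hc0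
    Nat.card_pos.ne')
  have h4 := card_SCl_le_of_control hG hc0 h P hPN hc
  have h5 := card_LinQ_le P c N hPN
  omega
end

end

/-! ### The counting step for a non-trivial normal `p`-subgroup -/

section
open Subgroup
open scoped commutatorElement

section
variable {G : Type} [Group G]

/-- In a finite `p`-group `⟨T, h⟩`, an element of the normal subgroup `T` outside `V ≤ T` may be
chosen to be fixed by `h` modulo `V`. -/
theorem exists_fixed_mod [Finite G] {p : ℕ} [hp : Fact p.Prime] {T V : Subgroup G}
    (hT : T.Normal) (hTp : IsPGroup p T) {h : G} (hh : PElt p h) (hV : ¬ T ≤ V) :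
    ∃ t ∈ T, t ∉ V ∧ h * t * h⁻¹ * t⁻¹ ∈ V := by
  by_contra hcon
  push Not at hcon
  obtain ⟨t0, ht0, ht0'⟩ := Set.not_subset.1 hV
  have hB : IsPGroup p (T ⊔ zpowers h : Subgroup G) := hTp.to_sup_of_normal_left hh.zpowers
  have hnil : Group.IsNilpotent (T ⊔ zpowers h : Subgroup G) := hB.isNilpotent
  obtain ⟨m, hm⟩ := (Subgroup.isNilpotent_iff_lowerCentralSeries _).1 hnil
  have key : ∀ k, ∃ t ∈ T, t ∉ V ∧ t ∈ (T ⊔ zpowers h : Subgroup G).lowerCentralSeries k := by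
    intro k
    induction k with
    | zero => exact ⟨t0, ht0, ht0', le_sup_left (a := T) ht0⟩
    | succ k ih =>
      obtain ⟨t, ht, htV, htk⟩ := ih
      refine ⟨h * t * h⁻¹ * t⁻¹, mul_mem (hT.conj_mem t ht h) (inv_mem ht), hcon t ht htV, ?_⟩
      rw [Subgroup.lowerCentralSeries_succ]
      have : h * t * h⁻¹ * t⁻¹ = ⁅t, h⁆⁻¹ := by rw [commutatorElement_def]; group
      rw [this]
      exact inv_mem (commutator_mem_commutator htk (le_sup_right (a := T) (mem_zpowers h)))
  obtain ⟨t, -, htV, ht⟩ := key m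
  rw [hm, mem_bot] at ht
  exact htV (ht ▸ one_mem V)

variable {T : Subgroup G}

/-- The subgroup `[T, y]` of an abelian normal subgroup `T`. -/
def tcom (hT : T.Normal) (ab : ∀ a ∈ T, ∀ b ∈ T, a * b = b * a) (y : G) : Subgroup G where
  carrier := {v | ∃ s ∈ T, v = y⁻¹ * s * y * s⁻¹}
  one_mem' := ⟨1, one_mem T, by group⟩
  mul_mem' := by
    rintro _ _ ⟨s, hs, rfl⟩ ⟨r, hr, rfl⟩
    refine ⟨s * r, mul_mem hs hr, ?_⟩
    have h1 : y⁻¹ * r * y ∈ T := by simpa using hT.conj_mem r hr y⁻¹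
    have h2 := ab _ h1 _ (inv_mem hs)
    calc y⁻¹ * s * y * s⁻¹ * (y⁻¹ * r * y * r⁻¹)
        = y⁻¹ * s * y * (s⁻¹ * (y⁻¹ * r * y)) * r⁻¹ := by group
      _ = y⁻¹ * s * y * ((y⁻¹ * r * y) * s⁻¹) * r⁻¹ := by rw [h2]
      _ = y⁻¹ * (s * r) * y * (s⁻¹ * r⁻¹) := by group
      _ = y⁻¹ * (s * r) * y * (s * r)⁻¹ := by
        rw [ab _ (inv_mem hs) _ (inv_mem hr), mul_inv_rev]
  inv_mem' := by
    rintro _ ⟨s, hs, rfl⟩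
    refine ⟨s⁻¹, inv_mem hs, ?_⟩
    have h1 : y⁻¹ * s⁻¹ * y ∈ T := by simpa using hT.conj_mem _ (inv_mem hs) y⁻¹
    calc (y⁻¹ * s * y * s⁻¹)⁻¹ = s * (y⁻¹ * s⁻¹ * y) := by group
      _ = (y⁻¹ * s⁻¹ * y) * s := ab _ hs _ h1
      _ = _ := by group

variable {hT : T.Normal} {ab : ∀ a ∈ T, ∀ b ∈ T, a * b = b * a}

theorem mem_tcom {y v : G} : v ∈ tcom hT ab y ↔ ∃ s ∈ T, v = y⁻¹ * s * y * s⁻¹ := Iff.rfl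

theorem tcom_le (y : G) : tcom hT ab y ≤ T := by
  rintro _ ⟨s, hs, rfl⟩
  exact mul_mem (by simpa using hT.conj_mem s hs y⁻¹) (inv_mem hs)

theorem tcom_mul (y : G) {t : G} (ht : t ∈ T) : tcom hT ab (y * t) = tcom hT ab y := by
  ext v
  rw [mem_tcom, mem_tcom]
  refine exists_congr fun s => and_congr_right fun hs => ?_
  have h1 : y⁻¹ * s * y ∈ T := by simpa using hT.conj_mem s hs y⁻¹
  have : (y * t)⁻¹ * s * (y * t) = y⁻¹ * s * y := by
    calc (y * t)⁻¹ * s * (y * t) = t⁻¹ * ((y⁻¹ * s * y) * t) := by group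
      _ = t⁻¹ * (t * (y⁻¹ * s * y)) := by rw [ab _ h1 _ ht]
      _ = _ := by group
  rw [this]

theorem tcom_pow_le (y : G) (n : ℕ) : tcom hT ab (y ^ n) ≤ tcom hT ab y := by
  rintro _ ⟨s, hs, rfl⟩
  induction n with
  | zero => simp
  | succ k ih =>
    have h1 : (y ^ k)⁻¹ * s * y ^ k ∈ T := by simpa using hT.conj_mem s hs (y ^ k)⁻¹
    have : (y ^ (k + 1))⁻¹ * s * y ^ (k + 1) * s⁻¹ =
      (y⁻¹ * ((y ^ k)⁻¹ * s * y ^ k) * y * ((y ^ k)⁻¹ * s * y ^ k)⁻¹) *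
        ((y ^ k)⁻¹ * s * y ^ k * s⁻¹) := by
      rw [pow_succ]; group
    rw [this]
    exact mul_mem ⟨_, h1, rfl⟩ ih

theorem cj_tcom (h y : G) : cj h (tcom hT ab y) = tcom hT ab (h * y * h⁻¹) := by
  ext v
  rw [mem_cj, mem_tcom, mem_tcom]
  constructor
  · rintro ⟨s, hs, e⟩
    refine ⟨h * s * h⁻¹, hT.conj_mem s hs h, ?_⟩
    calc v = h * (h⁻¹ * v * h) * h⁻¹ := by group
      _ = _ := by rw [e]; group
  · rintro ⟨s, hs, rfl⟩
    exact ⟨h⁻¹ * s * h, by simpa using hT.conj_mem s hs h⁻¹, by group⟩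

theorem mul_pow_tcom (x : G) {t : G} (ht : t ∈ T) (k : ℕ) :
    ∃ v ∈ tcom hT ab x, (x * t) ^ k = x ^ k * t ^ k * v := by
  induction k with
  | zero => exact ⟨1, one_mem _, by simp⟩
  | succ k ih =>
    obtain ⟨v, hv, e⟩ := ih
    have hvT := tcom_le (hT := hT) (ab := ab) x hv
    have htk : t ^ k ∈ T := pow_mem ht k
    have hw : x⁻¹ * (t ^ k * v) * x * (t ^ k * v)⁻¹ ∈ tcom hT ab x := ⟨_, mul_mem htk hvT, rfl⟩
    refine ⟨x⁻¹ * (t ^ k * v) * x * (t ^ k * v)⁻¹ * v, mul_mem hw hv, ?_⟩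
    have hwT := tcom_le (hT := hT) (ab := ab) x hw
    set w := x⁻¹ * (t ^ k * v) * x * (t ^ k * v)⁻¹ with hwdef
    have e1 : t ^ k * v * x = x * (w * (t ^ k * v)) := by rw [hwdef]; group
    calc (x * t) ^ (k + 1) = x ^ k * (t ^ k * v * x) * t := by rw [pow_succ, e]; group
      _ = x ^ (k + 1) * (w * (t ^ k * v) * t) := by rw [e1, pow_succ]; group
      _ = x ^ (k + 1) * (t * (w * (t ^ k * v))) := by
        rw [ab _ (mul_mem hwT (mul_mem htk hvT)) _ ht]
      _ = x ^ (k + 1) * (t * (w * t ^ k) * v) := by group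
      _ = x ^ (k + 1) * (t * (t ^ k * w) * v) := by rw [ab _ hwT _ htk]
      _ = x ^ (k + 1) * t ^ (k + 1) * (w * v) := by rw [pow_succ' t k]; group
end

end

section
open Subgroup
open scoped commutatorElement

theorem one_add_pow_modEq {p c : ℕ} (hc : c ≠ 0) (i : ℕ) : (1 + p ^ c) ^ p ^ i ≡ 1 [MOD p ^ i] := by
  have h1 : (1 + p ^ c) ≡ 1 [MOD p] := by
    have := (Nat.modEq_zero_iff_dvd.2 (dvd_pow_self p hc)).add_left 1
    simpa using this
  have h2 : ∀ i, (1 + p ^ c) ^ p ^ i ≡ 1 [MOD p ^ (i + 1)] := by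
    intro i
    have := dvd_sub_pow_of_dvd_sub (R := ℤ) (p := p) (a := 1 + (p : ℤ) ^ c) (b := 1) (by
      rw [add_sub_cancel_left]; exact dvd_pow_self _ hc) i
    refine (Nat.modEq_iff_dvd.2 ?_).symm
    push_cast
    simpa using this
  exact (h2 i).of_dvd (pow_dvd_pow p (Nat.le_succ i))

section
variable {G : Type} [Group G] [Fintype G] {p c n : ℕ} [hp : Fact p.Prime]

/-- An element conjugating a `p`-element `x` to `x ^ n` may be taken of `p`-power order. -/
theorem exists_pElt_conj (hc : c ≠ 0) (h : NGood p c n (Nat.card G)) {x g : G} (hx : PElt p x)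
    (hg : g * x * g⁻¹ = x ^ n) : ∃ k : ℕ, PElt p (g ^ k) ∧ g ^ k * x * (g ^ k)⁻¹ = x ^ n := by
  obtain ⟨a, d, hd, hpd⟩ := exists_ppart (N := Nat.card G) hp.out Nat.card_pos.ne'
  have hcop : (p ^ a).Coprime d := Nat.Coprime.pow_left a ((Nat.Prime.coprime_iff_not_dvd hp.out).2 hpd)
  have hxa : x ^ p ^ a = 1 := by
    obtain ⟨k, hk⟩ := hx
    obtain ⟨i, -, hi⟩ := (Nat.dvd_prime_pow hp.out).1 (orderOf_dvd_of_pow_eq_one hk)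
    have h1 := orderOf_dvd_natCard x
    rw [hi, hd] at h1
    have h2 : p ^ i ∣ p ^ a :=
      (Nat.Coprime.pow_left i ((Nat.Prime.coprime_iff_not_dvd hp.out).2 hpd)).dvd_of_dvd_mul_right h1
    rw [← hi] at h2
    exact orderOf_dvd_iff_pow_eq_one.1 h2
  obtain ⟨k, hk1, hk2⟩ := Nat.chineseRemainder hcop 1 0
  have key : ∀ j, g ^ j * x * (g ^ j)⁻¹ = x ^ (n ^ j) := by
    intro j
    induction j with
    | zero => simp
    | succ j ih =>
      calc g ^ (j + 1) * x * (g ^ (j + 1))⁻¹ = g * (g ^ j * x * (g ^ j)⁻¹) * g⁻¹ := by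
            rw [pow_succ' g j]; group
        _ = (g * x * g⁻¹) ^ (n ^ j) := by rw [ih, conj_pow]
        _ = _ := by rw [hg, ← pow_mul, pow_succ' n j]
  have hn1 : n ^ p ^ a ≡ 1 [MOD p ^ a] :=
    ((h.pp a (Dvd.intro _ hd.symm)).pow _).trans (one_add_pow_modEq hc a)
  refine ⟨k, ⟨a, ?_⟩, ?_⟩
  · obtain ⟨e, he⟩ := Nat.modEq_zero_iff_dvd.1 hk2
    rw [← pow_mul, he, mul_comm d e, mul_assoc, mul_comm d, ← hd, mul_comm, pow_mul, pow_card_eq_one',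
      one_pow]
  · rw [key]
    have h2 : n ^ k ≡ n [MOD p ^ a] := by
      have h3 : n ^ (p ^ a * k) ≡ 1 [MOD p ^ a] := by
        rw [pow_mul]; simpa using hn1.pow k
      rcases Nat.eq_zero_or_pos k with rfl | hk0
      · have : p ^ a ∣ 1 := Nat.modEq_zero_iff_dvd.1 hk1.symm
        rw [Nat.dvd_one.1 this]; exact Nat.modEq_one
      obtain ⟨q, hq⟩ := (Nat.modEq_iff_dvd' hk0).1 hk1.symm
      have : k = 1 + p ^ a * q := by omega
      rw [this, pow_add, pow_one, pow_mul]
      simpa using (hn1.pow q).mul_left n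
    exact pow_eq_pow_iff_modEq.2 (h2.of_dvd (orderOf_dvd_of_pow_eq_one hxa))

/-- The classes of a complement `L` to an elementary abelian normal `p`-subgroup `T` that are
fixed by the power map give rise to at least two such classes of `G` each, namely those of `x` and
of `x t` with `t ∉ [T, x]`. -/
theorem two_mul_card_SCl (hG : Odd (Nat.card G)) (hc : c ≠ 0) (h : NGood p c n (Nat.card G))
    {T L : Subgroup G} (hT : T.Normal) (ab : ∀ a ∈ T, ∀ b ∈ T, a * b = b * a)
    (hTp : ∀ t ∈ T, t ^ p = 1) (hT1 : T ≠ ⊥) (hLT : L ⊓ T = ⊥)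
    (hL : ∀ g : G, ∃ s ∈ T, ∃ l ∈ L, g = s * l) :
    2 * Nat.card (SCl n L) ≤ Nat.card (SCl n G) := by
  have := Fintype.ofFinite L
  have hLo : Odd (Nat.card L) := Odd.of_dvd_nat hG (card_subgroup_dvd_card L)
  have hgL := h.mono (card_subgroup_dvd_card L)
  have hTP : IsPGroup p T := fun t => ⟨1, Subtype.ext (by simpa using hTp t t.2)⟩
  have hpG : p ∣ Nat.card G := by
    obtain ⟨t, ht, ht1⟩ := (T.bot_or_exists_ne_one).resolve_left hT1
    have := orderOf_eq_prime (hTp t ht) ht1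
    rw [← this]; exact orderOf_dvd_natCard _
  have htn : ∀ t ∈ T, t ^ n = t := by
    intro t ht
    have h1 : n ≡ 1 [MOD p] := by
      have h2 := h.pp 1 (by simpa using hpG)
      rw [pow_one] at h2
      refine h2.trans ?_
      have := (Nat.modEq_zero_iff_dvd.2 (dvd_pow_self p hc)).add_left 1
      simpa using this
    have := pow_eq_pow_iff_modEq.2 (h1.of_dvd (orderOf_dvd_of_pow_eq_one (hTp t ht)))
    simpa using this
  have hmem : ∀ l ∈ L, l ∈ T → l = 1 := fun l h1 h2 => mem_bot.1 (hLT ▸ mem_inf.2 ⟨h1, h2⟩)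
  have hex : ∀ C : SCl n L, ∃ x : L, ∃ t : G, ConjClasses.mk x = C.1 ∧ IsConj x (x ^ n) ∧ t ∈ T ∧
      t ∉ tcom hT ab (x : G) ∧ IsConj ((x : G) * t) (((x : G) * t) ^ n) := by
    rintro ⟨_, x, rfl, hx⟩
    obtain ⟨g, hg⟩ := isConj_iff.1 hx
    have hxP := pElt_of_isConj hLo hp.out hc hgL hx
    obtain ⟨k, hk, hk'⟩ := exists_pElt_conj hc hgL hxP hg
    set u : G := ((g ^ k : L) : G) with hu
    have hxP' : PElt p (x : G) := by
      obtain ⟨j, hj⟩ := hxP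
      exact ⟨j, by have := congrArg Subtype.val hj; push_cast at this; exact this⟩
    have huP : PElt p u := by
      obtain ⟨j, hj⟩ := hk
      exact ⟨j, by have := congrArg Subtype.val hj; push_cast at this; exact this⟩
    have hux : u * (x : G) * u⁻¹ = (x : G) ^ n := by
      have := congrArg Subtype.val hk'
      push_cast at this; rw [hu]; push_cast; exact this
    set V := tcom hT ab (x : G) with hV
    have hVT : ¬ T ≤ V := by
      intro hle
      obtain ⟨t, ht, ht1, ht2⟩ := exists_fixed_mod (V := ⊥) hT hTP hxP'
        (fun hh => hT1 (le_bot_iff.1 hh))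
      have hcomm : (x : G) * t = t * x := by
        have h1 := mul_inv_eq_one.1 (mem_bot.1 ht2)
        exact mul_inv_eq_iff_eq_mul.1 h1
      -- `s ↦ x⁻¹ s x s⁻¹` is surjective on `T`, hence injective, but it kills `t`
      let f : T → T := fun s => ⟨(x : G)⁻¹ * s * x * (s : G)⁻¹, tcom_le (hT := hT) (ab := ab) _ ⟨s, s.2, rfl⟩⟩
      have hf : Function.Surjective f := by
        rintro ⟨v, hv⟩
        obtain ⟨s, hs, e⟩ := hle hv
        exact ⟨⟨s, hs⟩, Subtype.ext e.symm⟩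
      have hi := Finite.injective_iff_surjective.2 hf
      have : (⟨t, ht⟩ : T) = 1 := by
        apply hi
        apply Subtype.ext
        change (x : G)⁻¹ * t * x * t⁻¹ = (x : G)⁻¹ * 1 * x * 1⁻¹
        rw [mul_assoc (x : G)⁻¹, ← hcomm]; group
      exact ht1 (mem_bot.2 (congrArg Subtype.val this))
    obtain ⟨t, ht, htV, htu⟩ := exists_fixed_mod hT hTP huP hVT
    refine ⟨x, t, rfl, hx, ht, htV, ?_⟩
    have hVn : tcom hT ab (((x : G) * t) ^ n) = V := by
      obtain ⟨v, hv, e⟩ := mul_pow_tcom (hT := hT) (ab := ab) (x : G) ht n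
      rw [e, mul_assoc, tcom_mul _ (mul_mem (pow_mem ht n) (tcom_le _ hv))]
      apply eq_of_le_of_card_ge (tcom_pow_le _ _)
      rw [← hux, ← cj_tcom, card_cj]
    obtain ⟨v, hv, e⟩ := mul_pow_tcom (hT := hT) (ab := ab) (x : G) ht n
    rw [htn t ht] at e
    have h1 : u * ((x : G) * t) * u⁻¹ = ((x : G) * t) ^ n * (v⁻¹ * (u * t * u⁻¹ * t⁻¹)) := by
      have hw := hT.conj_mem t ht u
      have hvT : v ∈ T := tcom_le _ hv
      calc u * ((x : G) * t) * u⁻¹ = (u * x * u⁻¹) * (u * t * u⁻¹) := by group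
        _ = (x : G) ^ n * ((u * t * u⁻¹ * t⁻¹) * t) := by rw [hux]; group
        _ = (x : G) ^ n * (t * (u * t * u⁻¹ * t⁻¹)) := by
          rw [ab _ (mul_mem hw (inv_mem ht)) _ ht]
        _ = ((x : G) ^ n * t * v) * (v⁻¹ * (u * t * u⁻¹ * t⁻¹)) := by group
        _ = _ := by rw [← e]
    have h2 : (v⁻¹ * (u * t * u⁻¹ * t⁻¹)) ∈ V := mul_mem (inv_mem hv) htu
    rw [← hVn] at h2
    obtain ⟨s, hs, e2⟩ := h2
    rw [e2] at h1
    refine isConj_iff.2 ⟨s⁻¹ * u, ?_⟩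
    calc s⁻¹ * u * ((x : G) * t) * (s⁻¹ * u)⁻¹ = s⁻¹ * (u * ((x : G) * t) * u⁻¹) * s := by group
      _ = ((x : G) * t) ^ n := by rw [h1]; group
  choose x t hx hxn htT htV hxt using hex
  let f : SCl n L × Bool → SCl n G := fun q =>
    ⟨ConjClasses.mk ((x q.1 : G) * (bif q.2 then t q.1 else 1)), by
      rw [mk_mem_SCl]
      cases q.2
      · obtain ⟨g, hg⟩ := isConj_iff.1 (hxn q.1)
        have := congrArg Subtype.val hg
        push_cast at this
        simpa using isConj_iff.2 ⟨(g : G), this⟩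
      · exact hxt q.1⟩
  have hf : Function.Injective f := by
    rintro ⟨C, b⟩ ⟨C', b'⟩ e
    have e1 : ConjClasses.mk ((x C : G) * (bif b then t C else 1)) =
      ConjClasses.mk ((x C' : G) * (bif b' then t C' else 1)) := congrArg Subtype.val e
    have hb : ∀ (C : SCl n L) (b : Bool), (bif b then t C else 1) ∈ T := by
      intro C b; cases b
      · exact one_mem T
      · exact htT C
    obtain ⟨g, hg⟩ := isConj_iff.1 (ConjClasses.mk_eq_mk_iff_isConj.1 e1)
    obtain ⟨s, hs, l, hl, rfl⟩ := hL g
    generalize hr : (bif b then t C else 1) = r at hg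
    generalize hr' : (bif b' then t C' else 1) = r' at hg
    have hrT : r ∈ T := hr ▸ hb C b
    have hrT' : r' ∈ T := hr' ▸ hb C' b'
    have e2 : l * (x C : G) * l⁻¹ = x C' := by
      have hq : ∀ z ∈ T, QuotientGroup.mk' T z = 1 := fun z hz => (QuotientGroup.eq_one_iff z).2 hz
      have e3 := congrArg (QuotientGroup.mk' T) hg
      simp only [map_mul, map_inv, hq s hs, hq r hrT, hq r' hrT', mul_one, one_mul] at e3
      have e6 : (x C' : G)⁻¹ * (l * (x C : G) * l⁻¹) ∈ T := by
        rw [← QuotientGroup.eq_one_iff]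
        change QuotientGroup.mk' T _ = 1
        simp only [map_mul, map_inv, e3, inv_mul_cancel]
      exact (inv_mul_eq_one.1 (hmem _ (mul_mem (inv_mem (x C').2)
        (mul_mem (mul_mem hl (x C).2) (inv_mem hl))) e6)).symm
    have e4 : C = C' := by
      apply Subtype.ext
      rw [← hx C, ← hx C']
      exact ConjClasses.mk_eq_mk_iff_isConj.2 (isConj_iff.2 ⟨⟨l, hl⟩, Subtype.ext e2⟩)
    subst e4
    refine Prod.ext rfl ?_
    -- now `s` conjugates `x` times an element to `x` times another
    have e5 : s * ((x C : G) * (l * r * l⁻¹)) * s⁻¹ = (x C : G) * r' := by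
      calc s * ((x C : G) * (l * r * l⁻¹)) * s⁻¹ = s * ((l * (x C : G) * l⁻¹) * (l * r * l⁻¹)) * s⁻¹ := by
            rw [e2]
        _ = s * l * ((x C : G) * r) * (s * l)⁻¹ := by group
        _ = _ := hg
    cases b <;> cases b'
    · rfl
    · exfalso
      simp only [cond_true, cond_false] at hr hr'
      subst hr hr'
      refine htV C ⟨s, hs, ?_⟩
      have : (x C : G) * t C = s * (x C : G) * s⁻¹ := by rw [← e5]; group
      calc t C = (x C : G)⁻¹ * ((x C : G) * t C) := by group
        _ = _ := by rw [this]; group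
    · exfalso
      simp only [cond_true, cond_false] at hr hr'
      subst hr hr'
      have h1 : l * t C * l⁻¹ ∈ tcom hT ab (l * (x C : G) * l⁻¹) := by
        rw [e2]
        refine ⟨s⁻¹, inv_mem hs, ?_⟩
        calc l * t C * l⁻¹ = (x C : G)⁻¹ * s⁻¹ * (s * ((x C : G) * (l * t C * l⁻¹)) * s⁻¹) * s := by
              group
          _ = _ := by rw [e5]; group
      rw [← cj_tcom, mem_cj] at h1
      apply htV C
      simpa [mul_assoc] using h1
    · rfl
  have h1 := Nat.card_le_card_of_injective f hf
  rw [Nat.card_prod, Nat.card_eq_fintype_card (α := Bool), Fintype.card_bool] at h1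
  omega
end

end

section
open Subgroup
open scoped commutatorElement

section
variable {G : Type} [Group G] [Finite G]

/-- Conjugacy of complements to an abelian normal subgroup of coprime order, by averaging the
cocycle comparing two complements. -/
theorem complement_conj {T K H : Subgroup G} (hT : T.Normal) (ab : ∀ a ∈ T, ∀ b ∈ T, a * b = b * a)
    (hHT : H ⊓ T = ⊥) (hK : ∀ k ∈ K, ∃ s ∈ T, ∃ h ∈ H, k = s * h)
    (hcop : (Nat.card K).Coprime (Nat.card T)) : ∃ s ∈ T, ∀ k ∈ K, s⁻¹ * k * s ∈ H := by
  have := Fintype.ofFinite K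
  letI : CommGroup T := { (inferInstance : Group T) with
    mul_comm := fun a b => Subtype.ext (ab a a.2 b b.2) }
  have hex : ∀ k : K, ∃ s : T, (s : G)⁻¹ * k ∈ H := by
    intro k
    obtain ⟨s, hs, h, hh, e⟩ := hK k k.2
    exact ⟨⟨s, hs⟩, by rw [e]; simpa using hh⟩
  choose d hd using hex
  have huniq : ∀ (y : G) (s r : T), (s : G)⁻¹ * y ∈ H → (r : G)⁻¹ * y ∈ H → s = r := by
    intro y s r hs hr
    have h1 : (s : G)⁻¹ * r ∈ H := by
      have := mul_mem hs (inv_mem hr)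
      simpa [mul_assoc] using this
    have h2 : (s : G)⁻¹ * r ∈ H ⊓ T := mem_inf.2 ⟨h1, mul_mem (inv_mem s.2) r.2⟩
    rw [hHT, mem_bot] at h2
    exact Subtype.ext (inv_mul_eq_one.1 h2)
  have hcoc : ∀ k l : K, d (k * l) = d k * MulAut.conjNormal (k : G) (d l) := by
    intro k l
    refine huniq _ _ _ (hd (k * l)) ?_
    have h1 := mul_mem (hd k) (hd l)
    have h2 : (k : G) * (d l : G) * (k : G)⁻¹ ∈ T := hT.conj_mem _ (d l).2 _
    have e : ((d k * MulAut.conjNormal (k : G) (d l) : T) : G)⁻¹ * ((k * l : K) : G) =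
        (d k : G)⁻¹ * k * ((d l : G)⁻¹ * l) := by
      push_cast
      rw [MulAut.conjNormal_apply, ab _ (d k).2 _ h2]
      group
    rw [e]; exact h1
  set e : T := ∏ k : K, d k with he
  have h1 : ∀ k : K, e = d k ^ Nat.card K * MulAut.conjNormal (k : G) e := by
    intro k
    calc e = ∏ l : K, d (k * l) := (Equiv.prod_comp (Equiv.mulLeft k) d).symm
      _ = ∏ l : K, (d k * MulAut.conjNormal (k : G) (d l)) := by simp only [hcoc]
      _ = _ := by
        rw [Finset.prod_mul_distrib, Finset.prod_const, Finset.card_univ, ← Nat.card_eq_fintype_card]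
        congr 1
        exact (map_prod (MulAut.conjNormal (k : G)) _ _).symm
  obtain ⟨r, hr⟩ : ∃ r, Nat.card K * r ≡ 1 [MOD Nat.card T] := by
    obtain ⟨m, hm1, hm2⟩ := Nat.chineseRemainder hcop 0 1
    obtain ⟨r, rfl⟩ := Nat.modEq_zero_iff_dvd.1 hm1
    exact ⟨r, hm2⟩
  refine ⟨(e ^ r : T), (e ^ r).2, fun k hk => ?_⟩
  have h2 : e ^ r = d ⟨k, hk⟩ * MulAut.conjNormal k (e ^ r) := by
    conv_lhs => rw [h1 ⟨k, hk⟩, mul_pow, ← pow_mul]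
    rw [map_pow]
    congr 1
    have := pow_eq_pow_iff_modEq.2 (hr.of_dvd (orderOf_dvd_natCard (d ⟨k, hk⟩)))
    rw [this, pow_one]
  have h3 := hd ⟨k, hk⟩
  have h4 : d ⟨k, hk⟩ = (MulAut.conjNormal k (e ^ r))⁻¹ * e ^ r := by
    rw [eq_inv_mul_iff_mul_eq, mul_comm]; exact h2.symm
  have h5 : (d ⟨k, hk⟩ : G) = (k * ((e ^ r : T) : G) * k⁻¹)⁻¹ * ((e ^ r : T) : G) := by
    rw [h4, Subgroup.coe_mul, Subgroup.coe_inv, MulAut.conjNormal_apply]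
  rw [h5] at h3
  convert h3 using 1
  group

/-- Frattini argument for complements. -/
theorem exists_complement {T Y : Subgroup G} (hT : T.Normal) (hY : Y.Normal)
    (ab : ∀ a ∈ T, ∀ b ∈ T, a * b = b * a) (hTY : T ≤ Y)
    (hcop : (T.relIndex Y).Coprime (Nat.card T)) :
    ∃ H : Subgroup G, H ≤ Y ∧ H ⊓ T = ⊥ ∧ Nat.card H = T.relIndex Y ∧
      ∀ g, ∃ s ∈ T, ∃ l ∈ normalizer (H : Set G), g = s * l := by
  have hTn : (T.subgroupOf Y).Normal := hT.subgroupOf Y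
  have hcT : Nat.card (T.subgroupOf Y) = Nat.card T := Nat.card_congr (subgroupOfEquivOfLe hTY).toEquiv
  obtain ⟨H', hH'⟩ := exists_right_complement'_of_coprime (N := T.subgroupOf Y)
    (by rw [hcT]; exact hcop.symm)
  have hcard : Nat.card (H'.map Y.subtype) = T.relIndex Y := by
    rw [card_map_of_injective Y.subtype_injective, ← hH'.symm.index_eq_card]; rfl
  have hHY : H'.map Y.subtype ≤ Y := map_subtype_le H'
  have hfac : ∀ y ∈ Y, ∃ s ∈ T, ∃ h ∈ H'.map Y.subtype, y = s * h := by
    intro y hy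
    obtain ⟨⟨s, h⟩, e⟩ := hH'.2 ⟨y, hy⟩
    exact ⟨(s : Y), s.2, (h : Y), ⟨h, h.2, rfl⟩, (congrArg Subtype.val e).symm⟩
  have hinteg : H'.map Y.subtype ⊓ T = ⊥ := by
    rw [eq_bot_iff]
    rintro _ ⟨⟨h, hh, rfl⟩, hT'⟩
    have := (disjoint_iff.1 hH'.disjoint)
    have h1 : h ∈ T.subgroupOf Y ⊓ H' := mem_inf.2 ⟨hT', hh⟩
    rw [this, mem_bot] at h1
    rw [h1]; exact one_mem _
  refine ⟨H'.map Y.subtype, hHY, hinteg, hcard, fun g => ?_⟩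
  obtain ⟨s, hs, e⟩ := complement_conj (K := cj g (H'.map Y.subtype)) hT ab hinteg (by
    intro k hk
    exact hfac k (cj_of_normal (H := Y) g ▸ cj_mono hHY hk)) (by rw [card_cj, hcard]; exact hcop)
  refine ⟨s, hs, s⁻¹ * g, ?_, by group⟩
  apply mem_normalizer_of_cj_le
  rw [cj_mul]
  rw [cj_le_iff]
  intro h hh
  simpa using e h hh
end

end

section
open Subgroup
open scoped commutatorElement

section
variable {G : Type} [Group G] [Fintype G] {p c n : ℕ} [hp : Fact p.Prime]

/-- A minimal normal `p`-subgroup is elementary abelian. -/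
theorem minimal_abelian {T : Subgroup G} (hT : T.Normal) (hTp : IsPGroup p T) (hT1 : T ≠ ⊥)
    (hmin : ∀ M : Subgroup G, M.Normal → M ≤ T → M = ⊥ ∨ M = T) :
    (∀ a ∈ T, ∀ b ∈ T, a * b = b * a) ∧ ∀ t ∈ T, t ^ p = 1 := by
  have ab : ∀ a ∈ T, ∀ b ∈ T, a * b = b * a := by
    have h1 : ⁅T, T⁆ = ⊥ := by
      refine (hmin ⁅T, T⁆ inferInstance (commutator_le_left T T)).resolve_right fun h => ?_
      exact hT1 (eq_bot_of_le_commutator hTp le_rfl h.ge)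
    intro a ha b hb
    have h2 : ⁅a, b⁆ ∈ ⁅T, T⁆ := commutator_mem_commutator ha hb
    rw [h1, mem_bot] at h2
    exact commutatorElement_eq_one_iff_mul_comm.1 h2
  refine ⟨ab, ?_⟩
  let Ω : Subgroup G :=
    { carrier := {t | t ∈ T ∧ t ^ p = 1}
      one_mem' := ⟨one_mem T, one_pow p⟩
      mul_mem' := by
        rintro a b ⟨ha, ha'⟩ ⟨hb, hb'⟩
        refine ⟨mul_mem ha hb, ?_⟩
        rw [(show Commute a b from ab a ha b hb).mul_pow, ha', hb', one_mul]
      inv_mem' := by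
        rintro a ⟨ha, ha'⟩
        exact ⟨inv_mem ha, by rw [inv_pow, ha', inv_one]⟩ }
  have hΩ : Ω.Normal := ⟨by
    rintro a ⟨ha, ha'⟩ g
    exact ⟨hT.conj_mem a ha g, by rw [conj_pow, ha']; simp⟩⟩
  rcases hmin Ω hΩ fun t ht => ht.1 with h | h
  · exfalso
    have hnt : Nontrivial T := (nontrivial_iff_ne_bot T).2 hT1
    obtain ⟨i, hi, hi'⟩ := (hTp.nontrivial_iff_card).1 hnt
    obtain ⟨t, ht⟩ := exists_prime_orderOf_dvd_card' p (G := T) (hi' ▸ dvd_pow_self p hi.ne')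
    have h1 : (t : G) ∈ Ω := ⟨t.2, by
      have := pow_orderOf_eq_one t
      rw [ht] at this
      have := congrArg Subtype.val this
      push_cast at this; exact this⟩
    rw [h, mem_bot] at h1
    have : t = 1 := Subtype.ext h1
    rw [this, orderOf_one] at ht
    exact hp.out.one_lt.ne ht
  · intro t ht
    rw [← h] at ht
    exact ht.2

/-- The inductive step of the counting theorem when `O_p(G) ≠ 1` and the quotient by a minimal
normal `p`-subgroup has a normal `p`-complement. -/
theorem claim_pcore (hG : Odd (Nat.card G)) (hc0 : c ≠ 0)
    (h : NGood p c n (Nat.card G)) (hnp : ¬ HasNormalPComplement G p)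
    {T : Subgroup G} (hT : T.Normal) (hTp : IsPGroup p T) (hT1 : T ≠ ⊥)
    (hmin : ∀ M : Subgroup G, M.Normal → M ≤ T → M = ⊥ ∨ M = T)
    (hQ : HasNormalPComplement (G ⧸ T) p) :
    2 * Nat.card (LinQ (p ^ c) G) ≤ Nat.card (SChar n G) := by
  obtain ⟨ab, hexp⟩ := minimal_abelian hT hTp hT1 hmin
  obtain ⟨Y', hY', hYc, i, hi⟩ := hQ
  set Y := Y'.comap (QuotientGroup.mk' T) with hY
  have hYn : Y.Normal := hY'.comap _
  have hTY : T ≤ Y := by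
    intro t ht
    rw [hY, mem_comap]
    rw [show QuotientGroup.mk' T t = 1 from (QuotientGroup.eq_one_iff t).2 ht]
    exact one_mem _
  have hYi : Y.index = p ^ i := by
    rw [hY, index_comap_of_surjective _ (QuotientGroup.mk'_surjective T), hi]
  have hrel : T.relIndex Y = Nat.card Y' := by
    have h1 := relIndex_mul_index hTY
    have h2 := card_mul_index Y'
    have h3 : T.index = Nat.card (G ⧸ T) := rfl
    rw [hYi] at h1
    rw [hi, ← h3, ← h1] at h2
    exact (Nat.eq_of_mul_eq_mul_right (pow_pos hp.out.pos i) h2).symm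
  obtain ⟨a, ha⟩ := IsPGroup.iff_card.1 hTp
  obtain ⟨H, hHY, hHT, hHc, hfac⟩ := exists_complement hT hYn ab hTY
    (by rw [hrel, ha]; exact hYc.pow_right a)
  set L := normalizer (H : Set G) with hL
  have hHL : H ≤ L := le_normalizer
  -- `H` is not normal, as it would be a normal `p`-complement
  have hLt : ¬ T ≤ L := by
    intro hTL
    have hLt : L = ⊤ := by
      rw [eq_top_iff]
      intro g _
      obtain ⟨s, hs, l, hl, rfl⟩ := hfac g
      exact mul_mem (hTL hs) hl
    have hHn : H.Normal := normalizer_eq_top_iff.1 hLt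
    apply hnp
    refine ⟨H, hHn, by rw [hHc, hrel]; exact hYc, a + i, ?_⟩
    have h1 := card_mul_index H
    have h2 := card_mul_index T
    have h3 := relIndex_mul_index hTY
    rw [hHc] at h1
    rw [← h1, ← h3, hYi, ha] at h2
    have h4 : 0 < T.relIndex Y := by rw [← hHc]; exact Nat.card_pos
    refine Nat.eq_of_mul_eq_mul_left h4 ?_
    rw [← h2, pow_add]; ring
  -- elements of `T` normalising `H` centralise `H`, hence `Y`
  have hLTc : ∀ t ∈ T, t ∈ L → ∀ y ∈ H, t * y = y * t := by
    intro t ht htL y hy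
    have h1 : t * y * t⁻¹ * y⁻¹ ∈ H ⊓ T := by
      refine mem_inf.2 ⟨mul_mem ((mem_normalizer_iff.1 htL y).1 hy) (inv_mem hy), ?_⟩
      have : t * y * t⁻¹ * y⁻¹ = t * (y * t⁻¹ * y⁻¹) := by group
      rw [this]
      exact mul_mem ht (hT.conj_mem _ (inv_mem ht) _)
    rw [hHT, mem_bot] at h1
    exact mul_inv_eq_iff_eq_mul.1 (mul_inv_eq_one.1 h1)
  have hcen : ∀ t, (∀ y ∈ H, t * y = y * t) → t ∈ L := by
    intro t ht
    apply mem_normalizer_of_cj_le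
    rw [cj_le_iff]
    intro y hy
    rw [ht y hy]; simpa using hy
  have hHTY : ∀ y ∈ Y, ∃ s ∈ T, ∃ x ∈ H, y = s * x := by
    intro y hy
    have h1 : Y = T ⊔ H := by
      symm
      apply eq_of_le_of_card_ge (sup_le hTY hHY)
      have h2 : Nat.card T * Nat.card H ∣ Nat.card (T ⊔ H : Subgroup G) := by
        refine Nat.Coprime.mul_dvd_of_dvd_of_dvd ?_ (card_dvd_of_le le_sup_left)
          (card_dvd_of_le le_sup_right)
        rw [hHc, hrel, ha]; exact (hYc.pow_right a).symm
      have hcT : Nat.card (T.subgroupOf Y) = Nat.card T :=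
        Nat.card_congr (subgroupOfEquivOfLe hTY).toEquiv
      have h3 : Nat.card Y = Nat.card T * Nat.card H := by
        rw [hHc, ← hcT]; exact (card_mul_index (T.subgroupOf Y)).symm
      rw [h3]
      exact Nat.le_of_dvd Nat.card_pos h2
    exact exists_mul_of_mem_sup (by rw [normalizer_eq_top]; exact le_top) (h1 ▸ hy)
  have hLT : L ⊓ T = ⊥ := by
    have h1 : L ⊓ T = centralizer (Y : Set G) ⊓ T := by
      ext t
      refine ⟨fun ht => mem_inf.2 ⟨?_, (mem_inf.1 ht).2⟩, fun ht => mem_inf.2 ⟨?_, (mem_inf.1 ht).2⟩⟩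
      · obtain ⟨htL, htT⟩ := mem_inf.1 ht
        rw [mem_centralizer_iff]
        intro y hy
        obtain ⟨s, hs, x, hx, rfl⟩ := hHTY y hy
        rw [mul_assoc, ← hLTc t htT htL x hx, ← mul_assoc, ab s hs t htT, mul_assoc]
      · exact hcen t fun y hy => (mem_centralizer_iff.1 (mem_inf.1 ht).1 y (hHY hy)).symm
    have h2 : (L ⊓ T).Normal := by
      rw [h1]
      infer_instance
    rcases hmin _ h2 inf_le_right with h3 | h3
    · exact h3
    · exact absurd (inf_eq_right.1 h3) hLt
  -- linear characters are trivial on `T`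
  have htriv : ∀ μ : G →* ℂˣ, ∀ t ∈ T, μ t = 1 := by
    intro μ t ht
    have h1 : (T ⊓ μ.ker).Normal := inferInstance
    rcases hmin _ h1 inf_le_left with h2 | h2
    · exfalso
      apply hLt
      intro s hs
      apply hcen
      intro y _
      have h3 : s * y * s⁻¹ * y⁻¹ ∈ T ⊓ μ.ker := by
        refine mem_inf.2 ⟨?_, ?_⟩
        · have : s * y * s⁻¹ * y⁻¹ = s * (y * s⁻¹ * y⁻¹) := by group
          rw [this]
          exact mul_mem hs (hT.conj_mem _ (inv_mem hs) _)
        · rw [MonoidHom.mem_ker]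
          simp only [map_mul, map_inv]
          rw [mul_comm (μ s) (μ y)]; simp
      rw [h2, mem_bot] at h3
      exact mul_inv_eq_iff_eq_mul.1 (mul_inv_eq_one.1 h3)
    · have : t ∈ T ⊓ μ.ker := h2.symm.le ht
      exact (mem_inf.1 this).2
  have := Fintype.ofFinite L
  have hlin : Nat.card (LinQ (p ^ c) G) ≤ Nat.card (LinQ (p ^ c) L) := by
    refine Nat.card_le_card_of_injective (fun μ => ⟨μ.1.comp L.subtype, ?_⟩) ?_
    · rw [mem_LinQ]
      refine MonoidHom.ext fun x => ?_
      exact DFunLike.congr_fun (mem_LinQ.1 μ.2) (x : G)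
    · intro μ ν e
      have h1 : μ.1.comp L.subtype = ν.1.comp L.subtype := congrArg Subtype.val e
      apply Subtype.ext
      refine MonoidHom.ext fun g => ?_
      obtain ⟨s, hs, l, hl, rfl⟩ := hfac g
      have h2 : μ.1 l = ν.1 l := DFunLike.congr_fun h1 (⟨l, hl⟩ : L)
      rw [map_mul, map_mul, htriv _ s hs, htriv _ s hs, h2]
  have hLo : Odd (Nat.card L) := Odd.of_dvd_nat hG (card_subgroup_dvd_card L)
  have hgL := h.mono (card_subgroup_dvd_card L)
  have h2 := card_SChar (h.coprime hp.out hc0 Nat.card_pos.ne')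
  have h3 := card_SChar (G := L) (hgL.coprime hp.out hc0 Nat.card_pos.ne')
  have h4 := two_mul_card_SCl hG hc0 h hT ab hexp hT1 hLT hfac
  -- the linear characters in `LinQ` are invariant characters
  have h5 : Nat.card (LinQ (p ^ c) L) ≤ Nat.card (SChar n L) := by
    have : Finite (SChar n L) := SChar_finite
    refine Nat.card_le_card_of_injective
      (fun μ => (⟨tw μ.1 (fun _ => 1), lin_mem_Irr _, fun g => ?_⟩ : SChar n L)) ?_
    · rw [tw_apply, tw_apply, (lin_mem_SChar hLo hp.out hgL).2 μ.2 g]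
    · intro μ ν e
      exact Subtype.ext (tw_one_injective (congrArg Subtype.val e))
  omega
end

/-- The counting theorem: if an odd-order group has no normal `p`-complement, then at most half of
the irreducible characters invariant under the power map are linear. -/
theorem claimD (p : ℕ) [hp : Fact p.Prime] (hp2 : Odd p) (c n : ℕ) (hc0 : c ≠ 0) (N : ℕ) :
    ∀ (G : Type) [Group G] [Fintype G], Nat.card G = N → Odd (Nat.card G) →
      NGood p c n (Nat.card G) → ¬ HasNormalPComplement G p →
      2 * Nat.card (LinQ (p ^ c) G) ≤ Nat.card (SChar n G) := by
  induction N using Nat.strong_induction_on with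
  | _ N ih =>
  intro G _ _ hN hG h hnp
  by_cases hO : ∀ T : Subgroup G, T.Normal → IsPGroup p T → T = ⊥
  · refine claim_pcore_bot hp2 hG hc0 h hO hnp fun M hM hMnp => ?_
    have := Fintype.ofFinite M
    refine ih _ ?_ M rfl (Odd.of_dvd_nat hG (card_subgroup_dvd_card M))
      (h.mono (card_subgroup_dvd_card M)) hMnp
    rw [← hN]
    refine lt_of_le_of_ne (Nat.le_of_dvd Nat.card_pos (card_subgroup_dvd_card M)) fun e => hM ?_
    exact (card_eq_iff_eq_top M).1 e
  · push Not at hO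
    obtain ⟨T0, hT0⟩ := hO
    obtain ⟨T, ⟨hT, hTp, hT1⟩, hmin⟩ := Set.Finite.exists_minimal
      (s := {T : Subgroup G | T.Normal ∧ IsPGroup p T ∧ T ≠ ⊥}) (Set.toFinite _) ⟨T0, hT0⟩
    by_cases hQ : HasNormalPComplement (G ⧸ T) p
    · refine claim_pcore hG hc0 h hnp hT hTp hT1 (fun M hM hMT => ?_) hQ
      by_cases hM1 : M = ⊥
      · exact Or.inl hM1
      · exact Or.inr (le_antisymm hMT (hmin ⟨hM, hTp.to_le hMT, hM1⟩ hMT))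
    · refine SChar_quotient hG hp.out h T ?_
      have := Fintype.ofFinite (G ⧸ T)
      have hd : Nat.card (G ⧸ T) ∣ Nat.card G := card_quotient_dvd_card T
      refine ih _ ?_ (G ⧸ T) rfl (Odd.of_dvd_nat hG hd) (h.mono hd) hQ
      rw [← hN, card_eq_card_quotient_mul_card_subgroup T]
      have : 1 < Nat.card T := by
        have : Nontrivial T := (nontrivial_iff_ne_bot T).2 hT1
        exact Finite.one_lt_card
      exact lt_mul_of_one_lt_right Nat.card_pos this

end

/-! ### Invariant characters take values in `k` -/

/-- `1 + p ^ c` generates the residues modulo `p ^ i` congruent to `1` modulo `p ^ c`. -/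
theorem exists_pow_modEq {p c m : ℕ} (hp : p.Prime) (hp2 : Odd p) (hc : c ≠ 0)
    (hm : m ≡ 1 [MOD p ^ c]) (i : ℕ) : ∃ j, m ≡ (1 + p ^ c) ^ j [MOD p ^ i] := by
  have hp3 : 3 ≤ p := by
    have := hp.two_le
    rcases hp2 with ⟨r, hr⟩
    omega
  induction i with
  | zero => exact ⟨0, by simpa using Nat.modEq_one⟩
  | succ i ih =>
    rcases Nat.lt_or_ge i c with hi | hi
    · exact ⟨0, by simpa using hm.of_dvd (pow_dvd_pow p hi)⟩
    obtain ⟨j, hj⟩ := ih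
    obtain ⟨y, hy⟩   := ZMod.exists_one_add_mul_pow_prime_pow_eq (R := ℤ) (u := (p : ℤ) ^ c) (v := (p : ℤ)) hp
      (dvd_pow_self _ hc) (by
        rw [← pow_succ', ← pow_succ, ← pow_mul]
        refine pow_dvd_pow _ ?_
        have : c * 3 ≤ c * p := Nat.mul_le_mul_left _ hp3
        omega) 1 (i - c)
    have h1 : (p : ℤ) ^ (i - c) * (p : ℤ) ^ c = (p : ℤ) ^ i := by rw [← pow_add]; congr 1; omega
    rw [h1, mul_one] at hy
    obtain ⟨z, hz⟩ := (Int.natCast_modEq_iff.2 hj).dvd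
    obtain ⟨r, hr⟩ : ∃ r : ℕ, (p : ℤ) ∣ r + z := by
      refine ⟨((-z) % p).toNat, ?_⟩
      rw [Int.toNat_of_nonneg (Int.emod_nonneg _ (by exact_mod_cast hp.ne_zero))]
      have := Int.emod_add_mul_ediv (-z) p
      exact ⟨- (-z / p), by linear_combination this⟩
    have h3 : (p : ℤ) ^ (i + 1) ∣ (1 + (p : ℤ) ^ i * (1 + p * y)) ^ r - (1 + r * (p : ℤ) ^ i) := by
      clear hr
      induction r with
      | zero => simp
      | succ r ih =>
        obtain ⟨w, hw⟩ := ih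
        have hpi : (p : ℤ) ^ i = p * (p : ℤ) ^ (i - 1) := by rw [← pow_succ']; congr 1; omega
        refine ⟨w * (1 + (p : ℤ) ^ i * (1 + p * y)) + y * (1 + r * (p : ℤ) ^ i)
          + r * (p : ℤ) ^ (i - 1), ?_⟩
        rw [pow_succ (1 + (p : ℤ) ^ i * (1 + p * y)) r, pow_succ (p : ℤ) i]
        push_cast
        rw [pow_succ] at hw
        linear_combination (1 + (p : ℤ) ^ i * (1 + p * y)) * hw + r * (p : ℤ) ^ i * hpi
    refine ⟨j + p ^ (i - c) * r, ?_⟩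
    rw [← Int.natCast_modEq_iff]
    refine Int.ModEq.symm ?_
    refine (Int.modEq_iff_dvd).2 ?_
    push_cast at hz ⊢
    rw [pow_add (1 + (p : ℤ) ^ c), pow_mul, hy]
    obtain ⟨w, hw⟩ := h3
    obtain ⟨v, hv⟩ := hr
    obtain ⟨x, hx⟩ : (p : ℤ) ∣ (1 + (p : ℤ) ^ c) ^ j - 1 := by
      have := sub_dvd_pow_sub_pow (1 + (p : ℤ) ^ c) 1 j
      rw [one_pow] at this
      refine dvd_trans ?_ this
      simpa using dvd_pow_self (p : ℤ) hc
    refine ⟨- v - r * x - (1 + (p : ℤ) ^ c) ^ j * w, ?_⟩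
    rw [pow_succ (p : ℤ) i] at hw ⊢
    linear_combination -hz - (1 + (p : ℤ) ^ c) ^ j * hw - r * (p : ℤ) ^ i * hx - (p : ℤ) ^ i * hv

theorem exists_NGood {p c N : ℕ} (hp : p.Prime) (hN : N ≠ 0) : ∃ n, NGood p c n N := by
  obtain ⟨i, d, rfl, hd⟩ := exists_ppart hp hN
  have hc : (p ^ i).Coprime d := Nat.Coprime.pow_left _ ((hp.coprime_iff_not_dvd).2 hd)
  obtain ⟨n, h1, h2⟩ := Nat.chineseRemainder hc (1 + p ^ c) (d - 1)
  have hd0 : d ≠ 0 := by rintro rfl; simp at hd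
  refine ⟨n, fun j hj => ?_, fun e he hpe => ?_⟩
  · refine h1.of_dvd ?_
    exact Nat.Coprime.dvd_of_dvd_mul_right (Nat.Coprime.pow_left _ ((hp.coprime_iff_not_dvd).2 hd)) hj
  · have : e ∣ d := Nat.Coprime.dvd_of_dvd_mul_left
      (Nat.Coprime.pow_right _ (Nat.coprime_comm.1 ((hp.coprime_iff_not_dvd).2 hpe))) he
    refine this.trans ?_
    refine (h2.add_right 1).dvd_iff dvd_rfl |>.2 ?_
    rw [Nat.sub_add_cancel (Nat.pos_of_ne_zero hd0)]

/-- `p ^ c` is the exact `p`-part of the group of `N`-th roots of unity in `k`. -/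
structure KGood (p c N : ℕ) (k : Subfield ℂ) : Prop where
  mem : ∀ z : ℂ, z ^ p ^ c = 1 → z ∈ k
  max : ∀ z ∈ k, ∀ i, z ^ p ^ i = 1 → z ^ N = 1 → z ^ p ^ c = 1

theorem exists_KGood {p N : ℕ} (hp : p.Prime) (hN : N ≠ 0) (hpN : p ∣ N) (k : Subfield ℂ)
    (hk : ∀ z : ℂ, IsPrimitiveRoot z p → z ∈ k) : ∃ c ≠ 0, p ^ c ∣ N ∧ KGood p c N k := by
  classical
  let P : ℕ → Prop := fun i => ∀ z : ℂ, IsPrimitiveRoot z (p ^ i) → z ∈ k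
  have hP1 : P 1 := fun z hz => hk z (by simpa using hz)
  have key : ∀ i (z : ℂ), IsPrimitiveRoot z (p ^ i) → z ∈ k → ∀ w : ℂ, w ^ p ^ i = 1 → w ∈ k := by
    intro i z hz hzk w hw
    have : NeZero (p ^ i) := ⟨(pow_pos hp.pos i).ne'⟩
    obtain ⟨j, -, rfl⟩ := hz.eq_pow_of_pow_eq_one hw
    exact pow_mem hzk j
  let a := N.factorization p
  have ha : 1 ≤ a := (hp.dvd_iff_one_le_factorization hN).1 hpN
  let c := Nat.findGreatest P a
  have hc : 1 ≤ c := Nat.le_findGreatest ha hP1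
  have hPc : P c := Nat.findGreatest_spec ha hP1
  refine ⟨c, by omega, (hp.pow_dvd_iff_le_factorization hN).2 (Nat.findGreatest_le a), fun z hz => ?_, fun z hz i h1 h2 => ?_⟩
  · have := Complex.isPrimitiveRoot_exp (p ^ c) (pow_pos hp.pos c).ne'
    exact key c _ this (hPc _ this) z hz
  · obtain ⟨j, -, hj⟩ := (Nat.dvd_prime_pow hp).1 (orderOf_dvd_of_pow_eq_one h1)
    have hz' : IsPrimitiveRoot z (p ^ j) := hj ▸ IsPrimitiveRoot.orderOf z
    have hja : j ≤ a := (hp.pow_dvd_iff_le_factorization hN).1 (hj ▸ orderOf_dvd_of_pow_eq_one h2)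
    have hjc : j ≤ c := Nat.le_findGreatest hja fun w hw => key j z hz' hz w hw.pow_eq_one
    exact orderOf_dvd_iff_pow_eq_one.1 (hj ▸ pow_dvd_pow p hjc)

/-- Galois theory over `k`: a sum of `N`-th roots of unity lies in `k` if it is fixed by all
automorphisms fixing the `N`-th roots of unity in `k`. -/
theorem mem_of_galois_fixed (k : Subfield ℂ) {N : ℕ} (hN : N ≠ 0) {ω : ℂ} (hω : IsPrimitiveRoot ω N)
    (m : ℕ → ℕ) {z : ℂ} (hz : z = ∑ j ∈ Finset.range N, (m j : ℂ) * ω ^ j)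
    (h : ∀ e : ℕ, e.Coprime N → (∀ w ∈ k, w ^ N = 1 → w ^ e = w) →
      ∑ j ∈ Finset.range N, (m j : ℂ) * ω ^ (j * e) = z) : z ∈ k := by
  have : NeZero N := ⟨hN⟩
  let K : IntermediateField k ℂ := algebraicClosure k ℂ
  have hωi : IsIntegral k ω := by
    refine ⟨Polynomial.X ^ N - 1, Polynomial.monic_X_pow_sub_C 1 hN, ?_⟩
    simp [hω.pow_eq_one]
  have hωK : ω ∈ K := (mem_algebraicClosure_iff).2 hωi.isAlgebraic
  let w : K := ⟨ω, hωK⟩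
  have hw : IsPrimitiveRoot w N := IsPrimitiveRoot.of_map_of_injective (f := algebraMap K ℂ) hω
    (algebraMap K ℂ).injective
  let zK : K := ∑ j ∈ Finset.range N, (m j : K) * w ^ j
  have hzK : (zK : ℂ) = z := by
    rw [hz]
    change algebraMap K ℂ zK = _
    simp only [zK, map_sum, map_mul, map_natCast, map_pow]
    rfl
  have hgal : IsGalois k K := inferInstance
  have hbot : zK ∈ (⊥ : IntermediateField k K) := by
    rw [InfiniteGalois.mem_bot_iff_fixed]
    intro σ
    obtain ⟨e, -, he⟩ := hw.eq_pow_of_pow_eq_one (ξ := σ w) (by rw [← map_pow, hw.pow_eq_one, map_one])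
    have hσ : ∀ v : K, v ^ N = 1 → σ v = v ^ e := by
      intro v hv
      obtain ⟨j, -, rfl⟩ := hw.eq_pow_of_pow_eq_one hv
      rw [map_pow, ← he, ← pow_mul, ← pow_mul, mul_comm]
    have hwe : IsPrimitiveRoot (w ^ e) N := by
      rw [he]; exact hw.map_of_injective σ.injective
    have hecop : e.Coprime N := (hw.pow_iff_coprime (Nat.pos_of_ne_zero hN) e).1 hwe
    have h1 := h e hecop (fun v hv hvN => by
      have h2 := hσ (algebraMap k K ⟨v, hv⟩) (by
        rw [← map_pow, ← map_one (algebraMap k K)]; congr 1; exact Subtype.ext hvN)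
      rw [σ.commutes] at h2
      exact (congrArg (algebraMap K ℂ) h2).symm)
    apply (algebraMap K ℂ).injective
    change _ = (zK : ℂ)
    rw [hzK, ← h1]
    simp only [zK, map_sum, map_mul, map_natCast, map_pow]
    refine Finset.sum_congr rfl fun j _ => ?_
    rw [← he, map_pow, ← pow_mul, mul_comm e j]
    rfl
  obtain ⟨y, hy⟩ := IntermediateField.mem_bot.1 hbot
  rw [← hzK, ← hy]
  exact y.2

section
variable {G : Type} [Group G] [Fintype G] {p c n : ℕ} {k : Subfield ℂ}

theorem PElt.pow {g : G} (hg : PElt p g) (j : ℕ) : PElt p (g ^ j) := by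
  obtain ⟨i, hi⟩ := hg
  exact ⟨i, by rw [← pow_mul, mul_comm, pow_mul, hi, one_pow]⟩

theorem PElt.exists_orderOf (hp : p.Prime) {g : G} (hg : PElt p g) :
    ∃ i, orderOf g = p ^ i ∧ p ^ i ∣ Nat.card G := by
  obtain ⟨k, hk⟩ := hg
  obtain ⟨i, -, hi⟩ := (Nat.dvd_prime_pow hp).1 (orderOf_dvd_of_pow_eq_one hk)
  exact ⟨i, hi, hi ▸ orderOf_dvd_natCard g⟩

/-- Invariance under `g ↦ g ^ n` implies invariance under every Galois automorphism fixing the `p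
^ c`-th roots of unity: on `p`-elements such an automorphism acts as a power of `n`, and
`SChar_ext` applies. -/
theorem SChar_pow_eq (hG : Odd (Nat.card G)) (hp : p.Prime) (hp2 : Odd p) (hc : c ≠ 0)
    (h : NGood p c n (Nat.card G)) {χ : G → ℂ} (hχ : χ ∈ SChar n G) {m : ℕ}
    (hm : m.Coprime (Nat.card G)) (hmc : m ≡ 1 [MOD p ^ c]) (g : G) : χ (g ^ m) = χ g := by
  refine congrFun (SChar_ext hG hp hc h (χ := fun g => χ (g ^ m)) (Irr_pow hχ.1 hm) hχ.1 ?_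
    (SChar_tau hχ _) ?_) g
  · intro g
    change χ _ = χ _
    rw [← pow_mul, mul_comm, pow_mul, SChar_tau hχ]
  · intro g hg
    change χ _ = χ _
    obtain ⟨i, hi, hd⟩ := hg.exists_orderOf hp
    obtain ⟨j, hj⟩ := exists_pow_modEq hp hp2 hc hmc i
    have h1 : m ≡ n ^ j [MOD orderOf g] := hi ▸ hj.trans ((h.pp i hd).pow j).symm
    rw [pow_eq_pow_iff_modEq.2 h1, SChar_tau hχ]

theorem SChar_mem_k (hG : Odd (Nat.card G)) (hp : p.Prime) (hp2 : Odd p) (hc : c ≠ 0)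
    (hcd : p ^ c ∣ Nat.card G)
    (h : NGood p c n (Nat.card G)) (hk : KGood p c (Nat.card G) k) {χ : G → ℂ} (hχ : χ ∈ SChar n G)
    (g : G) : χ g ∈ k := by
  obtain ⟨t, ρ, hρ⟩ := Irr_matrix hχ.1
  have hN : Nat.card G ≠ 0 := Nat.card_pos.ne'
  have hω := Complex.isPrimitiveRoot_exp (Nat.card G) hN
  obtain ⟨m, hm, -⟩ := exists_mult hN (ρ g) (by rw [← map_pow, pow_card_eq_one', map_one]) hω
  refine mem_of_galois_fixed k hN hω m (by simpa [hρ] using hm 1) ?_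
  intro e he hfix
  rw [← hm e, ← map_pow, ← hρ]
  refine SChar_pow_eq hG hp hp2 hc h hχ he ?_ g
  have hζ := Complex.isPrimitiveRoot_exp (p ^ c) (pow_pos hp.pos c).ne'
  have h1 := hfix _ (hk.mem _ hζ.pow_eq_one)
    ((hζ.pow_eq_one_iff_dvd _).2 hcd)
  have hu : IsPrimitiveRoot (hζ.isUnit (pow_pos hp.pos c).ne').unit (p ^ c) :=
    IsPrimitiveRoot.coe_units_iff.1 hζ
  rw [hu.eq_orderOf, ← pow_eq_pow_iff_modEq, pow_one]
  exact Units.ext h1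
end

/-! ### Stabilizers of a character under twisting -/

/-- `T` intertwines `ρ` with its twist by the linear character `μ`. -/
def Tw {G : Type} [Group G] {t : ℕ} (ρ : G →* Matrix (Fin t) (Fin t) ℂ) (μ : G →* ℂˣ)
    (T : Matrix (Fin t) (Fin t) ℂ) : Prop := ∀ g, T * ρ g = (μ g : ℂ) • (ρ g * T)

section
variable {G : Type} [Group G] {t : ℕ} {ρ : G →* Matrix (Fin t) (Fin t) ℂ}

theorem Tw.mul {μ ν : G →* ℂˣ} {T S : Matrix (Fin t) (Fin t) ℂ} (hT : Tw ρ μ T) (hS : Tw ρ ν S) :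
    Tw ρ (μ * ν) (T * S) := by
  intro g
  rw [mul_assoc, hS g, mul_smul_comm, ← mul_assoc, hT g, smul_mul_assoc, smul_smul, mul_assoc,
    MonoidHom.mul_apply, Units.val_mul, mul_comm]

theorem Tw.one : Tw ρ 1 1 := fun g => by simp

theorem Tw.smul {μ : G →* ℂˣ} {T : Matrix (Fin t) (Fin t) ℂ} (hT : Tw ρ μ T) (c : ℂ) :
    Tw ρ μ (c • T) := by
  intro g
  rw [smul_mul_assoc, hT g, mul_smul_comm, smul_comm]

theorem Tw.pow {μ : G →* ℂˣ} {T : Matrix (Fin t) (Fin t) ℂ} (hT : Tw ρ μ T) (m : ℕ) :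
    Tw ρ (μ ^ m) (T ^ m) := by
  induction m with
  | zero => intro g; simp
  | succ m ih =>
    have e : μ ^ (m + 1) = μ ^ m * μ := MonoidHom.ext fun g => by simp [pow_succ]
    rw [pow_succ, e]; exact ih.mul hT

theorem Tw.unit_inv {μ : G →* ℂˣ} {U : (Matrix (Fin t) (Fin t) ℂ)ˣ} (hT : Tw ρ μ U) :
    Tw ρ μ⁻¹ (U⁻¹ : (Matrix (Fin t) (Fin t) ℂ)ˣ) := by
  intro g
  have h := hT g
  have h2 : ((U⁻¹ : (Matrix (Fin t) (Fin t) ℂ)ˣ) : Matrix (Fin t) (Fin t) ℂ) * (U * ρ g) * (U⁻¹ : (Matrix (Fin t) (Fin t) ℂ)ˣ) =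
     (U⁻¹ : (Matrix (Fin t) (Fin t) ℂ)ˣ) * ((μ g : ℂ) • (ρ g * U)) * (U⁻¹ : (Matrix (Fin t) (Fin t) ℂ)ˣ) := by rw [h]
  rw [← mul_assoc, U.inv_mul, one_mul, mul_smul_comm, smul_mul_assoc, ← mul_assoc, mul_assoc,
    mul_assoc, U.mul_inv, mul_one] at h2
  rw [h2, smul_smul, MonoidHom.inv_apply]
  simp

variable [Fintype G] {χ : G → ℂ}

theorem exists_Tw (hχ : χ ∈ Irr G) (hρ : ∀ g, χ g = (ρ g).trace) {μ : G →* ℂˣ} (h : tw μ χ = χ) :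
    ∃ U : (Matrix (Fin t) (Fin t) ℂ)ˣ, Tw ρ μ U := by
  obtain ⟨T, ⟨U, rfl⟩, h2⟩ := exists_intertwiner ρ (twRep μ ρ) hχ hρ
    (fun g => by rw [← twRep_trace μ ρ hρ, h])
  exact ⟨U, fun g => by rw [h2, twRep_apply, smul_mul_assoc]⟩

theorem Tw.unique (hχ : χ ∈ Irr G) (hρ : ∀ g, χ g = (ρ g).trace) {μ : G →* ℂˣ}
    {U : (Matrix (Fin t) (Fin t) ℂ)ˣ} (hU : Tw ρ μ U) {T : Matrix (Fin t) (Fin t) ℂ}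
    (hT : Tw ρ μ T) : ∃ c : ℂ, T = c • (U : Matrix (Fin t) (Fin t) ℂ) := by
  have h := hU.unit_inv.mul hT
  have h1 : (μ⁻¹ * μ : G →* ℂˣ) = 1 := MonoidHom.ext fun g => by simp
  rw [h1] at h
  obtain ⟨c, hc⟩ := schur ρ hχ hρ _ (fun g => by simpa using h g)
  refine ⟨c, ?_⟩
  have := congrArg (fun X => (U : Matrix (Fin t) (Fin t) ℂ) * X) hc
  simpa using this

theorem smul_unit_inj (ht : 0 < t) (U : (Matrix (Fin t) (Fin t) ℂ)ˣ) {a b : ℂ}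
    (h : a • (U : Matrix (Fin t) (Fin t) ℂ) = b • (U : Matrix (Fin t) (Fin t) ℂ)) : a = b := by
  have := congrArg (fun X => X * ((U⁻¹ : (Matrix (Fin t) (Fin t) ℂ)ˣ) : Matrix (Fin t) (Fin t) ℂ)) h
  simp only [smul_mul_assoc, U.mul_inv] at this
  have h2 := congrFun (congrFun this ⟨0, ht⟩) ⟨0, ht⟩
  simpa using h2

/-- The intertwiners for the stabilizer of a character fixed by the `n`-th power Galois action
commute: the commutator scalar `β` of two of them is sent by the Galois action both to itself and to its inverse,
and it has odd order. -/
theorem Tw_comm {n m : ℕ} (hχ : χ ∈ SChar n G) (hρ : ∀ g, χ g = (ρ g).trace) (ht : 0 < t)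
    (hn : n.Coprime (Nat.card G)) (hm : Odd m) (hmn : m ∣ n + 1) (hmN : m ∣ Nat.card G)
    {μ ν : G →* ℂˣ} (hμ : μ ^ m = 1) (hν : ν ^ m = 1) {U V : (Matrix (Fin t) (Fin t) ℂ)ˣ}
    (hU : Tw ρ μ U) (hV : Tw ρ ν V) : U * V = V * U := by
  have hUV : Tw ρ (μ * ν) ((U * V : (Matrix (Fin t) (Fin t) ℂ)ˣ) : Matrix (Fin t) (Fin t) ℂ) := by
    rw [Units.val_mul]; exact hU.mul hV
  have hVU : Tw ρ (μ * ν) ((V * U : (Matrix (Fin t) (Fin t) ℂ)ˣ) : Matrix (Fin t) (Fin t) ℂ) := by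
    rw [Units.val_mul, mul_comm μ]; exact hV.mul hU
  obtain ⟨β, hβ⟩ := Tw.unique hχ.1 hρ hVU hUV
  -- `β` is an `m`-th root of unity
  have hβm : β ^ m = 1 := by
    have h1 : ∀ j : ℕ, ((U ^ j * V : (Matrix (Fin t) (Fin t) ℂ)ˣ) : Matrix (Fin t) (Fin t) ℂ)
        = β ^ j • ((V * U ^ j : (Matrix (Fin t) (Fin t) ℂ)ˣ) : Matrix (Fin t) (Fin t) ℂ) := by
      intro j
      induction j with
      | zero => simp
      | succ j ih =>
        have e1 : U ^ (j + 1) * V = U ^ j * (U * V) := by rw [pow_succ, mul_assoc]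
        have e2 : V * U ^ (j + 1) = V * U ^ j * U := by rw [pow_succ, mul_assoc]
        rw [e1, e2, Units.val_mul, hβ, mul_smul_comm, Units.val_mul V U, ← mul_assoc,
          ← Units.val_mul, ih, smul_mul_assoc, smul_smul, ← Units.val_mul, pow_succ, mul_comm β]
    have h2 : Tw ρ 1 ((U ^ m : (Matrix (Fin t) (Fin t) ℂ)ˣ) : Matrix (Fin t) (Fin t) ℂ) := by
      rw [Units.val_pow_eq_pow_val, ← hμ]; exact hU.pow m
    obtain ⟨s, hs⟩ := schur ρ hχ.1 hρ _ (fun g => by simpa using h2 g)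
    have hs' : ((U ^ m : (Matrix (Fin t) (Fin t) ℂ)ˣ) : Matrix (Fin t) (Fin t) ℂ) = s • 1 := by
      rw [← hs, Units.val_pow_eq_pow_val]
    have h4 : (U ^ m : (Matrix (Fin t) (Fin t) ℂ)ˣ) * V = V * U ^ m := by
      ext1; rw [Units.val_mul, Units.val_mul, hs']; simp
    have h5 := h1 m
    rw [h4] at h5
    refine smul_unit_inj ht (V * U ^ m) ?_
    rw [← h5, one_smul]
  obtain ⟨τ, hτ⟩ := exists_ringHom_pow (Nat.card G) n Nat.card_pos.ne' hn
  have hτβ : τ β = β ^ n := hτ β (by obtain ⟨e, he⟩ := hmN; rw [he, pow_mul, hβm, one_pow])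
  let F : Matrix (Fin t) (Fin t) ℂ →+* Matrix (Fin t) (Fin t) ℂ := τ.mapMatrix
  have hF : ∀ (c : ℂ) (X : Matrix (Fin t) (Fin t) ℂ), F (c • X) = τ c • F X := by
    intro c X; ext i j; simp [F]
  let ρ' : G →* Matrix (Fin t) (Fin t) ℂ := (F : _ →* _).comp ρ
  have hρ' : ∀ g, χ g = (ρ' g).trace := by
    intro g
    rw [← hχ.2 g, ← ringHom_Irr hχ.1 τ hτ g, hρ]
    simp [ρ', F, Matrix.trace, Matrix.diag]
  obtain ⟨M, ⟨M, rfl⟩, hM⟩ := exists_intertwiner ρ ρ' hχ.1 hρ hρ'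
  let Φ : (Matrix (Fin t) (Fin t) ℂ)ˣ → (Matrix (Fin t) (Fin t) ℂ)ˣ := fun W =>
    M⁻¹ * Units.map (F : _ →* _) W * M
  have hΦmul : ∀ W W', Φ (W * W') = Φ W * Φ W' := by
    intro W W'
    simp only [Φ, map_mul]
    group
  have hτμ : ∀ (κ : G →* ℂˣ), κ ^ m = 1 → ∀ g, τ (κ g : ℂ) = ((κ⁻¹ : G →* ℂˣ) g : ℂ) := by
    intro κ hκ g
    have h1 : κ g ^ m = 1 := by rw [← MonoidHom.pow_apply, hκ, MonoidHom.one_apply]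
    rw [hτ _ (by
      rw [← Units.val_pow_eq_pow_val, ← map_pow, pow_card_eq_one', map_one, Units.val_one])]
    rw [MonoidHom.inv_apply, ← Units.val_pow_eq_pow_val]
    congr 1
    obtain ⟨e, he⟩ := hmn
    refine eq_inv_of_mul_eq_one_left ?_
    rw [← pow_succ, he, pow_mul, h1, one_pow]
  have hΦ : ∀ (κ : G →* ℂˣ) (W : (Matrix (Fin t) (Fin t) ℂ)ˣ), κ ^ m = 1 → Tw ρ κ W →
      Tw ρ κ⁻¹ (Φ W) := by
    intro κ W hκ hW g
    have h1 : F W * ρ' g = ((κ⁻¹ : G →* ℂˣ) g : ℂ) • (ρ' g * F W) := by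
      have := congrArg F (hW g)
      rw [map_mul, hF, map_mul, hτμ κ hκ] at this
      exact this
    have h2 : ((M⁻¹ : (Matrix (Fin t) (Fin t) ℂ)ˣ) : Matrix (Fin t) (Fin t) ℂ) * ρ' g
        = ρ g * (M⁻¹ : (Matrix (Fin t) (Fin t) ℂ)ˣ) := by
      rw [Units.inv_mul_eq_iff_eq_mul, ← mul_assoc, hM g, mul_assoc, M.mul_inv, mul_one]
    change ((M⁻¹ * Units.map (F : _ →* _) W * M : (Matrix (Fin t) (Fin t) ℂ)ˣ) : Matrix (Fin t) (Fin t) ℂ) * _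
      = _ • (_ * ((M⁻¹ * Units.map (F : _ →* _) W * M : (Matrix (Fin t) (Fin t) ℂ)ˣ) : Matrix (Fin t) (Fin t) ℂ))
    simp only [Units.val_mul, Units.coe_map, MonoidHom.coe_coe]
    rw [mul_assoc, hM g, mul_assoc, ← mul_assoc (F W), h1, smul_mul_assoc, mul_smul_comm,
      mul_assoc (ρ' g), ← mul_assoc _ (ρ' g), h2]
    simp only [mul_assoc]
  have hΦs : ∀ (κ : G →* ℂˣ) (W : (Matrix (Fin t) (Fin t) ℂ)ˣ), κ ^ m = 1 → Tw ρ κ W →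
      ∃ s : ℂ, ((Φ W : (Matrix (Fin t) (Fin t) ℂ)ˣ) : Matrix (Fin t) (Fin t) ℂ)
        = s • ((W⁻¹ : (Matrix (Fin t) (Fin t) ℂ)ˣ) : Matrix (Fin t) (Fin t) ℂ) :=
    fun κ W hκ hW => Tw.unique hχ.1 hρ hW.unit_inv (hΦ κ W hκ hW)
  obtain ⟨s, hs⟩ := hΦs μ U hμ hU
  obtain ⟨r, hr⟩ := hΦs ν V hν hV
  have hΦβ : ((Φ U * Φ V : (Matrix (Fin t) (Fin t) ℂ)ˣ) : Matrix (Fin t) (Fin t) ℂ)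
      = τ β • ((Φ V * Φ U : (Matrix (Fin t) (Fin t) ℂ)ˣ) : Matrix (Fin t) (Fin t) ℂ) := by
    rw [← hΦmul, ← hΦmul]
    have := congrArg F hβ
    rw [hF] at this
    simp only [Φ]
    rw [Units.val_mul, Units.val_mul, Units.val_mul, Units.val_mul, Units.coe_map, Units.coe_map]
    simp only [MonoidHom.coe_coe]
    rw [this, mul_smul_comm, smul_mul_assoc]
  -- compare the two commutation scalars
  have hcomb : ((U⁻¹ * V⁻¹ : (Matrix (Fin t) (Fin t) ℂ)ˣ) : Matrix (Fin t) (Fin t) ℂ)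
      = τ β • ((V⁻¹ * U⁻¹ : (Matrix (Fin t) (Fin t) ℂ)ˣ) : Matrix (Fin t) (Fin t) ℂ) := by
    rw [Units.val_mul (Φ U), Units.val_mul (Φ V), hs, hr] at hΦβ
    simp only [smul_mul_assoc, mul_smul_comm, smul_smul] at hΦβ
    have hne : s ≠ 0 := by
      rintro rfl
      rw [zero_smul] at hs
      have h0 := (Φ U).mul_inv
      rw [hs, zero_mul] at h0
      have := congrFun (congrFun h0 ⟨0, ht⟩) ⟨0, ht⟩
      simp at this
    have hne' : r ≠ 0 := by
      rintro rfl
      rw [zero_smul] at hr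
      have h0 := (Φ V).mul_inv
      rw [hr, zero_mul] at h0
      have := congrFun (congrFun h0 ⟨0, ht⟩) ⟨0, ht⟩
      simp at this
    rw [Units.val_mul, Units.val_mul]
    have h3 := congrArg (fun X => (r * s)⁻¹ • X) hΦβ
    simp only [smul_smul] at h3
    have e1 : (r * s)⁻¹ * (s * r) = 1 := by field_simp
    have e1' : (r * s)⁻¹ * (r * s) = 1 := by field_simp
    have e2 : (r * s)⁻¹ * (τ β * (r * s)) = τ β := by field_simp
    have e3 : (r * s)⁻¹ * (τ β * (s * r)) = τ β := by field_simp
    simpa only [e1, e1', e2, e3, one_smul] using h3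
  have hβτ : τ β = β := by
    -- multiply by `U * V` on both sides
    have h1 := congrArg (fun X => ((V * U : (Matrix (Fin t) (Fin t) ℂ)ˣ) : Matrix (Fin t) (Fin t) ℂ) * X
      * ((U * V : (Matrix (Fin t) (Fin t) ℂ)ˣ) : Matrix (Fin t) (Fin t) ℂ)) hcomb
    simp only [mul_smul_comm, smul_mul_assoc, ← Units.val_mul] at h1
    have e1 : V * U * (U⁻¹ * V⁻¹) * (U * V) = U * V := by group
    have e2 : V * U * (V⁻¹ * U⁻¹) * (U * V) = V * U := by group
    rw [e1, e2, hβ] at h1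
    exact (smul_unit_inj ht _ h1).symm
  have hβ1 : β = 1 := by
    have hb0 : β ≠ 0 := by
      rintro rfl
      rw [zero_pow hm.pos.ne'] at hβm
      exact zero_ne_one hβm
    have h1 : β ^ (n + 1) = 1 := by obtain ⟨e, he⟩ := hmn; rw [he, pow_mul, hβm, one_pow]
    rw [pow_succ, ← hτβ, hβτ, ← pow_two] at h1
    obtain ⟨e, he⟩ := hm
    rw [he, pow_succ, pow_mul, h1, one_pow, one_mul] at hβm
    exact hβm
  ext1
  rw [hβ, hβ1, one_smul]
end

theorem exists_algHom_complex (A : Type) [CommRing A] [Nontrivial A] [Algebra ℂ A]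
    [Module.Finite ℂ A] : Nonempty (A →ₐ[ℂ] ℂ) := by
  obtain ⟨m, hm⟩ := Ideal.exists_maximal A
  let : Field (A ⧸ m) := Ideal.Quotient.field m
  have hfin : Module.Finite ℂ (A ⧸ m) := inferInstance
  have hb : Function.Bijective (algebraMap ℂ (A ⧸ m)) :=
    IsAlgClosed.algebraMap_bijective_of_isIntegral
  let e : ℂ ≃ₐ[ℂ] (A ⧸ m) := AlgEquiv.ofBijective (Algebra.ofId ℂ _) hb
  exact ⟨(e.symm : (A ⧸ m) →ₐ[ℂ] ℂ).comp (Ideal.Quotient.mkₐ ℂ m)⟩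

open scoped IsMulCommutative in
/-- Commuting complex matrices have a common system of eigenvalues. -/
theorem exists_algHom_adjoin {t : ℕ} (ht : 0 < t) {s : Set (Matrix (Fin t) (Fin t) ℂ)}
    (hs : ∀ a ∈ s, ∀ b ∈ s, a * b = b * a) :
    Nonempty (Algebra.adjoin ℂ s →ₐ[ℂ] ℂ) := by
  have := Algebra.isMulCommutative_adjoin ℂ hs
  have : NeZero t := ⟨ht.ne'⟩
  exact exists_algHom_complex (Algebra.adjoin ℂ s)

section
variable {G : Type} [Group G] {t : ℕ} {ρ : G →* Matrix (Fin t) (Fin t) ℂ}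
variable [Fintype G] {χ : G → ℂ}

/-- The intertwiners of the stabilizer can be rescaled to form a representation. -/
theorem exists_Tw_hom {n m : ℕ} (hχ : χ ∈ SChar n G) (hρ : ∀ g, χ g = (ρ g).trace) (ht : 0 < t)
    (hn : n.Coprime (Nat.card G)) (hm : Odd m) (hmn : m ∣ n + 1) (hmN : m ∣ Nat.card G)
    (D : Subgroup (G →* ℂˣ)) (hD : ∀ μ ∈ D, μ ^ m = 1) (hD' : ∀ μ ∈ D, tw μ χ = χ) :
    ∃ T : D →* Matrix (Fin t) (Fin t) ℂ, ∀ μ : D, Tw ρ μ (T μ) := by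
  choose U hU using fun μ : D => exists_Tw hχ.1 hρ (hD' μ.1 μ.2)
  let s : Set (Matrix (Fin t) (Fin t) ℂ) := Set.range fun μ : D => (U μ : Matrix (Fin t) (Fin t) ℂ)
  have hcomm : ∀ a ∈ s, ∀ b ∈ s, a * b = b * a := by
    rintro _ ⟨μ, rfl⟩ _ ⟨ν, rfl⟩
    exact congrArg Units.val (Tw_comm hχ hρ ht hn hm hmn hmN (hD _ μ.2) (hD _ ν.2) (hU μ) (hU ν))
  obtain ⟨φ⟩ := exists_algHom_adjoin ht hcomm
  let u : D → Algebra.adjoin ℂ s := fun μ => ⟨U μ, Algebra.subset_adjoin ⟨μ, rfl⟩⟩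
  have hone : ∀ X : Matrix (Fin t) (Fin t) ℂ, Tw ρ 1 X → ∃ c : ℂ, X = c • 1 :=
    fun X hX => schur ρ hχ.1 hρ _ (fun g => by simpa using hX g)
  have hφ0 : ∀ μ, φ (u μ) ≠ 0 := by
    intro μ h0
    have h1 := (hU μ).pow m
    rw [hD _ μ.2] at h1
    obtain ⟨c, hc⟩ := hone _ h1
    have h2 : u μ ^ m = c • 1 := Subtype.ext hc
    have h3 := congrArg φ h2
    rw [map_pow, h0, zero_pow hm.pos.ne', map_smul, map_one, smul_eq_mul, mul_one] at h3
    rw [← h3, zero_smul] at hc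
    have h4 := (U μ ^ m).mul_inv
    rw [Units.val_pow_eq_pow_val, hc, zero_mul] at h4
    have := congrFun (congrFun h4 ⟨0, ht⟩) ⟨0, ht⟩
    simp at this
  have hmul : ∀ μ ν : D, (φ (u μ))⁻¹ • (U μ : Matrix (Fin t) (Fin t) ℂ) *
      ((φ (u ν))⁻¹ • (U ν : Matrix (Fin t) (Fin t) ℂ))
      = (φ (u (μ * ν)))⁻¹ • (U (μ * ν) : Matrix (Fin t) (Fin t) ℂ) := by
    intro μ ν
    obtain ⟨c, hc⟩ := Tw.unique hχ.1 hρ (hU (μ * ν)) ((hU μ).mul (hU ν))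
    have h2 : u μ * u ν = c • u (μ * ν) := Subtype.ext hc
    have h3 := congrArg φ h2
    rw [map_mul, map_smul, smul_eq_mul] at h3
    rw [smul_mul_smul_comm, hc, smul_smul]
    congr 1
    have h4 := hφ0 μ
    have h5 := hφ0 ν
    have h6 := hφ0 (μ * ν)
    field_simp
    linear_combination -h3
  refine ⟨⟨⟨fun μ => (φ (u μ))⁻¹ • (U μ : Matrix (Fin t) (Fin t) ℂ), ?_⟩,
    fun μ ν => (hmul μ ν).symm⟩, fun μ => (hU μ).smul _⟩
  obtain ⟨c, hc⟩ := hone _ (hU 1)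
  have h2 : u 1 = c • 1 := Subtype.ext hc
  have h3 := congrArg φ h2
  rw [map_smul, map_one, smul_eq_mul, mul_one] at h3
  have h4 := hφ0 1
  rw [hc, h3, smul_smul, inv_mul_cancel₀ (h3 ▸ h4), one_smul]

theorem Tw.trace_eq_zero {μ : G →* ℂˣ} (hμ : μ ≠ 1) {T : Matrix (Fin t) (Fin t) ℂ}
    (hT : Tw ρ μ T) : T.trace = 0 := by
  obtain ⟨g, hg⟩ : ∃ g, μ g ≠ 1 := by
    by_contra h
    push Not at h
    exact hμ (MonoidHom.ext h)
  have h1 : (T * ρ g * ρ g⁻¹).trace = T.trace := by rw [mul_assoc, ← map_mul]; simp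
  rw [hT g, smul_mul_assoc, Matrix.trace_smul, Matrix.trace_mul_comm, ← mul_assoc, ← map_mul] at h1
  simp only [inv_mul_cancel, map_one, one_mul, smul_eq_mul] at h1
  have h2 : ((μ g : ℂ) - 1) * T.trace = 0 := by linear_combination h1
  refine (mul_eq_zero.1 h2).resolve_left fun h3 => hg ?_
  ext1
  simpa [sub_eq_zero] using h3

/-- The averaging idempotent of the stabilizer. -/
theorem exists_stab_idem {n m : ℕ} (hχ : χ ∈ SChar n G) (hρ : ∀ g, χ g = (ρ g).trace) (ht : 0 < t)
    (hn : n.Coprime (Nat.card G)) (hm : Odd m) (hmn : m ∣ n + 1) (hmN : m ∣ Nat.card G)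
    (D : Subgroup (G →* ℂˣ)) (hD : ∀ μ ∈ D, μ ^ m = 1) (hD' : ∀ μ ∈ D, tw μ χ = χ) :
    ∃ e : Matrix (Fin t) (Fin t) ℂ, e * e = e ∧ (Nat.card D : ℂ) * e.trace = t ∧
      ∀ x : G, (∀ μ ∈ D, μ x = 1) → e * ρ x = ρ x * e := by
  classical
  obtain ⟨T, hT⟩ := exists_Tw_hom hχ hρ ht hn hm hmn hmN D hD hD'
  have : Fintype D := Fintype.ofFinite D
  have hd0 : (Nat.card D : ℂ) ≠ 0 := by exact_mod_cast Nat.card_pos.ne'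
  refine ⟨(Nat.card D : ℂ)⁻¹ • ∑ μ : D, T μ, ?_, ?_, ?_⟩
  · rw [smul_mul_smul_comm, Finset.sum_mul]
    have h1 : ∀ μ : D, T μ * ∑ ν : D, T ν = ∑ ν : D, T ν := by
      intro μ
      rw [Finset.mul_sum]
      simp_rw [← map_mul]
      exact Fintype.sum_bijective (fun ν => μ * ν) (Group.mulLeft_bijective μ) _ _ fun _ => rfl
    rw [Finset.sum_congr rfl fun μ _ => h1 μ, Finset.sum_const, Finset.card_univ,
      ← Nat.card_eq_fintype_card, ← Nat.cast_smul_eq_nsmul ℂ, smul_smul]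
    congr 1
    field_simp
  · rw [Matrix.trace_smul, Matrix.trace_sum, Finset.sum_eq_single 1, map_one, Matrix.trace_one]
    · simp [hd0]
    · intro μ _ hμ
      exact (hT μ).trace_eq_zero fun h => hμ (Subtype.ext h)
    · simp
  · intro x hx
    rw [smul_mul_assoc, mul_smul_comm, Finset.sum_mul, Finset.mul_sum]
    congr 1
    refine Finset.sum_congr rfl fun μ _ => ?_
    rw [hT μ x, hx _ μ.2]; simp

/-- The stabilizer `D` of `χ` under twisting has order dividing `χ 1 = t`: the averaging
idempotent over suitably normalized commuting intertwiners has trace `t / |D|`. -/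
theorem stab_card_dvd {n m : ℕ} (hχ : χ ∈ SChar n G) (ht : χ 1 = t)
    (hn : n.Coprime (Nat.card G)) (hm : Odd m) (hmn : m ∣ n + 1) (hmN : m ∣ Nat.card G)
    (D : Subgroup (G →* ℂˣ)) (hD : ∀ μ ∈ D, μ ^ m = 1) (hD' : ∀ μ ∈ D, tw μ χ = χ) :
    Nat.card D ∣ t := by
  obtain ⟨t', ρ, h0, h1, hρ⟩ := Irr_degree hχ.1
  obtain rfl : t' = t := by rw [ht] at h1; exact_mod_cast h1.symm
  obtain ⟨e, he, htr, -⟩ := exists_stab_idem hχ hρ h0 hn hm hmn hmN D hD hD'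
  obtain ⟨r, hr, -⟩ := trace_nat_of_idem e he
  rw [hr] at htr
  exact ⟨r, by exact_mod_cast htr.symm⟩

/-- An idempotent matrix of trace one has rank one. -/
theorem idem_rank_one (e : Matrix (Fin t) (Fin t) ℂ) (he : e * e = e) (h1 : e.trace = 1) :
    ∃ v : Fin t → ℂ, v ≠ 0 ∧ e.mulVec v = v ∧ ∀ w, ∃ c : ℂ, e.mulVec w = c • v := by
  have h2 : IsIdempotentElem (Matrix.toLin' e) := by
    change Matrix.toLin' e * Matrix.toLin' e = _
    rw [Module.End.mul_eq_comp, ← Matrix.toLin'_mul, he]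
  have h3 := (LinearMap.IsIdempotentElem.isProj_range _ h2).trace
  rw [Matrix.trace_toLin'_eq, h1] at h3
  have h4 : Module.finrank ℂ (LinearMap.range (Matrix.toLin' e)) = 1 := by exact_mod_cast h3.symm
  obtain ⟨⟨v, ⟨u, hu⟩⟩, hv0, hv⟩ := finrank_eq_one_iff'.1 h4
  rw [Matrix.toLin'_apply] at hu
  refine ⟨v, fun h => hv0 (Subtype.ext h), ?_, fun w => ?_⟩
  · rw [← hu, Matrix.mulVec_mulVec, he]
  · obtain ⟨c, hc⟩ := hv ⟨e.mulVec w, ⟨w, Matrix.toLin'_apply e w⟩⟩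
    exact ⟨c, (congrArg Subtype.val hc).symm⟩

/-- The orbit of a vector in the image of an idempotent of trace one spans an irreducible module. -/
theorem span_orbit_eq_top (hχ : χ ∈ Irr G) (hρ : ∀ g, χ g = (ρ g).trace) (ht : 0 < t)
    (e : Matrix (Fin t) (Fin t) ℂ) (h1 : e.trace = 1) (v : Fin t → ℂ)
    (hv : ∀ w, ∃ c : ℂ, e.mulVec w = c • v) :
    Submodule.span ℂ (Set.range fun g : G => (ρ g).mulVec v) = ⊤ := by
  let A : Matrix (Fin t) (Fin t) ℂ := ∑ g : G, ρ g * e * ρ g⁻¹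
  obtain ⟨c, hc⟩ := schur ρ hχ hρ A (by
    intro h
    simp only [A]
    rw [Finset.sum_mul, Finset.mul_sum]
    refine Fintype.sum_bijective (fun g => h⁻¹ * g) (Group.mulLeft_bijective _) _ _ fun g => ?_
    simp only [mul_inv_rev, inv_inv, map_mul]
    simp only [← mul_assoc]
    rw [← map_mul ρ h, mul_inv_cancel, map_one, one_mul])
  have htr : A.trace = Nat.card G := by
    simp only [A]
    rw [Matrix.trace_sum]
    have : ∀ g : G, (ρ g * e * ρ g⁻¹).trace = 1 := by
      intro g
      rw [Matrix.trace_mul_comm, ← mul_assoc, ← map_mul]; simp [h1]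
    simp [this]
  have hc0 : c ≠ 0 := by
    rintro rfl
    rw [hc, zero_smul, Matrix.trace_zero] at htr
    exact (Nat.card_pos (α := G)).ne' (by exact_mod_cast htr.symm)
  rw [eq_top_iff]
  intro w _
  have h2 : w = c⁻¹ • A.mulVec w := by
    rw [hc, Matrix.smul_mulVec, Matrix.one_mulVec, smul_smul, inv_mul_cancel₀ hc0, one_smul]
  rw [h2]
  refine Submodule.smul_mem _ _ ?_
  simp only [A]
  rw [Matrix.sum_mulVec]
  refine Submodule.sum_mem _ fun g _ => ?_
  rw [mul_assoc, ← Matrix.mulVec_mulVec, ← Matrix.mulVec_mulVec]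
  obtain ⟨b, hb⟩ := hv ((ρ g⁻¹).mulVec w)
  rw [hb, Matrix.mulVec_smul]
  exact Submodule.smul_mem _ _ (Submodule.subset_span ⟨g, rfl⟩)
end

theorem eq_one_of_pow_coprime {M : Type*} [Monoid M] {z : M} {a b : ℕ} (h : a.Coprime b)
    (ha : z ^ a = 1) (hb : z ^ b = 1) : z = 1 := by
  have := Nat.dvd_gcd (orderOf_dvd_of_pow_eq_one ha) (orderOf_dvd_of_pow_eq_one hb)
  rw [h] at this
  exact orderOf_eq_one_iff.1 (Nat.dvd_one.1 this)

section
variable {G : Type} [Group G] {t p c n m : ℕ}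
variable [Fintype G] {χ : G → ℂ}

/-- If the stabilizer of `χ` has order `χ 1 < p`, some `p`-element has no eigenvalue `1` in a
representation affording `χ`: the representation is spanned by at most `χ 1 < p` common
eigenvectors of the `p`-elements, none of them fixed by a whole Sylow subgroup, and fewer than `p
+ 1` proper subgroups cannot cover a `p`-group. -/
theorem exists_no_fixed (hG : Odd (Nat.card G)) (hp : p.Prime) (hc : c ≠ 0)
    (h : NGood p c n (Nat.card G)) (hχ : χ ∈ SChar n G) (ht : χ 1 = t) (ht1 : t ≠ 1) (htp : t < p)
    (hm : Odd m) (hmn : m ∣ n + 1) (hmN : m ∣ Nat.card G) (hmp : ¬ p ∣ m)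
    (D : Subgroup (G →* ℂˣ)) (hD : ∀ μ ∈ D, μ ^ m = 1) (hD' : ∀ μ ∈ D, tw μ χ = χ)
    (hDt : Nat.card D = t) :
    ∃ x : G, PElt p x ∧ ∑ i ∈ Finset.range (orderOf x), χ (x ^ i) = 0 := by
  classical
  have hpf : Fact p.Prime := ⟨hp⟩
  obtain ⟨t', ρ, h0, h1, hρ⟩ := Irr_degree hχ.1
  obtain rfl : t' = t := by rw [ht] at h1; exact_mod_cast h1.symm
  have hn : n.Coprime (Nat.card G) := h.coprime hp hc Nat.card_pos.ne'
  obtain ⟨e, he, htr, hcomm⟩ := exists_stab_idem hχ hρ h0 hn hm hmn hmN D hD hD'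
  have htr1 : e.trace = 1 := by
    rw [hDt] at htr
    have : (t' : ℂ) ≠ 0 := by exact_mod_cast h0.ne'
    exact mul_left_cancel₀ this (by rw [htr, mul_one])
  obtain ⟨v, hv0, hev, hv⟩ := idem_rank_one e he htr1
  have hspan := span_orbit_eq_top hχ.1 hρ h0 e htr1 v hv
  have hmul : ∀ (x y : G) (w : Fin t' → ℂ), (ρ (x * y)).mulVec w = (ρ x).mulVec ((ρ y).mulVec w) := by
    intro x y w; rw [map_mul, Matrix.mulVec_mulVec]
  have hone : ∀ w : Fin t' → ℂ, (ρ 1).mulVec w = w := by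
    intro w; rw [map_one, Matrix.one_mulVec]
  let N₀ : Subgroup G := ⨅ μ ∈ D, MonoidHom.ker μ
  have hN₀ : ∀ x, x ∈ N₀ ↔ ∀ μ ∈ D, μ x = 1 := by
    intro x; simp [N₀, Subgroup.mem_iInf, MonoidHom.mem_ker]
  have hN₀n : ∀ x ∈ N₀, ∀ g, g⁻¹ * x * g ∈ N₀ := by
    intro x hx g
    rw [hN₀] at hx ⊢
    intro μ hμ
    rw [map_mul, map_mul, hx μ hμ, mul_one, ← map_mul, inv_mul_cancel, map_one]
  have hcop : ∀ k, m.Coprime (p ^ k) := fun k =>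
    Nat.Coprime.pow_right _ (Nat.coprime_comm.1 ((hp.coprime_iff_not_dvd).2 hmp))
  have hPN : ∀ x, PElt p x → x ∈ N₀ := by
    rintro x ⟨k, hk⟩
    rw [hN₀]
    intro μ hμ
    refine eq_one_of_pow_coprime (hcop k) ?_ ?_
    · rw [← MonoidHom.pow_apply, hD μ hμ, MonoidHom.one_apply]
    · rw [← map_pow, hk, map_one]
  have heig : ∀ x ∈ N₀, ∃ a : ℂ, (ρ x).mulVec v = a • v := by
    intro x hx
    have h2 := hcomm x ((hN₀ x).1 hx)
    obtain ⟨a, ha⟩ := hv ((ρ x).mulVec v)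
    refine ⟨a, ?_⟩
    rw [← ha, Matrix.mulVec_mulVec, h2, ← Matrix.mulVec_mulVec, hev]
  have hpow : ∀ (x : G) (w : Fin t' → ℂ) (a : ℂ), (ρ x).mulVec w = a • w →
      ∀ j : ℕ, (ρ (x ^ j)).mulVec w = a ^ j • w := by
    intro x w a hx j
    induction j with
    | zero => simp
    | succ j ih => rw [pow_succ, hmul, hx, Matrix.mulVec_smul, ih, smul_smul, pow_succ, mul_comm]
  let P : Sylow p G := default
  -- no conjugate of a Sylow subgroup fixes `v`
  have hnofix : ∀ g : G, ¬ ∀ x ∈ P, (ρ x).mulVec ((ρ g).mulVec v) = (ρ g).mulVec v := by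
    intro g hfix
    let K : Subgroup N₀ :=
      { carrier := {x | (ρ x).mulVec v = v}
        one_mem' := by simp
        mul_mem' := fun {a b} ha hb => by
          change (ρ _).mulVec v = v at ha hb ⊢
          rw [Subgroup.coe_mul, hmul, hb, ha]
        inv_mem' := fun {a} ha => by
          change (ρ _).mulVec v = v at ha ⊢
          conv_lhs => rw [← ha, ← hmul]
          simp }
    have hK : ∀ x : N₀, x ∈ K ↔ (ρ x).mulVec v = v := fun x => Iff.rfl
    have hKn : K.Normal := by
      refine ⟨fun x hx y => ?_⟩
      rw [hK] at hx ⊢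
      obtain ⟨a, ha⟩ := heig _ (y⁻¹).2
      rw [Subgroup.coe_mul, Subgroup.coe_mul, hmul, ha, Matrix.mulVec_smul, hmul, hx,
        ← Matrix.mulVec_smul, ← ha, ← hmul]
      simp
    have hKi : ¬ p ∣ K.index := by
      have e1 : ((g⁻¹ • P : Sylow p G) : Subgroup G).subgroupOf N₀ ≤ K := by
        intro x hx
        rw [Subgroup.mem_subgroupOf] at hx
        rw [hK]
        have hx' : g * x * g⁻¹ ∈ P := by
          have := hx
          rw [Sylow.coe_subgroup_smul, Subgroup.mem_pointwise_smul_iff_inv_smul_mem] at this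
          change g * x * g⁻¹ ∈ (P : Subgroup G)
          simpa [MulAut.smul_def, MulAut.conj_apply] using this
        have h2 := hfix _ hx'
        rw [← hmul] at h2
        have h3 := congrArg (fun w => (ρ g⁻¹).mulVec w) h2
        simp only [← hmul] at h3
        simpa [mul_assoc] using h3
      have e2 := Subgroup.index_dvd_of_le e1
      intro hd
      have e3 := hd.trans e2
      have e4 : (((g⁻¹ • P : Sylow p G) : Subgroup G).subgroupOf N₀).index ∣
          ((g⁻¹ • P : Sylow p G) : Subgroup G).index := by
        refine Subgroup.relIndex_dvd_index_of_le ?_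
        intro x hx
        obtain ⟨k, hk⟩ := (g⁻¹ • P : Sylow p G).isPGroup' ⟨x, hx⟩
        exact hPN x ⟨k, by simpa using congrArg Subtype.val hk⟩
      exact (g⁻¹ • P : Sylow p G).not_dvd_index (e3.trans e4)
    have hall : ∀ y, PElt p y → (ρ y).mulVec v = v := by
      intro y hy
      obtain ⟨a, ha⟩ := heig y (hPN y hy)
      have h2 : (⟨y, hPN y hy⟩ : N₀) ^ K.index ∈ K := K.pow_index_mem _
      rw [hK] at h2
      have h3 := hpow y v a ha K.index
      obtain ⟨k, hk⟩ := hy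
      have h4 := hpow y v a ha (p ^ k)
      rw [hk, hone] at h4
      have hinj : ∀ b : ℂ, b • v = v → b = 1 := by
        intro b hb
        refine smul_left_injective ℂ hv0 ?_
        simpa using hb
      have h5 : a ^ K.index = 1 := hinj _ (by rw [← h3]; simpa using h2)
      have h6 : a ^ p ^ k = 1 := hinj _ h4.symm
      have : a = 1 := eq_one_of_pow_coprime (Nat.Coprime.pow_right k
        (Nat.coprime_comm.1 ((hp.coprime_iff_not_dvd).2 hKi))) h5 h6
      rw [ha, this, one_smul]
    have htriv : ∀ y, PElt p y → χ y = χ 1 := by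
      intro y hy
      have h2 : Matrix.toLin' (ρ y) = Matrix.toLin' (ρ 1) := by
        refine LinearMap.ext_on_range hspan fun g' => ?_
        rw [Matrix.toLin'_apply, Matrix.toLin'_apply, hone]
        have e1 : y * g' = g' * (g'⁻¹ * y * g') := by group
        rw [← hmul, e1, hmul, hall]
        obtain ⟨k, hk⟩ := hy
        refine ⟨k, ?_⟩
        have := conj_pow (i := p ^ k) (a := g'⁻¹) (b := y)
        rw [inv_inv] at this
        rw [this, hk]; simp
      rw [hρ, hρ, Matrix.toLin'.injective h2]
    have h3 := SChar_trivial hG hp hc h hχ htriv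
    rw [h3] at ht
    change (1 : ℂ) = t' at ht
    exact ht1 (by exact_mod_cast ht.symm)
  -- a spanning subset of at most `t` vectors of the orbit
  obtain ⟨b, hb1, hb2, hb3⟩ := exists_linearIndependent ℂ (Set.range fun g : G => (ρ g).mulVec v)
  rw [hspan] at hb2
  have hbfin : Fintype b := ((Set.finite_range _).subset hb1).fintype
  have hbcard : Fintype.card b ≤ t' := by
    simpa using hb3.fintype_card_le_finrank
  choose γ hγ using fun u : b => hb1 u.2
  let H : b → Subgroup P := fun u =>
      { carrier := {x | (ρ x).mulVec u = u}
        one_mem' := by simp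
        mul_mem' := fun {a b} ha hb => by
          change (ρ _).mulVec _ = _ at ha hb ⊢
          rw [Subgroup.coe_mul, hmul, hb, ha]
        inv_mem' := fun {a} ha => by
          change (ρ _).mulVec _ = _ at ha ⊢
          conv_lhs => rw [← ha, ← hmul]
          simp }
  have hH : ∀ u (x : P), x ∈ H u ↔ (ρ x).mulVec u = u := fun u x => Iff.rfl
  have hHi : ∀ u, p ≤ (H u).index := by
    intro u
    obtain ⟨j, hj⟩ := IsPGroup.iff_card.1 P.isPGroup'
    obtain ⟨i, -, hi⟩ := (Nat.dvd_prime_pow hp).1 (hj ▸ (H u).index_dvd_card)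
    rw [hi]
    rcases Nat.eq_zero_or_pos i with rfl | hi0
    · exfalso
      rw [pow_zero, Subgroup.index_eq_one] at hi
      refine hnofix (γ u) fun x hx => ?_
      have : (⟨x, hx⟩ : P) ∈ H u := hi ▸ Subgroup.mem_top _
      rw [hH] at this
      have e2 : (ρ (γ u)).mulVec v = u := hγ u
      rw [e2]
      exact this
    · exact Nat.le_self_pow hi0.ne' p
  obtain ⟨x, hx⟩ : ∃ x : P, ∀ u, x ∉ H u := by
    by_contra hcon
    push Not at hcon
    have h2 := Subgroup.one_le_sum_inv_index_of_leftCoset_cover (s := Finset.univ) (H := H)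
      (g := fun _ => 1) (by
        rw [Set.eq_univ_iff_forall]
        intro x
        obtain ⟨u, hu⟩ := hcon x
        simpa using ⟨u.1, u.2, hu⟩)
    have h3 : ∑ i : b, ((H i).index : ℚ)⁻¹ ≤ ∑ i : b, (p : ℚ)⁻¹ := by
      refine Finset.sum_le_sum fun u _ => ?_
      exact inv_anti₀ (by exact_mod_cast hp.pos) (by exact_mod_cast hHi u)
    rw [Finset.sum_const, Finset.card_univ, nsmul_eq_mul] at h3
    have h4 : (Fintype.card b : ℚ) < p := by exact_mod_cast hbcard.trans_lt htp
    have hp0 : (0 : ℚ) < p := by exact_mod_cast hp.pos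
    have h5 : (Fintype.card b : ℚ) * (p : ℚ)⁻¹ < 1 := by
      rw [← div_eq_mul_inv, div_lt_one hp0]; exact h4
    linarith
  have hxP : PElt p (x : G) := by
    obtain ⟨k, hk⟩ := P.isPGroup' x
    exact ⟨k, by simpa using congrArg Subtype.val hk⟩
  refine ⟨x, hxP, ?_⟩
  have hS : ∑ i ∈ Finset.range (orderOf (x : G)), ρ ((x : G) ^ i) = 0 := by
    apply Matrix.toLin'.injective
    refine LinearMap.ext_on (s := b) hb2 fun u hu => ?_
    rw [Matrix.toLin'_apply, Matrix.toLin'_apply, Matrix.sum_mulVec, Matrix.zero_mulVec]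
    have hu' : (ρ (γ ⟨u, hu⟩)).mulVec v = u := hγ ⟨u, hu⟩
    obtain ⟨a, ha⟩ := heig _ (hN₀n _ (hPN _ hxP) (γ ⟨u, hu⟩))
    have h2 : (ρ x).mulVec u = a • u := by
      have e1 : (x : G) * γ ⟨u, hu⟩ = γ ⟨u, hu⟩ * ((γ ⟨u, hu⟩)⁻¹ * x * γ ⟨u, hu⟩) := by group
      rw [← hu', ← hmul, e1, hmul, ha, Matrix.mulVec_smul]
    have ha1 : a ≠ 1 := by
      rintro rfl
      rw [one_smul] at h2
      exact hx ⟨u, hu⟩ ((hH _ _).2 h2)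
    have h3 := hpow x u a h2
    rw [Finset.sum_congr rfl fun i _ => h3 i, ← Finset.sum_smul]
    by_cases hu0 : u = 0
    · rw [hu0, smul_zero]
    have haN : a ^ orderOf (x : G) = 1 := by
      have := h3 (orderOf (x : G))
      rw [pow_orderOf_eq_one, hone] at this
      refine smul_left_injective ℂ hu0 ?_
      simpa using this.symm
    have : ∑ i ∈ Finset.range (orderOf (x : G)), a ^ i = 0 := by
      have h4 := geom_sum_mul a (orderOf (x : G))
      rw [haN, sub_self] at h4
      exact (mul_eq_zero.1 h4).resolve_right (sub_ne_zero.2 ha1)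
    rw [this, zero_smul]
  simp only [hρ]
  rw [← Matrix.trace_sum, hS, Matrix.trace_zero]
end

/-! ### Galois orbits of eigenvalues -/

/-- A system of exponents realizing the action of `(ZMod p)ˣ`, by Teichmüller lifts, on the
`p`-parts of `N`-th roots of unity. -/
structure JGood (p N : ℕ) (j : (ZMod p)ˣ → ℕ) : Prop where
  one : j 1 ≡ 1 [MOD N]
  mul : ∀ u v, j (u * v) ≡ j u * j v [MOD N]
  cast : ∀ u, (j u : ZMod p) = u
  pq : ∀ u d, d ∣ N → ¬ p ∣ d → j u ≡ 1 [MOD d]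

theorem JGood.coprime {p N : ℕ} {j : (ZMod p)ˣ → ℕ} (h : JGood p N j) (u : (ZMod p)ˣ) :
    (j u).Coprime N := by
  have h1 : j u * j u⁻¹ ≡ 1 [MOD N] := (h.mul u u⁻¹).symm.trans (by
    rw [mul_inv_cancel]; exact h.one)
  exact Nat.Coprime.coprime_mul_right (k := j u⁻¹) (by
    have := h1.gcd_eq
    simpa using this)

/-- Existence of the exponents: Teichmüller lifts modulo the `p`-part of `N`, and `1` modulo the
rest. -/
theorem exists_JGood {p N : ℕ} (hp : p.Prime) (hN : N ≠ 0) (hpN : p ∣ N) :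
    ∃ j, JGood p N j := by
  have : Fact p.Prime := ⟨hp⟩
  obtain ⟨a, d, rfl, hd⟩ := exists_ppart hp hN
  have ha : a ≠ 0 := by rintro rfl; rw [pow_zero, one_mul] at hpN; exact hd hpN
  obtain ⟨a, rfl⟩ := Nat.exists_eq_succ_of_ne_zero ha
  rw [Nat.succ_eq_add_one]
  have hc : (p ^ (a + 1)).Coprime d := Nat.Coprime.pow_left _ ((hp.coprime_iff_not_dvd).2 hd)
  have hex : ∀ u : (ZMod p)ˣ, ∃ x : ℕ,
      x ≡ (u : ZMod p).val ^ p ^ a [MOD p ^ (a + 1)] ∧ x ≡ 1 [MOD d] :=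
    fun u => ⟨_, (Nat.chineseRemainder hc _ 1).2⟩
  choose j hj1 hj2 using hex
  have key : ∀ x y : ℕ, x ≡ y [MOD p] → x ^ p ^ a ≡ y ^ p ^ a [MOD p ^ (a + 1)] := by
    intro x y hxy
    have h1 := (Nat.modEq_iff_dvd.1 hxy)
    have h2 := dvd_sub_pow_of_dvd_sub (R := ℤ) h1 a
    rw [Nat.modEq_iff_dvd]
    push_cast
    exact h2
  refine ⟨j, ?_, ?_, ?_, ?_⟩
  · refine (Nat.modEq_and_modEq_iff_modEq_mul hc).1 ⟨(hj1 1).trans ?_, hj2 1⟩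
    rw [Units.val_one, ZMod.val_one, one_pow]
  · intro u v
    refine (Nat.modEq_and_modEq_iff_modEq_mul hc).1 ⟨?_, ?_⟩
    · refine (hj1 _).trans (Nat.ModEq.trans ?_ ((hj1 u).mul (hj1 v)).symm)
      rw [← mul_pow]
      refine key _ _ ?_
      rw [← ZMod.natCast_eq_natCast_iff]
      simp
    · exact (hj2 _).trans (by simpa using ((hj2 u).mul (hj2 v)).symm)
  · intro u
    have h1 : j u ≡ (u : ZMod p).val ^ p ^ a [MOD p] := (hj1 u).of_dvd (dvd_pow_self p (by omega))
    rw [← ZMod.natCast_eq_natCast_iff] at h1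
    rw [h1]
    push_cast
    rw [ZMod.natCast_val, ZMod.cast_id, ZMod.pow_card_pow]
  · intro u e he hpe
    refine (hj2 u).of_dvd ?_
    exact Nat.Coprime.dvd_of_dvd_mul_left
      (Nat.Coprime.pow_right _ (Nat.coprime_comm.1 ((hp.coprime_iff_not_dvd).2 hpe))) he

/-- Orbit counting for an action that is free on the support of `f`. -/
theorem dvd_sum_of_free {C X : Type*} [Group C] [Finite C] [Fintype X] [MulAction C X]
    (f : X → ℕ) (hf : ∀ (c : C) x, f (c • x) = f x) (hfree : ∀ x, f x ≠ 0 → ∀ c : C, c • x = x → c = 1) :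
    Nat.card C ∣ ∑ x, f x := by
  classical
  have : Fintype C := Fintype.ofFinite C
  have : Fintype (MulAction.orbitRel.Quotient C X) := Fintype.ofFinite _
  rw [← Finset.sum_fiberwise Finset.univ
    (fun x : X => (Quotient.mk'' x : MulAction.orbitRel.Quotient C X)) f]
  refine Finset.dvd_sum fun o _ => ?_
  obtain ⟨x, rfl⟩ := Quotient.mk''_surjective o
  have hmem : ∀ y, y ∈ Finset.univ.filter (fun y : X => (Quotient.mk'' y : MulAction.orbitRel.Quotient C X) = Quotient.mk'' x) ↔
      ∃ c : C, c • x = y := by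
    intro y
    rw [Finset.mem_filter, Quotient.eq'']
    simp only [Finset.mem_univ, true_and]
    exact Iff.rfl
  have hval : ∀ y ∈ Finset.univ.filter (fun y : X => (Quotient.mk'' y : MulAction.orbitRel.Quotient C X) = Quotient.mk'' x), f y = f x := by
    intro y hy
    obtain ⟨c, rfl⟩ := (hmem y).1 hy
    exact hf c x
  rw [Finset.sum_congr rfl hval, Finset.sum_const, smul_eq_mul]
  by_cases h0 : f x = 0
  · rw [h0, mul_zero]; exact dvd_zero _
  · refine Dvd.dvd.mul_right ?_ _
    have himg : Finset.univ.filter (fun y : X =>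
        (Quotient.mk'' y : MulAction.orbitRel.Quotient C X) = Quotient.mk'' x) =
        Finset.univ.image (fun c : C => c • x) := by
      ext y
      rw [hmem]
      simp
    rw [himg, Finset.card_image_of_injective, Finset.card_univ, Nat.card_eq_fintype_card]
    intro c e hce
    have h1 : (e⁻¹ * c) • x = x := by
      rw [mul_smul]
      change e⁻¹ • (fun c : C => c • x) c = x
      rw [hce]
      simp
    exact (inv_mul_eq_one.1 (hfree x h0 _ h1)).symm

section
variable {G : Type} [Group G] {t p : ℕ} [Fintype G] {χ : G → ℂ}

/-- Eigenvalue multiplicities of a `p`-element are constant on the orbits of a group of Galois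
automorphisms fixing the character on its powers, and the orbits of nontrivial eigenvalues are
regular. -/
theorem orbit_dvd (hp : p.Prime) (hχ : χ ∈ Irr G) (ht : χ 1 = t) {j : (ZMod p)ˣ → ℕ}
    (hj : JGood p (Nat.card G) j) (C : Subgroup (ZMod p)ˣ) {x : G} (hx : PElt p x)
    (hinv : ∀ u ∈ C, ∀ i, χ (x ^ (i * j u)) = χ (x ^ i)) :
    ∃ m0 r : ℕ, t = m0 + r ∧ Nat.card C ∣ r ∧ (r = 0 → χ x = χ 1) ∧
      (∑ i ∈ Finset.range (orderOf x), χ (x ^ i) = 0 → m0 = 0) := by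
  classical
  have hpf : Fact p.Prime := ⟨hp⟩
  obtain ⟨b, hb, hbN⟩ := hx.exists_orderOf hp
  obtain ⟨t', ρ, h0, h1, hρ⟩ := Irr_degree hχ
  obtain rfl : t' = t := by rw [ht] at h1; exact_mod_cast h1.symm
  set q := orderOf x with hq
  have hq0 : q ≠ 0 := (orderOf_pos x).ne'
  have : NeZero q := ⟨hq0⟩
  have hω := Complex.isPrimitiveRoot_exp q hq0
  set ω := Complex.exp (2 * Real.pi * Complex.I / q)
  obtain ⟨m, hm1, hm2⟩ := exists_mult hq0 (ρ x) (by rw [← map_pow, pow_orderOf_eq_one, map_one]) hω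
  simp only [← map_pow, ← hρ] at hm1 hm2
  have hωinv : (ω⁻¹) ^ q = 1 := by rw [inv_pow, hω.pow_eq_one, inv_one]
  have hsum : ∀ f : ℕ → ℂ, ∑ i ∈ Finset.range q, f i = ∑ y : ZMod q, f y.val := by
    intro f
    refine Finset.sum_nbij' (fun i => (i : ZMod q)) (fun y => y.val) (by simp) ?_ ?_ (by simp) ?_
    · intro y _; exact Finset.mem_range.2 (ZMod.val_lt y)
    · intro i hi; exact ZMod.val_cast_of_lt (Finset.mem_range.1 hi)
    · intro i hi; rw [ZMod.val_cast_of_lt (Finset.mem_range.1 hi)]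
  let M : ZMod q → ℕ := fun l => m l.val
  have hωm : ∀ a b : ℕ, a ≡ b [MOD q] → (ω⁻¹) ^ a = (ω⁻¹) ^ b := by
    intro a b hab
    rw [← Nat.mod_add_div a q, ← Nat.mod_add_div b q, hab, pow_add, pow_add, pow_mul, pow_mul, hωinv,
      one_pow, one_pow]
  have hχm : ∀ a b : ℕ, a ≡ b [MOD q] → χ (x ^ a) = χ (x ^ b) := by
    intro a b hab
    rw [pow_eq_pow_iff_modEq.2 hab]
  have hM : ∀ l : ZMod q, (M l : ℂ) = (q : ℂ)⁻¹ * ∑ y : ZMod q, (ω⁻¹) ^ (y * l).val * χ (x ^ y.val) := by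
    intro l
    simp only [M]
    rw [hm2, hsum]
    congr 1
    refine Finset.sum_congr rfl fun y _ => ?_
    rw [hωm _ (y * l).val]
    rw [← ZMod.natCast_eq_natCast_iff]
    simp
  let J : C →* (ZMod q)ˣ :=
    { toFun := fun u => ZMod.unitOfCoprime (j u) ((hj.coprime u).coprime_dvd_right (orderOf_dvd_natCard x))
      map_one' := by
        ext1
        rw [ZMod.coe_unitOfCoprime, Units.val_one, ← Nat.cast_one, ZMod.natCast_eq_natCast_iff]
        exact hj.one.of_dvd (orderOf_dvd_natCard x)
      map_mul' := fun u v => by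
        ext1
        rw [Units.val_mul, ZMod.coe_unitOfCoprime, ZMod.coe_unitOfCoprime, ZMod.coe_unitOfCoprime,
          ← Nat.cast_mul, ZMod.natCast_eq_natCast_iff]
        exact (hj.mul u v).of_dvd (orderOf_dvd_natCard x) }
  have hJ : ∀ u : C, ((J u : (ZMod q)ˣ) : ZMod q) = (j u : ZMod q) := fun u => rfl
  have hMinv : ∀ (u : C) (l : ZMod q), M (J u * l) = M l := by
    intro u l
    have : (M (J u * l) : ℂ) = M l := by
      rw [hM, hM]
      congr 1
      refine Fintype.sum_bijective (fun y => y * (J u : ZMod q)) (Units.mulRight_bijective _) _ _ fun y => ?_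
      rw [mul_assoc]
      congr 1
      rw [← hinv u u.2, hχm]
      rw [← ZMod.natCast_eq_natCast_iff]
      simp [hJ]
    exact_mod_cast this
  have hJfree : ∀ (u : C) (l : ZMod q), l ≠ 0 → J u * l = l → u = 1 := by
    intro u l hl hul
    by_contra hu
    have hu' : (j u : ZMod p) ≠ 1 := by
      rw [hj.cast]; intro h; exact hu (Subtype.ext (Units.ext h))
    have h2 : ((j u : ZMod q) - 1) * l = 0 := by
      rw [sub_mul, one_mul, sub_eq_zero, ← hJ]
      exact hul
    have h3 : ¬ (p : ℤ) ∣ (j u : ℤ) - 1 := by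
      intro h
      rw [← ZMod.intCast_zmod_eq_zero_iff_dvd] at h
      push_cast at h
      exact hu' (sub_eq_zero.1 h)
    have h4 : IsCoprime ((j u : ℤ) - 1) (q : ℤ) := by
      rw [hb]
      push_cast
      exact (((Nat.prime_iff_prime_int.1 hp).irreducible.coprime_iff_not_dvd.2 h3).symm).pow_right
    obtain ⟨e, f, hef⟩ := h4
    have h5 := congrArg (fun z : ℤ => (z : ZMod q)) hef
    simp only [Int.cast_add, Int.cast_mul, Int.cast_sub, Int.cast_natCast, Int.cast_one,
      ZMod.natCast_self, mul_zero, add_zero] at h5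
    refine hl ?_
    rw [← one_mul l, ← h5, mul_assoc, h2, mul_zero]
  let act : MulAction C (ZMod q) := MulAction.compHom _ J
  have hact : ∀ (u : C) (l : ZMod q), u • l = J u * l := fun u l => rfl
  have hdiv := dvd_sum_of_free (C := C) (X := ZMod q) (fun l => if l = 0 then 0 else M l) (by
      intro u l
      simp only [hact, Units.mul_right_eq_zero, hMinv]) (by
      intro l hl u hul
      exact hJfree u l (by rintro rfl; simp at hl) hul)
  have ht2 : t' = ∑ l : ZMod q, M l := by
    have h2 := hm1 0
    simp only [pow_zero, mul_zero, mul_one] at h2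
    rw [ht, hsum] at h2
    exact_mod_cast h2
  refine ⟨M 0, ∑ l : ZMod q, if l = 0 then 0 else M l, ?_, hdiv, ?_, ?_⟩
  · rw [ht2, ← Finset.add_sum_erase _ _ (Finset.mem_univ (0 : ZMod q)),
      ← Finset.add_sum_erase Finset.univ (fun l => if l = 0 then 0 else M l) (Finset.mem_univ (0 : ZMod q))]
    simp only [if_true, zero_add]
    congr 1
    refine Finset.sum_congr rfl fun l hl => ?_
    rw [if_neg (Finset.ne_of_mem_erase hl)]
  · intro hr
    have h2 : ∀ l : ZMod q, l ≠ 0 → M l = 0 := by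
      intro l hl
      have := (Finset.sum_eq_zero_iff.1 hr) l (Finset.mem_univ _)
      rwa [if_neg hl] at this
    have e1 := hm1 1
    rw [pow_one, hsum, Finset.sum_eq_single 0 (fun l _ hl => by
      have := h2 l hl
      simp only [M] at this
      rw [this]; simp) (by simp)] at e1
    have e0 := hm1 0
    rw [pow_zero, hsum, Finset.sum_eq_single 0 (fun l _ hl => by
      have := h2 l hl
      simp only [M] at this
      rw [this]; simp) (by simp)] at e0
    rw [e1, e0]; simp
  · intro h2
    have h3 := hm2 0
    simp only [mul_zero, pow_zero, one_mul] at h3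
    rw [h2, mul_zero] at h3
    have : M 0 = m 0 := by simp [M]
    rw [this]
    exact_mod_cast h3
end

/-! ### The standing hypotheses and the numerical estimate -/

/-- The group of linear characters of `G` with values in `k`. -/
def LinK (k : Subfield ℂ) (G : Type) [Group G] : Subgroup (G →* ℂˣ) where
  carrier := {μ | ∀ g, (μ g : ℂ) ∈ k}
  mul_mem' {μ ν} hμ hν g := by
    rw [MonoidHom.mul_apply, Units.val_mul]
    exact mul_mem (hμ g) (hν g)
  one_mem' g := by simp
  inv_mem' {μ} hμ g := by
    rw [MonoidHom.inv_apply, Units.val_inv_eq_inv_val]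
    exact inv_mem (hμ g)

/-- The standing hypotheses: `|G| = p ^ a * m` is odd with `p ∤ m`, `p ≡ 1 (mod 3)`, the field `k`
contains no primitive cube root of unity, its `p`-power roots of unity of order dividing `|G|` are
those of order dividing `p ^ c`, and `n` is `1 + p ^ c` modulo `p ^ a` and `-1` modulo `m`. -/
structure Ctx (G : Type) [Group G] [Fintype G] (p a c m n : ℕ) (k : Subfield ℂ) : Prop where
  hG : Odd (Nat.card G)
  hp : p.Prime
  hp2 : Odd p
  hmod : p % 3 = 1
  hc : c ≠ 0
  hcd : p ^ c ∣ Nat.card G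
  hn : NGood p c n (Nat.card G)
  hk : KGood p c (Nat.card G) k
  hk3 : ∀ z : ℂ, IsPrimitiveRoot z 3 → z ∉ k
  hN : Nat.card G = p ^ a * m
  hpm : ¬ p ∣ m

section
variable {G : Type} [Group G] [Fintype G] {p a c m n t : ℕ} {k : Subfield ℂ} {χ : G → ℂ}

theorem lin_pow_card (μ : G →* ℂˣ) : μ ^ Nat.card G = 1 :=
  MonoidHom.ext fun g => by
    rw [MonoidHom.pow_apply, ← map_pow, pow_card_eq_one', map_one, MonoidHom.one_apply]

theorem lin_pow_pow {G : Type} [Group G] (μ : G →* ℂˣ) (a b : ℕ) : (μ ^ a) ^ b = μ ^ (a * b) :=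
  MonoidHom.ext fun g => by
    simp only [MonoidHom.pow_apply, pow_mul]

theorem lin_one_pow {G : Type} [Group G] (a : ℕ) : (1 : G →* ℂˣ) ^ a = 1 :=
  MonoidHom.ext fun g => by simp

theorem tw_comm (μ ν : G →* ℂˣ) (χ : G → ℂ) : tw μ (tw ν χ) = tw ν (tw μ χ) := by
  funext g
  simp only [tw]
  ring

theorem tw_apply_one (μ : G →* ℂˣ) (χ : G → ℂ) : tw μ χ 1 = χ 1 := by simp [tw]

/-- The stabilizer of `χ` in a group `A` of linear characters. -/
def twStab (A : Subgroup (G →* ℂˣ)) (χ : G → ℂ) : Subgroup (G →* ℂˣ) where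
  carrier := {μ | μ ∈ A ∧ tw μ χ = χ}
  mul_mem' {μ ν} hμ hν := ⟨mul_mem hμ.1 hν.1, by rw [← tw_tw, hν.2, hμ.2]⟩
  one_mem' := ⟨one_mem _, tw_one χ⟩
  inv_mem' {μ} hμ := ⟨inv_mem hμ.1, by
    apply tw_inj μ
    rw [tw_tw, hμ.2, mul_inv_cancel, tw_one]⟩

theorem tw_eq_tw_iff {μ ν : G →* ℂˣ} : tw μ χ = tw ν χ ↔ tw (μ * ν⁻¹) χ = χ := by
  have h0 : tw μ χ = tw ν (tw (μ * ν⁻¹) χ) := by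
    funext g
    simp [tw]
    field_simp
  rw [h0]
  exact ⟨fun h => tw_inj ν h, fun h => by rw [h]⟩

namespace Ctx

theorem m_odd (X : Ctx G p a c m n k) : Odd m :=
  X.hG.of_dvd_nat (Dvd.intro_left _ X.hN.symm)

theorem m_dvd (X : Ctx G p a c m n k) : m ∣ Nat.card G := Dvd.intro_left _ X.hN.symm

theorem m_dvd_n (X : Ctx G p a c m n k) : m ∣ n + 1 := X.hn.pq m X.m_dvd X.hpm

theorem cop (X : Ctx G p a c m n k) : (p ^ a).Coprime m :=
  Nat.Coprime.pow_left _ ((X.hp.coprime_iff_not_dvd).2 X.hpm)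

theorem n_cop (X : Ctx G p a c m n k) : n.Coprime (Nat.card G) :=
  X.hn.coprime X.hp X.hc Nat.card_pos.ne'

theorem seven_le (X : Ctx G p a c m n k) : 7 ≤ p := by
  have := X.hp.two_le
  obtain ⟨q, hq⟩ := X.hp2
  have := X.hmod
  omega

theorem LinQ_le (X : Ctx G p a c m n k) : LinQ (p ^ c) G ≤ LinK k G := by
  intro μ hμ g
  refine X.hk.mem _ ?_
  have := congrArg (fun ν : G →* ℂˣ => (ν g : ℂ)) (mem_LinQ.1 hμ)
  simpa using this

theorem mem_LinQ_of (X : Ctx G p a c m n k) {μ : G →* ℂˣ} (hμ : μ ∈ LinK k G)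
    (h : μ ^ p ^ a = 1) : μ ∈ LinQ (p ^ c) G := by
  rw [mem_LinQ]
  ext g
  have h1 := congrArg (fun ν : G →* ℂˣ => (ν g : ℂ)) h
  have h2 := congrArg (fun ν : G →* ℂˣ => (ν g : ℂ)) (lin_pow_card μ)
  simp only [MonoidHom.pow_apply, Units.val_pow_eq_pow_val, MonoidHom.one_apply,
    Units.val_one] at h1 h2 ⊢
  exact X.hk.max _ (hμ g) a h1 h2

theorem three (X : Ctx G p a c m n k) {μ : G →* ℂˣ} (hμ : μ ∈ LinK k G) (h : μ ^ 3 = 1) :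
    μ = 1 := by
  ext g
  by_contra hne
  have h1 := congrArg (fun ν : G →* ℂˣ => (ν g : ℂ)) h
  simp only [MonoidHom.pow_apply, Units.val_pow_eq_pow_val, MonoidHom.one_apply,
    Units.val_one] at h1 hne
  refine X.hk3 _ ?_ (hμ g)
  have : orderOf (μ g : ℂ) = 3 := orderOf_eq_prime (hp := ⟨Nat.prime_three⟩) h1 hne
  rw [← this]
  exact IsPrimitiveRoot.orderOf _

/-- The field `k` contains no primitive cube roots of unity, so no `k`-valued linear character has
order `3`. -/
theorem not_three_dvd (X : Ctx G p a c m n k) (D : Subgroup (G →* ℂˣ)) (hD : D ≤ LinK k G) :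
    ¬ 3 ∣ Nat.card D := by
  intro h
  have : Fact (Nat.Prime 3) := ⟨Nat.prime_three⟩
  obtain ⟨μ, hμ⟩ := exists_prime_orderOf_dvd_card' 3 h
  have h1 : (μ : G →* ℂˣ) ^ 3 = 1 := by
    have := pow_orderOf_eq_one μ
    rw [hμ] at this
    exact_mod_cast congrArg Subtype.val this
  have h2 := X.three (hD μ.2) h1
  have h3 : μ = 1 := Subtype.ext h2
  rw [h3, orderOf_one] at hμ
  omega

/-- Primary decomposition of the group of `k`-valued linear characters into `p`-part and
`p'`-part. -/
theorem card_LinK_le (X : Ctx G p a c m n k) :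
    Nat.card (LinK k G) ≤ Nat.card (LinQ (p ^ c) G) *
      Nat.card (LinK k G ⊓ LinQ m G : Subgroup (G →* ℂˣ)) := by
  have hN : ∀ μ : G →* ℂˣ, μ ^ (p ^ a * m) = 1 := fun μ => by rw [← X.hN]; exact lin_pow_card μ
  rw [← Nat.card_prod]
  refine Nat.card_le_card_of_injective
    (fun μ : LinK k G => ((⟨(μ : G →* ℂˣ) ^ m, X.mem_LinQ_of (pow_mem μ.2 m) (by
      rw [lin_pow_pow, mul_comm, hN])⟩ : LinQ (p ^ c) G),
      (⟨(μ : G →* ℂˣ) ^ p ^ a, pow_mem μ.2 _, mem_LinQ.2 (by rw [lin_pow_pow, hN])⟩ :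
        (LinK k G ⊓ LinQ m G : Subgroup (G →* ℂˣ))))) ?_
  intro μ ν h
  have h1 : (μ : G →* ℂˣ) ^ m = (ν : G →* ℂˣ) ^ m := congrArg (fun z => (z.1 : G →* ℂˣ)) h
  have h2 : (μ : G →* ℂˣ) ^ p ^ a = (ν : G →* ℂˣ) ^ p ^ a := congrArg (fun z => (z.2 : G →* ℂˣ)) h
  refine Subtype.ext (MonoidHom.ext fun g => ?_)
  have h3 := DFunLike.congr_fun h1 g
  have h4 := DFunLike.congr_fun h2 g
  rw [MonoidHom.pow_apply, MonoidHom.pow_apply] at h3 h4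
  refine div_eq_one.1 (eq_one_of_pow_coprime X.cop (z := (μ : G →* ℂˣ) g / (ν : G →* ℂˣ) g) ?_ ?_)
  · rw [div_pow, h4, div_self']
  · rw [div_pow, h3, div_self']

theorem stab_pow (X : Ctx G p a c m n k) (hχ : χ ∈ Irr G) (ht : χ 1 = t) (hpt : ¬ p ∣ t)
    {μ : G →* ℂˣ} (h : tw μ χ = χ) : μ ^ m = 1 := by
  refine eq_one_of_pow_coprime (z := μ ^ m) (a := p ^ a) (b := t)
    (Nat.Coprime.pow_left _ ((X.hp.coprime_iff_not_dvd).2 hpt)) ?_ ?_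
  · rw [lin_pow_pow, mul_comm, ← X.hN]; exact lin_pow_card μ
  · rw [lin_pow_pow, mul_comm, ← lin_pow_pow, twist_pow_eq_one hχ h ht, lin_one_pow]

end Ctx
end

/-- The numerical estimate for a character of degree `t`.  The cases are: `t = 3`, which forces `d
= 1`; `t / d ≥ 3`, where `2 s ≤ p - 1` suffices; `d = t < p`, where `6 s ∣ p - 1`; and `d = t ≥
p`. -/
theorem numerics {p t d s : ℕ} (hp : 7 ≤ p) (hp2 : Odd p) (hmod : p % 3 = 1) (ht : Odd t)
    (ht1 : t ≠ 1) (hdt : d ∣ t) (hd3 : ¬ 3 ∣ d) (hsp : s ∣ p - 1) (hs : Odd s) (hst : s ≤ t)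
    (hds : d = t → t < p → s ∣ t) : 3 * p + 2 * (d * s) ≤ t * (p + 2) := by
  have h2 : 2 * s ∣ p - 1 := by
    refine Nat.Coprime.mul_dvd_of_dvd_of_dvd ?_ ?_ hsp
    · exact (Nat.coprime_two_left).2 hs
    · obtain ⟨q, hq⟩ := hp2; exact ⟨q, by omega⟩
  have h2' : 2 * s ≤ p - 1 := Nat.le_of_dvd (by omega) h2
  have ht3 : 3 ≤ t := by obtain ⟨q, hq⟩ := ht; omega
  obtain ⟨q, hq⟩ := hdt
  have hqo : Odd q := ht.of_dvd_nat ⟨d, by rw [hq, mul_comm]⟩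
  obtain ⟨r, hr⟩ := Nat.exists_eq_add_of_le (show 1 ≤ p by omega)
  have hr' : p - 1 = r := by omega
  rw [hr'] at h2'
  have ht5 : t = 3 ∨ 5 ≤ t := by obtain ⟨q, hq⟩ := ht; omega
  rcases ht5 with rfl | ht5
  · have : d = 1 := by
      have h3 : d ∣ 3 := ⟨q, hq⟩
      rcases (Nat.dvd_prime Nat.prime_three).1 h3 with h | h
      · exact h
      · exact absurd (by rw [h]) hd3
    subst this
    omega
  have main : 3 * (d * (2 * s)) ≤ t * r → 3 * p + 2 * (d * s) ≤ t * (p + 2) := by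
    intro h
    have h5 : 5 * r ≤ t * r := Nat.mul_le_mul_right r ht5
    subst hr
    nlinarith
  by_cases hq1 : q = 1
  · have hd : d = t := by rw [hq, hq1, mul_one]
    subst hd
    by_cases hlt : d < p
    · have h3 := hds rfl hlt
      have h6 : 3 * (2 * s) ∣ p - 1 := by
        refine Nat.Coprime.mul_dvd_of_dvd_of_dvd ?_ ?_ h2
        · refine Nat.Coprime.mul_right (by norm_num) ?_
          exact (Nat.prime_three.coprime_iff_not_dvd).2 fun h => hd3 (h.trans h3)
        · omega
      have h6' := Nat.le_of_dvd (by omega) h6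
      rw [hr'] at h6'
      refine main ?_
      calc 3 * (d * (2 * s)) = d * (3 * (2 * s)) := by ring
        _ ≤ d * r := Nat.mul_le_mul_left d h6'
    · have := Nat.mul_le_mul_left d h2'
      subst hr
      nlinarith
  · have hq3 : 3 ≤ q := by obtain ⟨q', hq'⟩ := hqo; omega
    refine main ?_
    calc 3 * (d * (2 * s)) = d * 3 * (2 * s) := by ring
      _ ≤ d * q * r := Nat.mul_le_mul (Nat.mul_le_mul_left d hq3) h2'
      _ = t * r := by rw [hq]

/-! ### A non-linear invariant character of degree prime to `p` -/

section
variable {G : Type} [Group G] [Fintype G] {p a c m n t : ℕ} {k : Subfield ℂ} {χ : G → ℂ}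
variable {j : (ZMod p)ˣ → ℕ}

theorem pow_congr_card {x : G} {a b : ℕ} (h : a ≡ b [MOD Nat.card G]) : x ^ a = x ^ b :=
  pow_eq_pow_iff_modEq.2 (h.of_dvd (orderOf_dvd_natCard x))

theorem JGood.pow_mul (hj : JGood p (Nat.card G) j) (x : G) (u v : (ZMod p)ˣ) :
    x ^ j (u * v) = (x ^ j u) ^ j v := by
  rw [← _root_.pow_mul]
  exact pow_congr_card (hj.mul u v)

theorem JGood.pow_one (hj : JGood p (Nat.card G) j) (x : G) : x ^ j 1 = x := by
  rw [pow_congr_card hj.one, _root_.pow_one]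

theorem JGood.pow_inv (hj : JGood p (Nat.card G) j) (x : G) (u : (ZMod p)ˣ) :
    (x ^ j u⁻¹) ^ j u = x := by
  rw [← hj.pow_mul, inv_mul_cancel, hj.pow_one]

/-- The Galois elements carrying `χ` to one of its twists by the group `A` of linear characters. -/
def galStab (hj : JGood p (Nat.card G) j) (A : Subgroup (G →* ℂˣ)) (χ : G → ℂ) :
    Subgroup (ZMod p)ˣ where
  carrier := {u | ∃ μ ∈ A, ∀ g, χ (g ^ j u) = tw μ χ g}
  one_mem' := ⟨1, one_mem _, fun g => by rw [hj.pow_one, tw_one]⟩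
  mul_mem' {u v} := by
    rintro ⟨μ, hμ, h1⟩ ⟨ν, hν, h2⟩
    refine ⟨ν ^ j u * μ, mul_mem (pow_mem hν _) hμ, fun g => ?_⟩
    rw [hj.pow_mul, h2, tw_apply, h1, tw_apply, tw_apply, map_pow]
    simp [mul_assoc]
  inv_mem' {u} := by
    rintro ⟨μ, hμ, h1⟩
    refine ⟨(μ ^ j u⁻¹)⁻¹, inv_mem (pow_mem hμ _), fun g => ?_⟩
    have h2 := h1 (g ^ j u⁻¹)
    rw [hj.pow_inv, tw_apply, map_pow] at h2
    rw [tw_apply, h2]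
    simp

theorem mem_galStab {hj : JGood p (Nat.card G) j} {A : Subgroup (G →* ℂˣ)} {u : (ZMod p)ˣ} :
    u ∈ galStab hj A χ ↔ ∃ μ ∈ A, ∀ g, χ (g ^ j u) = tw μ χ g := Iff.rfl

/-- A solution `R` of `R (e - 1) ≡ -1` modulo `p ^ a`, divisible by `m`; raising a linear
character to the power `R` corrects `χ` by a twist. -/
theorem exists_twist_exponent {p a m e : ℕ} (hp : p.Prime) (hpm : ¬ p ∣ m)
    (he : ¬ (p : ℤ) ∣ (e : ℤ) - 1) : ∃ R : ℕ, m ∣ R ∧ R * e + 1 ≡ R [MOD p ^ a] := by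
  have hpi := (Nat.prime_iff_prime_int.1 hp)
  have h1 : IsCoprime (((e : ℤ) - 1) * m) ((p ^ a : ℕ) : ℤ) := by
    push_cast
    refine IsCoprime.pow_right (hpi.irreducible.coprime_iff_not_dvd.2 fun h => ?_).symm
    rcases hpi.dvd_or_dvd h with h | h
    · exact he h
    · exact hpm (by exact_mod_cast h)
  obtain ⟨u, v, huv⟩ := h1
  have hpos : (0 : ℤ) < ((p ^ a : ℕ) : ℤ) := by exact_mod_cast pow_pos hp.pos a
  obtain ⟨s, hs⟩ := Int.eq_ofNat_of_zero_le (Int.emod_nonneg (-u) hpos.ne')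
  refine ⟨s * m, Dvd.intro_left _ rfl, ?_⟩
  rw [Nat.modEq_iff_dvd]
  have h2 : ((p ^ a : ℕ) : ℤ) ∣ s + u := by
    rw [← hs]
    have := Int.emod_add_mul_ediv (-u) ((p ^ a : ℕ) : ℤ)
    exact ⟨-((-u) / ((p ^ a : ℕ) : ℤ)), by linarith⟩
  obtain ⟨w, hw⟩ := h2
  refine ⟨-(w * ((e - 1) * m)) - v, ?_⟩
  have h3 : (s : ℤ) = ((p ^ a : ℕ) : ℤ) * w - u := by linarith
  push_cast at huv h3 ⊢
  rw [h3]
  linear_combination huv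

namespace Ctx

/-- An involution in `galStab` would turn `χ` into a twist of its complex conjugate; a further
twist of `χ` would be real, hence trivial. -/
theorem galStab_odd (X : Ctx G p a c m n k) (hj : JGood p (Nat.card G) j)
    (A : Subgroup (G →* ℂˣ)) (hχ : χ ∈ SChar n G) (h1 : χ 1 ≠ 1) :
    Odd (Nat.card (galStab hj A χ)) := by
  have : Fact p.Prime := ⟨X.hp⟩
  by_contra heven
  have h2 : 2 ∣ Nat.card (galStab hj A χ) := (Nat.not_odd_iff_even.1 heven).two_dvd
  have : Fact (Nat.Prime 2) := ⟨Nat.prime_two⟩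
  obtain ⟨u, hu⟩ := exists_prime_orderOf_dvd_card' 2 h2
  have hu1 : u ≠ 1 := by rintro rfl; rw [orderOf_one] at hu; omega
  have hu2 : (u : (ZMod p)ˣ) * u = 1 := by
    have := pow_orderOf_eq_one u
    rw [hu, pow_two] at this
    exact congrArg Subtype.val this
  obtain ⟨μ, -, hμ⟩ := mem_galStab.1 u.2
  set e := j (u : (ZMod p)ˣ) with he
  have hp1 : ¬ (p : ℤ) ∣ (e : ℤ) - 1 := by
    intro h
    rw [← ZMod.intCast_zmod_eq_zero_iff_dvd] at h
    push_cast at h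
    rw [he, hj.cast, sub_eq_zero] at h
    exact hu1 (Subtype.ext (Units.ext h))
  have hsq : e * e ≡ 1 [MOD Nat.card G] := by
    have := hj.mul (u : (ZMod p)ˣ) u
    rw [hu2] at this
    exact this.symm.trans hj.one
  -- modulo `p ^ a` the exponent of an involution is `-1`
  have hpa : p ^ a ∣ e + 1 := by
    have h3 : ((p ^ a : ℕ) : ℤ) ∣ ((e : ℤ) - 1) * (e + 1) := by
      have := (Nat.modEq_iff_dvd.1 (hsq.of_dvd (Dvd.intro _ X.hN.symm))).neg_right
      refine this.trans (dvd_of_eq ?_)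
      push_cast
      ring
    have h4 : IsCoprime ((p ^ a : ℕ) : ℤ) ((e : ℤ) - 1) := by
      push_cast
      exact ((Nat.prime_iff_prime_int.1 X.hp).irreducible.coprime_iff_not_dvd.2 hp1).pow_left
    exact_mod_cast h4.dvd_of_dvd_mul_left h3
  obtain ⟨ht1, ht2⟩ := X.hn.tau X.hp X.hc X.hG
  have hE : Nat.card G ∣ e * n ^ Nat.card G + 1 := by
    rw [show (Nat.card G ∣ e * n ^ Nat.card G + 1) ↔ p ^ a * m ∣ e * n ^ Nat.card G + 1 by
      rw [← X.hN]]
    refine X.cop.mul_dvd_of_dvd_of_dvd ?_ ?_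
    · have h3 : e * n ^ Nat.card G + 1 ≡ e * 1 + 1 [MOD p ^ a] :=
        ((ht1 a (Dvd.intro _ X.hN.symm)).mul_left e).add_right 1
      rw [mul_one] at h3
      exact (Nat.modEq_zero_iff_dvd).1 (h3.trans ((Nat.modEq_zero_iff_dvd).2 hpa))
    · have h3 : e * n ^ Nat.card G + 1 ≡ 1 * n ^ Nat.card G + 1 [MOD m] :=
        ((hj.pq u m X.m_dvd X.hpm).mul_right _).add_right 1
      rw [one_mul] at h3
      exact (Nat.modEq_zero_iff_dvd).1
        (h3.trans ((Nat.modEq_zero_iff_dvd).2 (ht2 m X.m_dvd X.hpm)))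
  have hinv : ∀ g, χ g⁻¹ = tw μ χ g := by
    intro g
    rw [← hμ, ← SChar_tau hχ (Nat.card G) (g ^ e), ← pow_mul]
    congr 1
    refine (eq_inv_of_mul_eq_one_left ?_).symm
    rw [← pow_succ]
    exact orderOf_dvd_iff_pow_eq_one.1 ((orderOf_dvd_natCard g).trans hE)
  obtain ⟨r, hr⟩ := X.hG
  have hν : ∀ g, μ g ^ (r + 1) * μ g ^ (r + 1) = μ g := by
    intro g
    rw [← pow_add, show r + 1 + (r + 1) = Nat.card G + 1 by omega, pow_succ, ← map_pow,
      pow_card_eq_one', map_one, one_mul]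
  have htriv := Irr_real_trivial ⟨r, hr⟩ (tw_mem_Irr (μ ^ (r + 1)) hχ.1) (fun g => by
    rw [tw_apply, hinv, tw_apply, tw_apply, ← mul_assoc, ← Units.val_mul]
    congr 2
    rw [MonoidHom.pow_apply, MonoidHom.pow_apply, map_inv, inv_pow, inv_mul_eq_iff_eq_mul, hν])
  refine h1 ?_
  rw [← tw_apply_one (μ ^ (r + 1)) χ, htriv]

/-- After twisting by a `k`-valued character of `p`-power order, the Galois stabilizer fixes `χ` on
`p`-elements. -/
theorem exists_normalized (X : Ctx G p a c m n k) (hj : JGood p (Nat.card G) j) (χ : G → ℂ) :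
    ∃ ν ∈ LinQ (p ^ c) G, ∀ u ∈ galStab hj (LinK k G) χ, ∀ x, PElt p x →
      tw ν χ (x ^ j u) = tw ν χ x := by
  have : Fact p.Prime := ⟨X.hp⟩
  obtain ⟨γ, hγ⟩ := IsCyclic.exists_generator (α := galStab hj (LinK k G) χ)
  -- it suffices to treat a generator
  have hgen : ∀ ν : G →* ℂˣ, (∀ x, PElt p x → tw ν χ (x ^ j γ) = tw ν χ x) →
      ∀ u ∈ galStab hj (LinK k G) χ, ∀ x, PElt p x → tw ν χ (x ^ j u) = tw ν χ x := by
    intro ν hν u hu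
    obtain ⟨i, hi⟩ := (mem_powers_iff_mem_zpowers (x := γ)).2 (hγ ⟨u, hu⟩)
    have hi' : (γ : (ZMod p)ˣ) ^ i = u := by
      have := congrArg Subtype.val hi
      simpa using this
    rw [← hi']
    clear hi hi' hu
    induction i with
    | zero => intro x _; rw [pow_zero, hj.pow_one]
    | succ i ih =>
      intro x hx
      rw [pow_succ, hj.pow_mul, hν _ (hx.pow _), ih x hx]
  by_cases hγ1 : (γ : (ZMod p)ˣ) = 1
  · refine ⟨1, one_mem _, hgen 1 fun x _ => ?_⟩
    rw [hγ1, hj.pow_one]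
  · obtain ⟨μ, hμ, h1⟩ := mem_galStab.1 γ.2
    have hp1 : ¬ (p : ℤ) ∣ (j (γ : (ZMod p)ˣ) : ℤ) - 1 := by
      intro h
      rw [← ZMod.intCast_zmod_eq_zero_iff_dvd] at h
      push_cast at h
      rw [hj.cast, sub_eq_zero] at h
      exact hγ1 (Units.ext h)
    obtain ⟨R, hmR, hR⟩ := exists_twist_exponent (a := a) X.hp X.hpm hp1
    refine ⟨μ ^ R, X.mem_LinQ_of (pow_mem hμ R) ?_, hgen _ fun x hx => ?_⟩
    · obtain ⟨R', rfl⟩ := hmR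
      rw [lin_pow_pow, mul_comm, ← mul_assoc, ← X.hN, ← lin_pow_pow, lin_pow_card, lin_one_pow]
    · rw [tw_apply, h1, tw_apply, tw_apply, ← mul_assoc, ← Units.val_mul]
      congr 2
      obtain ⟨i, hi, hid⟩ := hx.exists_orderOf X.hp
      have hia : i ≤ a := by
        have h2 : p ^ i ∣ p ^ a := by
          rw [X.hN] at hid
          exact (Nat.Coprime.pow_left i ((X.hp.coprime_iff_not_dvd).2 X.hpm)).dvd_of_dvd_mul_right hid
        exact (Nat.pow_dvd_pow_iff_le_right X.hp.one_lt).1 h2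
      have hxR : x ^ (R * j γ + 1) = x ^ R :=
        pow_eq_pow_iff_modEq.2 (by rw [hi]; exact hR.of_dvd (pow_dvd_pow p hia))
      rw [MonoidHom.pow_apply, MonoidHom.pow_apply, ← map_pow, ← map_pow, ← map_mul,
        ← hxR, ← pow_mul, ← pow_succ, mul_comm (j _)]

end Ctx
end

section
variable {G : Type} [Group G] [Fintype G] {p a c m n t : ℕ} {k : Subfield ℂ} {χ : G → ℂ}
variable {j : (ZMod p)ˣ → ℕ}

theorem tw_mem_IrrK {μ : G →* ℂˣ} (hμ : μ ∈ LinK k G) (hχ : χ ∈ IrrK G k) : tw μ χ ∈ IrrK G k :=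
  ⟨tw_mem_Irr μ hχ.1, fun g => mul_mem (hμ g) (hχ.2 g)⟩

namespace Ctx

theorem SChar_sub (X : Ctx G p a c m n k) (hχ : χ ∈ SChar n G) : χ ∈ IrrK G k :=
  ⟨hχ.1, SChar_mem_k X.hG X.hp X.hp2 X.hc X.hcd X.hn X.hk hχ⟩

theorem gal_mem_SChar (hj : JGood p (Nat.card G) j) (hχ : χ ∈ SChar n G) (u : (ZMod p)ˣ) :
    (fun g => χ (g ^ j u)) ∈ SChar n G :=
  ⟨Irr_pow hχ.1 (hj.coprime u), fun g => by
    change χ _ = χ _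
    rw [← pow_mul, mul_comm, pow_mul, hχ.2]⟩

/-- The degree estimate `(p + 2) χ(1) ≥ 3 p + 2 d s`. -/
theorem case_one_bound (X : Ctx G p a c m n k) (hj : JGood p (Nat.card G) j) (hχ : χ ∈ SChar n G)
    (ht : χ 1 = t) (ht1 : t ≠ 1) (hpt : ¬ p ∣ t) :
    3 * p + 2 * (Nat.card (twStab (LinK k G) χ) * Nat.card (galStab hj (LinK k G) χ)) ≤
      t * (p + 2) := by
  have : Fact p.Prime := ⟨X.hp⟩
  have hD : ∀ μ ∈ twStab (LinK k G) χ, μ ^ m = 1 := fun μ hμ => X.stab_pow hχ.1 ht hpt hμ.2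
  have hdt : Nat.card (twStab (LinK k G) χ) ∣ t :=
    stab_card_dvd hχ ht X.n_cop X.m_odd X.m_dvd_n X.m_dvd _ hD fun μ hμ => hμ.2
  have hχ1 : χ 1 ≠ 1 := by rw [ht]; exact_mod_cast ht1
  obtain ⟨ν, hν, hinv⟩ := X.exists_normalized hj χ
  have hψ := tw_mem_SChar X.hG X.hp X.hn hν hχ
  have hψt : tw ν χ 1 = t := by rw [tw_apply_one, ht]
  have hne : ∃ x, PElt p x ∧ tw ν χ x ≠ tw ν χ 1 := by
    by_contra hcon
    push Not at hcon
    have := SChar_trivial X.hG X.hp X.hc X.hn hψ hcon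
    refine hχ1 ?_
    rw [← tw_apply_one ν χ, this]
  have horb := fun (x : G) (hx : PElt p x) =>
    orbit_dvd X.hp hψ.1 hψt hj (galStab hj (LinK k G) χ) hx (fun u hu i => by
      rw [pow_mul]; exact hinv u hu _ (hx.pow i))
  have hst : Nat.card (galStab hj (LinK k G) χ) ≤ t := by
    obtain ⟨x, hx, hx1⟩ := hne
    obtain ⟨m0, r, h1, h2, h3, -⟩ := horb x hx
    have hr : r ≠ 0 := fun h => hx1 (h3 h)
    have := Nat.le_of_dvd (Nat.pos_of_ne_zero hr) h2
    omega
  refine numerics X.seven_le X.hp2 X.hmod (Irr_odd X.hG hχ.1 ht) ht1 hdt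
    (X.not_three_dvd _ fun μ hμ => hμ.1) ?_ (X.galStab_odd hj _ hχ hχ1) hst ?_
  · have := Subgroup.card_subgroup_dvd_card (galStab hj (LinK k G) χ)
    rwa [Nat.card_eq_fintype_card (α := (ZMod p)ˣ), ZMod.card_units] at this
  · intro hdt' htp
    obtain ⟨x, hx, hx0⟩ := exists_no_fixed X.hG X.hp X.hc X.hn hψ hψt ht1 htp X.m_odd X.m_dvd_n
      X.m_dvd X.hpm (twStab (LinK k G) χ) hD (fun μ hμ => by rw [tw_comm, hμ.2]) hdt'
    obtain ⟨m0, r, h1, h2, -, h4⟩ := horb x hx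
    rw [h4 hx0, zero_add] at h1
    rw [h1]
    exact h2

open Classical in
/-- The twists and Galois conjugates of `χ` form a set of at least `|LinK k G| (p - 1) / (d s)`
`k`-valued characters. -/
theorem case_one_count (X : Ctx G p a c m n k) (hj : JGood p (Nat.card G) j) (hχ : χ ∈ SChar n G)
    (ht : χ 1 = t) (hpt : ¬ p ∣ t) :
    ∃ F : Finset (G → ℂ), (∀ ψ ∈ F, ψ ∈ IrrK G k ∧ ψ 1 = t) ∧
      Nat.card (LinK k G) * (p - 1) ≤
        Nat.card (twStab (LinK k G) χ) * Nat.card (galStab hj (LinK k G) χ) * F.card := by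
  have : Fact p.Prime := ⟨X.hp⟩
  have := Fintype.ofFinite (LinK k G)
  have := Fintype.ofFinite (G →* ℂˣ)
  have := Fintype.ofFinite (twStab (LinK k G) χ)
  have := Fintype.ofFinite (galStab hj (LinK k G) χ)
  let f : LinK k G × (ZMod p)ˣ → (G → ℂ) := fun z => tw z.1 (fun g => χ (g ^ j z.2))
  refine ⟨Finset.univ.image f, ?_, ?_⟩
  · intro ψ hψ
    obtain ⟨⟨μ, u⟩, -, rfl⟩ := Finset.mem_image.1 hψ
    refine ⟨tw_mem_IrrK μ.2 (X.SChar_sub (gal_mem_SChar hj hχ u)), ?_⟩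
    simp only [f]
    rw [tw_apply_one, one_pow, ht]
  have hcard : Nat.card (LinK k G) * (p - 1) = (Finset.univ : Finset (LinK k G × (ZMod p)ˣ)).card := by
    rw [Finset.card_univ, Fintype.card_prod, ZMod.card_units, Nat.card_eq_fintype_card]
  rw [hcard]
  refine Finset.card_le_mul_card_image _ _ fun ψ hψ => ?_
  obtain ⟨⟨μ₀, u₀⟩, -, rfl⟩ := Finset.mem_image.1 hψ
  set S := Finset.univ.filter fun z => f z = f (μ₀, u₀) with hS
  -- the second components lie in a single coset of the Galois stabilizer
  have hcoset : (S.image Prod.snd).card ≤ Nat.card (galStab hj (LinK k G) χ) := by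
    rw [Nat.card_eq_fintype_card, ← Finset.card_univ]
    have hsub : S.image Prod.snd ⊆ (Finset.univ : Finset (galStab hj (LinK k G) χ)).image
        (fun v : galStab hj (LinK k G) χ => u₀ * (v : (ZMod p)ˣ)) := by
      intro u hu
      obtain ⟨⟨μ, u'⟩, hz, rfl⟩ := Finset.mem_image.1 hu
      have hf : f (μ, u') = f (μ₀, u₀) := (Finset.mem_filter.1 hz).2
      refine Finset.mem_image.2 ⟨⟨u₀⁻¹ * u', ?_⟩, Finset.mem_univ _, by simp⟩
      refine mem_galStab.2 ⟨((μ : G →* ℂˣ) ^ j u₀⁻¹)⁻¹ * (μ₀ : G →* ℂˣ) ^ j u₀⁻¹,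
        mul_mem (inv_mem (pow_mem μ.2 _)) (pow_mem μ₀.2 _), fun g => ?_⟩
      have h1 := congrFun hf (g ^ j u₀⁻¹)
      simp only [f, tw] at h1
      rw [hj.pow_inv, ← hj.pow_mul, map_pow, map_pow] at h1
      rw [tw_apply]
      simp only [MonoidHom.mul_apply, MonoidHom.inv_apply, MonoidHom.pow_apply, Units.val_mul,
        mul_assoc, Units.val_inv_eq_inv_val]
      rw [← h1]
      simp
    exact (Finset.card_le_card hsub).trans Finset.card_image_le
  refine le_trans ?_ (Nat.mul_le_mul_left _ hcoset)
  refine Finset.card_le_mul_card_image _ _ fun u hu => ?_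
  obtain ⟨⟨μ₁, u'⟩, hz, rfl⟩ := Finset.mem_image.1 hu
  have hf₁ : f (μ₁, u') = f (μ₀, u₀) := (Finset.mem_filter.1 hz).2
  rw [Nat.card_eq_fintype_card, ← Finset.card_univ]
  refine Finset.card_le_card_of_injOn (t := (Finset.univ : Finset (G →* ℂˣ)).filter
    (fun μ => μ ∈ twStab (LinK k G) χ)) (fun z => (z.1 : G →* ℂˣ) * (μ₁ : G →* ℂˣ)⁻¹) ?_ ?_ |>.trans ?_
  · rintro ⟨μ, u⟩ hz'
    obtain ⟨hz1, hz2⟩ := Finset.mem_filter.1 (Finset.mem_coe.1 hz')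
    have hf : f (μ, u) = f (μ₁, u') := by rw [hf₁]; exact (Finset.mem_filter.1 hz1).2
    have hu' : u = u' := hz2
    subst hu'
    refine Finset.mem_coe.2 (Finset.mem_filter.2 ⟨Finset.mem_univ _,
      mul_mem μ.2 (inv_mem μ₁.2), ?_⟩)
    have h1 := tw_eq_tw_iff.1 hf
    have h2 := X.stab_pow (gal_mem_SChar hj hχ u).1 (by simp only [one_pow]; exact ht) hpt h1
    change tw ((μ : G →* ℂˣ) * (μ₁ : G →* ℂˣ)⁻¹) χ = χ
    simp only at h1 h2
    generalize (μ : G →* ℂˣ) * (μ₁ : G →* ℂˣ)⁻¹ = κ at h1 h2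
    funext g
    have h3 := congrFun h1 (g ^ j u⁻¹)
    simp only [tw] at h3
    rw [hj.pow_inv, map_pow] at h3
    have h4 : κ g ^ j u⁻¹ = κ g := by
      have h5 : κ g ^ m = 1 := by rw [← MonoidHom.pow_apply, h2, MonoidHom.one_apply]
      conv_rhs => rw [← pow_one (κ g)]
      exact pow_eq_pow_iff_modEq.2
        ((hj.pq u⁻¹ m X.m_dvd X.hpm).of_dvd (orderOf_dvd_of_pow_eq_one h5))
    rw [h4] at h3
    exact h3
  · rintro ⟨μ, u⟩ hz1 ⟨μ', u1⟩ hz2 he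
    have h1 : u = u' := (Finset.mem_filter.1 (Finset.mem_coe.1 hz1)).2
    have h2 : u1 = u' := (Finset.mem_filter.1 (Finset.mem_coe.1 hz2)).2
    have h3 : μ = μ' := Subtype.ext (MonoidHom.ext fun g => by
      have := DFunLike.congr_fun he g
      simpa using this)
    rw [h1, h2, h3]
  · rw [Finset.card_univ, ← Fintype.card_subtype]

/-- Some non-linear `χ ∈ SChar n G` has degree prime to `p`: the orbit of `χ` outweighs the linear
characters. -/
theorem case_one (X : Ctx G p a c m n k) (hpN : p ∣ Nat.card G) (hχ : χ ∈ SChar n G)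
    (ht : χ 1 = t) (ht1 : t ≠ 1) (hpt : ¬ p ∣ t) :
    ∃ F : Finset (G → ℂ), (∀ ψ ∈ F, ψ ∈ IrrK G k ∧ ψ 1 ≠ 1) ∧
      2 * ((p : ℝ) - 1) * Nat.card (LinK k G) ≤ ∑ ψ ∈ F, (((p : ℝ) + 2) * (ψ 1).re - 3 * p) := by
  obtain ⟨j, hj⟩ := exists_JGood X.hp Nat.card_pos.ne' hpN
  obtain ⟨F, hF, hc⟩ := X.case_one_count hj hχ ht hpt
  have hb := X.case_one_bound hj hχ ht ht1 hpt
  refine ⟨F, fun ψ hψ => ⟨(hF ψ hψ).1, ?_⟩, ?_⟩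
  · rw [(hF ψ hψ).2]; exact_mod_cast ht1
  rw [Finset.sum_congr rfl (g := fun _ => ((p : ℝ) + 2) * t - 3 * p) (fun ψ hψ => by
    rw [(hF ψ hψ).2, Complex.natCast_re]), Finset.sum_const, nsmul_eq_mul]
  generalize Nat.card (twStab (LinK k G) χ) * Nat.card (galStab hj (LinK k G) χ) = e at hc hb
  have hb' : (3 * p + 2 * e : ℝ) ≤ t * (p + 2) := by exact_mod_cast hb
  have hc' : (Nat.card (LinK k G) : ℝ) * ((p : ℝ) - 1) ≤ e * F.card := by
    have := (Nat.cast_le (α := ℝ)).2 hc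
    push_cast [Nat.cast_sub X.hp.one_le] at this
    exact this
  have h0 : (0 : ℝ) ≤ F.card := Nat.cast_nonneg _
  nlinarith [mul_le_mul_of_nonneg_left hb' h0]

end Ctx
end

/-! ### All non-linear invariant characters have degree divisible by `p` -/

section
variable {G : Type} [Group G] [Fintype G] {p a c m n t : ℕ} {k : Subfield ℂ} {χ : G → ℂ}

namespace Ctx

/-- Distinct members of `SChar n G` have disjoint orbits under twisting by linear characters of
order dividing `m`. -/
theorem orbit_unique (X : Ctx G p a c m n k) {χ' : G → ℂ} (hχ : χ ∈ SChar n G)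
    (hχ' : χ' ∈ SChar n G) {μ μ' : G →* ℂˣ} (hμ : μ ^ m = 1) (hμ' : μ' ^ m = 1)
    (h : tw μ χ = tw μ' χ') : χ = χ' := by
  have hinv : ∀ (ν : G →* ℂˣ), ν ^ m = 1 → ∀ g, ν (g ^ n) = (ν g)⁻¹ := by
    intro ν hν g
    have h5 : ν g ^ m = 1 := by rw [← MonoidHom.pow_apply, hν, MonoidHom.one_apply]
    rw [map_pow]
    refine eq_inv_of_mul_eq_one_left ?_
    rw [← pow_succ]
    exact orderOf_dvd_iff_pow_eq_one.1 ((orderOf_dvd_of_pow_eq_one h5).trans X.m_dvd_n)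
  obtain ⟨r, hr⟩ := X.m_odd
  have hpw : ∀ (ν : G →* ℂˣ), ν ^ m = 1 → ∀ g, (ν g ^ 2) ^ (r + 1) = ν g := by
    intro ν hν g
    have h5 : ν g ^ m = 1 := by rw [← MonoidHom.pow_apply, hν, MonoidHom.one_apply]
    rw [← pow_mul, show 2 * (r + 1) = m + 1 by omega, pow_succ, h5, one_mul]
  funext g
  have h1 := congrFun h g
  have h2 := congrFun h (g ^ n)
  simp only [tw, hinv μ hμ, hinv μ' hμ', hχ.2, hχ'.2] at h1 h2
  by_cases h0 : χ g = 0
  · rw [h0, mul_zero] at h1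
    rw [h0]
    exact ((mul_eq_zero.1 h1.symm).resolve_left (Units.ne_zero _)).symm
  have h3 : μ g ^ 2 = μ' g ^ 2 := by
    have h0' : χ' g ≠ 0 := by
      intro h0'
      rw [h0', mul_zero] at h1
      exact (mul_ne_zero (Units.ne_zero _) h0) h1
    ext
    push_cast
    rw [Units.val_inv_eq_inv_val, Units.val_inv_eq_inv_val] at h2
    have e1 := Units.ne_zero (μ g)
    have e2 := Units.ne_zero (μ' g)
    field_simp at h2
    have h4 : ((μ g : ℂ) ^ 2 - (μ' g : ℂ) ^ 2) * χ g = 0 := by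
      linear_combination (μ g : ℂ) * h1 - (μ' g : ℂ) * h2
    exact sub_eq_zero.1 ((mul_eq_zero.1 h4).resolve_right h0)
  have h4 : μ g = μ' g := by rw [← hpw μ hμ, h3, hpw μ' hμ']
  rw [h4] at h1
  exact mul_left_cancel₀ (Units.ne_zero _) h1

open Classical in
theorem orbit_count (B : Subgroup (G →* ℂˣ)) [Fintype B] (χ : G → ℂ) :
    Nat.card B ≤ Nat.card (twStab B χ) *
      ((Finset.univ : Finset B).image (fun μ : B => tw (μ : G →* ℂˣ) χ)).card := by
  have := Fintype.ofFinite (twStab B χ)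
  have := Fintype.ofFinite (G →* ℂˣ)
  rw [Nat.card_eq_fintype_card, ← Finset.card_univ]
  refine Finset.card_le_mul_card_image _ _ fun ψ hψ => ?_
  obtain ⟨μ₁, -, rfl⟩ := Finset.mem_image.1 hψ
  rw [Nat.card_eq_fintype_card, ← Finset.card_univ]
  refine Finset.card_le_card_of_injOn (t := (Finset.univ : Finset (G →* ℂˣ)).filter
    (fun μ => μ ∈ twStab B χ)) (fun z : B => (z : G →* ℂˣ) * (μ₁ : G →* ℂˣ)⁻¹) ?_ ?_ |>.trans ?_
  · intro μ hμ
    refine Finset.mem_coe.2 (Finset.mem_filter.2 ⟨Finset.mem_univ _,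
      mul_mem μ.2 (inv_mem μ₁.2), ?_⟩)
    exact tw_eq_tw_iff.1 (Finset.mem_filter.1 (Finset.mem_coe.1 hμ)).2
  · intro μ _ μ' _ he
    refine Subtype.ext (MonoidHom.ext fun g => ?_)
    have := DFunLike.congr_fun he g
    simpa using this
  · rw [Finset.card_univ, ← Fintype.card_subtype]

open Classical in
/-- The counting theorem, in terms of the non-linear members of `SChar n G`. -/
theorem card_nonlinear (X : Ctx G p a c m n k)
    (hD : 2 * Nat.card (LinQ (p ^ c) G) ≤ Nat.card (SChar n G)) :
    Nat.card (LinQ (p ^ c) G) ≤ ((SChar_finite (n := n) (G := G)).toFinset.filter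
      (fun χ => χ 1 ≠ 1)).card := by
  have := Fintype.ofFinite (LinQ (p ^ c) G)
  set S := (SChar_finite (n := n) (G := G)).toFinset with hS
  have hSc : S.card = Nat.card (SChar n G) :=
    (Nat.card_eq_card_finite_toFinset SChar_finite).symm
  have h1 : (S.filter (fun χ => χ 1 = 1)).card ≤ Nat.card (LinQ (p ^ c) G) := by
    rw [Nat.card_eq_fintype_card, ← Finset.card_univ]
    refine le_trans (Finset.card_le_card (t := (Finset.univ : Finset (LinQ (p ^ c) G)).image
      (fun μ : LinQ (p ^ c) G => tw (μ : G →* ℂˣ) (fun _ => 1))) ?_) Finset.card_image_le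
    intro χ hχ
    obtain ⟨h2, h3⟩ := Finset.mem_filter.1 hχ
    have h2' : χ ∈ SChar n G := (Set.Finite.mem_toFinset _).1 h2
    obtain ⟨μ, rfl⟩ := exists_lin h2'.1 h3
    refine Finset.mem_image.2 ⟨⟨μ, (lin_mem_SChar X.hG X.hp X.hn).1 fun g => ?_⟩,
      Finset.mem_univ _, rfl⟩
    have h4 := h2'.2 g
    simp only [tw, mul_one] at h4
    exact Units.ext h4
  have h2 := Finset.card_filter_add_card_filter_not (s := S) (fun χ => χ 1 = 1)
  rw [hSc] at h2
  change _ ≤ (S.filter (fun χ => ¬ χ 1 = 1)).card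
  omega

open Classical in
/-- All non-linear `χ ∈ SChar n G` have degree divisible by `p`: their orbits under twists of
order dividing `m` outweigh the linear characters, as a stabilizer of order `d` satisfies `p d ∣ χ
1`. -/
theorem case_two (X : Ctx G p a c m n k)
    (hD : 2 * Nat.card (LinQ (p ^ c) G) ≤ Nat.card (SChar n G))
    (hall : ∀ χ ∈ SChar n G, ∀ t : ℕ, χ 1 = t → t ≠ 1 → p ∣ t) :
    ∃ F : Finset (G → ℂ), (∀ ψ ∈ F, ψ ∈ IrrK G k ∧ ψ 1 ≠ 1) ∧
      2 * ((p : ℝ) - 1) * Nat.card (LinK k G) ≤ ∑ ψ ∈ F, (((p : ℝ) + 2) * (ψ 1).re - 3 * p) := by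
  set B : Subgroup (G →* ℂˣ) := LinK k G ⊓ LinQ m G with hB
  have := Fintype.ofFinite B
  set W := (SChar_finite (n := n) (G := G)).toFinset.filter (fun χ => χ 1 ≠ 1) with hW
  have hmemW : ∀ χ, χ ∈ W → χ ∈ SChar n G ∧ χ 1 ≠ 1 := fun χ hχ => by
    obtain ⟨h1, h2⟩ := Finset.mem_filter.1 hχ
    exact ⟨(Set.Finite.mem_toFinset _).1 h1, h2⟩
  let O : (G → ℂ) → Finset (G → ℂ) := fun χ =>
    (Finset.univ : Finset B).image (fun μ : B => tw (μ : G →* ℂˣ) χ)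
  have hp7 : (7 : ℝ) ≤ p := by exact_mod_cast X.seven_le
  have hdisj : (W : Set (G → ℂ)).PairwiseDisjoint O := by
    intro χ hχ χ' hχ' hne
    rw [Function.onFun, Finset.disjoint_left]
    intro ψ h1 h2
    obtain ⟨μ, -, h1⟩ := Finset.mem_image.1 h1
    obtain ⟨μ', -, h2⟩ := Finset.mem_image.1 h2
    exact hne (X.orbit_unique (hmemW _ hχ).1 (hmemW _ hχ').1 μ.2.2 μ'.2.2 (h1.trans h2.symm))
  refine ⟨W.biUnion O, ?_, ?_⟩
  · intro ψ hψ
    obtain ⟨χ, hχ, h1⟩ := Finset.mem_biUnion.1 hψ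
    obtain ⟨μ, -, rfl⟩ := Finset.mem_image.1 h1
    exact ⟨tw_mem_IrrK μ.2.1 (X.SChar_sub (hmemW _ hχ).1), by
      rw [tw_apply_one]; exact (hmemW _ hχ).2⟩
  rw [Finset.sum_biUnion hdisj]
  have hterm : ∀ χ ∈ W, (Nat.card B : ℝ) * (p * (p - 1)) ≤
      ∑ ψ ∈ O χ, (((p : ℝ) + 2) * (ψ 1).re - 3 * p) := by
    intro χ hχ
    obtain ⟨hχS, hχ1⟩ := hmemW χ hχ
    obtain ⟨t, ht0, ht⟩ := Irr_pos hχS.1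
    have hpt := hall χ hχS t ht (by rintro rfl; exact hχ1 (by simpa using ht))
    have hdt : Nat.card (twStab B χ) ∣ t :=
      stab_card_dvd hχS ht X.n_cop X.m_odd X.m_dvd_n X.m_dvd _ (fun μ hμ => hμ.1.2)
        fun μ hμ => hμ.2
    have hpd : ¬ p ∣ Nat.card (twStab B χ) := by
      intro h
      have : Fact p.Prime := ⟨X.hp⟩
      obtain ⟨μ, hμ⟩ := exists_prime_orderOf_dvd_card' p h
      refine X.hpm ?_
      rw [← hμ, orderOf_dvd_iff_pow_eq_one]
      exact Subtype.ext μ.2.1.2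
    have hpdt : p * Nat.card (twStab B χ) ∣ t :=
      Nat.Coprime.mul_dvd_of_dvd_of_dvd ((X.hp.coprime_iff_not_dvd).2 hpd) hpt hdt
    have hle := Nat.le_of_dvd ht0 hpdt
    have hcount := orbit_count B χ
    have hd1 : 1 ≤ Nat.card (twStab B χ) := Nat.card_pos
    rw [Finset.sum_congr rfl (g := fun _ => ((p : ℝ) + 2) * t - 3 * p) (fun ψ hψ => by
      obtain ⟨μ, -, rfl⟩ := Finset.mem_image.1 hψ
      rw [tw_apply_one, ht, Complex.natCast_re]), Finset.sum_const, nsmul_eq_mul]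
    change Nat.card B ≤ Nat.card (twStab B χ) * (O χ).card at hcount
    generalize Nat.card (twStab B χ) = d at hle hcount hd1
    have hle' : (p : ℝ) * d ≤ t := by exact_mod_cast hle
    have hcount' : (Nat.card B : ℝ) ≤ d * (O χ).card := by exact_mod_cast hcount
    have hd1' : (1 : ℝ) ≤ d := by exact_mod_cast hd1
    have h1 : (d : ℝ) * (p * (p - 1)) ≤ ((p : ℝ) + 2) * t - 3 * p := by nlinarith
    calc (Nat.card B : ℝ) * (p * (p - 1)) ≤ d * (O χ).card * (p * (p - 1)) :=
          mul_le_mul_of_nonneg_right hcount' (by nlinarith)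
      _ = (O χ).card * (d * (p * (p - 1))) := by ring
      _ ≤ _ := mul_le_mul_of_nonneg_left h1 (Nat.cast_nonneg _)
  have hsum := Finset.sum_le_sum hterm
  rw [Finset.sum_const, nsmul_eq_mul] at hsum
  refine le_trans ?_ hsum
  have hWc : (Nat.card (LinQ (p ^ c) G) : ℝ) ≤ W.card := by exact_mod_cast X.card_nonlinear hD
  have hA : (Nat.card (LinK k G) : ℝ) ≤ Nat.card (LinQ (p ^ c) G) * Nat.card B := by
    exact_mod_cast X.card_LinK_le
  have hA' : (Nat.card (LinK k G) : ℝ) ≤ W.card * Nat.card B :=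
    hA.trans (mul_le_mul_of_nonneg_right hWc (Nat.cast_nonneg _))
  calc 2 * ((p : ℝ) - 1) * Nat.card (LinK k G) ≤ (p * (p - 1)) * (W.card * Nat.card B) :=
        mul_le_mul (by nlinarith) hA' (Nat.cast_nonneg _) (by nlinarith)
    _ = _ := by ring

/-- The weighted degree sum over all `k`-valued irreducible characters is nonnegative as soon as
some family of nonlinear ones outweighs the linear ones. -/
theorem acdK_ge (X : Ctx G p a c m n k) {F : Finset (G → ℂ)}
    (hF : ∀ ψ ∈ F, ψ ∈ IrrK G k ∧ ψ 1 ≠ 1)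
    (hsum : 2 * ((p : ℝ) - 1) * Nat.card (LinK k G) ≤
      ∑ ψ ∈ F, (((p : ℝ) + 2) * (ψ 1).re - 3 * p)) :
    3 * (p : ℝ) / ((p : ℝ) + 2) ≤ acdK G k := by
  classical
  have := Fintype.ofFinite (LinK k G)
  have hp7 : (7 : ℝ) ≤ p := by exact_mod_cast X.seven_le
  have hfin : (IrrK G k).Finite := Irr_finite.subset fun _ h => h.1
  set S := hfin.toFinset with hS
  have hmem : ∀ ψ, ψ ∈ S ↔ ψ ∈ IrrK G k := fun ψ => Set.Finite.mem_toFinset _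
  have hSc : S.card = Nat.card (IrrK G k) := (Nat.card_eq_card_finite_toFinset hfin).symm
  have hlin : (S.filter (fun χ => χ 1 = 1)).card ≤ Nat.card (LinK k G) := by
    rw [Nat.card_eq_fintype_card, ← Finset.card_univ]
    refine le_trans (Finset.card_le_card (t := (Finset.univ : Finset (LinK k G)).image
      (fun μ : LinK k G => tw (μ : G →* ℂˣ) (fun _ => 1))) ?_) Finset.card_image_le
    intro χ hχ
    obtain ⟨h2, h3⟩ := Finset.mem_filter.1 hχ
    have h2' := (hmem χ).1 h2
    obtain ⟨μ, rfl⟩ := exists_lin h2'.1 h3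
    refine Finset.mem_image.2 ⟨⟨μ, fun g => ?_⟩, Finset.mem_univ _, rfl⟩
    have h4 := h2'.2 g
    simpa only [tw, mul_one] using h4
  have hnon : ∀ ψ ∈ S.filter (fun χ => ¬ χ 1 = 1), 0 ≤ ((p : ℝ) + 2) * (ψ 1).re - 3 * p := by
    intro ψ hψ
    obtain ⟨h1, h2⟩ := Finset.mem_filter.1 hψ
    obtain ⟨t, ht0, ht⟩ := Irr_pos ((hmem ψ).1 h1).1
    have hto := Irr_odd X.hG ((hmem ψ).1 h1).1 ht
    have ht1 : t ≠ 1 := by rintro rfl; exact h2 (by simpa using ht)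
    have ht3 : (3 : ℝ) ≤ t := by
      have : 3 ≤ t := by obtain ⟨q, hq⟩ := hto; omega
      exact_mod_cast this
    rw [ht, Complex.natCast_re]
    nlinarith
  have hFS : F ⊆ S.filter (fun χ => ¬ χ 1 = 1) := fun ψ hψ =>
    Finset.mem_filter.2 ⟨(hmem ψ).2 (hF ψ hψ).1, (hF ψ hψ).2⟩
  have h1 := hsum.trans (Finset.sum_le_sum_of_subset_of_nonneg hFS fun ψ hψ _ => hnon ψ hψ)
  have h2 : -(2 * ((p : ℝ) - 1) * Nat.card (LinK k G)) ≤
      ∑ ψ ∈ S.filter (fun χ => χ 1 = 1), (((p : ℝ) + 2) * (ψ 1).re - 3 * p) := by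
    rw [Finset.sum_congr rfl (g := fun _ => -(2 * ((p : ℝ) - 1))) (fun ψ hψ => by
      rw [(Finset.mem_filter.1 hψ).2, Complex.one_re]; ring), Finset.sum_const, nsmul_eq_mul]
    have : ((S.filter (fun χ => χ 1 = 1)).card : ℝ) ≤ Nat.card (LinK k G) := by
      exact_mod_cast hlin
    nlinarith
  have h3 := Finset.sum_filter_add_sum_filter_not S (fun χ => χ 1 = 1)
    (fun ψ => ((p : ℝ) + 2) * (ψ 1).re - 3 * p)
  have h4 : 0 ≤ ∑ ψ ∈ S, (((p : ℝ) + 2) * (ψ 1).re - 3 * p) := by rw [← h3]; linarith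
  rw [Finset.sum_sub_distrib, ← Finset.mul_sum, Finset.sum_const, nsmul_eq_mul] at h4
  have hpos : 0 < S.card := Finset.card_pos.2 ⟨fun _ => 1, (hmem _).2 ⟨one_mem_Irr, fun _ => one_mem _⟩⟩
  have hpos' : (0 : ℝ) < S.card := by exact_mod_cast hpos
  rw [acdK, finsum_mem_eq_finite_toFinset_sum _ hfin, ← hSc, div_le_div_iff₀ (by linarith) hpos']
  linarith

end Ctx
end

theorem average_k_degree_normal_p_complement_one_mod_three_no_thirds
    (G : Type) [Group G] [Fintype G] (hG : Odd (Nat.card G))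
    (p : ℕ) (hp : p.Prime) (hpodd : Odd p) (hmod : p % 3 = 1)
    (k : Subfield ℂ)
    (hkp : ∀ z : ℂ, IsPrimitiveRoot z p → z ∈ k)
    (hk3 : ∀ z : ℂ, IsPrimitiveRoot z 3 → z ∉ k)
    (h : acdK G k < 3 * (p : ℝ) / ((p : ℝ) + 2)) :
    HasNormalPComplement G p := by
  by_contra hnp
  have hpf : Fact p.Prime := ⟨hp⟩
  have hN0 : Nat.card G ≠ 0 := Nat.card_pos.ne'
  have hpN : p ∣ Nat.card G := by
    by_contra hpN
    refine hnp ⟨⊤, inferInstance, ?_, 0, by simp⟩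
    rw [Subgroup.card_top]
    exact Nat.coprime_comm.1 ((hp.coprime_iff_not_dvd).2 hpN)
  obtain ⟨c, hc, hcd, hkg⟩ := exists_KGood hp hN0 hpN k hkp
  obtain ⟨n, hn⟩ := exists_NGood (c := c) hp hN0
  obtain ⟨a, m, hN, hpm⟩ := exists_ppart hp hN0
  have X : Ctx G p a c m n k := ⟨hG, hp, hpodd, hmod, hc, hcd, hn, hkg, hk3, hN, hpm⟩
  have hD := claimD p hpodd c n hc _ G rfl hG hn hnp
  refine not_le.2 h ?_
  by_cases hall : ∀ χ ∈ SChar n G, ∀ t : ℕ, χ 1 = t → t ≠ 1 → p ∣ t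
  · obtain ⟨F, hF, hs⟩ := X.case_two hD hall
    exact X.acdK_ge hF hs
  · push Not at hall
    obtain ⟨χ, hχ, t, ht, ht1, hpt⟩ := hall
    obtain ⟨F, hF, hs⟩ := X.case_one hpN hχ ht ht1 hpt
    exact X.acdK_ge hF hs
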